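/- For each dimension d ≥ 1 and each ρ > 0 there exists a constant C < ∞ such that for every δ > 0 and every ρ-strictly admissible ordered triple E = (E₁,E₂,E₃) of Lebesgue measurable subsets of ℝ^d with finite measures, if ∫_{E₃} (1_{E₁} * 1_{E₂}) ≥ (1−δ) ∫_{E₃⋆} (1_{E₁⋆} * 1_{E₂⋆}) then Distance(E, O(E⋆)) ≤ C δ^{1/2} max_j |E_j|. -/

import Mathlib

/-!
The trilinear form `TS A B C` is the integral over `x`, `y` of `1_A(x) 1_B(y) 1_C(-x-y)`, and after
replacing `E₃` by `-E₃` the integral in the theorem is a value of `TS`. The deficit of a triple is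
the gap between `TS` of the balls of the same measures and `TS` of the triple. The theorem says that
the deficit controls the square of the distance to the orbit of the balls.

**Flow.** On the line, centres of intervals can be moved towards the origin so that `TS` never
decreases (`flow`). Applied to the fibres of sets that are unions of cylinders, this joins any
bounded triple to its Steiner symmetrization by a chain of arbitrarily small steps along which the
measures barely change and `TS` hardly decreases (`reach_St`). A bounded set far from a ball has a
direction in which symmetrization lowers the second moment by a fixed amount (`gain`), so every
bounded triple is joined in this way to triples arbitrarily close to balls (`near_balls`). The
Riesz–Sobolev inequality (`rs_ineq`) follows.

**Near balls.** For a triple close to concentric balls `B j`, the first variation of `TS` controls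
the measure of `E j Δ B j` weighted with the distance to the sphere, and `E` can be trimmed to lie
between balls of radii `r j ± κ` (`trim_deficit`). After trimming, the fibres in any direction are
intervals up to their ends. The one-dimensional energy estimate `Sq.energy`, integrated over
triples of parallel chords that form nondegenerate triangles (`geom`, `slice_main`), shows that the
fibres are nearly intervals and that their barycentres nearly solve Pexider's equation
`p(x) + q(y) + s(-x-y) = 0`. That equation is stable in `L¹` (`pexider`), hence the barycentres are
nearly affine with a common linear part (`slices_affine`). A translation (`trans_norm`) and a
volume-preserving linear map (`lin_norm`) make the first moments of the three sets equal and their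
total second moment operator scalar. This forces the affine functions to be small (`centred`),
so that each set is nearly fixed by every Steiner symmetrization, and a set squeezed between two
concentric balls with this property is nearly a ball (`round_ball`). The outcome is `local_norm`,
and, without the normalization, `local_thm`.

**Conclusion.** A triple with small deficit cannot be far from the orbit of the balls: the chain of
`near_balls` would contain a triple at a fixed small positive distance from the orbit whose deficit
is small, against `local_thm` (`global_near`). So `local_thm` applies to every triple of small
deficit (`global_thm`), large deficits are covered by the trivial bound for the distance, and scaling
reduces general measures to normalized ones.
-/

open MeasureTheory Set

noncomputable section

/-- `ℝ^d` with Lebesgue measure. -/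
abbrev Vec (d : ℕ) := EuclideanSpace ℝ (Fin d)

/-- Indicator function of a set, with value `1 : ℝ`. -/
def ind {d : ℕ} (E : Set (Vec d)) : Vec d → ℝ := E.indicator 1

/-- Convolution of two functions on `ℝ^d`. -/
def conv {d : ℕ} (f g : Vec d → ℝ) (x : Vec d) : ℝ := ∫ y, f y * g (x - y)

/-- `E⋆`: the closed ball centered at the origin with the same measure as `E`. -/
def ballStar {d : ℕ} (E : Set (Vec d)) : Set (Vec d) :=
  Metric.closedBall 0
    (((volume E).toReal / (volume (Metric.closedBall (0 : Vec d) 1)).toReal) ^ ((1 : ℝ) / d))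

/-- A triple of positive reals is `ρ`-strictly admissible. -/
def RhoStrictlyAdmissible (ρ : ℝ) (r : Fin 3 → ℝ) : Prop :=
  (∀ j, 0 < r j) ∧
  (∀ i j k : Fin 3, ({i, j, k} : Set (Fin 3)) = Set.univ → r k ≤ (1 - ρ) * (r i + r j)) ∧
  (∀ i j, ρ * r i ≤ r j)

/-- `Distance(E, O(F))`: infimum over measure-preserving linear maps `ψ` and translations
`v` with `v₃ = v₁ + v₂` of the maximal measure of the symmetric differences
`E_j Δ (ψ(F_j) + v_j)`. -/
def tripleDistance {d : ℕ} (E F : Fin 3 → Set (Vec d)) : ℝ :=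
  sInf { r : ℝ | ∃ (ψ : Vec d ≃ₗ[ℝ] Vec d) (v : Fin 3 → Vec d),
    v 2 = v 0 + v 1 ∧ MeasurePreserving (⇑ψ) volume volume ∧
    r = max (volume (symmDiff (E 0) ((fun y => ψ y + v 0) '' F 0))).toReal
        (max (volume (symmDiff (E 1) ((fun y => ψ y + v 1) '' F 1))).toReal
             (volume (symmDiff (E 2) ((fun y => ψ y + v 2) '' F 2))).toReal) }

open Metric
open scoped symmDiff

set_option linter.unusedSectionVars false

namespace RS

notation "vol" => Measure.real volume
notation:max "𝔹" d:max => closedBall (0 : Vec d)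

/-! ### The trilinear form -/

/-- The real indicator function of a set. -/
def chi {G : Type*} (A : Set G) : G → ℝ := A.indicator 1

/-- The symmetric trilinear form `∬ f(x) g(y) h(-x-y) dx dy`. -/
def Tri {G : Type*} [AddCommGroup G] [MeasureSpace G] (f g h : G → ℝ) : ℝ :=
  ∫ p : G × G, f p.1 * g p.2 * h (-p.1 - p.2)

/-- `Tri` on indicator functions of sets. -/
def TS {G : Type*} [AddCommGroup G] [MeasureSpace G] (A B C : Set G) : ℝ :=
  Tri (chi A) (chi B) (chi C)

/-- Bounded measurable integrable functions. -/
def Nice {G : Type*} [MeasureSpace G] (f : G → ℝ) : Prop :=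
  Measurable f ∧ Integrable f ∧ ∃ c, ∀ x, |f x| ≤ c

lemma Nice.sub {G : Type*} [MeasureSpace G] {f g : G → ℝ} (hf : Nice f) (hg : Nice g) :
    Nice (fun x => f x - g x) := by
  obtain ⟨h1, h2, c, hc⟩ := hf
  obtain ⟨k1, k2, c', hc'⟩ := hg
  exact ⟨h1.sub k1, h2.sub k2, c + c', fun x => (abs_sub _ _).trans (add_le_add (hc x) (hc' x))⟩

lemma chi_nonneg {G : Type*} (A : Set G) (x : G) : 0 ≤ chi A x :=
  indicator_nonneg (fun _ _ => zero_le_one) x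

lemma chi_le_one {G : Type*} (A : Set G) (x : G) : chi A x ≤ 1 := by
  unfold chi; by_cases h : x ∈ A <;> simp [h]

lemma abs_chi_le {G : Type*} (A : Set G) (x : G) : |chi A x| ≤ 1 := by
  rw [abs_of_nonneg (chi_nonneg _ _)]; exact chi_le_one _ _

lemma chi_of_mem {G : Type*} {A : Set G} {x : G} (h : x ∈ A) : chi A x = 1 := by simp [chi, h]

lemma chi_of_notMem {G : Type*} {A : Set G} {x : G} (h : x ∉ A) : chi A x = 0 := by simp [chi, h]

lemma chi_inter {G : Type*} (A B : Set G) (x : G) : chi (A ∩ B) x = chi A x * chi B x := by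
  unfold chi; by_cases h : x ∈ A <;> by_cases h' : x ∈ B <;> simp [h, h']

lemma chi_congr {G H : Type*} {A : Set G} {B : Set H} {x : G} {y : H} (h : x ∈ A ↔ y ∈ B) :
    chi A x = chi B y := by
  unfold chi; by_cases h' : y ∈ B
  · simp [h', h.2 h']
  · simp [h', mt h.1 h']

lemma abs_chi_sub {G : Type*} (A B : Set G) (x : G) : |chi A x - chi B x| = chi (A ∆ B) x := by
  unfold chi
  by_cases h : x ∈ A <;> by_cases h' : x ∈ B <;> simp [h, h', mem_symmDiff]

lemma measurable_chi {G : Type*} [MeasurableSpace G] {A : Set G} (hA : MeasurableSet A) :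
    Measurable (chi A) := measurable_one.indicator hA

lemma integral_chi {G : Type*} [MeasureSpace G] {A : Set G} (hA : MeasurableSet A) :
    ∫ x, chi A x = vol A := integral_indicator_one hA

lemma nice_chi {G : Type*} [MeasureSpace G] {A : Set G} (hA : MeasurableSet A)
    (h : volume A ≠ ⊤) : Nice (chi A) := by
  refine ⟨measurable_chi hA, ?_, 1, fun x => ?_⟩
  · exact (integrable_indicator_iff hA).2 (integrableOn_const h)
  · exact abs_chi_le _ _

lemma integral_abs_chi_sub {G : Type*} [MeasureSpace G] {A B : Set G} (hA : MeasurableSet A)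
    (hB : MeasurableSet B) : ∫ x, |chi A x - chi B x| = vol (A ∆ B) := by
  simp_rw [abs_chi_sub]; exact integral_chi (hA.symmDiff hB)

variable {G : Type*} [AddCommGroup G] [MeasureSpace G] [MeasurableAdd₂ G] [MeasurableNeg G]
  [SigmaFinite (volume : Measure G)] [(volume : Measure G).IsAddLeftInvariant]
  [(volume : Measure G).IsNegInvariant]
variable {n d : ℕ}
variable {c m : ℝ} {A B C A' B' C' : Set G} {f g h f' : G → ℝ}

lemma tri_integrable (hf : Nice f) (hg : Nice g) (hh : Measurable h) (hc : ∀ x, |h x| ≤ c) :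
    Integrable (fun p : G × G => f p.1 * g p.2 * h (-p.1 - p.2)) := by
  have h1 : Integrable fun p : G × G => f p.1 * g p.2 := Integrable.mul_prod hf.2.1 hg.2.1
  refine h1.mul_bdd (c := c) ?_ ?_
  · refine (hh.comp ?_).aestronglyMeasurable
    have : Measurable fun p : G × G => -p.1 + -p.2 := measurable_fst.neg.add measurable_snd.neg
    simpa [sub_eq_add_neg] using this
  · exact .of_forall fun x => hc _

lemma tri_abs_le (hf : Nice f) (hg : Nice g) (hc : ∀ x, |h x| ≤ c) :
    |Tri f g h| ≤ c * (∫ x, |f x|) * (∫ x, |g x|) := by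
  unfold Tri
  have h1 : Integrable fun p : G × G => |f p.1| * |g p.2| :=
    Integrable.mul_prod hf.2.1.abs hg.2.1.abs
  have h2 := norm_integral_le_of_norm_le (μ := (volume : Measure (G × G)))
    (f := fun p : G × G => f p.1 * g p.2 * h (-p.1 - p.2)) (h1.const_mul c) ?_
  · rw [Real.norm_eq_abs, integral_const_mul] at h2
    refine h2.trans (le_of_eq ?_)
    rw [Measure.volume_eq_prod, integral_prod_mul (fun x => |f x|) (fun x => |g x|), mul_assoc]
  · refine .of_forall fun p => ?_
    rw [Real.norm_eq_abs, abs_mul, abs_mul, mul_comm]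
    exact mul_le_mul_of_nonneg_right (hc _) (by positivity)

lemma tri_sub_left (hf : Nice f) (hf' : Nice f') (hg : Nice g) (hh : Nice h) :
    Tri (fun x => f x - f' x) g h = Tri f g h - Tri f' g h := by
  obtain ⟨c, hc⟩ := hh.2.2
  unfold Tri
  rw [← integral_sub (tri_integrable hf hg hh.1 hc) (tri_integrable hf' hg hh.1 hc)]
  congr 1; ext p; ring

lemma tri_swap (f g h : G → ℝ) : Tri f g h = Tri g f h := by
  unfold Tri
  rw [Measure.volume_eq_prod, ← integral_prod_swap]
  congr 1; ext p
  simp only [Prod.fst_swap, Prod.snd_swap]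
  rw [show -p.2 - p.1 = -p.1 - p.2 by abel]; ring

lemma tri_iter (hf : Nice f) (hg : Nice g) (hh : Nice h) :
    Tri f g h = ∫ x, f x * ∫ y, g y * h (-x - y) := by
  obtain ⟨c, hc⟩ := hh.2.2
  unfold Tri
  have := tri_integrable hf hg hh.1 hc
  rw [Measure.volume_eq_prod] at this ⊢
  rw [integral_prod _ this]
  congr 1; ext x
  rw [← integral_const_mul]
  congr 1; ext y; ring

lemma tri_rot (hf : Nice f) (hg : Nice g) (hh : Nice h) : Tri f g h = Tri f h g := by
  rw [tri_iter hf hg hh, tri_iter hf hh hg]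
  congr 1; ext x
  rw [← integral_sub_left_eq_self (fun y => h y * g (-x - y)) volume (-x)]
  congr 2; ext y
  simp [mul_comm]

lemma ts_swap (A B C : Set G) : TS A B C = TS B A C := tri_swap _ _ _

/-- The form does not change when the three arguments are translated by vectors of sum zero. -/
lemma tri_translate (f g h : G → ℝ) (a b c : G) (habc : a + b + c = 0) :
    Tri (fun x => f (x + a)) (fun x => g (x + b)) (fun x => h (x + c)) = Tri f g h := by
  symm
  unfold Tri
  have h1 : MeasurePreserving (fun x : G => x + a) := measurePreserving_add_right volume a
  have h1' : MeasurePreserving (fun x : G => x + b) := measurePreserving_add_right volume b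
  have h2 : MeasurePreserving (MeasurableEquiv.prodCongr (MeasurableEquiv.addRight a)
      (MeasurableEquiv.addRight b)) (volume : Measure (G × G)) (volume : Measure (G × G)) :=
    h1.prod h1'
  rw [← h2.integral_comp (MeasurableEquiv.measurableEmbedding _)]
  congr 1; ext p
  simp only [MeasurableEquiv.prodCongr, MeasurableEquiv.coe_mk, Equiv.prodCongr_apply,
    Prod.map_fst, Prod.map_snd]
  rw [show c = -a - b by rw [eq_sub_iff_add_eq, eq_neg_iff_add_eq_zero, ← habc]; abel]
  change f (p.1 + a) * g (p.2 + b) * h (-(p.1 + a) - (p.2 + b)) = _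
  congr 2; abel

lemma tri_comp {H : Type*} [AddCommGroup H] [MeasureSpace H] [SigmaFinite (volume : Measure H)]
    (e : G ≃ᵐ H) (he : MeasurePreserving e) (hadd : ∀ x y, e (-x - y) = - e x - e y)
    (f g h : H → ℝ) : Tri (f ∘ e) (g ∘ e) (h ∘ e) = Tri f g h := by
  unfold Tri
  have h2 : MeasurePreserving (MeasurableEquiv.prodCongr e e)
      (volume : Measure (G × G)) (volume : Measure (H × H)) := he.prod he
  rw [← h2.integral_comp (MeasurableEquiv.measurableEmbedding _)]
  congr 1; ext p
  simp [MeasurableEquiv.prodCongr, hadd]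

lemma ts_comp {H : Type*} [AddCommGroup H] [MeasureSpace H] [SigmaFinite (volume : Measure H)]
    (e : G ≃ᵐ H) (he : MeasurePreserving e) (hadd : ∀ x y, e (-x - y) = - e x - e y)
    (A B C : Set H) : TS (e ⁻¹' A) (e ⁻¹' B) (e ⁻¹' C) = TS A B C := by
  unfold TS
  rw [← tri_comp e he hadd (chi A)]
  rfl

lemma ts_translate (A B C : Set G) (a b c : G) (habc : a + b + c = 0) :
    TS ((fun x => x + a) ⁻¹' A) ((fun x => x + b) ⁻¹' B) ((fun x => x + c) ⁻¹' C) = TS A B C := by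
  unfold TS
  rw [← tri_translate (chi A) _ _ a b c habc]
  rfl

/-- Measurable with finite measure. -/
def Fin' (A : Set G) : Prop := MeasurableSet A ∧ volume A ≠ ⊤

lemma Fin'.nice {H : Type*} [MeasureSpace H] {A : Set H} (hA : Fin' A) : Nice (chi A) := nice_chi hA.1 hA.2

lemma ts_rot (hA : Fin' A) (hB : Fin' B) (hC : Fin' C) : TS A B C = TS A C B :=
  tri_rot hA.nice hB.nice hC.nice

lemma ts_lip1 (hA : Fin' A) (hA' : Fin' A') (hB : Fin' B) (hC : Fin' C) :
    |TS A B C - TS A' B C| ≤ vol (A ∆ A') * vol B := by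
  have nA := hA.nice
  have nA' := hA'.nice
  have nB := hB.nice
  have nC := hC.nice
  unfold TS
  rw [← tri_sub_left nA nA' nB nC]
  have := tri_abs_le (h := chi C) (c := 1) (nA.sub nA') nB
    (fun x => abs_chi_le _ _)
  rw [integral_abs_chi_sub hA.1 hA'.1, one_mul] at this
  simpa only [abs_of_nonneg (chi_nonneg B _), integral_chi hB.1] using this

/-- `TS` is Lipschitz for the symmetric difference distance, on sets of bounded measure. -/
lemma ts_lip (hA : Fin' A) (hB : Fin' B) (hC : Fin' C) (hA' : Fin' A') (hB' : Fin' B')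
    (hC' : Fin' C') (h1 : vol B ≤ m) (h2 : vol A' ≤ m) :
    |TS A B C - TS A' B' C'| ≤ m * (vol (A ∆ A') + vol (B ∆ B')
      + vol (C ∆ C')) := by
  have e1 := ts_lip1 hA hA' hB hC
  have e2 := ts_lip1 hB hB' hA' hC
  have e3 := ts_lip1 hC hC' hA' hB'
  rw [ts_swap B, ts_swap B'] at e2
  rw [ts_swap C, ts_swap C', ts_rot hA' hC hB', ts_rot hA' hC' hB'] at e3
  have d1 := measureReal_nonneg (μ := volume) (s := A ∆ A')
  have d2 := measureReal_nonneg (μ := volume) (s := B ∆ B')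
  have d3 := measureReal_nonneg (μ := volume) (s := C ∆ C')
  calc |TS A B C - TS A' B' C'| = |(TS A B C - TS A' B C) + (TS A' B C - TS A' B' C)
        + (TS A' B' C - TS A' B' C')| := by ring_nf
    _ ≤ |TS A B C - TS A' B C| + |TS A' B C - TS A' B' C| + |TS A' B' C - TS A' B' C'| :=
        abs_add_three _ _ _
    _ ≤ m * (vol (A ∆ A') + vol (B ∆ B')
      + vol (C ∆ C')) := by
        nlinarith [mul_le_mul_of_nonneg_left h1 d1, mul_le_mul_of_nonneg_left h2 d2,
          mul_le_mul_of_nonneg_left h2 d3]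

lemma Fin'.inter (hA : Fin' A) (hB : MeasurableSet B) : Fin' (A ∩ B) :=
  ⟨hA.1.inter hB, measure_ne_top_of_subset inter_subset_left hA.2⟩

lemma Fin'.symmDiff (hA : Fin' A) (hB : Fin' B) : Fin' (A ∆ B) :=
  ⟨hA.1.symmDiff hB.1, measure_ne_top_of_subset
    (symmDiff_le_sup (a := A) (b := B)) (measure_union_ne_top hA.2 hB.2)⟩

lemma sd_triangle (hA : Fin' A) (hB : Fin' B) (hC : Fin' C) :
    vol (A ∆ C) ≤ vol (A ∆ B) + vol (B ∆ C) := by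
  refine (measureReal_mono (symmDiff_triangle A B C) ?_).trans (measureReal_union_le _ _)
  exact measure_union_ne_top (hA.symmDiff hB).2 (hB.symmDiff hC).2

lemma abs_vol_sub (hA : Fin' A) (hB : Fin' B) : |vol A - vol B| ≤ vol (A ∆ B) := by
  have nA := hA.nice
  have nB := hB.nice
  rw [← integral_chi hA.1, ← integral_chi hB.1, ← integral_abs_chi_sub hA.1 hB.1,
    ← integral_sub nA.2.1 nB.2.1]
  exact abs_integral_le_integral_abs

instance instAddInvProd {n : ℕ} : (volume : Measure (Vec n × ℝ)).IsAddLeftInvariant :=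
  inferInstanceAs (((volume : Measure (Vec n)).prod (volume : Measure ℝ)).IsAddLeftInvariant)

instance instNegInvProd {n : ℕ} : (volume : Measure (Vec n × ℝ)).IsNegInvariant := by
  constructor
  exact ((Measure.measurePreserving_neg (volume : Measure (Vec n))).prod
    (Measure.measurePreserving_neg (volume : Measure ℝ))).map_eq

variable {h₁ h₂ x y h₃ c' : ℝ}

/-! ### Intervals on the line -/

/-- The overlap length of `[-h₁,h₁)` with `(-x-h₂,-x+h₂]`. -/
def ovl (h₁ h₂ x : ℝ) : ℝ := max 0 (min h₁ (-x + h₂) - max (-h₁) (-x - h₂))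

lemma ovl_anti (hxy : |x| ≤ |y|) : ovl h₁ h₂ y ≤ ovl h₁ h₂ x := by
  unfold ovl
  rcases le_total 0 x with hx | hx <;> rcases le_total 0 y with hy | hy
  all_goals
    simp only [abs_of_nonneg, abs_of_nonpos, hx, hy] at hxy
    refine max_le_max le_rfl ?_
    rcases min_cases h₁ (-x + h₂) with h | h <;> rcases max_cases (-h₁) (-x - h₂) with h' | h' <;>
    rcases min_cases h₁ (-y + h₂) with k | k <;> rcases max_cases (-h₁) (-y - h₂) with k' | k' <;>
    linarith

lemma continuous_ovl (h₁ h₂ : ℝ) : Continuous (ovl h₁ h₂) := by unfold ovl; fun_prop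

lemma integral_ovl (h₁ h₂ x : ℝ) :
    ∫ y, chi (Ico (-h₁) h₁) y * chi (Ico (-h₂) h₂) (-x - y) = ovl h₁ h₂ x := by
  have : (fun y => chi (Ico (-h₁) h₁) y * chi (Ico (-h₂) h₂) (-x - y))
      = chi (Ico (-h₁) h₁ ∩ Ioc (-x - h₂) (-x + h₂)) := by
    ext y
    rw [chi_inter]
    congr 1
    refine chi_congr ?_
    simp only [mem_Ioc, mem_Ico]
    constructor <;> rintro ⟨h1, h2⟩ <;> constructor <;> linarith
  rw [this, integral_chi (measurableSet_Ico.inter measurableSet_Ioc)]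
  have e : (Ico (-h₁) h₁ ∩ Ioc (-x - h₂) (-x + h₂) : Set ℝ) =ᵐ[volume]
      (Ioc (-h₁) h₁ ∩ Ioc (-x - h₂) (-x + h₂) : Set ℝ) :=
    Ico_ae_eq_Ioc.inter (Filter.EventuallyEq.refl _ _)
  rw [measureReal_congr e, Ioc_inter_Ioc, Real.volume_real_Ioc, ovl, max_comm]

lemma fin_Ico (a b : ℝ) : Fin' (Ico a b) := ⟨measurableSet_Ico, by simp⟩

/-- The form on three intervals, as a function of the sum of the centres. -/
def Phi (h₁ h₂ h₃ c : ℝ) : ℝ := ∫ x in (c - h₃)..(c + h₃), ovl h₁ h₂ x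

lemma ts_Ico (c₁ c₂ c₃ h₁ h₂ h₃ : ℝ) (h3 : 0 ≤ h₃) :
    TS (Ico (c₁ - h₁) (c₁ + h₁)) (Ico (c₂ - h₂) (c₂ + h₂)) (Ico (c₃ - h₃) (c₃ + h₃))
      = Phi h₁ h₂ h₃ (c₁ + c₂ + c₃) := by
  rw [← ts_translate _ _ _ c₁ c₂ (-c₁ - c₂) (by ring)]
  simp only [preimage_add_const_Ico]
  have e1 : Ico (c₁ - h₁ - c₁) (c₁ + h₁ - c₁) = Ico (-h₁) h₁ := by congr 1 <;> ring
  have e2 : Ico (c₂ - h₂ - c₂) (c₂ + h₂ - c₂) = Ico (-h₂) h₂ := by congr 1 <;> ring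
  have e3 : Ico (c₃ - h₃ - (-c₁ - c₂)) (c₃ + h₃ - (-c₁ - c₂))
    = Ico (c₁ + c₂ + c₃ - h₃) (c₁ + c₂ + c₃ + h₃) := by congr 1 <;> ring
  rw [e1, e2, e3]
  set c := c₁ + c₂ + c₃
  rw [ts_rot (fin_Ico _ _) (fin_Ico _ _) (fin_Ico _ _), ts_swap]
  unfold TS
  rw [tri_iter (fin_Ico _ _).nice
    (fin_Ico _ _).nice (fin_Ico _ _).nice]
  simp_rw [integral_ovl]
  rw [Phi, intervalIntegral.integral_of_le (by linarith), ← integral_Ico_eq_integral_Ioc,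
    ← integral_indicator measurableSet_Ico]
  congr 1; ext x
  by_cases h : x ∈ Ico (c - h₃) (c + h₃) <;> simp [chi, h]

lemma Phi_even (h₁ h₂ h₃ c : ℝ) : Phi h₁ h₂ h₃ (-c) = Phi h₁ h₂ h₃ c := by
  unfold Phi
  have : ∀ x, ovl h₁ h₂ (-x) = ovl h₁ h₂ x := fun x =>
    le_antisymm (ovl_anti (by simp)) (ovl_anti (by simp))
  rw [show c - h₃ = -(-c + h₃) by ring, show c + h₃ = -(-c - h₃) by ring,
    ← intervalIntegral.integral_comp_neg]
  simp_rw [this]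

/-- The form on three intervals decreases as the sum of the centres moves away from zero. -/
lemma Phi_anti (h3 : 0 ≤ h₃) (h : |c| ≤ |c'|) : Phi h₁ h₂ h₃ c' ≤ Phi h₁ h₂ h₃ c := by
  wlog hc : 0 ≤ c generalizing c
  · rw [← Phi_even _ _ _ c]; exact this (by simpa using h) (by linarith)
  wlog hc' : 0 ≤ c' generalizing c'
  · rw [← Phi_even _ _ _ c']; exact this (by simpa using h) (by linarith)
  rw [abs_of_nonneg hc, abs_of_nonneg hc'] at h
  have ii a b : IntervalIntegrable (ovl h₁ h₂) volume a b := (continuous_ovl h₁ h₂).intervalIntegrable a b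
  have key : Phi h₁ h₂ h₃ c - Phi h₁ h₂ h₃ c'
      = ∫ x in c..c', (ovl h₁ h₂ (x - h₃) - ovl h₁ h₂ (x + h₃)) := by
    rw [intervalIntegral.integral_sub, intervalIntegral.integral_comp_sub_right,
      intervalIntegral.integral_comp_add_right]
    · unfold Phi
      have a1 := intervalIntegral.integral_add_adjacent_intervals (ii (c - h₃) (c + h₃))
        (ii (c + h₃) (c' + h₃))
      have a2 := intervalIntegral.integral_add_adjacent_intervals (ii (c - h₃) (c' - h₃))
        (ii (c' - h₃) (c' + h₃))
      linarith
    · exact ((continuous_ovl h₁ h₂).comp (continuous_id.sub continuous_const)).intervalIntegrable ..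
    · exact ((continuous_ovl h₁ h₂).comp (continuous_id.add continuous_const)).intervalIntegrable ..
  have : 0 ≤ ∫ x in c..c', (ovl h₁ h₂ (x - h₃) - ovl h₁ h₂ (x + h₃)) := by
    refine intervalIntegral.integral_nonneg h fun x hx => sub_nonneg.2 (ovl_anti ?_)
    have : 0 ≤ x := hc.trans hx.1
    rw [abs_of_nonneg (by linarith : 0 ≤ x + h₃), abs_le]
    constructor <;> linarith
  linarith

variable {t t' η t₀ : ℝ}

/-! ### The sliding flow on finite unions of intervals -/

lemma Nice.add (hf : Nice f) (hg : Nice g) : Nice (fun x => f x + g x) := by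
  obtain ⟨h1, h2, c, hc⟩ := hf
  obtain ⟨k1, k2, c', hc'⟩ := hg
  exact ⟨h1.add k1, h2.add k2, c + c', fun x => (abs_add_le _ _).trans (add_le_add (hc x) (hc' x))⟩

lemma nice_zero : Nice (fun _ : G => (0 : ℝ)) :=
  ⟨measurable_const, integrable_zero _ _ _, 0, fun _ => by simp⟩

lemma nice_sum {ι : Type*} (s : Finset ι) (f : ι → G → ℝ) (hf : ∀ i, Nice (f i)) :
    Nice (fun x => ∑ i ∈ s, f i x) := by
  classical
  induction s using Finset.induction_on with
  | empty => simpa using nice_zero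
  | insert i s hi ih => simpa [Finset.sum_insert hi] using (hf i).add ih

lemma tri_add_left (hf : Nice f) (hf' : Nice f') (hg : Nice g) (hh : Nice h) :
    Tri (fun x => f x + f' x) g h = Tri f g h + Tri f' g h := by
  obtain ⟨c, hc⟩ := hh.2.2
  unfold Tri
  rw [← integral_add (tri_integrable hf hg hh.1 hc) (tri_integrable hf' hg hh.1 hc)]
  congr 1; ext p; ring

lemma tri_sum_left {ι : Type*} (s : Finset ι) (f : ι → G → ℝ) (hf : ∀ i, Nice (f i)) (hg : Nice g)
    (hh : Nice h) : Tri (fun x => ∑ i ∈ s, f i x) g h = ∑ i ∈ s, Tri (f i) g h := by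
  classical
  induction s using Finset.induction_on with
  | empty => simp [Tri]
  | insert i s hi ih =>
    simp only [Finset.sum_insert hi]
    rw [tri_add_left (hf i) (nice_sum s f hf) hg hh, ih]

lemma tri_sum {ι : Type*} (s₁ s₂ s₃ : Finset ι) (f : ι → G → ℝ) (hf : ∀ i, Nice (f i)) :
    Tri (fun x => ∑ i ∈ s₁, f i x) (fun x => ∑ i ∈ s₂, f i x) (fun x => ∑ i ∈ s₃, f i x)
      = ∑ i ∈ s₁, ∑ j ∈ s₂, ∑ k ∈ s₃, Tri (f i) (f j) (f k) := by
  rw [tri_sum_left s₁ f hf (nice_sum _ f hf) (nice_sum _ f hf)]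
  refine Finset.sum_congr rfl fun i _ => ?_
  rw [tri_swap, tri_sum_left s₂ f hf (hf i) (nice_sum _ f hf)]
  refine Finset.sum_congr rfl fun j _ => ?_
  rw [tri_swap, tri_rot (hf i) (hf j) (nice_sum _ f hf), tri_swap,
    tri_sum_left s₃ f hf (hf i) (hf j)]
  refine Finset.sum_congr rfl fun k _ => ?_
  rw [tri_swap, tri_rot (hf i) (hf k) (hf j)]

section Flow
variable {ι Λ : Type*} [DecidableEq ι] [DecidableEq Λ] (lab : ι → Λ)

/-- The interval `[c-h,c+h)`. -/
def J (c h : ℝ) : Set ℝ := Ico (c - h) (c + h)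

/-- The union of the intervals of the configuration carrying the label `a`. -/
def FS (s : Finset ι) (c h : ι → ℝ) (a : Λ) : Set ℝ :=
  ⋃ i ∈ s.filter (fun i => lab i = a), J (c i) (h i)

/-- Intervals with the same label do not overlap. -/
def Valid (s : Finset ι) (c h : ι → ℝ) : Prop :=
  (∀ i ∈ s, 0 < h i) ∧ ∀ i ∈ s, ∀ j ∈ s, i ≠ j → lab i = lab j → h i + h j ≤ |c i - c j|

/-- One step of the flow on a family of subsets of the line: each set moves by at most `η`, keeps
its measure, and no value of the trilinear form decreases. -/
def Step1 (η : ℝ) (A A' : Λ → Set ℝ) : Prop :=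
  (∀ a, Fin' (A' a)) ∧ (∀ a, vol (A a ∆ A' a) ≤ η) ∧
  (∀ a, vol (A' a) = vol (A a)) ∧
  ∀ a b c, TS (A a) (A b) (A c) ≤ TS (A' a) (A' b) (A' c)

lemma nice_J (c h : ℝ) : Nice (chi (J c h)) := (fin_Ico _ _).nice

lemma fin_FS (s : Finset ι) (c h : ι → ℝ) (a : Λ) : Fin' (FS lab s c h a) := by
  refine ⟨Finset.measurableSet_biUnion _ fun i _ => measurableSet_Ico, ?_⟩
  refine ((measure_biUnion_finset_le _ _).trans_lt ?_).ne
  exact ENNReal.sum_lt_top.2 fun i _ => (fin_Ico _ _).2.lt_top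

variable {lab} {s : Finset ι} {c h : ι → ℝ}

lemma chi_FS (hv : Valid lab s c h) (a : Λ) :
    chi (FS lab s c h a) = fun x => ∑ i ∈ s with lab i = a, chi (J (c i) (h i)) x := by
  ext x
  by_cases hx : x ∈ FS lab s c h a
  · rw [chi_of_mem hx]
    simp only [FS, mem_iUnion, exists_prop] at hx
    obtain ⟨i, hi, hxi⟩ := hx
    rw [Finset.sum_eq_single_of_mem i hi, chi_of_mem hxi]
    intro j hj hji
    refine chi_of_notMem fun hxj => ?_
    simp only [Finset.mem_filter] at hi hj
    have := hv.2 i hi.1 j hj.1 (Ne.symm hji) (hi.2.trans hj.2.symm)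
    simp only [J, mem_Ico] at hxi hxj
    have : |c i - c j| < h i + h j := by rw [abs_lt]; constructor <;> linarith
    linarith
  · rw [chi_of_notMem hx, Finset.sum_eq_zero]
    intro i hi
    refine chi_of_notMem fun hxi => hx ?_
    simp only [FS, mem_iUnion, exists_prop]
    exact ⟨i, hi, hxi⟩

lemma vol_FS (hv : Valid lab s c h) (a : Λ) :
    vol (FS lab s c h a) = ∑ i ∈ s with lab i = a, 2 * h i := by
  rw [← integral_chi (fin_FS lab s c h a).1, chi_FS hv,
    integral_finsetSum _ fun i _ => (nice_J _ _).2.1]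
  refine Finset.sum_congr rfl fun i hi => ?_
  rw [integral_chi (show MeasurableSet (J (c i) (h i)) from measurableSet_Ico), J, Real.volume_real_Ico_of_le]
  · ring
  · linarith [hv.1 i (Finset.mem_filter.1 hi).1]

lemma ts_FS (hv : Valid lab s c h) (a b d : Λ) :
    TS (FS lab s c h a) (FS lab s c h b) (FS lab s c h d) =
      ∑ i ∈ s with lab i = a, ∑ j ∈ s with lab j = b,
        ∑ k ∈ s with lab k = d, Phi (h i) (h j) (h k) (c i + c j + c k) := by
  unfold TS
  rw [chi_FS hv, chi_FS hv, chi_FS hv, tri_sum _ _ _ _ fun i => nice_J _ _]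
  exact Finset.sum_congr rfl fun i hi => Finset.sum_congr rfl fun j hj =>
    Finset.sum_congr rfl fun k hk => ts_Ico _ _ _ _ _ _ (hv.1 k (Finset.mem_filter.1 hk).1).le

lemma vol_sd_J (c c' h : ℝ) : vol (J c h ∆ J c' h) ≤ 2 * |c - c'| := by
  wlog hcc : c ≤ c' generalizing c c'
  · rw [symmDiff_comm, abs_sub_comm]; exact this _ _ (by linarith)
  have : J c h ∆ J c' h ⊆ Ico (c - h) (c' - h) ∪ Ico (c + h) (c' + h) := by
    intro x hx
    simp only [J, mem_symmDiff, mem_Ico, mem_union, not_and_or, not_le, not_lt] at hx ⊢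
    rcases hx with ⟨⟨h1, h2⟩, h3 | h3⟩ | ⟨⟨h1, h2⟩, h3 | h3⟩
    · left; constructor <;> linarith
    · linarith
    · linarith
    · right; constructor <;> linarith
  refine (measureReal_mono this (measure_union_ne_top (fin_Ico _ _).2 (fin_Ico _ _).2)).trans
    ((measureReal_union_le _ _).trans ?_)
  rw [Real.volume_real_Ico_of_le (by linarith), Real.volume_real_Ico_of_le (by linarith),
    abs_of_nonpos (by linarith)]
  linarith

/-- Moving the centres of the intervals towards the origin by a common factor. -/
lemma step_scale (ht' : 0 ≤ t') (htt : t' ≤ t) (hv : Valid lab s (fun i => t * c i) h)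
    (hv' : Valid lab s (fun i => t' * c i) h) (hη : (t - t') * ∑ i ∈ s, 2 * |c i| ≤ η) :
    Step1 η (FS lab s (fun i => t * c i) h) (FS lab s (fun i => t' * c i) h) := by
  refine ⟨fun a => fin_FS .., fun a => ?_, fun a => ?_, fun a b d => ?_⟩
  · refine le_trans ?_ hη
    rw [← integral_abs_chi_sub (fin_FS ..).1 (fin_FS ..).1, chi_FS hv, chi_FS hv']
    have n1 i : Integrable fun x => |chi (J (t * c i) (h i)) x - chi (J (t' * c i) (h i)) x| :=
      ((nice_J _ _).sub (nice_J _ _)).2.1.abs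
    calc ∫ x, |∑ i ∈ s with lab i = a, chi (J (t * c i) (h i)) x
          - ∑ i ∈ s with lab i = a, chi (J (t' * c i) (h i)) x|
        ≤ ∫ x, ∑ i ∈ s with lab i = a,
          |chi (J (t * c i) (h i)) x - chi (J (t' * c i) (h i)) x| := by
          refine integral_mono ?_ (integrable_finsetSum _ fun i _ => n1 i) fun x => ?_
          · exact ((nice_sum _ (fun i => chi (J (t * c i) (h i))) fun i => nice_J _ _).sub
              (nice_sum _ (fun i => chi (J (t' * c i) (h i))) fun i => nice_J _ _)).2.1.abs
          · simp only
            rw [← Finset.sum_sub_distrib]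
            exact Finset.abs_sum_le_sum_abs _ _
      _ = ∑ i ∈ s with lab i = a,
          vol ((J (t * c i) (h i)) ∆ (J (t' * c i) (h i))) := by
          rw [integral_finsetSum _ fun i _ => n1 i]
          exact Finset.sum_congr rfl fun i _ => integral_abs_chi_sub (fin_Ico _ _).1 (fin_Ico _ _).1
      _ ≤ ∑ i ∈ s with lab i = a, (t - t') * (2 * |c i|) := by
          refine Finset.sum_le_sum fun i _ => (vol_sd_J _ _ _).trans (le_of_eq ?_)
          rw [← sub_mul, abs_mul, abs_of_nonneg (by linarith : 0 ≤ t - t')]; ring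
      _ ≤ ∑ i ∈ s, (t - t') * (2 * |c i|) := by
          refine Finset.sum_le_sum_of_subset_of_nonneg (Finset.filter_subset _ _) fun i _ _ => ?_
          have : 0 ≤ t - t' := by linarith
          positivity
      _ = _ := by rw [Finset.mul_sum]
  · rw [vol_FS hv, vol_FS hv']
  · rw [ts_FS hv, ts_FS hv']
    refine Finset.sum_le_sum fun i hi => Finset.sum_le_sum fun j hj =>
      Finset.sum_le_sum fun k hk => ?_
    refine Phi_anti (hv.1 k (Finset.mem_filter.1 hk).1).le ?_
    rw [← mul_add, ← mul_add, ← mul_add, ← mul_add, abs_mul, abs_mul, abs_of_nonneg ht',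
      abs_of_nonneg (ht'.trans htt)]
    gcongr

lemma valid_scale (hv : Valid lab s c h) (h0 : 0 ≤ t₀) (ht : t₀ ≤ t)
    (hs : ∀ i ∈ s, ∀ j ∈ s, i ≠ j → lab i = lab j → h i + h j ≤ t₀ * |c i - c j|) :
    Valid lab s (fun i => t * c i) h := by
  refine ⟨hv.1, fun i hi j hj hij hl => (hs i hi j hj hij hl).trans ?_⟩
  simp only
  rw [← mul_sub, abs_mul, abs_of_nonneg (h0.trans ht)]
  gcongr

lemma chain_scale (hv : Valid lab s c h) (h0 : 0 ≤ t₀) (h1 : t₀ ≤ 1)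
    (hs : ∀ i ∈ s, ∀ j ∈ s, i ≠ j → lab i = lab j → h i + h j ≤ t₀ * |c i - c j|) (hη : 0 < η) :
    Relation.ReflTransGen (Step1 η) (FS lab s c h) (FS lab s (fun i => t₀ * c i) h) := by
  obtain ⟨N, hN⟩ := exists_nat_gt ((∑ i ∈ s, 2 * |c i|) / η)
  have hS : 0 ≤ ∑ i ∈ s, 2 * |c i| := Finset.sum_nonneg fun i _ => by positivity
  have hN0 := lt_of_le_of_lt (by positivity) hN
  have key (k : ℕ) : k ≤ N → Relation.ReflTransGen (Step1 η) (FS lab s c h)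
      (FS lab s (fun i => (1 - k / N * (1 - t₀)) * c i) h) := by
    induction k with
    | zero => intro _; simp only [Nat.cast_zero, zero_div, zero_mul, sub_zero, one_mul]; rfl
    | succ k ih =>
      intro hk
      refine (ih (by omega)).tail ?_
      have hk' : ((k : ℝ) + 1) / N ≤ 1 := by rw [div_le_one hN0]; exact_mod_cast hk
      have hk1 : (k : ℝ) / N ≤ (k + 1) / N := by gcongr; linarith
      have a1 : t₀ ≤ 1 - (k + 1) / N * (1 - t₀) := by nlinarith
      have a2 : 1 - (k + 1) / N * (1 - t₀) ≤ 1 - k / N * (1 - t₀) := by nlinarith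
      push_cast
      refine step_scale (h0.trans a1) a2 (valid_scale hv h0 (a1.trans a2) hs)
        (valid_scale hv h0 a1 hs) ?_
      rw [show (1 - k / N * (1 - t₀) - (1 - (k + 1) / N * (1 - t₀))) = (1 - t₀) / N
        by field_simp; ring]
      rw [div_lt_iff₀ hη] at hN
      rw [div_mul_eq_mul_div, div_le_iff₀ hN0]
      nlinarith
  have := key N le_rfl
  rwa [div_self hN0.ne', one_mul, sub_sub_cancel] at this

/-- Two touching intervals with the same label can be replaced by a single one. -/
lemma merge (hv : Valid lab s c h) {i j : ι} (hi : i ∈ s) (hj : j ∈ s) (hij : i ≠ j)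
    (hl : lab i = lab j) (hc : c j = c i + (h i + h j)) :
    Valid lab (s.erase j) (Function.update c i (c i + h j)) (Function.update h i (h i + h j)) ∧
    FS lab (s.erase j) (Function.update c i (c i + h j)) (Function.update h i (h i + h j))
      = FS lab s c h := by
  have pi := hv.1 i hi
  have pj := hv.1 j hj
  have sep : ∀ k ∈ s, k ≠ i → k ≠ j → lab k = lab i →
      h k + (h i + h j) ≤ |c k - (c i + h j)| := by
    intro k hk hki hkj hkl
    have pk := hv.1 k hk
    have e1 := hv.2 k hk i hi hki hkl
    have e2 := hv.2 k hk j hj hkj (hkl.trans hl)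
    rw [hc] at e2
    rcases abs_cases (c k - c i) with h1 | h1 <;>
    rcases abs_cases (c k - (c i + (h i + h j))) with h2 | h2 <;>
    rcases abs_cases (c k - (c i + h j)) with h3 | h3 <;> linarith
  refine ⟨⟨fun k hk => ?_, fun k hk l hl' hkl hlab => ?_⟩, ?_⟩
  · rw [Finset.mem_erase] at hk
    by_cases hki : k = i
    · subst hki; simp; linarith
    · rw [Function.update_of_ne hki]; exact hv.1 k hk.2
  · rw [Finset.mem_erase] at hk hl'
    by_cases hki : k = i
    · subst hki
      rw [Function.update_self, Function.update_self, Function.update_of_ne (Ne.symm hkl),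
        Function.update_of_ne (Ne.symm hkl), abs_sub_comm, add_comm]
      exact sep l hl'.2 (Ne.symm hkl) hl'.1 hlab.symm
    · by_cases hli : l = i
      · subst hli
        rw [Function.update_self, Function.update_self, Function.update_of_ne hki,
          Function.update_of_ne hki]
        exact sep k hk.2 hki hk.1 hlab
      · rw [Function.update_of_ne hki, Function.update_of_ne hki, Function.update_of_ne hli,
          Function.update_of_ne hli]
        exact hv.2 k hk.2 l hl'.2 hkl hlab
  · ext a x
    simp only [FS, mem_iUnion, exists_prop, Finset.mem_filter, Finset.mem_erase]
    constructor
    · rintro ⟨k, ⟨⟨hkj, hks⟩, hka⟩, hx⟩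
      by_cases hki : k = i
      · subst hki
        simp only [Function.update_self, J, mem_Ico] at hx
        by_cases hx2 : x < c k + h k
        · exact ⟨k, ⟨hks, hka⟩, by simp only [J, mem_Ico]; constructor <;> linarith⟩
        · exact ⟨j, ⟨hj, hl ▸ hka⟩, by simp only [J, mem_Ico]; constructor <;> linarith⟩
      · rw [Function.update_of_ne hki, Function.update_of_ne hki] at hx
        exact ⟨k, ⟨hks, hka⟩, hx⟩
    · rintro ⟨k, ⟨hks, hka⟩, hx⟩
      by_cases hki : k = i
      · subst hki
        refine ⟨k, ⟨⟨hij, hks⟩, hka⟩, ?_⟩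
        simp only [J, mem_Ico, Function.update_self] at hx ⊢
        constructor <;> linarith
      by_cases hkj : k = j
      · subst hkj
        refine ⟨i, ⟨⟨hij, hi⟩, hl ▸ hka⟩, ?_⟩
        simp only [J, mem_Ico, Function.update_self] at hx ⊢
        constructor <;> linarith
      · refine ⟨k, ⟨⟨hkj, hks⟩, hka⟩, ?_⟩
        rwa [Function.update_of_ne hki, Function.update_of_ne hki]

/-- The sliding flow leads to centred intervals. -/
lemma flow (hη : 0 < η) : ∀ (N : ℕ) (s : Finset ι) (c h : ι → ℝ), s.card = N →
    Valid lab s c h → Relation.ReflTransGen (Step1 η) (FS lab s c h)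
      (fun a => Ico (-(vol (FS lab s c h a) / 2)) (vol (FS lab s c h a) / 2)) := by
  intro N
  induction N with
  | zero =>
    intro s c h hs _
    rw [Finset.card_eq_zero] at hs
    subst hs
    have : ∀ a, FS lab ∅ c h a = ∅ := fun a => by simp [FS]
    convert Relation.ReflTransGen.refl using 2 with a
    rw [this]; simp
  | succ N ih =>
    intro s c h hs hv
    -- the pairs of distinct intervals with a common label
    set P := (s ×ˢ s).filter (fun p => p.1 ≠ p.2 ∧ lab p.1 = lab p.2) with hP
    have memP : ∀ p, p ∈ P ↔ (p.1 ∈ s ∧ p.2 ∈ s) ∧ p.1 ≠ p.2 ∧ lab p.1 = lab p.2 := by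
      intro p; simp [hP]
    rcases P.eq_empty_or_nonempty with hPe | hPn
    · have hs0 : ∀ i ∈ s, ∀ j ∈ s, i ≠ j → lab i = lab j → h i + h j ≤ 0 * |c i - c j| := by
        intro i hi j hj hij hl
        have : (i, j) ∈ P := (memP _).2 ⟨⟨hi, hj⟩, hij, hl⟩
        rw [hPe] at this; simp at this
      have hch := chain_scale hv le_rfl zero_le_one hs0 hη
      convert hch using 2 with a
      rw [vol_FS hv]
      rcases (s.filter (fun i => lab i = a)).eq_empty_or_nonempty with he | ⟨i, hi⟩
      · simp [FS, he]
      · have : s.filter (fun i => lab i = a) = {i} := by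
          refine Finset.eq_singleton_iff_unique_mem.2 ⟨hi, fun j hj => ?_⟩
          by_contra hji
          simp only [Finset.mem_filter] at hi hj
          have : (j, i) ∈ P := (memP _).2 ⟨⟨hj.1, hi.1⟩, hji, hj.2.trans hi.2.symm⟩
          rw [hPe] at this; simp at this
        simp [FS, this, J]
    · obtain ⟨p, hp, hmax⟩ := P.exists_max_image
        (fun p => (h p.1 + h p.2) / |c p.1 - c p.2|) hPn
      have pos : ∀ q ∈ P, 0 < h q.1 + h q.2 ∧ h q.1 + h q.2 ≤ |c q.1 - c q.2| := by
        intro q hq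
        obtain ⟨⟨q1, q2⟩, q3, q4⟩ := (memP q).1 hq
        exact ⟨add_pos (hv.1 _ q1) (hv.1 _ q2), hv.2 _ q1 _ q2 q3 q4⟩
      set t₀ := (h p.1 + h p.2) / |c p.1 - c p.2|
      obtain ⟨pp1, pp2⟩ := pos p hp
      have hd := pp1.trans_le pp2
      have t0 : 0 < t₀ := div_pos pp1 hd
      have t1 : t₀ ≤ 1 := (div_le_one hd).2 pp2
      have hs0 : ∀ i ∈ s, ∀ j ∈ s, i ≠ j → lab i = lab j → h i + h j ≤ t₀ * |c i - c j| := by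
        intro i hi j hj hij hl
        have hq : (i, j) ∈ P := (memP _).2 ⟨⟨hi, hj⟩, hij, hl⟩
        have := hmax _ hq
        simp only at this
        obtain ⟨q1, q2⟩ := pos _ hq
        rwa [div_le_iff₀ (q1.trans_le q2)] at this
      have hch := chain_scale hv t0.le t1 hs0 hη
      have hv0 := valid_scale hv t0.le le_rfl hs0
      -- order the touching pair
      have : ∃ i ∈ s, ∃ j ∈ s, i ≠ j ∧ lab i = lab j ∧
          t₀ * c j = t₀ * c i + (h i + h j) := by
        obtain ⟨⟨q1, q2⟩, q3, q4⟩ := (memP p).1 hp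
        have e : t₀ * |c p.1 - c p.2| = h p.1 + h p.2 := div_mul_cancel₀ _ hd.ne'
        rcases le_total (c p.1) (c p.2) with hle | hle
        · rw [abs_of_nonpos (by linarith)] at e
          exact ⟨p.1, q1, p.2, q2, q3, q4, by linarith⟩
        · rw [abs_of_nonneg (by linarith)] at e
          exact ⟨p.2, q2, p.1, q1, q3.symm, q4.symm, by linarith⟩
      obtain ⟨i, hi, j, hj, hij, hl, hcj⟩ := this
      obtain ⟨m1, m2⟩ := merge hv0 hi hj hij hl hcj
      have := ih _ _ _ (by rw [Finset.card_erase_of_mem hj, hs]; rfl) m1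
      rw [m2] at this
      have hvol a : vol (FS lab s (fun i => t₀ * c i) h a)
          = vol (FS lab s c h a) := by rw [vol_FS hv, vol_FS hv0]
      simp_rw [hvol] at this
      exact hch.trans this

end Flow

variable {A B C E : Set (Vec n × ℝ)}

/-! ### Slicing along the last coordinate -/

/-- The fibre of a subset of `ℝⁿ × ℝ`. -/
def fib (E : Set (Vec n × ℝ)) (w : Vec n) : Set ℝ := Prod.mk w ⁻¹' E

lemma measurableSet_fib (hE : MeasurableSet E) (w : Vec n) :
    MeasurableSet (fib E w) := measurable_prodMk_left hE

/-- The exchange `((a,s),(b,t)) ↦ ((a,b),(s,t))` preserves Lebesgue measure. -/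
lemma mp_comm4 : MeasurePreserving
    (fun q : (Vec n × Vec n) × (ℝ × ℝ) => ((q.1.1, q.2.1), (q.1.2, q.2.2)))
    (volume : Measure ((Vec n × Vec n) × (ℝ × ℝ)))
    (volume : Measure ((Vec n × ℝ) × (Vec n × ℝ))) := by
  have a1 := volume_preserving_prodAssoc (α₁ := Vec n) (β₁ := Vec n) (γ₁ := ℝ × ℝ)
  have a2 := (MeasurePreserving.id (volume : Measure (Vec n))).prod
    ((volume_preserving_prodAssoc (α₁ := Vec n) (β₁ := ℝ) (γ₁ := ℝ)).symm)
  have a3 := (MeasurePreserving.id (volume : Measure (Vec n))).prod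
    ((Measure.measurePreserving_swap (μ := (volume : Measure (Vec n)))
      (ν := (volume : Measure ℝ))).prod (MeasurePreserving.id (volume : Measure ℝ)))
  have a4 := (MeasurePreserving.id (volume : Measure (Vec n))).prod
    (volume_preserving_prodAssoc (α₁ := ℝ) (β₁ := Vec n) (γ₁ := ℝ))
  have a5 := (volume_preserving_prodAssoc (α₁ := Vec n) (β₁ := ℝ) (γ₁ := Vec n × ℝ)).symm
  exact a5.comp (a4.comp (a3.comp (a2.comp a1)))

lemma emb_comm4 : MeasurableEmbedding
    (fun q : (Vec n × Vec n) × (ℝ × ℝ) => ((q.1.1, q.2.1), (q.1.2, q.2.2))) :=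
  (MeasurableEquiv.mk ⟨fun q : (Vec n × Vec n) × (ℝ × ℝ) => ((q.1.1, q.2.1), (q.1.2, q.2.2)),
    fun q => ((q.1.1, q.2.1), (q.1.2, q.2.2)), fun _ => rfl, fun _ => rfl⟩
    (by dsimp; fun_prop) (by dsimp; fun_prop)).measurableEmbedding

lemma slice_integrable (hA : Fin' A) (hB : Fin' B) (hC : Fin' C) :
    Integrable (fun q : (Vec n × Vec n) × (ℝ × ℝ) =>
      chi (fib A q.1.1) q.2.1 * chi (fib B q.1.2) q.2.2
        * chi (fib C (-q.1.1 - q.1.2)) (-q.2.1 - q.2.2)) := by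
  have h := tri_integrable hA.nice hB.nice (measurable_chi hC.1) (c := 1)
    (fun x => abs_chi_le _ _)
  exact (mp_comm4.integrable_comp_emb emb_comm4).2 h

/-- Fubini for the trilinear form. -/
lemma ts_slice (hA : Fin' A) (hB : Fin' B) (hC : Fin' C) :
    TS A B C = ∫ p : Vec n × Vec n, TS (fib A p.1) (fib B p.2) (fib C (-p.1 - p.2)) := by
  have h := slice_integrable hA hB hC
  rw [Measure.volume_eq_prod] at h
  have h2 := integral_prod _ h
  unfold TS Tri
  rw [← h2]
  exact (mp_comm4.integral_comp emb_comm4 _).symm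

lemma ts_slice_integrable (hA : Fin' A) (hB : Fin' B) (hC : Fin' C) :
    Integrable (fun p : Vec n × Vec n => TS (fib A p.1) (fib B p.2) (fib C (-p.1 - p.2))) := by
  have h := slice_integrable hA hB hC
  rw [Measure.volume_eq_prod] at h
  exact h.integral_prod_left

lemma fib_ae (hA : Fin' A) : ∀ᵐ w, Fin' (fib A w) := by
  have h := hA.2
  rw [Measure.volume_eq_prod] at h
  filter_upwards [Measure.ae_measure_lt_top hA.1 h] with w hw
  exact ⟨measurableSet_fib hA.1 w, hw.ne⟩

lemma vol_slice (hA : Fin' A) : vol A = ∫ w, vol (fib A w) := by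
  have h := hA.2
  have h1 : Integrable (chi A) := hA.nice.2.1
  rw [Measure.volume_eq_prod] at h h1
  rw [← integral_chi hA.1, Measure.volume_eq_prod, integral_prod _ h1]
  refine integral_congr_ae ?_
  filter_upwards with w
  rw [← integral_chi (measurableSet_fib hA.1 w)]
  rfl

lemma vol_fib_integrable (hA : Fin' A) : Integrable fun w => vol (fib A w) := by
  have h1 := hA.nice.2.1
  rw [Measure.volume_eq_prod] at h1
  refine h1.integral_prod_left.congr ?_
  filter_upwards with w
  rw [← integral_chi (measurableSet_fib hA.1 w)]
  rfl

lemma measurable_vol_fib (hA : MeasurableSet A) : Measurable (fun w => vol (fib A w)) :=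
  (measurable_measure_prodMk_left hA).ennreal_toReal

lemma fib_symmDiff (A B : Set (Vec n × ℝ)) (w : Vec n) : fib (A ∆ B) w = fib A w ∆ fib B w := rfl

variable {a b τ ζ η' τ' ζ' ε R : ℝ} {A B : Set ℝ} {K : Set (Vec n)}

/-! ### Steiner symmetrization -/

/-- The centred interval `[-m/2,m/2)` of length `m`. -/
def cI (m : ℝ) : Set ℝ := Ico (-(m / 2)) (m / 2)

lemma fin_cI (m : ℝ) : Fin' (cI m) := fin_Ico _ _

lemma vol_cI (hm : 0 ≤ m) : vol (cI m) = m := by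
  rw [cI, Real.volume_real_Ico_of_le (by linarith)]; ring

lemma vol_sd_cI (ha : 0 ≤ a) (hb : 0 ≤ b) : vol (cI a ∆ cI b) = |a - b| := by
  wlog hab : a ≤ b generalizing a b
  · rw [symmDiff_comm, abs_sub_comm]; exact this hb ha (by linarith)
  have hs : cI a ⊆ cI b := Ico_subset_Ico (by linarith) (by linarith)
  rw [symmDiff_of_le hs, measureReal_sdiff hs (fin_cI a).1 (fin_cI b).2, vol_cI ha, vol_cI hb,
    abs_of_nonpos (by linarith)]
  ring

/-- Steiner symmetrization along the last coordinate. -/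
def St (E : Set (Vec n × ℝ)) : Set (Vec n × ℝ) := {p | p.2 ∈ cI (vol (fib E p.1))}

lemma fib_St (E : Set (Vec n × ℝ)) (w : Vec n) : fib (St E) w = cI (vol (fib E w)) := rfl

lemma measurableSet_St (hE : MeasurableSet E) : MeasurableSet (St E) := by
  have h : Measurable (fun p : Vec n × ℝ => vol (fib E p.1)) :=
    (measurable_vol_fib hE).comp measurable_fst
  exact (measurableSet_le (h.div_const 2).neg measurable_snd).inter
    (measurableSet_lt measurable_snd (h.div_const 2))

lemma volume_St (hE : Fin' E) : volume (St E) = volume E := by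
  rw [Measure.volume_eq_prod, Measure.prod_apply (measurableSet_St hE.1), Measure.prod_apply hE.1]
  refine lintegral_congr_ae ?_
  filter_upwards [fib_ae hE] with w hw
  have h1 := vol_cI (measureReal_nonneg (μ := volume) (s := fib E w))
  rw [← fib_St] at h1
  exact (measureReal_eq_measureReal_iff (show volume (fib (St E) w) ≠ ⊤ by rw [fib_St]; exact (fin_cI _).2) hw.2).1 h1

lemma fin_St (hE : Fin' E) : Fin' (St E) :=
  ⟨measurableSet_St hE.1, by rw [volume_St hE]; exact hE.2⟩

lemma vol_St (hE : Fin' E) : vol (St E) = vol E := by simp [Measure.real, volume_St hE]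

/-- Steiner symmetrization is a contraction for the symmetric difference distance. -/
lemma St_contract {A B : Set (Vec n × ℝ)} (hA : Fin' A) (hB : Fin' B) :
    vol (St A ∆ St B) ≤ vol (A ∆ B) := by
  rw [vol_slice ((fin_St hA).symmDiff (fin_St hB)), vol_slice (hA.symmDiff hB)]
  refine integral_mono_ae (vol_fib_integrable ((fin_St hA).symmDiff (fin_St hB)))
    (vol_fib_integrable (hA.symmDiff hB)) ?_
  filter_upwards [fib_ae hA, fib_ae hB] with w hw hw'
  rw [fib_symmDiff, fib_symmDiff, fib_St, fib_St,
    vol_sd_cI measureReal_nonneg measureReal_nonneg]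
  exact abs_vol_sub hw hw'

/-! ### Chains -/

/-- The value of the trilinear form at a triple of sets. -/
def T3 (E : Fin 3 → Set G) : ℝ := TS (E 0) (E 1) (E 2)

/-- A link of a chain: the sets move by at most `η`, the value of the form stays at least `τ`,
and the measures stay within `ζ` of `m`. -/
def Lk (η τ ζ : ℝ) (m : Fin 3 → ℝ) (E F : Fin 3 → Set G) : Prop :=
  (∀ j, Fin' (F j)) ∧ (∀ j, vol (E j ∆ F j) ≤ η) ∧
  (∀ j, |vol (F j) - m j| ≤ ζ) ∧ τ ≤ T3 F

lemma Lk.mono {m m' : Fin 3 → ℝ} {E F : Fin 3 → Set G} (h : Lk η τ ζ m E F) (h1 : η ≤ η')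
    (h2 : τ' ≤ τ) (h3 : ∀ j, |m j - m' j| + ζ ≤ ζ') : Lk η' τ' ζ' m' E F :=
  ⟨h.1, fun j => (h.2.1 j).trans h1, fun j => by
    have := h.2.2.1 j
    have h3 := h3 j
    have h4 := abs_sub_le (vol (F j)) (m j) (m' j)
    linarith, h2.trans h.2.2.2⟩

/-- `F` can be reached from `E` by chains with arbitrarily small links along which the form
essentially does not decrease. -/
def Reach (E F : Fin 3 → Set G) : Prop :=
  ∀ η > 0, ∀ ζ > 0, Relation.ReflTransGen
    (Lk η (T3 E - ζ) ζ (fun j => vol (E j))) E F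

lemma Reach.spec {E F : Fin 3 → Set G} (h : Reach E F) (hE : ∀ j, Fin' (E j)) :
    (∀ j, Fin' (F j)) ∧ (∀ j, vol (F j) = vol (E j)) ∧ T3 E ≤ T3 F := by
  have key : ∀ ζ > 0, (∀ j, Fin' (F j)) ∧ (∀ j, |vol (F j) - vol (E j)| ≤ ζ) ∧
      T3 E - ζ ≤ T3 F := by
    intro ζ hζ
    rcases (Relation.ReflTransGen.cases_tail (h 1 one_pos ζ hζ)) with h1 | ⟨_, _, h1⟩
    · subst h1; exact ⟨hE, fun j => by simp [hζ.le], by linarith⟩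
    · exact ⟨h1.1, h1.2.2.1, h1.2.2.2⟩
  refine ⟨(key 1 one_pos).1, fun j => ?_, ?_⟩
  · refine eq_of_abs_sub_eq_zero (le_antisymm ?_ (abs_nonneg _))
    exact le_of_forall_pos_le_add fun ε hε => by simpa using (key ε hε).2.1 j
  · exact le_of_forall_pos_le_add fun ε hε => by linarith [(key ε hε).2.2]

lemma Reach.trans {E F H : Fin 3 → Set G} (h : Reach E F) (h' : Reach F H)
    (hE : ∀ j, Fin' (E j)) : Reach E H := by
  intro η hη ζ hζ
  obtain ⟨_, h2, h3⟩ := h.spec hE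
  refine (h η hη ζ hζ).trans (Relation.ReflTransGen.mono (fun A B hAB => ?_) _ _ (h' η hη ζ hζ))
  exact Lk.mono hAB le_rfl (by linarith) fun j => by simp [h2 j]

lemma T3_lip {E F : Fin 3 → Set G} (hE : ∀ j, Fin' (E j)) (hF : ∀ j, Fin' (F j))
    (h1 : ∀ j, vol (E j) ≤ m) (h2 : ∀ j, vol (F j) ≤ m) (h : ∀ j, vol (E j ∆ F j) ≤ ε) :
    |T3 E - T3 F| ≤ m * (3 * ε) := by
  have hm := measureReal_nonneg.trans (h1 0)
  refine (ts_lip (hE 0) (hE 1) (hE 2) (hF 0) (hF 1) (hF 2) (h1 1) (h2 0)).trans ?_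
  refine mul_le_mul_of_nonneg_left ?_ hm
  linarith [h 0, h 1, h 2]

/-! ### Approximation by cylinder sets -/

/-- Finite unions of half-open intervals, described by their finite set of break points. -/
def Elem (A : Set ℝ) : Prop :=
  ∃ P : Finset ℝ, ∀ x y, x ≤ y → (∀ p ∈ P, ¬ (x < p ∧ p ≤ y)) → (x ∈ A ↔ y ∈ A)

/-- Sets whose fibres take finitely many values, each a finite union of half-open intervals. -/
def Cyl (E : Set (Vec n × ℝ)) : Prop :=
  ∃ (σ : Vec n → ℕ) (A : ℕ → Set ℝ), Measurable σ ∧ (range σ).Finite ∧ (∀ i, Elem (A i)) ∧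
    E = {p | p.2 ∈ A (σ p.1)}

lemma Elem.compl (h : Elem A) : Elem Aᶜ := by
  obtain ⟨P, hP⟩ := h
  exact ⟨P, fun x y hxy hp => not_congr (hP x y hxy hp)⟩

lemma Elem.union (h : Elem A) (h' : Elem B) : Elem (A ∪ B) := by
  classical
  obtain ⟨P, hP⟩ := h
  obtain ⟨Q, hQ⟩ := h'
  refine ⟨P ∪ Q, fun x y hxy hp => or_congr (hP x y hxy fun p hp' => ?_)
    (hQ x y hxy fun p hp' => ?_)⟩
  · exact hp p (Finset.mem_union_left _ hp')
  · exact hp p (Finset.mem_union_right _ hp')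

lemma cyl_algebra : IsSetAlgebra {E : Set (Vec n × ℝ) | Cyl E} where
  empty_mem := ⟨fun _ => 0, fun _ => ∅, measurable_const, (finite_singleton 0).subset (by simp),
    fun _ => ⟨∅, by simp⟩, by simp⟩
  compl_mem := by
    rintro _ ⟨σ, A, h1, h2, h3, rfl⟩
    exact ⟨σ, fun i => (A i)ᶜ, h1, h2, fun i => (h3 i).compl, rfl⟩
  union_mem := by
    rintro _ _ ⟨σ, A, h1, h2, h3, rfl⟩ ⟨τ, B, k1, k2, k3, rfl⟩
    refine ⟨fun w => Nat.pair (σ w) (τ w), fun i => A i.unpair.1 ∪ B i.unpair.2, ?_, ?_,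
      fun i => (h3 _).union (k3 _), ?_⟩
    · exact (measurable_of_countable (fun q : ℕ × ℕ => Nat.pair q.1 q.2)).comp (h1.prodMk k1)
    · refine ((h2.prod k2).image (fun q : ℕ × ℕ => Nat.pair q.1 q.2)).subset ?_
      rintro _ ⟨w, rfl⟩
      exact ⟨(σ w, τ w), ⟨⟨w, rfl⟩, ⟨w, rfl⟩⟩, rfl⟩
    · ext p; simp

lemma cyl_fst (hK : MeasurableSet K) : Cyl (Prod.fst ⁻¹' K : Set (Vec n × ℝ)) := by
  classical
  refine ⟨fun w => if w ∈ K then 1 else 0, fun i => if i = 1 then univ else ∅,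
    Measurable.ite hK measurable_const measurable_const, ?_, fun i => ⟨∅, by simp⟩, ?_⟩
  · refine (Set.toFinite {0, 1}).subset ?_
    rintro _ ⟨w, rfl⟩
    by_cases h : w ∈ K <;> simp [h]
  · ext p; by_cases h : p.1 ∈ K <;> simp [h]

lemma cyl_snd (a : ℝ) : Cyl (Prod.snd ⁻¹' Iio a : Set (Vec n × ℝ)) := by
  refine ⟨fun w => 0, fun i => Iio a, measurable_const, (finite_singleton 0).subset (by simp),
    fun i => ⟨{a}, fun x y hxy hp => ?_⟩, by ext; simp⟩
  simp only [Finset.mem_singleton, forall_eq, not_and, not_le, mem_Iio] at hp ⊢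
  exact ⟨hp, fun h => hxy.trans_lt h⟩

/-- An elementary set meets each bounded interval in a finite disjoint union of intervals. -/
lemma elem_decomp {P : Finset ℝ}
    (hP : ∀ x y, x ≤ y → (∀ p ∈ P, ¬ (x < p ∧ p ≤ y)) → (x ∈ A ↔ y ∈ A)) :
    ∀ (N : ℕ) (a b : ℝ), (P.filter (fun p => a < p ∧ p < b)).card ≤ N → 
    ∃ F : Finset (ℝ × ℝ), (∀ q ∈ F, a ≤ q.1 ∧ q.1 < q.2 ∧ q.2 ≤ b) ∧
      (∀ q ∈ F, ∀ q' ∈ F, q ≠ q' → q.2 ≤ q'.1 ∨ q'.2 ≤ q.1) ∧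
      A ∩ Ico a b = ⋃ q ∈ F, Ico q.1 q.2 := by
  classical
  intro N
  have base (a b : ℝ) : (∀ p ∈ P, ¬ (a < p ∧ p < b)) → 
    ∃ F : Finset (ℝ × ℝ), (∀ q ∈ F, a ≤ q.1 ∧ q.1 < q.2 ∧ q.2 ≤ b) ∧
      (∀ q ∈ F, ∀ q' ∈ F, q ≠ q' → q.2 ≤ q'.1 ∨ q'.2 ≤ q.1) ∧
      A ∩ Ico a b = ⋃ q ∈ F, Ico q.1 q.2 := by
    intro hab
    by_cases hlt : a < b
    · have hconst : ∀ y ∈ Ico a b, (a ∈ A ↔ y ∈ A) := fun y hy =>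
        hP a y hy.1 fun p hp h => hab p hp ⟨h.1, h.2.trans_lt hy.2⟩
      by_cases haA : a ∈ A
      · refine ⟨{(a, b)}, by simp [hlt], by simp, ?_⟩
        simp only [Finset.mem_singleton, iUnion_iUnion_eq_left]
        exact inter_eq_right.2 fun y hy => (hconst y hy).1 haA
      · refine ⟨∅, by simp, by simp, ?_⟩
        ext y
        simp only [mem_inter_iff, Finset.notMem_empty, iUnion_of_empty, iUnion_empty,
          mem_empty_iff_false, iff_false, not_and]
        exact fun hy hy' => haA ((hconst y hy').2 hy)
    · exact ⟨∅, by simp, by simp, by simp [Ico_eq_empty hlt]⟩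
  induction N with
  | zero =>
    intro a b hN
    refine base a b fun p hp h => ?_
    have : p ∈ P.filter (fun p => a < p ∧ p < b) := Finset.mem_filter.2 ⟨hp, h⟩
    rw [Finset.card_eq_zero.1 (Nat.le_zero.1 hN)] at this
    simp at this
  | succ N ih =>
    intro a b hN
    by_cases hex : ∃ p ∈ P, a < p ∧ p < b
    · obtain ⟨p, hp, hap, hpb⟩ := hex
      have hpm : p ∈ P.filter (fun p => a < p ∧ p < b) := Finset.mem_filter.2 ⟨hp, hap, hpb⟩
      have c1 : (P.filter (fun x => a < x ∧ x < p)).card ≤ N := by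
        refine Nat.lt_succ_iff.1 (lt_of_lt_of_le (Finset.card_lt_card ?_) hN)
        refine (Finset.ssubset_iff_of_subset fun x hx => ?_).2 ⟨p, hpm, by simp⟩
        simp only [Finset.mem_filter] at hx ⊢
        exact ⟨hx.1, hx.2.1, hx.2.2.trans hpb⟩
      have c2 : (P.filter (fun x => p < x ∧ x < b)).card ≤ N := by
        refine Nat.lt_succ_iff.1 (lt_of_lt_of_le (Finset.card_lt_card ?_) hN)
        refine (Finset.ssubset_iff_of_subset fun x hx => ?_).2 ⟨p, hpm, by simp⟩
        simp only [Finset.mem_filter] at hx ⊢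
        exact ⟨hx.1, hap.trans hx.2.1, hx.2.2⟩
      obtain ⟨F, f1, f2, f3⟩ := ih a p c1
      obtain ⟨F', f1', f2', f3'⟩ := ih p b c2
      refine ⟨F ∪ F', fun q hq => ?_, fun q hq q' hq' hne => ?_, ?_⟩
      · rcases Finset.mem_union.1 hq with h | h
        · have := f1 q h; exact ⟨this.1, this.2.1, this.2.2.trans hpb.le⟩
        · have := f1' q h; exact ⟨hap.le.trans this.1, this.2.1, this.2.2⟩
      · rcases Finset.mem_union.1 hq with h | h <;> rcases Finset.mem_union.1 hq' with h' | h'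
        · exact f2 q h q' h' hne
        · exact Or.inl ((f1 q h).2.2.trans (f1' q' h').1)
        · exact Or.inr ((f1 q' h').2.2.trans (f1' q h).1)
        · exact f2' q h q' h' hne
      · rw [← Ico_union_Ico_eq_Ico hap.le hpb.le, inter_union_distrib_left, f3, f3']
        exact (Finset.set_biUnion_union F F' fun q => Ico q.1 q.2).symm
    · push Not at hex
      exact base a b fun p hp h => absurd h.2 (not_lt.2 (hex p hp h.1))

lemma measurableSet_elem (h : Elem A) : MeasurableSet A := by
  obtain ⟨P, hP⟩ := h
  have : A = ⋃ k : ℕ, A ∩ Ico (-(k : ℝ)) k := by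
    rw [← inter_iUnion]
    refine (inter_eq_left.2 fun x _ => ?_).symm
    obtain ⟨k, hk⟩ := exists_nat_gt |x|
    exact mem_iUnion.2 ⟨k, (abs_lt.1 hk).1.le, (abs_lt.1 hk).2⟩
  rw [this]
  refine MeasurableSet.iUnion fun k => ?_
  obtain ⟨F, -, -, h3⟩ := elem_decomp hP _ (-(k : ℝ)) k le_rfl
  rw [h3]
  exact Finset.measurableSet_biUnion _ fun q _ => measurableSet_Ico

/-- Sets described by a measurable countable label and measurable fibres are measurable. -/
lemma measurableSet_label {σ : Vec n → ℕ} (hσ : Measurable σ) {A : ℕ → Set ℝ}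
    (hA : ∀ i, MeasurableSet (A i)) : MeasurableSet {p : Vec n × ℝ | p.2 ∈ A (σ p.1)} := by
  rw [show {p : Vec n × ℝ | p.2 ∈ A (σ p.1)} = ⋃ i : ℕ, (σ ⁻¹' {i}) ×ˢ (A i) by ext p; simp]
  exact MeasurableSet.iUnion fun i => (hσ (measurableSet_singleton i)).prod (hA i)

lemma cyl_gen : (inferInstance : MeasurableSpace (Vec n × ℝ))
    = MeasurableSpace.generateFrom {E : Set (Vec n × ℝ) | Cyl E} := by
  refine le_antisymm (sup_le ?_ ?_) (MeasurableSpace.generateFrom_le ?_)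
  · rintro _ ⟨K, hK, rfl⟩
    exact MeasurableSpace.measurableSet_generateFrom (cyl_fst hK)
  · rw [show Real.measurableSpace = borel ℝ from BorelSpace.measurable_eq,
      borel_eq_generateFrom_Iio, MeasurableSpace.comap_generateFrom]
    refine MeasurableSpace.generateFrom_le ?_
    rintro _ ⟨_, ⟨a, rfl⟩, rfl⟩
    exact MeasurableSpace.measurableSet_generateFrom (cyl_snd a)
  · rintro _ ⟨σ, A, h1, h2, h3, rfl⟩
    exact measurableSet_label h1 fun i => measurableSet_elem (h3 i)

/-- The box `K × [-R,R)`. -/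
def box (K : Set (Vec n)) (R : ℝ) : Set (Vec n × ℝ) := K ×ˢ Ico (-R) R

lemma cyl_box (hK : MeasurableSet K) (R : ℝ) : Cyl (box K R) := by
  have h := cyl_algebra.inter_mem (cyl_fst hK)
    (cyl_algebra.inter_mem (cyl_algebra.compl_mem (cyl_snd (n := n) (-R))) (cyl_snd R))
  have e : box K R = Prod.fst ⁻¹' K ∩ ((Prod.snd ⁻¹' Iio (-R))ᶜ ∩ Prod.snd ⁻¹' Iio R) := by
    ext p; simp [box]
  rwa [e]

/-- Cylinder sets are dense among the subsets of a box. -/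
lemma cyl_approx (hK : Fin' K) (hE : MeasurableSet E) (hEB : E ⊆ box K R) (hε : 0 < ε) :
    ∃ E' : Set (Vec n × ℝ), Cyl E' ∧ E' ⊆ box K R ∧ vol (E ∆ E') ≤ ε := by
  have hB : MeasurableSet (box K R) := hK.1.prod measurableSet_Ico
  have hBv : volume (box K R) ≠ ⊤ := by
    rw [box, Measure.volume_eq_prod, Measure.prod_prod]
    exact ENNReal.mul_ne_top hK.2 (fin_Ico _ _).2
  have : IsFiniteMeasure (volume.restrict (box K R)) := ⟨by simpa using hBv.lt_top⟩
  obtain ⟨t, ht, htε⟩ := (Measure.MeasureDense.of_generateFrom_isSetAlgebra_finite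
    (volume.restrict (box K R)) cyl_algebra cyl_gen).approx E hE (measure_ne_top _ _) ε hε
  refine ⟨t ∩ box K R, cyl_algebra.inter_mem ht (cyl_box hK.1 R), inter_subset_right, ?_⟩
  have e : E ∆ (t ∩ box K R) = E ∆ t ∩ box K R := by
    ext x
    have := @hEB x
    simp only [mem_symmDiff, mem_inter_iff]
    tauto
  rw [e]
  refine ENNReal.toReal_le_of_le_ofReal hε.le ?_
  rw [Measure.restrict_apply' hB] at htε
  exact htε.le

variable {A A' : Fin 3 × ℕ → Set ℝ} {σ : Fin 3 → Vec n → ℕ} {E : Fin 3 → Set (Vec n × ℝ)}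

/-! ### The Steiner chain -/

/-- The triple of sets with fibres `A (j, σ j w)`. -/
def Lift (σ : Fin 3 → Vec n → ℕ) (A : Fin 3 × ℕ → Set ℝ) (j : Fin 3) : Set (Vec n × ℝ) :=
  {p | p.2 ∈ A (j, σ j p.1)}

/-- Families of fibres carried by `K` giving sets of finite measure. -/
def Good (σ : Fin 3 → Vec n → ℕ) (K : Set (Vec n)) (A : Fin 3 × ℕ → Set ℝ) : Prop :=
  (∀ a, Fin' (A a)) ∧ (∀ j, Fin' (Lift σ A j)) ∧ ∀ j, ∀ w ∉ K, vol (A (j, σ j w)) = 0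

lemma lift_step (hσ : ∀ j, Measurable (σ j)) (hK : Fin' K) (hη : 0 ≤ η) (hA : Good σ K A)
    (h : Step1 η A A') : Good σ K A' ∧
      (∀ j, vol (Lift σ A j ∆ Lift σ A' j) ≤ η * vol K) ∧
      (∀ j, vol (Lift σ A' j) = vol (Lift σ A j)) ∧
      T3 (Lift σ A) ≤ T3 (Lift σ A') := by
  obtain ⟨h1, h2, h3⟩ := hA
  obtain ⟨k1, k2, k3, k4⟩ := h
  have hm j : MeasurableSet (Lift σ A' j) := measurableSet_label (hσ j) fun i => (k1 (j, i)).1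
  have hv j : volume (Lift σ A' j) = volume (Lift σ A j) := by
    rw [Measure.volume_eq_prod, Measure.prod_apply (hm j), Measure.prod_apply (h2 j).1]
    exact lintegral_congr fun w =>
      (measureReal_eq_measureReal_iff (k1 (j, σ j w)).2 (h1 (j, σ j w)).2).1 (k3 (j, σ j w))
  have hF j : Fin' (Lift σ A' j) := ⟨hm j, by rw [hv j]; exact (h2 j).2⟩
  refine ⟨⟨k1, hF, fun j w hw => by rw [k3]; exact h3 j w hw⟩, fun j => ?_, fun j => ?_, ?_⟩
  · rw [vol_slice ((h2 j).symmDiff (hF j))]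
    have hi := hK.nice.2.1.const_mul η
    refine (integral_mono (vol_fib_integrable ((h2 j).symmDiff (hF j))) hi fun w => ?_).trans_eq ?_
    · change vol ((A (j, σ j w)) ∆ (A' (j, σ j w))) ≤ η * chi K w
      by_cases hw : w ∈ K
      · rw [chi_of_mem hw, mul_one]; exact k2 _
      · rw [chi_of_notMem hw, mul_zero]
        refine (measureReal_mono (symmDiff_le_sup (a := A (j, σ j w)) (b := A' (j, σ j w)))
          (measure_union_ne_top (h1 _).2 (k1 _).2)).trans
          ((measureReal_union_le _ _).trans ?_)
        rw [k3, h3 j w hw]; simp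
    · rw [integral_const_mul, integral_chi hK.1]
  · simp [Measure.real, hv j]
  · unfold T3
    rw [ts_slice (h2 0) (h2 1) (h2 2), ts_slice (hF 0) (hF 1) (hF 2)]
    exact integral_mono (ts_slice_integrable (h2 0) (h2 1) (h2 2))
      (ts_slice_integrable (hF 0) (hF 1) (hF 2)) fun p =>
        k4 (0, σ 0 p.1) (1, σ 1 p.2) (2, σ 2 (-p.1 - p.2))

lemma lift_chain (hσ : ∀ j, Measurable (σ j)) (hK : Fin' K) (hη : 0 ≤ η) (hη' : η * vol K ≤ η')
    {m : Fin 3 → ℝ} (hA : Good σ K A) (hτ : τ ≤ T3 (Lift σ A))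
    (hm : ∀ j, |vol (Lift σ A j) - m j| ≤ ζ) (h : Relation.ReflTransGen (Step1 η) A A') :
    Good σ K A' ∧ T3 (Lift σ A) ≤ T3 (Lift σ A') ∧
      (∀ j, vol (Lift σ A' j) = vol (Lift σ A j)) ∧
      Relation.ReflTransGen (Lk η' τ ζ m) (Lift σ A) (Lift σ A') := by
  induction h with
  | refl => exact ⟨hA, le_rfl, fun _ => rfl, .refl⟩
  | tail _ hs ih =>
    obtain ⟨i1, i2, i3, i4⟩ := ih
    obtain ⟨s1, s2, s3, s4⟩ := lift_step hσ hK hη i1 hs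
    refine ⟨s1, i2.trans s4, fun j => (s3 j).trans (i3 j), i4.tail ⟨s1.2.1, fun j =>
      (s2 j).trans hη', fun j => by rw [s3, i3]; exact hm j, by linarith⟩⟩

/-- A triple of cylinder sets comes from a configuration of intervals. -/
lemma cyl_labels (hE : ∀ j, Cyl (E j)) (hEB : ∀ j, E j ⊆ box K R) :
    ∃ (σ : Fin 3 → Vec n → ℕ) (s : Finset ((Fin 3 × ℕ) × (ℝ × ℝ))),
      (∀ j, Measurable (σ j)) ∧
      Valid Prod.fst s (fun i => (i.2.1 + i.2.2) / 2) (fun i => (i.2.2 - i.2.1) / 2) ∧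
      E = Lift σ (FS Prod.fst s (fun i => (i.2.1 + i.2.2) / 2) (fun i => (i.2.2 - i.2.1) / 2)) := by
  classical
  choose σ A h1 h2 h3 h4 using hE
  choose P hP using h3
  choose F f1 f2 f3 using fun (j : Fin 3) (i : ℕ) => elem_decomp (hP j i) _ (-R) R le_rfl
  let L : Finset (Fin 3 × ℕ) := Finset.univ.biUnion fun j : Fin 3 =>
    (h2 j).toFinset.image fun i => (j, i)
  have hL j w : (j, σ j w) ∈ L := by
    simp only [L, Finset.mem_biUnion, Finset.mem_univ, true_and, Finset.mem_image,
      Set.Finite.mem_toFinset]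
    exact ⟨j, σ j w, ⟨w, rfl⟩, rfl⟩
  let s : Finset ((Fin 3 × ℕ) × (ℝ × ℝ)) := L.biUnion fun l => (F l.1 l.2).image fun q => (l, q)
  have hs l q : (l, q) ∈ s ↔ l ∈ L ∧ q ∈ F l.1 l.2 := by grind
  refine ⟨σ, s, h1, ⟨?_, ?_⟩, ?_⟩
  · grind
  · grind
  · funext j
    ext p
    rw [h4 j]
    change p.2 ∈ A j (σ j p.1) ↔ p.2 ∈ FS _ _ _ _ (j, σ j p.1)
    have hin : A j (σ j p.1) ⊆ Ico (-R) R := by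
      intro t ht
      have := hEB j (show (p.1, t) ∈ E j by rw [h4 j]; exact ht)
      exact this.2
    rw [← inter_eq_left.2 hin, f3]
    simp only [FS, J, mem_iUnion, Finset.mem_filter, exists_prop]
    constructor
    · rintro ⟨q, hq, hp⟩
      refine ⟨((j, σ j p.1), q), ⟨(hs _ _).2 ⟨hL _ _, hq⟩, rfl⟩, ?_⟩
      convert hp using 2 <;> ring
    · rintro ⟨⟨l, q⟩, ⟨hi, hl⟩, hp⟩
      change l = _ at hl
      subst hl
      refine ⟨q, ((hs _ _).1 hi).2, ?_⟩
      convert hp using 2 <;> ring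

lemma fin_box (hK : Fin' K) (R : ℝ) : Fin' (box K R) := by
  refine ⟨hK.1.prod measurableSet_Ico, ?_⟩
  rw [box, Measure.volume_eq_prod, Measure.prod_prod]
  exact ENNReal.mul_ne_top hK.2 (fin_Ico _ _).2

/-- A bounded triple is connected to the triple of its Steiner symmetrizations. -/
lemma reach_St (hK : Fin' K) (hE : ∀ j, MeasurableSet (E j)) (hEB : ∀ j, E j ⊆ box K R) :
    Reach E (fun j => St (E j)) := by
  intro η hη ζ hζ
  have hbox := fin_box hK R
  set m := vol (box K R)
  obtain ⟨ε, hε, e1, e2, e3⟩ : ∃ ε > 0, ε ≤ η ∧ ε ≤ ζ ∧ m * (3 * ε) ≤ ζ / 2 := by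
    refine ⟨min η (min ζ (ζ / (6 * m + 1))), by positivity, min_le_left _ _,
      (min_le_right _ _).trans (min_le_left _ _), ?_⟩
    have : min η (min ζ (ζ / (6 * m + 1))) ≤ ζ / (6 * m + 1) :=
      (min_le_right _ _).trans (min_le_right _ _)
    have h2 : m * (3 * (ζ / (6 * m + 1))) ≤ ζ / 2 := by
      rw [show m * (3 * (ζ / (6 * m + 1))) = (3 * m * ζ) / (6 * m + 1) by ring,
        div_le_iff₀ (by positivity)]
      nlinarith
    exact le_trans (by gcongr) h2
  choose E' c1 c2 c3 using fun j => cyl_approx hK (hE j) (hEB j) hε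
  have fs : ∀ {A : Set (Vec n × ℝ)}, MeasurableSet A → A ⊆ box K R → Fin' A := fun hA h =>
    ⟨hA, measure_ne_top_of_subset h hbox.2⟩
  have fE j : Fin' (E j) := fs (hE j) (hEB j)
  obtain ⟨σ, s, s1, s2, s3⟩ := cyl_labels c1 c2
  set c : (Fin 3 × ℕ) × (ℝ × ℝ) → ℝ := fun i => (i.2.1 + i.2.2) / 2
  set h : (Fin 3 × ℕ) × (ℝ × ℝ) → ℝ := fun i => (i.2.2 - i.2.1) / 2
  have fFS a : Fin' (FS Prod.fst s c h a) := fin_FS _ _ _ _ _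
  have fE' j : Fin' (E' j) := by
    refine fs ?_ (c2 j)
    rw [s3]; exact measurableSet_label (s1 j) fun i => (fFS _).1
  have vE j : vol (E j) ≤ m := measureReal_mono (hEB j) hbox.2
  have vE' j : vol (E' j) ≤ m := measureReal_mono (c2 j) hbox.2
  have t1 := abs_le.1 (T3_lip fE fE' vE vE' c3)
  have t2 := abs_le.1 (T3_lip (fun j => fin_St (fE j)) (fun j => fin_St (fE' j))
    (fun j => by rw [vol_St (fE j)]; exact vE j) (fun j => by rw [vol_St (fE' j)]; exact vE' j)
    (fun j => (St_contract (fE j) (fE' j)).trans (c3 j)))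
  have v1 j : |vol (E' j) - vol (E j)| ≤ ζ := by
    rw [abs_sub_comm]; exact ((abs_vol_sub (fE j) (fE' j)).trans (c3 j)).trans e2
  have hgood : Good σ K (FS Prod.fst s c h) := by
    refine ⟨fFS, fun j => by rw [← s3]; exact fE' j, fun j w hw => ?_⟩
    rw [show FS Prod.fst s c h (j, σ j w) = fib (E' j) w by rw [s3]; rfl]
    have : fib (E' j) w = ∅ := by
      ext t
      simp only [mem_empty_iff_false, iff_false]
      exact fun ht => hw (c2 j ht).1
    rw [this]; simp
  obtain ⟨-, l2, -, l4⟩ := lift_chain s1 hK (η := η / (vol K + 1)) (η' := η)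
    (τ := T3 E - ζ) (ζ := ζ) (m := fun j => vol (E j)) (by positivity)
    (by rw [div_mul_eq_mul_div, div_le_iff₀ (by positivity)]; nlinarith) hgood
    (by rw [← s3]; linarith) (by rw [← s3]; exact v1) (flow (by positivity) _ s c h rfl s2)
  have hfin : Lift σ (fun a => Ico (-(vol (FS Prod.fst s c h a) / 2))
      (vol (FS Prod.fst s c h a) / 2)) = fun j => St (E' j) := by rw [s3]; rfl
  rw [hfin, ← s3] at l4
  rw [hfin, ← s3] at l2
  refine (Relation.ReflTransGen.head ⟨fE', fun j => (c3 j).trans e1, v1, by linarith⟩ l4).tail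
    ⟨fun j => fin_St (fE j), fun j => ?_, fun j => by rw [vol_St (fE j)]; simpa using hζ.le,
      by linarith⟩
  rw [symmDiff_comm]
  exact ((St_contract (fE j) (fE' j)).trans (c3 j)).trans e1

variable {r : ℝ}

/-! ### Orthonormal frames -/

/-- An isometric identification of `ℝ^{n+1}` with `ℝ^n × ℝ` (with the Euclidean norm). -/
structure Frame (n : ℕ) where
  e : Vec (n + 1) ≃L[ℝ] (Vec n × ℝ)
  nsq : ∀ x, ‖x‖ ^ 2 = ‖(e x).1‖ ^ 2 + (e x).2 ^ 2
  mp : MeasurePreserving e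

/-- Every unit vector is the vertical direction of a frame. -/
lemma frame_exists (u : Vec (n + 1)) (hu : ‖u‖ = 1) : ∃ F : Frame n, F.e u = (0, 1) := by
  have hfr : Module.finrank ℝ (WithLp 2 (Vec n × ℝ)) = n + 1 := by
    rw [(WithLp.linearEquiv 2 ℝ (Vec n × ℝ)).finrank_eq]; simp
  let L : Vec (n + 1) ≃ₗᵢ[ℝ] WithLp 2 (Vec n × ℝ) :=
    (stdOrthonormalBasis ℝ (Vec (n + 1))).equiv (stdOrthonormalBasis ℝ (WithLp 2 (Vec n × ℝ)))
      (finCongr (by rw [hfr]; simp))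
  let z : WithLp 2 (Vec n × ℝ) := WithLp.toLp 2 (0, 1)
  have hz : ‖z‖ = 1 := by
    have := WithLp.prod_norm_sq_eq_of_L2 z
    have h2 : ‖z‖ ^ 2 = 1 := by rw [this]; simp [z]
    nlinarith [norm_nonneg z, sq_nonneg (‖z‖ - 1)]
  let Rf : WithLp 2 (Vec n × ℝ) ≃ₗᵢ[ℝ] WithLp 2 (Vec n × ℝ) :=
    (Submodule.span ℝ {L u - z})ᗮ.reflection
  have hR : Rf (L u) = z := Submodule.reflection_sub (by rw [hz, L.norm_map, hu])
  let L' : Vec (n + 1) ≃ₗᵢ[ℝ] WithLp 2 (Vec n × ℝ) := L.trans Rf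
  refine ⟨⟨L'.toContinuousLinearEquiv.trans (WithLp.prodContinuousLinearEquiv 2 ℝ (Vec n) ℝ),
    fun x => ?_, ?_⟩, ?_⟩
  · have := WithLp.prod_norm_sq_eq_of_L2 (L' x)
    rw [L'.norm_map] at this
    rw [this]
    simp
  · exact (WithLp.volume_preserving_ofLp (Vec n) ℝ).comp L'.measurePreserving
  · change WithLp.ofLp (L' u) = (0, 1)
    have : L' u = z := hR
    rw [this]

namespace Frame
variable (F : Frame n)

/-- The frame as a measurable equivalence. -/
def me : Vec (n + 1) ≃ᵐ (Vec n × ℝ) := F.e.toHomeomorph.toMeasurableEquiv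

/-- The set `E` read in the frame. -/
def im (E : Set (Vec (n + 1))) : Set (Vec n × ℝ) := F.e.symm ⁻¹' E

/-- The subset of `ℝ^{n+1}` with a given reading in the frame. -/
def pre (A : Set (Vec n × ℝ)) : Set (Vec (n + 1)) := F.e ⁻¹' A

@[simp] lemma pre_im (E : Set (Vec (n + 1))) : F.pre (F.im E) = E := by ext x; simp [pre, im]

@[simp] lemma im_pre (A : Set (Vec n × ℝ)) : F.im (F.pre A) = A := by ext x; simp [pre, im]

lemma mp_symm : MeasurePreserving F.e.symm := by
  have := MeasurePreserving.symm F.me F.mp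
  exact this

lemma vol_im (E : Set (Vec (n + 1))) : volume (F.im E) = volume E := by
  have := MeasurePreserving.symm F.me F.mp
  exact this.measure_preimage_equiv E

lemma volr_im (E : Set (Vec (n + 1))) : vol (F.im E) = vol E := by simp [Measure.real, F.vol_im]

lemma vol_pre (A : Set (Vec n × ℝ)) : volume (F.pre A) = volume A := by rw [← F.vol_im, F.im_pre]

lemma volr_pre (A : Set (Vec n × ℝ)) : vol (F.pre A) = vol A := by simp [Measure.real, F.vol_pre]

lemma fin_im {E : Set (Vec (n + 1))} (h : Fin' E) : Fin' (F.im E) :=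
  ⟨F.e.symm.continuous.measurable h.1, by rw [F.vol_im]; exact h.2⟩

lemma fin_pre {A : Set (Vec n × ℝ)} (h : Fin' A) : Fin' (F.pre A) :=
  ⟨F.e.continuous.measurable h.1, by rw [F.vol_pre]; exact h.2⟩

lemma im_symmDiff (A B : Set (Vec (n + 1))) : F.im (A ∆ B) = F.im A ∆ F.im B := rfl

lemma pre_symmDiff (A B : Set (Vec n × ℝ)) : F.pre (A ∆ B) = F.pre A ∆ F.pre B :=
  rfl

lemma ts_pre (A B C : Set (Vec n × ℝ)) : TS (F.pre A) (F.pre B) (F.pre C) = TS A B C :=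
  ts_comp F.me F.mp (fun x y => by
    change F.e (-x - y) = - F.e x - F.e y
    rw [map_sub, map_neg]) A B C

lemma ts_im (A B C : Set (Vec (n + 1))) : TS (F.im A) (F.im B) (F.im C) = TS A B C := by
  rw [← F.ts_pre]; simp

lemma t3_pre (A : Fin 3 → Set (Vec n × ℝ)) : T3 (fun j => F.pre (A j)) = T3 A := F.ts_pre _ _ _

lemma t3_im (A : Fin 3 → Set (Vec (n + 1))) : T3 (fun j => F.im (A j)) = T3 A := F.ts_im _ _ _

/-- Chains in the frame give chains in `ℝ^{n+1}`. -/
lemma reach_pre {A B : Fin 3 → Set (Vec n × ℝ)} (h : Reach A B) :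
    Reach (fun j => F.pre (A j)) (fun j => F.pre (B j)) := by
  intro η hη ζ hζ
  replace h := h η hη ζ hζ
  rw [F.t3_pre]
  simp_rw [F.volr_pre]
  induction h with
  | refl => exact .refl
  | tail _ hs ih =>
    refine ih.tail ⟨fun j => F.fin_pre (hs.1 j), fun j => ?_, fun j => ?_, ?_⟩
    · rw [← F.pre_symmDiff, F.volr_pre]; exact hs.2.1 j
    · rw [F.volr_pre]; exact hs.2.2.1 j
    · rw [F.t3_pre]; exact hs.2.2.2

lemma nsq_symm (p : Vec n × ℝ) : ‖F.e.symm p‖ ^ 2 = ‖p.1‖ ^ 2 + p.2 ^ 2 := by rw [F.nsq]; simp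

lemma inner_symm (p q : Vec n × ℝ) :
    inner ℝ (F.e.symm p) (F.e.symm q) = inner ℝ p.1 q.1 + p.2 * q.2 := by
  have h1 := norm_add_sq_real (F.e.symm p) (F.e.symm q)
  rw [← map_add, F.nsq_symm, F.nsq_symm, F.nsq_symm] at h1
  have h2 := norm_add_sq_real p.1 q.1
  simp only [Prod.fst_add, Prod.snd_add] at h1
  linarith [h1, h2, add_sq p.2 q.2]

/-- Steiner symmetrization in the vertical direction of the frame. -/
def S (E : Set (Vec (n + 1))) : Set (Vec (n + 1)) := F.pre (St (F.im E))

end Frame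

/-- The closed ball of radius `r` read in a frame. -/
def Bp (n : ℕ) (r : ℝ) : Set (Vec n × ℝ) := {p | ‖p.1‖ ^ 2 + p.2 ^ 2 ≤ r ^ 2}

lemma im_ball (F : Frame n) (hr : 0 ≤ r) : F.im (closedBall 0 r) = Bp n r := by
  ext p
  simp only [Frame.im, mem_preimage, mem_closedBall, dist_zero_right, Bp]
  change _ ↔ ‖p.1‖ ^ 2 + p.2 ^ 2 ≤ r ^ 2
  rw [← F.nsq_symm, sq_le_sq₀ (norm_nonneg _) hr]

lemma fin_ball {m : ℕ} (x : Vec m) (r : ℝ) : Fin' (closedBall x r) :=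
  ⟨isClosed_closedBall.measurableSet, measure_closedBall_lt_top.ne⟩

lemma Bp_subset_box (r : ℝ) : Bp n r ⊆ box (closedBall 0 |r|) (|r| + 1) := by
  intro p hp
  change ‖p.1‖ ^ 2 + p.2 ^ 2 ≤ r ^ 2 at hp
  have h1 : ‖p.1‖ ≤ |r| := (abs_le_of_sq_le_sq' (by nlinarith [sq_abs r, sq_nonneg p.2]) (abs_nonneg r)).2
  have h2 := abs_le_of_sq_le_sq' (show p.2 ^ 2 ≤ |r| ^ 2 by nlinarith [sq_abs r, sq_nonneg ‖p.1‖]) (abs_nonneg r)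
  refine ⟨by simpa using h1, ?_, ?_⟩ <;> linarith [h2.1, h2.2]

/-- Triples in a ball are connected to their Steiner symmetrizations. -/
lemma reach_S (F : Frame n) (hR : 0 ≤ R) {E : Fin 3 → Set (Vec (n + 1))}
    (hE : ∀ j, MeasurableSet (E j)) (hER : ∀ j, E j ⊆ closedBall 0 R) :
    Reach E (fun j => F.S (E j)) := by
  have h := F.reach_pre (reach_St (fin_ball 0 |R|) (R := |R| + 1) (E := fun j => F.im (E j))
    (fun j => F.e.symm.continuous.measurable (hE j)) fun j => ?_)
  · simp only [Frame.pre_im] at h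
    exact h
  · refine subset_trans ?_ (Bp_subset_box R)
    rw [← im_ball F hR]
    exact preimage_mono (hER j)

variable {s : ℝ} {A Y : Set (Vec n × ℝ)}

/-! ### Second moments decrease under Steiner symmetrization -/

lemma integrable_chi_mul {A : Set G} (hA : MeasurableSet A) (hA' : volume A ≠ ⊤) (hf : Measurable f)
    (hc : ∀ x ∈ A, |f x| ≤ c) : Integrable fun x => chi A x * f x := by
  refine Integrable.mono' ((nice_chi hA hA').2.1.const_mul c)
    ((measurable_chi hA).mul hf).aestronglyMeasurable (.of_forall fun x => ?_)
  by_cases hx : x ∈ A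
  · simpa [chi_of_mem hx] using hc x hx
  · simp [chi_of_notMem hx]

lemma vol_sdiff_eq {A I : Set ℝ} (hA : Fin' A) (hI : Fin' I)
    (h : vol A = vol I) : vol (A \ I) = vol (I \ A) := by
  have h1 := measureReal_sdiff_add_inter (μ := volume) (s := A) (t := I) hI.1 hA.2
  have h2 := measureReal_sdiff_add_inter (μ := volume) (s := I) (t := A) hA.1 hI.2
  rw [inter_comm] at h2
  linarith

/-- Quantitative form of the fact that the centred interval minimizes the second moment. -/
lemma bath2 {A : Set ℝ} (hA : Fin' A) (hAR : A ⊆ Icc (-R) R) (c : ℝ) :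
    (vol (cI (vol A) \ A)) ^ 3 / 32 ≤
      (∫ t, chi A t * (c + t ^ 2)) - ∫ t, chi (cI (vol A)) t * (c + t ^ 2) := by
  set m := vol A with hm
  set a := m / 2 with ha
  have hm0 : 0 ≤ m := measureReal_nonneg
  set k := vol (cI m \ A) with hk
  have hk0 : 0 ≤ k := measureReal_nonneg
  have fI := fin_cI m
  have hkA : vol (A \ cI m) = k :=
    vol_sdiff_eq hA fI (by rw [vol_cI hm0])
  have i1 : Integrable fun t => chi A t * (c + t ^ 2) :=
    integrable_chi_mul hA.1 hA.2 (by fun_prop) (c := |c| + R ^ 2) fun x hx => by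
      have := hAR hx
      refine (abs_add_le _ _).trans ?_
      rw [abs_of_nonneg (sq_nonneg x)]
      nlinarith [abs_le.2 this, sq_abs x, abs_nonneg x]
  have i2 : Integrable fun t => chi (cI m) t * (c + t ^ 2) :=
    integrable_chi_mul fI.1 fI.2 (by fun_prop) (c := |c| + a ^ 2) fun x hx => by
      refine (abs_add_le _ _).trans ?_
      rw [abs_of_nonneg (sq_nonneg x)]
      have h1 : -a ≤ x := hx.1
      have h2 : x < a := hx.2
      nlinarith
  rw [← integral_sub i1 i2]
  have j1 : Integrable (chi A) := hA.nice.2.1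
  have j2 : Integrable (chi (cI m)) := fI.nice.2.1
  have e0 : ∫ t, (chi A t - chi (cI m) t) * (c + a ^ 2) = 0 := by
    rw [integral_mul_const, integral_sub j1 j2, integral_chi hA.1, integral_chi fI.1, vol_cI hm0]
    simp [hm]
  set J' := cI (m + k / 2) with hJ
  have hsub : vol (A \ J') ≥ k / 2 := by
    have s1 : A \ cI m ⊆ (A \ J') ∪ (J' \ cI m) := by
      intro x hx
      by_cases hxJ : x ∈ J'
      · exact Or.inr ⟨hxJ, hx.2⟩
      · exact Or.inl ⟨hx.1, hxJ⟩
    have s2 : cI m ⊆ J' := Ico_subset_Ico (by linarith) (by linarith)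
    have s3 : vol (J' \ cI m) = k / 2 := by
      rw [measureReal_sdiff s2 fI.1 (fin_cI _).2, vol_cI hm0, vol_cI (by linarith)]; ring
    have s4 := (measureReal_mono s1 (measure_union_ne_top
      (measure_ne_top_of_subset sdiff_subset hA.2)
      (measure_ne_top_of_subset sdiff_subset (fin_cI _).2))).trans (measureReal_union_le _ _)
    linarith
  have hAJ : MeasurableSet (A \ J') := hA.1.diff (fin_cI _).1
  have jAJ : Integrable (chi (A \ J')) := (nice_chi hAJ (measure_ne_top_of_subset sdiff_subset hA.2)).2.1
  have key : ∫ t, k ^ 2 / 16 * chi (A \ J') t ≤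
      ∫ t, ((chi A t * (c + t ^ 2) - chi (cI m) t * (c + t ^ 2))
        - (chi A t - chi (cI m) t) * (c + a ^ 2)) := by
    refine integral_mono (jAJ.const_mul _) ((i1.sub i2).sub ((j1.sub j2).mul_const _)) fun t => ?_
    have e : (chi A t * (c + t ^ 2) - chi (cI m) t * (c + t ^ 2))
        - (chi A t - chi (cI m) t) * (c + a ^ 2) = (chi A t - chi (cI m) t) * (t ^ 2 - a ^ 2) := by
      ring
    simp only
    rw [e]
    have hout : t ∉ cI m → a ^ 2 ≤ t ^ 2 := by
      intro h
      simp only [cI, mem_Ico, not_and, not_lt] at h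
      by_cases h' : -(m / 2) ≤ t
      · nlinarith [h h']
      · nlinarith
    have hin : t ∈ cI m → t ^ 2 ≤ a ^ 2 := by
      intro h
      have h1 : -a ≤ t := h.1
      have h2 : t < a := h.2
      nlinarith
    by_cases hJt : t ∈ A \ J'
    · have ht : t ∉ cI m := fun h => hJt.2 (Ico_subset_Ico (by linarith) (by linarith) h)
      rw [chi_of_mem hJt, chi_of_mem hJt.1, chi_of_notMem ht]
      have h := hJt.2
      simp only [J', cI, mem_Ico, not_and, not_lt] at h
      by_cases h' : -((m + k / 2) / 2) ≤ t
      · nlinarith [h h']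
      · nlinarith
    · rw [chi_of_notMem hJt, mul_zero]
      by_cases h1 : t ∈ A <;> by_cases h2 : t ∈ cI m
      · simp [chi_of_mem h1, chi_of_mem h2]
      · rw [chi_of_mem h1, chi_of_notMem h2]; linarith [hout h2]
      · rw [chi_of_notMem h1, chi_of_mem h2]; linarith [hin h2]
      · simp [chi_of_notMem h1, chi_of_notMem h2]
  have i3 : Integrable fun t => chi A t * (c + t ^ 2) - chi (cI m) t * (c + t ^ 2) := i1.sub i2
  have j3 : Integrable fun t => (chi A t - chi (cI m) t) * (c + a ^ 2) :=
    (j1.sub j2).mul_const _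
  rw [integral_sub i3 j3, e0, sub_zero, integral_const_mul, integral_chi hAJ] at key
  refine le_trans ?_ key
  nlinarith [sq_nonneg k]

/-- The second moment in a frame. -/
def Mp (A : Set (Vec n × ℝ)) : ℝ := ∫ p, chi A p * (‖p.1‖ ^ 2 + p.2 ^ 2)

lemma fib_Bp (hAR : A ⊆ Bp n R) (w : Vec n) : fib A w ⊆ Icc (-|R|) |R| := by
  intro t ht
  have h := hAR ht
  change ‖w‖ ^ 2 + t ^ 2 ≤ R ^ 2 at h
  have h1 : t ^ 2 ≤ |R| ^ 2 := by rw [sq_abs]; linarith [sq_nonneg ‖w‖]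
  have h2 := abs_le_of_sq_le_sq' h1 (abs_nonneg R)
  exact mem_Icc.2 h2

lemma integrable_Mp (hA : Fin' A) (hAR : A ⊆ Bp n R) :
    Integrable (fun p : Vec n × ℝ => chi A p * (‖p.1‖ ^ 2 + p.2 ^ 2)) :=
  integrable_chi_mul hA.1 hA.2 (by fun_prop) (c := R ^ 2) fun p hp => by
    rw [abs_of_nonneg (by positivity)]; exact hAR hp

lemma fin_fib (hA : MeasurableSet A) (hAR : A ⊆ Bp n R) (w : Vec n) : Fin' (fib A w) :=
  ⟨measurableSet_fib hA w, measure_ne_top_of_subset (fib_Bp hAR w) (by simp)⟩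

lemma St_subset_Bp (hAR : A ⊆ Bp n R) : St A ⊆ Bp n R := by
  intro p hp
  set b := Real.sqrt (R ^ 2 - ‖p.1‖ ^ 2) with hb
  have hb0 : 0 ≤ b := Real.sqrt_nonneg _
  have hs : fib A p.1 ⊆ Icc (-b) b := by
    intro t ht
    have h : ‖p.1‖ ^ 2 + t ^ 2 ≤ R ^ 2 := hAR ht
    exact abs_le.1 (Real.abs_le_sqrt (by linarith))
  have hv : vol (fib A p.1) ≤ 2 * b := by
    refine (measureReal_mono hs (by simp)).trans ?_
    rw [Real.volume_real_Icc_of_le (by linarith)]; linarith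
  have h1 := hp.1
  have h2 := hp.2
  have hpos : 0 < b := by linarith
  have hsq := Real.sq_sqrt (Real.sqrt_pos.1 hpos).le
  change ‖p.1‖ ^ 2 + p.2 ^ 2 ≤ R ^ 2
  nlinarith

/-- The decrease of the second moment, fibre by fibre. -/
lemma Mp_sub (hA : Fin' A) (hAR : A ⊆ Bp n R) :
    ∃ D : Vec n → ℝ, Integrable D ∧ Mp A - Mp (St A) = ∫ w, D w ∧
      ∀ w, (vol (cI (vol (fib A w)) \ fib A w)) ^ 3 / 32 ≤ D w := by
  have i1 := integrable_Mp hA hAR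
  have i2 := integrable_Mp (fin_St hA) (St_subset_Bp hAR)
  rw [Measure.volume_eq_prod] at i1 i2
  refine ⟨fun w => (∫ t, chi (fib A w) t * (‖w‖ ^ 2 + t ^ 2))
    - ∫ t, chi (fib (St A) w) t * (‖w‖ ^ 2 + t ^ 2), ?_, ?_, fun w => ?_⟩
  · exact i1.integral_prod_left.sub i2.integral_prod_left
  · unfold Mp
    rw [Measure.volume_eq_prod, integral_prod _ i1, integral_prod _ i2]
    exact (integral_sub i1.integral_prod_left i2.integral_prod_left).symm
  · exact bath2 (fin_fib hA.1 hAR w) (fib_Bp hAR w) _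

lemma Mp_St_le (hA : Fin' A) (hAR : A ⊆ Bp n R) : Mp (St A) ≤ Mp A := by
  obtain ⟨D, -, h2, h3⟩ := Mp_sub hA hAR
  have : 0 ≤ ∫ w, D w := integral_nonneg fun w => le_trans (by positivity) (h3 w)
  linarith

/-- If many vertical segments have their inner end in `B \ A` and their outer end in `A \ B`, then
Steiner symmetrization lowers the second moment by a definite amount. -/
lemma Mp_gain (hA : Fin' A) (hY : Fin' Y) {g : ℝ} (hg : 0 ≤ g) (hAR : A ⊆ Bp n R) (hYR : Y ⊆ Bp n R)
    (hr : Y ⊆ Bp n r \ A) (hs : ∀ p ∈ Y, (p.1, p.2 + s) ∈ A \ Bp n r) (hgY : g ≤ vol Y)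
    (hb : 0 < vol (𝔹 n (|R|))) : g ^ 3 / (32 * vol (𝔹 n (|R|)) ^ 2) ≤ Mp A - Mp (St A) := by
  set b := vol (𝔹 n (|R|)) with hbdef
  obtain ⟨D, h1, h2, h3⟩ := Mp_sub hA hAR
  have hk w : vol (fib Y w) ≤ vol (cI (vol (fib A w)) \ fib A w) := by
    have fA := fin_fib hA.1 hAR w
    set m := vol (fib A w) with hm
    have hm0 : 0 ≤ m := measureReal_nonneg
    by_cases hc : ∀ t ∈ fib Y w, t ∈ cI m
    · refine measureReal_mono (fun t ht => ⟨hc t ht, (hr ht).2⟩)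
        (measure_ne_top_of_subset sdiff_subset (fin_cI _).2)
    · -- an inner end lies outside the interval, so all outer ends do
      push Not at hc
      obtain ⟨t0, ht0, hct⟩ := hc
      have hB : ‖w‖ ^ 2 + t0 ^ 2 ≤ r ^ 2 := (hr ht0).1
      have ht2 : (m / 2) ^ 2 ≤ t0 ^ 2 := by
        simp only [cI, mem_Ico, not_and, not_lt] at hct
        by_cases h' : -(m / 2) ≤ t0
        · nlinarith [hct h']
        · nlinarith
      rw [← vol_sdiff_eq fA (fin_cI m) (by rw [vol_cI hm0])]
      rw [show vol (fib Y w) = vol ((fun t => t + -s) ⁻¹' fib Y w)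
        by simp [Measure.real, measure_preimage_add_right]]
      refine measureReal_mono (fun t ht => ?_) (measure_ne_top_of_subset sdiff_subset fA.2)
      have h := hs (w, t + -s) ht
      simp only [neg_add_cancel_right] at h
      refine ⟨h.1, fun hI => h.2 ?_⟩
      change ‖w‖ ^ 2 + t ^ 2 ≤ r ^ 2
      have h5 : -(m / 2) ≤ t := hI.1
      have h6 : t < m / 2 := hI.2
      nlinarith
  set τ := g / b with hτ
  have hτ0 : 0 ≤ τ := by positivity
  have fb := fin_ball (0 : Vec n) |R|
  have iy := vol_fib_integrable hY
  have ib := fb.nice.2.1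
  have hpt w : 3 * τ ^ 2 / 32 * vol (fib Y w)
      - 2 * τ ^ 3 / 32 * chi (𝔹 n (|R|)) w ≤ D w := by
    refine le_trans ?_ (h3 w)
    by_cases hw : w ∈ 𝔹 n (|R|)
    · rw [chi_of_mem hw]
      have h0 : 0 ≤ vol (fib Y w) := measureReal_nonneg
      have h1 := hk w
      have h2 := pow_le_pow_left₀ h0 h1 3
      nlinarith [mul_nonneg (sq_nonneg (vol (fib Y w) - τ)) (by linarith : 0 ≤ vol (fib Y w) + 2 * τ)]
    · have : fib Y w = ∅ := by
        ext t
        simp only [mem_empty_iff_false, iff_false]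
        intro ht
        exact hw (Bp_subset_box R (hYR ht)).1
      rw [chi_of_notMem hw, this]
      simp only [measureReal_empty, mul_zero, sub_zero]
      positivity
  have := integral_mono ((iy.const_mul (3 * τ ^ 2 / 32)).sub (ib.const_mul (2 * τ ^ 3 / 32))) h1 hpt
  simp only [Pi.sub_apply] at this
  rw [integral_sub (iy.const_mul _) (ib.const_mul _), integral_const_mul, integral_const_mul,
    ← vol_slice hY, integral_chi fb.1, ← h2, ← hbdef] at this
  refine le_trans ?_ this
  rw [show 2 * τ ^ 3 / 32 * b = 2 * g * τ ^ 2 / 32 by rw [hτ]; field_simp,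
    show g ^ 3 / (32 * b ^ 2) = g * τ ^ 2 / 32 by rw [hτ]; field_simp]
  nlinarith [mul_le_mul_of_nonneg_right hgY (sq_nonneg τ)]

variable {H O : Set (Vec d)} {A E : Set (Vec (n + 1))}

/-! ### Chains of Steiner symmetrizations towards balls -/

/-- The volume of the unit ball. -/
def om (d : ℕ) : ℝ := vol (𝔹 d 1)

lemma om_pos (d : ℕ) : 0 < om d :=
  ENNReal.toReal_pos (measure_closedBall_pos volume 0 one_pos).ne' (fin_ball 0 1).2

lemma vol_ball (x : Vec d) (hr : 0 ≤ r) : vol (closedBall x r) = r ^ d * om d := by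
  rw [om, Measure.addHaar_real_closedBall' _ _ hr, finrank_euclideanSpace_fin]

/-- The radius of the ball with the measure of `E`. -/
def brad {d : ℕ} (E : Set (Vec d)) : ℝ := (vol E / om d) ^ ((1 : ℝ) / d)

lemma ballStar_eq (E : Set (Vec d)) : ballStar E = closedBall 0 (brad E) := rfl

lemma brad_nonneg (E : Set (Vec d)) : 0 ≤ brad E :=
  Real.rpow_nonneg (div_nonneg measureReal_nonneg (om_pos d).le) _

lemma fin_ballStar (E : Set (Vec d)) : Fin' (ballStar E) := fin_ball _ _

lemma brad_pow (E : Set (Vec (n + 1))) : brad E ^ (n + 1) * om (n + 1) = vol E := by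
  have := om_pos (n + 1)
  rw [brad, ← Real.rpow_natCast, ← Real.rpow_mul (div_nonneg measureReal_nonneg this.le)]
  rw [show (1 : ℝ) / ((n + 1 : ℕ) : ℝ) * ((n + 1 : ℕ) : ℝ) = 1 by field_simp, Real.rpow_one]
  field_simp

lemma vol_ballStar (E : Set (Vec (n + 1))) : vol (ballStar E) = vol E := by
  rw [ballStar_eq, vol_ball _ (brad_nonneg E), brad_pow]

lemma ballStar_congr {E F : Set (Vec n)} (h : vol E = vol F) : ballStar E = ballStar F := by
  rw [ballStar_eq, ballStar_eq, brad, brad, h]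

lemma brad_le (hR : 0 ≤ R) (h : E ⊆ closedBall 0 R) : brad E ≤ R := by
  by_contra hc
  push Not at hc
  have h1 := measureReal_mono h (fin_ball 0 R).2
  rw [vol_ball _ hR, ← brad_pow E] at h1
  have h2 : R ^ (n + 1) < brad E ^ (n + 1) := pow_lt_pow_left₀ hc hR (by omega)
  nlinarith [om_pos (n + 1)]

lemma brad_ball (hr : 0 ≤ r) : brad (𝔹 (n + 1) r) = r := by
  have h := brad_pow (𝔹 (n + 1) r)
  rw [vol_ball _ hr] at h
  exact (pow_left_inj₀ (brad_nonneg _) hr (by omega)).1 (mul_right_cancel₀ (om_pos _).ne' h)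

/-- The measure of the set of `y ∈ H` with `y + h ∈ O`. -/
def PG {d : ℕ} (H O : Set (Vec d)) (h : Vec d) : ℝ := vol (H ∩ (fun y => y + h) ⁻¹' O)

lemma pair_integrable (hH : Fin' H) (hO : Fin' O) :
    Integrable (fun p : Vec d × Vec d => chi H p.1 * chi O (p.1 + p.2)) (volume.prod volume) := by
  have h1 := hH.nice.2.1.mul_prod hO.nice.2.1
  exact (measurePreserving_prod_add (volume : Measure (Vec d)) volume).integrable_comp_of_integrable h1

lemma PG_eq (hH : Fin' H) (hO : Fin' O) (h : Vec d) : PG H O h = ∫ y, chi H y * chi O (y + h) := by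
  have hm : MeasurableSet (H ∩ (fun y => y + h) ⁻¹' O) := hH.1.inter (hO.1.preimage (by fun_prop))
  rw [PG, ← integral_chi hm]
  refine integral_congr_ae (.of_forall fun y => ?_)
  simp only [chi_inter]
  rfl

lemma PG_integrable (hH : Fin' H) (hO : Fin' O) : Integrable (PG H O) := by
  have := (pair_integrable hH hO).integral_prod_right
  exact this.congr (.of_forall fun h => (PG_eq hH hO h).symm)

lemma pair_integral (hH : Fin' H) (hO : Fin' O) : ∫ h, PG H O h = vol H * vol O := by
  simp_rw [PG_eq hH hO]
  rw [← integral_integral_swap (f := fun y h => chi H y * chi O (y + h)) (pair_integrable hH hO)]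
  simp_rw [integral_const_mul]
  have : ∀ y, ∫ h, chi O (y + h) = vol O := fun y => by
    rw [integral_add_left_eq_self (fun z => chi O z), integral_chi hO.1]
  simp_rw [this]
  rw [integral_mul_const, integral_chi hH.1]

/-- The second moment. -/
def Mv (A : Set (Vec n)) : ℝ := ∫ x, chi A x * ‖x‖ ^ 2

lemma Mv_nonneg (A : Set (Vec n)) : 0 ≤ Mv A :=
  integral_nonneg fun x => mul_nonneg (chi_nonneg _ _) (sq_nonneg _)

lemma Mv_eq (F : Frame n) (A : Set (Vec (n + 1))) : Mv A = Mp (F.im A) := by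
  have h := MeasurePreserving.symm F.me F.mp
  rw [Mv, ← h.integral_comp', Mp]
  refine integral_congr_ae (.of_forall fun p => ?_)
  change chi A (F.e.symm p) * ‖F.e.symm p‖ ^ 2 = _
  rw [F.nsq_symm]
  rfl

lemma im_subset_Bp (F : Frame n) (hR : 0 ≤ R) (h : A ⊆ closedBall 0 R) : F.im A ⊆ Bp n R := by
  rw [← im_ball F hR]; exact preimage_mono h

lemma S_subset (F : Frame n) (hR : 0 ≤ R) (h : A ⊆ closedBall 0 R) : F.S A ⊆ closedBall 0 R := by
  have := St_subset_Bp (im_subset_Bp F hR h)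
  rw [← im_ball F hR] at this
  have h2 : F.pre (St (F.im A)) ⊆ F.pre (F.im (closedBall 0 R)) := preimage_mono this
  rwa [F.pre_im] at h2

lemma Mv_S_le (F : Frame n) (hR : 0 ≤ R) (hA : Fin' A) (h : A ⊆ closedBall 0 R) :
    Mv (F.S A) ≤ Mv A := by
  rw [Mv_eq F, Mv_eq F, Frame.S, F.im_pre]
  exact Mp_St_le (F.fin_im hA) (im_subset_Bp F hR h)

lemma sdiff_eq_half {m : ℕ} {A B : Set (Vec m)} (hA : Fin' A) (hB : Fin' B) (h : vol A = vol B) :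
    vol (A \ B) = vol (A ∆ B) / 2 ∧
      vol (B \ A) = vol (A ∆ B) / 2 := by
  have h1 := measureReal_sdiff_add_inter (μ := volume) (s := A) (t := B) hB.1 hA.2
  have h2 := measureReal_sdiff_add_inter (μ := volume) (s := B) (t := A) hA.1 hB.2
  rw [inter_comm] at h2
  have h3 : vol (A ∆ B) = vol (A \ B) + vol (B \ A) := by
    rw [Set.symmDiff_def, measureReal_union disjoint_sdiff_sdiff (hB.1.diff hA.1)
      (measure_ne_top_of_subset sdiff_subset hA.2) (measure_ne_top_of_subset sdiff_subset hB.2)]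
  constructor <;> linarith

/-- A bounded set which is far from its ball has a direction in which Steiner symmetrization lowers
the second moment by a definite amount. -/
lemma gain (hR : 0 < R) (hη : 0 < η) : ∃ c > 0, ∀ A : Set (Vec (n + 1)),
    MeasurableSet A → A ⊆ closedBall 0 R → η ≤ vol (A ∆ ballStar A) →
    ∃ F : Frame n, c ≤ Mv A - Mv (F.S A) := by
  set b := vol (𝔹 n (|R|)) with hb
  have hb0 : 0 < b := by rw [hb, abs_of_pos hR, vol_ball _ hR.le]; have := om_pos n; positivity
  set V := vol (𝔹 (n + 1) (2 * R)) with hV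
  have hV0 : 0 < V := by rw [hV, vol_ball _ (by linarith)]; have := om_pos (n + 1); positivity
  set g := η / 2 * (η / 2) / (2 * V) with hg
  have hg0 : 0 < g := by positivity
  refine ⟨g ^ 3 / (32 * b ^ 2), by positivity, fun A hAm hAR hηA => ?_⟩
  have hA : Fin' A := ⟨hAm, measure_ne_top_of_subset hAR (fin_ball 0 R).2⟩
  have hB := fin_ballStar A
  have hrR := brad_le hR.le hAR
  have hr0 := brad_nonneg A
  obtain ⟨e1, e2⟩ := sdiff_eq_half hA hB (vol_ballStar A).symm
  set O := A \ ballStar A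
  set H := ballStar A \ A
  have fO : Fin' O := ⟨hA.1.diff hB.1, measure_ne_top_of_subset sdiff_subset hA.2⟩
  have fH : Fin' H := ⟨hB.1.diff hA.1, measure_ne_top_of_subset sdiff_subset hB.2⟩
  have hBR : ballStar A ⊆ closedBall 0 R := closedBall_subset_closedBall hrR
  have : ∃ h, g ≤ PG H O h := by
    by_contra hc
    push Not at hc
    have fV := fin_ball (0 : Vec (n + 1)) (2 * R)
    have hpt h : PG H O h ≤ g * chi (𝔹 (n + 1) (2 * R)) h := by
      by_cases hh : h ∈ 𝔹 (n + 1) (2 * R)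
      · rw [chi_of_mem hh, mul_one]; exact (hc h).le
      · rw [chi_of_notMem hh, mul_zero]
        have : H ∩ (fun y => y + h) ⁻¹' O = ∅ := by
          ext y
          simp only [mem_inter_iff, mem_preimage, mem_empty_iff_false, iff_false, not_and]
          intro h1 h2
          apply hh
          have h3 := hBR h1.1
          have h4 := hAR h2.1
          simp only [mem_closedBall, dist_zero_right] at h3 h4 ⊢
          calc ‖h‖ = ‖(y + h) - y‖ := by simp
            _ ≤ ‖y + h‖ + ‖y‖ := norm_sub_le _ _
            _ ≤ 2 * R := by linarith
        rw [PG, this]; simp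
    have := integral_mono (PG_integrable fH fO) (fV.nice.2.1.const_mul g) hpt
    rw [pair_integral fH fO, integral_const_mul, integral_chi fV.1, ← hV, e1, e2, hg] at this
    rw [show η / 2 * (η / 2) / (2 * V) * V = η / 2 * (η / 2) / 2 by field_simp] at this
    nlinarith
  obtain ⟨h, hgh⟩ := this
  have hh0 : h ≠ 0 := by
    rintro rfl
    have : H ∩ (fun y => y + 0) ⁻¹' O = ∅ := by
      ext y
      simp only [mem_inter_iff, mem_preimage, mem_empty_iff_false, iff_false, not_and, add_zero]
      exact fun h1 h2 => h1.2 h2.1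
    rw [PG, this] at hgh
    simp at hgh
    linarith
  have hn : ‖h‖ ≠ 0 := norm_ne_zero_iff.2 hh0
  obtain ⟨F, hF⟩ := frame_exists (n := n) (‖h‖⁻¹ • h) (by rw [norm_smul]; simp [hn])
  have hFh : F.e h = (0, ‖h‖) := by
    have : h = ‖h‖ • (‖h‖⁻¹ • h) := by rw [smul_smul, mul_inv_cancel₀ hn, one_smul]
    conv_lhs => rw [this]
    rw [map_smul, hF]; simp
  refine ⟨F, ?_⟩
  rw [Mv_eq F, Mv_eq F, Frame.S, F.im_pre]
  have hYm : MeasurableSet (H ∩ (fun y => y + h) ⁻¹' O) := fH.1.inter (fO.1.preimage (by fun_prop))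
  have fY : Fin' (H ∩ (fun y => y + h) ⁻¹' O) :=
    ⟨hYm, measure_ne_top_of_subset inter_subset_left fH.2⟩
  have himB := im_ball F hr0
  refine Mp_gain (F.fin_im hA) (F.fin_im fY) (r := brad A) (s := ‖h‖) hg0.le
    (im_subset_Bp F hR.le hAR)
    (im_subset_Bp F hR.le (inter_subset_left.trans (sdiff_subset.trans hBR))) ?_ ?_ ?_ hb0
  · rw [← himB]
    exact fun p hp => hp.1
  · intro p hp
    rw [← himB]
    have e : F.e.symm (p.1, p.2 + ‖h‖) = F.e.symm p + h := by
      apply F.e.injective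
      rw [map_add, hFh]
      ext <;> simp
    have h2 : F.e.symm p + h ∈ O := hp.2
    rw [← e] at h2
    exact h2
  · rwa [F.volr_im]

variable {E : Fin 3 → Set (Vec (n + 1))}

/-! ### The Riesz–Sobolev inequality -/

lemma Reach.refl (E : Fin 3 → Set G) : Reach E E :=
  fun _ _ _ _ => Relation.ReflTransGen.refl

/-- The Riesz–Sobolev inequality for bounded subsets of the line. -/
lemma rs_line {A : Fin 3 → Set ℝ} (hA : ∀ j, MeasurableSet (A j)) (hAR : ∀ j, A j ⊆ Ico (-R) R) :
    T3 A ≤ T3 (fun j => cI (vol (A j))) := by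
  have fu : Fin' (univ : Set (Vec 0)) := by
    refine ⟨MeasurableSet.univ, ?_⟩
    rw [show (univ : Set (Vec 0)) = closedBall 0 1
      by ext x; simp [Subsingleton.elim x 0]]; exact (fin_ball _ _).2
  have hEm j : MeasurableSet (Prod.snd ⁻¹' A j : Set (Vec 0 × ℝ)) := measurable_snd (hA j)
  have hEb j : (Prod.snd ⁻¹' A j : Set (Vec 0 × ℝ)) ⊆ box univ R :=
    fun p hp => ⟨mem_univ _, hAR j hp⟩
  have fE j : Fin' (Prod.snd ⁻¹' A j : Set (Vec 0 × ℝ)) := ⟨hEm j, measure_ne_top_of_subset (hEb j) (fin_box fu R).2⟩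
  have h := ((reach_St fu hEm hEb).spec fE).2.2
  unfold T3 at h ⊢
  rw [ts_slice (fE 0) (fE 1) (fE 2), ts_slice (fin_St (fE 0)) (fin_St (fE 1)) (fin_St (fE 2))] at h
  simp_rw [fib_St] at h
  have e j w : fib (Prod.snd ⁻¹' A j : Set (Vec 0 × ℝ)) w = A j := rfl
  simp only [e, integral_const, smul_eq_mul] at h
  refine le_of_mul_le_mul_left h ?_
  rw [Measure.volume_eq_prod, ← univ_prod_univ, measureReal_prod_prod]
  rw [show (univ : Set (Vec 0)) = closedBall 0 1 by ext x; simp [Subsingleton.elim x 0]]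
  exact mul_pos (om_pos 0) (om_pos 0)

/-- Every bounded triple is connected to triples arbitrarily close to balls. -/
lemma near_balls (hR : 0 < R) (hE : ∀ j, MeasurableSet (E j)) (hER : ∀ j, E j ⊆ closedBall 0 R)
    (hη : 0 < η) : ∃ G, Reach E G ∧ ∀ j, vol (G j ∆ (ballStar (E j))) < η := by
  obtain ⟨c, hc, hgain⟩ := gain (n := n) hR hη
  have fE j : Fin' (E j) := ⟨hE j, measure_ne_top_of_subset (hER j) (fin_ball 0 R).2⟩
  set P : Set ℝ := {s | ∃ G : Fin 3 → Set (Vec (n + 1)), Reach E G ∧ (∀ j, MeasurableSet (G j)) ∧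
    (∀ j, G j ⊆ closedBall 0 R) ∧ s = ∑ j, Mv (G j)} with hP
  have hne : P.Nonempty := ⟨_, E, Reach.refl E, hE, hER, rfl⟩
  have hbdd : BddBelow P := ⟨0, by
    rintro s ⟨G, -, -, -, rfl⟩
    exact Finset.sum_nonneg fun j _ => Mv_nonneg _⟩
  obtain ⟨s, ⟨G, h1, h2, h3, rfl⟩, hs⟩ := exists_lt_of_csInf_lt hne (lt_add_of_pos_right (sInf P) hc)
  obtain ⟨fG, vG, -⟩ := h1.spec fE
  refine ⟨G, h1, fun j => ?_⟩
  by_contra hcon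
  push Not at hcon
  rw [← ballStar_congr (vG j)] at hcon
  obtain ⟨F, hF⟩ := hgain (G j) (h2 j) (h3 j) hcon
  have hmem : (∑ i, Mv (F.S (G i))) ∈ P :=
    ⟨fun i => F.S (G i), h1.trans (reach_S F hR.le h2 h3) fE,
      fun i => (F.fin_pre (fin_St (F.fin_im (fG i)))).1, fun i => S_subset F hR.le (h3 i), rfl⟩
  have h4 := csInf_le hbdd hmem
  have h5 := hF.trans (Finset.single_le_sum (f := fun i => Mv (G i) - Mv (F.S (G i)))
      (fun i _ => sub_nonneg.2 (Mv_S_le F hR.le (fG i) (h3 i))) (Finset.mem_univ j))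
  rw [Finset.sum_sub_distrib] at h5
  linarith

lemma rs_bounded (hR : 0 < R) (hE : ∀ j, MeasurableSet (E j)) (hER : ∀ j, E j ⊆ closedBall 0 R) :
    T3 E ≤ T3 (fun j => ballStar (E j)) := by
  have fE j : Fin' (E j) := ⟨hE j, measure_ne_top_of_subset (hER j) (fin_ball 0 R).2⟩
  set m := ∑ j, vol (E j)
  have hjm j : vol (E j) ≤ m := Finset.single_le_sum (f := fun j => vol (E j)) (fun _ _ => measureReal_nonneg)
      (Finset.mem_univ j)
  have hm0 := measureReal_nonneg.trans (hjm 0)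
  refine le_of_forall_pos_le_add fun ε hε => ?_
  obtain ⟨G, h1, h2⟩ := near_balls hR hE hER (η := ε / (3 * (m + 1))) (by positivity)
  obtain ⟨fG, vG, hT⟩ := h1.spec fE
  have h3 := T3_lip fG (fun j => fin_ballStar (E j)) (m := m) (ε := ε / (3 * (m + 1)))
    (fun j => by rw [vG]; exact hjm j) (fun j => by rw [vol_ballStar]; exact hjm j)
    (fun j => (h2 j).le)
  have h4 : m * (3 * (ε / (3 * (m + 1)))) ≤ ε := by
    rw [show m * (3 * (ε / (3 * (m + 1)))) = ε * (m / (m + 1)) by field_simp]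
    have : m / (m + 1) ≤ 1 := by rw [div_le_one (by linarith)]; linarith
    nlinarith
  linarith [(abs_le.1 h3).2]

lemma ts_mono {A B C A' : Set G} (hA : Fin' A) (hB : Fin' B) (hC : Fin' C) (hA' : Fin' A')
    (hB' : Fin' B') (hC' : Fin' C') (h1 : A ⊆ A') (h2 : B ⊆ B') (h3 : C ⊆ C') :
    TS A B C ≤ TS A' B' C' := by
  have b : ∀ (X : Set G) x, |chi X x| ≤ 1 := fun X x => by exact abs_chi_le _ _
  have mo : ∀ {X Y : Set G}, X ⊆ Y → ∀ x, chi X x ≤ chi Y x := fun h x =>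
    indicator_le_indicator_of_subset h (fun _ => zero_le_one) x
  exact integral_mono (tri_integrable hA.nice hB.nice
    (measurable_chi hC.1) (b C)) (tri_integrable hA'.nice hB'.nice
    (measurable_chi hC'.1) (b C')) fun p =>
    mul_le_mul (mul_le_mul (mo h1 _) (mo h2 _) (chi_nonneg _ _) (chi_nonneg _ _)) (mo h3 _)
    (chi_nonneg _ _) (mul_nonneg (chi_nonneg _ _) (chi_nonneg _ _))

/-- Large balls contain all but a small part of a set of finite measure. -/
lemma trunc {m : ℕ} {E : Set (Vec m)} (hE : Fin' E) (hε : 0 < ε) :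
    ∃ R₀, ∀ R ≥ R₀, vol (E \ closedBall 0 R) < ε := by
  have h1 : Filter.Tendsto (fun k : ℕ => volume (E \ closedBall 0 (k : ℝ))) Filter.atTop
      (nhds (volume (⋂ k : ℕ, E \ closedBall 0 (k : ℝ)))) := by
    refine tendsto_measure_iInter_atTop (fun k => (hE.1.diff (fin_ball _ _).1).nullMeasurableSet) ?_ ?_
    · intro i j hij
      exact sdiff_subset_sdiff_right (closedBall_subset_closedBall (by exact_mod_cast hij))
    · exact ⟨0, measure_ne_top_of_subset sdiff_subset hE.2⟩
  have h2 : (⋂ k : ℕ, E \ 𝔹 m (k : ℝ)) = ∅ := by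
    ext x
    simp only [mem_iInter, mem_empty_iff_false, iff_false, not_forall]
    obtain ⟨k, hk⟩ := exists_nat_ge ‖x‖
    exact ⟨k, fun h => h.2 (by simpa using hk)⟩
  rw [h2, measure_empty] at h1
  obtain ⟨k, hk⟩ := ((tendsto_order.1 h1).2 (ENNReal.ofReal ε) (by simpa using hε)).exists
  refine ⟨k, fun R hR => ?_⟩
  have h3 := (measure_mono (sdiff_subset_sdiff_right (closedBall_subset_closedBall hR))).trans_lt hk
  exact (ENNReal.toReal_lt_of_lt_ofReal h3)

lemma symmDiff_inter_self {α : Type*} (A B : Set α) : A ∆ (A ∩ B) = A \ B := by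
  ext x; simp only [mem_symmDiff, mem_inter_iff, mem_sdiff]; tauto

/-- The Riesz–Sobolev inequality. -/
theorem rs_ineq (fE : ∀ j, Fin' (E j)) : T3 E ≤ T3 (fun j => ballStar (E j)) := by
  set m := ∑ j, vol (E j)
  have hjm j : vol (E j) ≤ m := Finset.single_le_sum (f := fun j => vol (E j)) (fun _ _ => measureReal_nonneg)
      (Finset.mem_univ j)
  have hm0 := measureReal_nonneg.trans (hjm 0)
  refine le_of_forall_pos_le_add fun ε hε => ?_
  choose R₀ hR₀ using fun j => trunc (fE j) (ε := ε / (3 * (m + 1))) (by positivity)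
  set R := ∑ j, |R₀ j| + 1
  have hRj j : R₀ j ≤ R := by
    have := Finset.single_le_sum (f := fun j => |R₀ j|) (fun _ _ => abs_nonneg _) (Finset.mem_univ j)
    linarith [le_abs_self (R₀ j)]
  have hR0 : 0 < R := by
    have : 0 ≤ ∑ j, |R₀ j| := Finset.sum_nonneg fun _ _ => abs_nonneg _
    linarith
  set G : Fin 3 → Set (Vec (n + 1)) := fun j => E j ∩ closedBall 0 R with hG
  have fG j : Fin' (G j) := (fE j).inter (fin_ball _ _).1
  have hGm j : vol (G j) ≤ vol (E j) := measureReal_mono inter_subset_left (fE j).2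
  have h1 := rs_bounded hR0 (fun j => (fG j).1) (fun j => inter_subset_right)
  have h2 : T3 (fun j => ballStar (G j)) ≤ T3 (fun j => ballStar (E j)) := by
    have hs j : ballStar (G j) ⊆ ballStar (E j) := by
      refine closedBall_subset_closedBall (Real.rpow_le_rpow ?_ ?_ (by positivity))
      · exact div_nonneg measureReal_nonneg (om_pos _).le
      · exact div_le_div_of_nonneg_right (hGm j) (om_pos _).le
    exact ts_mono (fin_ballStar _) (fin_ballStar _) (fin_ballStar _) (fin_ballStar _)
      (fin_ballStar _) (fin_ballStar _) (hs 0) (hs 1) (hs 2)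
  have h3 := T3_lip fE fG (m := m) (ε := ε / (3 * (m + 1))) hjm (fun j => (hGm j).trans (hjm j))
    (fun j => by
      simp only [hG]
      rw [symmDiff_inter_self]
      exact (hR₀ j R (hRj j)).le)
  have h4 : m * (3 * (ε / (3 * (m + 1)))) ≤ ε := by
    rw [show m * (3 * (ε / (3 * (m + 1)))) = ε * (m / (m + 1)) by field_simp]
    have : m / (m + 1) ≤ 1 := by rw [div_le_one (by linarith)]; linarith
    nlinarith
  linarith [(abs_le.1 h3).2]

variable {u : Vec (n + 1)} {E : Set (Vec (n + 1))}

/-! ### Sets that are almost invariant under all reflections are almost balls -/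

lemma refl_frame (F : Frame n) (hu : ‖u‖ = 1) (hF : F.e u = (0, 1)) (x : Vec (n + 1)) :
    F.e ((Submodule.span ℝ {u})ᗮ.reflection x) = ((F.e x).1, -(F.e x).2) := by
  have h1 : (Submodule.span ℝ {u})ᗮ.reflection x = x - (2 * inner ℝ u x) • u := by
    rw [Submodule.reflection_orthogonal_apply, Submodule.reflection_singleton_apply]
    simp [hu]
    rw [mul_smul, two_smul, two_smul]
  have h2 : inner ℝ u x = (F.e x).2 := by
    have := F.inner_symm (F.e u) (F.e x)
    rw [hF, F.e.symm_apply_apply, ← hF, F.e.symm_apply_apply, hF] at this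
    simpa using this
  rw [h1, map_sub, map_smul, hF, h2]
  ext
  · simp
  · simp; ring

lemma vol_refl_S (F : Frame n) (hE : Fin' E) (hu : ‖u‖ = 1) (hF : F.e u = (0, 1)) :
    vol (F.S E ∆ ((Submodule.span ℝ {u})ᗮ.reflection ⁻¹' F.S E)) = 0 := by
  set A := F.im E
  have hA : Fin' A := F.fin_im hE
  let ρ : Vec n × ℝ → Vec n × ℝ := fun p => (p.1, -p.2)
  have e1 : (Submodule.span ℝ {u})ᗮ.reflection ⁻¹' F.S E = F.pre (ρ ⁻¹' (St A)) := by
    ext x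
    simp only [Frame.S, Frame.pre, mem_preimage, refl_frame F hu hF]; rfl
  have hρ : MeasurePreserving ρ := by
    have := (MeasurePreserving.id (volume : Measure (Vec n))).prod
      (Measure.measurePreserving_neg (volume : Measure ℝ))
    exact this
  have hSt := fin_St hA
  have hρS : Fin' (ρ ⁻¹' St A) :=
    ⟨hρ.measurable hSt.1, by rw [hρ.measure_preimage hSt.1.nullMeasurableSet]; exact hSt.2⟩
  rw [e1, Frame.S, ← Frame.pre_symmDiff, F.volr_pre, vol_slice (hSt.symmDiff hρS)]
  refine integral_eq_zero_of_ae (.of_forall fun w => ?_)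
  have hsub : fib (St A ∆ (ρ ⁻¹' St A)) w
      ⊆ {vol (fib A w) / 2, -(vol (fib A w) / 2)} := by
    intro t ht
    rw [fib_symmDiff] at ht
    have e2 : fib (ρ ⁻¹' St A) w = {t | -t ∈ cI (vol (fib A w))} := rfl
    rw [e2, fib_St, mem_symmDiff] at ht
    change (t ∈ Ico _ _ ∧ ¬ (-t ∈ Ico _ _)) ∨ (-t ∈ Ico _ _ ∧ ¬ (t ∈ Ico _ _)) at ht
    simp only [mem_Ico, mem_insert_iff, mem_singleton_iff, not_and_or, not_le, not_lt] at ht ⊢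
    rcases ht with ⟨⟨h1, h2⟩, h3 | h3⟩ | ⟨⟨h1, h2⟩, h3 | h3⟩
    · left; linarith
    · right; linarith
    · left; linarith
    · left; linarith
  have : volume (fib (St A ∆ (ρ ⁻¹' St A)) w) = 0 :=
    measure_mono_null hsub ((Set.toFinite _).measure_zero _)
  simp [Measure.real, this]

lemma vol_pre_isom (Q : Vec (n + 1) ≃ₗᵢ[ℝ] Vec (n + 1)) (A : Set (Vec (n + 1))) :
    vol (Q ⁻¹' A) = vol A := by
  have h : MeasurePreserving Q.toHomeomorph.toMeasurableEquiv := Q.measurePreserving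
  exact congrArg ENNReal.toReal (h.measure_preimage_equiv A)

lemma fin_pre_isom (Q : Vec (n + 1) ≃ₗᵢ[ℝ] Vec (n + 1)) (hA : Fin' A) : Fin' (Q ⁻¹' A) := by
  refine ⟨Q.continuous.measurable hA.1, ?_⟩
  have h : MeasurePreserving Q.toHomeomorph.toMeasurableEquiv := Q.measurePreserving
  rw [show volume (Q ⁻¹' A) = volume A from h.measure_preimage_equiv A]; exact hA.2

lemma refl_near (hE : Fin' E) (hε : 0 ≤ ε) (h : ∀ F : Frame n, vol (E ∆ F.S E) ≤ ε)
    (v : Vec (n + 1)) :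
    vol (E ∆ (((Submodule.span ℝ {v})ᗮ.reflection :
      Vec (n + 1) ≃ₗᵢ[ℝ] Vec (n + 1)) ⁻¹' E)) ≤ 2 * ε := by
  by_cases hv : v = 0
  · subst hv
    have : ((Submodule.span ℝ {(0 : Vec (n + 1))})ᗮ.reflection : Vec (n + 1) → Vec (n + 1)) ⁻¹' E = E := by
      ext x
      rw [mem_preimage, Submodule.reflection_orthogonal_apply, Submodule.reflection_singleton_apply]
      simp
    rw [this]; simp [hε]
  · set u : Vec (n + 1) := (‖v‖⁻¹ : ℝ) • v
    have hu : ‖u‖ = 1 := by simp [u, norm_smul, norm_ne_zero_iff.2 hv]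
    have hs : (Submodule.span ℝ {v}) = Submodule.span ℝ {u} := by
      rw [Submodule.span_singleton_smul_eq (IsUnit.mk0 _ (by simpa using hv))]
    obtain ⟨F, hF⟩ := frame_exists u hu
    have hS : Fin' (F.S E) := F.fin_pre (fin_St (F.fin_im hE))
    simp only [hs]
    set Q := (Submodule.span ℝ {u})ᗮ.reflection
    have h1 := sd_triangle hE hS (fin_pre_isom Q hE)
    have h2 := sd_triangle hS (fin_pre_isom Q hS) (fin_pre_isom Q hE)
    rw [vol_refl_S F hE hu hF, ← preimage_symmDiff, vol_pre_isom, symmDiff_comm (F.S E) E] at h2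
    linarith [h F]

/-- A set almost invariant under every reflection is almost invariant under every isometry. -/
lemma isom_near (hE : Fin' E) (hε : 0 ≤ ε) (h : ∀ F : Frame n, vol (E ∆ F.S E) ≤ ε)
    (Q : Vec (n + 1) ≃ₗᵢ[ℝ] Vec (n + 1)) : vol (E ∆ (Q ⁻¹' E)) ≤ 2 * (n + 1) * ε := by
  have key : ∀ l : List (Vec (n + 1)), vol (symmDiff E
      ((l.map fun v => (Submodule.span ℝ {v})ᗮ.reflection).prod ⁻¹' E)) ≤ 2 * l.length * ε := by
    intro l
    induction l with
    | nil => simp [preimage_id_eq]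
    | cons v l ih =>
      set P := (l.map fun v => (Submodule.span ℝ {v})ᗮ.reflection).prod
      have e1 : ((v :: l).map fun v => (Submodule.span ℝ {v})ᗮ.reflection).prod ⁻¹' E
          = P ⁻¹' ((Submodule.span ℝ {v})ᗮ.reflection ⁻¹' E) := by
        simp only [List.map_cons, List.prod_cons]; rfl
      rw [e1]
      have h1 := sd_triangle hE (fin_pre_isom P hE) (fin_pre_isom P (fin_pre_isom
        (Submodule.span ℝ {v})ᗮ.reflection hE))
      rw [← preimage_symmDiff, vol_pre_isom] at h1
      have h2 := refl_near hE hε h v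
      push_cast [List.length_cons]
      linarith
  obtain ⟨l, hl, rfl⟩ := Q.reflections_generate_dim
  refine (key l).trans ?_
  have : (l.length : ℝ) ≤ n + 1 := by simp at hl; exact_mod_cast hl
  gcongr

/-- Averaging over the orthogonal group: a set almost invariant under every isometry is `L¹`-close
to a radial function. -/
lemma radial_avg (hE : Fin' E) (h : ∀ Q : Vec (n + 1) ≃ₗᵢ[ℝ] Vec (n + 1), vol (E ∆ (Q ⁻¹' E)) ≤ ε) :
    ∃ g : ℝ → ℝ, Measurable g ∧ (∀ s, 0 ≤ g s) ∧ (∀ s, g s ≤ 1) ∧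
      (∀ s, 0 ≤ s → (∀ y, ‖y‖ = s → y ∈ E) → g s = 1) ∧
      (∀ s, 0 ≤ s → (∀ y, ‖y‖ = s → y ∉ E) → g s = 0) ∧
      Integrable (fun x => |chi E x - g ‖x‖|) ∧ ∫ x, |chi E x - g ‖x‖| ≤ ε := by
  let V := Vec (n + 1)
  let X := unitary (V →L[ℝ] V)
  have : ContinuousStar (V →L[ℝ] V) :=
    ⟨(ContinuousLinearMap.adjoint : (V →L[ℝ] V) ≃ₗᵢ⋆[ℝ] (V →L[ℝ] V)).continuous⟩
  have : CompactSpace X := by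
    refine isCompact_iff_compactSpace.1 (isCompact_of_isClosed_isBounded isClosed_unitary ?_)
    refine (isBounded_closedBall (x := 0) (r := 1)).subset fun Q hQ => ?_
    simp only [mem_closedBall, dist_zero_right]
    exact CStarRing.norm_of_mem_unitary hQ |>.le
  let : MeasurableSpace X := borel X
  have : BorelSpace X := ⟨rfl⟩
  let μ : Measure X := Measure.haarMeasure ⊤
  have hμ : IsProbabilityMeasure μ := ⟨by
    have := Measure.haarMeasure_self (K₀ := (⊤ : TopologicalSpace.PositiveCompacts X))
    simpa using this⟩
  have hcont : Continuous (fun q : V × X => ((q.2⁻¹ : X) : V →L[ℝ] V) q.1) :=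
    (continuous_subtype_val.comp (continuous_inv.comp continuous_snd)).clm_apply continuous_fst
  let θ : V → ℝ := fun x => ∫ Q, chi E (((Q⁻¹ : X) : V →L[ℝ] V) x) ∂μ
  have hmeas : Measurable (fun q : V × X => chi E (((q.2⁻¹ : X) : V →L[ℝ] V) q.1)) :=
    (measurable_chi hE.1).comp hcont.measurable
  have hθm : StronglyMeasurable θ := hmeas.stronglyMeasurable.integral_prod_right
  have hInt x : Integrable (fun Q : X => chi E (((Q⁻¹ : X) : V →L[ℝ] V) x)) μ :=
    Integrable.of_bound (C := 1) (hmeas.comp measurable_prodMk_left).aestronglyMeasurable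
      (.of_forall fun Q => by exact abs_chi_le _ _)
  have hθinv : ∀ (Q : X) x, θ ((Q : V →L[ℝ] V) x) = θ x := by
    intro Q x
    have := integral_mul_left_eq_self (μ := μ) (fun P : X => chi E (((P⁻¹ : X) : V →L[ℝ] V)
      ((Q : V →L[ℝ] V) x))) Q
    change ∫ P, _ ∂μ = _
    rw [← this]
    refine integral_congr_ae (.of_forall fun P => ?_)
    change chi E _ = chi E _
    congr 1
    have e : ((Q * P)⁻¹ * Q : X) = P⁻¹ := by group
    conv_rhs => rw [← e]
    rfl
  have hθnorm (x y : V) : ‖x‖ = ‖y‖ → θ x = θ y := by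
    intro hxy
    have h1 := hθinv (Unitary.linearIsometryEquiv.symm (Submodule.span ℝ {x - y})ᗮ.reflection) x
    rw [← h1]
    congr 1
    exact Submodule.reflection_sub hxy
  obtain ⟨u, hu⟩ : ∃ u : V, ‖u‖ = 1 := exists_norm_eq V zero_le_one
  have hsu (s : ℝ) : 0 ≤ s → ‖s • u‖ = s := fun hs => by simp [norm_smul, hu, abs_of_nonneg hs]
  have hmap : ∀ (Q : X) x, ‖((Q⁻¹ : X) : V →L[ℝ] V) x‖ = ‖x‖ := fun Q x => Unitary.norm_map _ x
  have hg (x : V) : θ (‖x‖ • u) = θ x := hθnorm _ _ (hsu _ (norm_nonneg _))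
  have key (Q : X) : vol (symmDiff E ((fun x => ((Q⁻¹ : X) : V →L[ℝ] V) x) ⁻¹' E)) ≤ ε :=
    h (Unitary.linearIsometryEquiv Q⁻¹)
  have hfinQ (Q : X) : Fin' ((fun x => ((Q⁻¹ : X) : V →L[ℝ] V) x) ⁻¹' E) :=
    fin_pre_isom (Unitary.linearIsometryEquiv Q⁻¹) hE
  have hm2 : Measurable (fun q : V × X => |chi E q.1 - chi E (((q.2⁻¹ : X) : V →L[ℝ] V) q.1)|) :=
    (((measurable_chi hE.1).comp measurable_fst).sub hmeas).abs
  have hprod : Integrable (fun q : V × X => |chi E q.1 - chi E (((q.2⁻¹ : X) : V →L[ℝ] V) q.1)|)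
      ((volume : Measure V).prod μ) := by
    rw [integrable_prod_iff' hm2.aestronglyMeasurable]
    have e1 (Q : X) : ∫ x, ‖|chi E x - chi E (((Q⁻¹ : X) : V →L[ℝ] V) x)|‖
        = vol (symmDiff E ((fun x => ((Q⁻¹ : X) : V →L[ℝ] V) x) ⁻¹' E)) := by
      rw [← integral_abs_chi_sub hE.1 (hfinQ Q).1]
      simp only [Real.norm_eq_abs, abs_abs]; rfl
    refine ⟨.of_forall fun Q => ?_, ?_⟩
    · exact (hE.nice.sub (hfinQ Q).nice).2.1.abs
    · have := hm2.norm.stronglyMeasurable.integral_prod_left' (μ := (volume : Measure V)) (β := X)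
      refine Integrable.of_bound (C := ε) this.aestronglyMeasurable
        (.of_forall fun Q => ?_)
      dsimp only
      rw [e1, Real.norm_eq_abs, abs_of_nonneg measureReal_nonneg]
      exact key Q
  have hpt x : |chi E x - θ x| ≤ ∫ Q, |chi E x - chi E (((Q⁻¹ : X) : V →L[ℝ] V) x)| ∂μ := by
    rw [show chi E x - θ x = ∫ Q, (chi E x - chi E (((Q⁻¹ : X) : V →L[ℝ] V) x)) ∂μ
      by rw [integral_sub (integrable_const _) (hInt x)]; simp [θ]]
    exact abs_integral_le_integral_abs
  have hθint : Integrable fun x => |chi E x - θ x| := by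
    refine Integrable.mono' hprod.integral_prod_left
      (((measurable_chi hE.1).sub hθm.measurable).abs.aestronglyMeasurable)
      (.of_forall fun x => ?_)
    rw [Real.norm_eq_abs, abs_abs]; exact hpt x
  refine ⟨fun s => θ (s • u), hθm.measurable.comp (by fun_prop), fun s => ?_, fun s => ?_, ?_, ?_, ?_⟩
  · exact integral_nonneg fun Q => chi_nonneg _ _
  · calc θ (s • u) ≤ ∫ Q : X, (1 : ℝ) ∂μ :=
          integral_mono (hInt _) (integrable_const _) fun Q => chi_le_one _ _
      _ = 1 := by simp
  · intro s hs hy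
    have : ∀ Q : X, chi E (((Q⁻¹ : X) : V →L[ℝ] V) (s • u)) = 1 := fun Q =>
      chi_of_mem (hy _ (by rw [hmap, hsu s hs]))
    change ∫ Q, _ ∂μ = _
    rw [integral_congr_ae (.of_forall this)]; simp
  · intro s hs hy
    have : ∀ Q : X, chi E (((Q⁻¹ : X) : V →L[ℝ] V) (s • u)) = 0 := fun Q =>
      chi_of_notMem (hy _ (by rw [hmap, hsu s hs]))
    change ∫ Q, _ ∂μ = _
    rw [integral_congr_ae (.of_forall this)]; simp
  · simp only [hg]
    refine ⟨hθint, ?_⟩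
    calc ∫ x, |chi E x - θ x|
        ≤ ∫ x, ∫ Q, |chi E x - chi E (((Q⁻¹ : X) : V →L[ℝ] V) x)| ∂μ :=
          integral_mono hθint hprod.integral_prod_left hpt
      _ = ∫ Q, (∫ x, |chi E x - chi E (((Q⁻¹ : X) : V →L[ℝ] V) x)|) ∂μ :=
          integral_integral_swap hprod
      _ ≤ ∫ Q : X, ε ∂μ := by
          refine integral_mono hprod.integral_prod_right (integrable_const _) fun Q => ?_
          have := integral_abs_chi_sub hE.1 (hfinQ Q).1
          refine le_trans (le_of_eq ?_) (key Q)
          rw [← this]; rfl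
      _ = ε := by simp

variable {A : Set (Vec n × ℝ)}

/-- The substitution `s = √(a² + t²)`, whose derivative in `t` is at most one. -/
lemma line_change {H : ℝ → ℝ} (hm : Measurable H) (h0 : ∀ s, 0 ≤ H s) (ha : 0 ≤ a)
    (hi : IntegrableOn (fun t => H (√(a ^ 2 + t ^ 2))) (Ioi 0)) :
    IntegrableOn H (Ioi a) ∧ ∫ s in Ioi a, H s ≤ ∫ t in Ioi 0, H (√(a ^ 2 + t ^ 2)) := by
  let f : ℝ → ℝ := fun t => √(a ^ 2 + t ^ 2)
  let f' : ℝ → ℝ := fun t => t / √(a ^ 2 + t ^ 2)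
  have hpos : ∀ t ∈ Ioi (0 : ℝ), 0 < a ^ 2 + t ^ 2 := fun t ht => by
    have : 0 < t := ht
    positivity
  have hd : ∀ t ∈ Ioi (0 : ℝ), HasDerivWithinAt f (f' t) (Ioi 0) t := by
    intro t ht
    have h1 : HasDerivAt (fun t : ℝ => a ^ 2 + t ^ 2) (2 * t) t := by
      simpa using (hasDerivAt_pow 2 t).const_add (a ^ 2)
    have h2 := (h1.sqrt (hpos t ht).ne').hasDerivWithinAt (s := Ioi 0)
    rw [mul_div_mul_left _ _ two_ne_zero] at h2
    exact h2
  have hinj : InjOn f (Ioi 0) := by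
    intro s hs t ht h
    have h' : a ^ 2 + s ^ 2 = a ^ 2 + t ^ 2 := by
      have := congrArg (· ^ 2) h
      simpa only [f, Real.sq_sqrt (hpos s hs).le, Real.sq_sqrt (hpos t ht).le] using this
    exact (pow_left_inj₀ (le_of_lt hs) (le_of_lt ht) two_ne_zero).1 (by linarith)
  have him : f '' Ioi 0 = Ioi a := by
    ext s
    constructor
    · rintro ⟨t, ht, rfl⟩
      have : 0 < t := ht
      exact Real.lt_sqrt_of_sq_lt (by nlinarith)
    · intro hs
      have hs' : a < s := hs
      refine ⟨√(s ^ 2 - a ^ 2), Real.sqrt_pos.2 (by nlinarith), ?_⟩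
      simp only [f]
      rw [Real.sq_sqrt (by nlinarith), add_sub_cancel, Real.sqrt_sq (by linarith)]
  have hf'le : ∀ t ∈ Ioi (0 : ℝ), |f' t| ≤ 1 := by
    intro t ht
    have ht' : 0 < t := ht
    have : 0 < √(a ^ 2 + t ^ 2) := Real.sqrt_pos.2 (hpos t ht)
    simp only [f']
    rw [abs_of_nonneg (by positivity), div_le_one this]
    exact Real.le_sqrt_of_sq_le (by nlinarith)
  have hi' : IntegrableOn (fun t => |f' t| • H (f t)) (Ioi 0) := by
    refine Integrable.mono' hi ?_ ?_
    · have : Measurable fun t => |f' t| • H (f t) := by simp only [f, f']; fun_prop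
      exact this.aestronglyMeasurable
    · refine (ae_restrict_iff' measurableSet_Ioi).2 (.of_forall fun t ht => ?_)
      rw [smul_eq_mul, norm_mul, Real.norm_eq_abs, Real.norm_eq_abs, abs_abs,
        abs_of_nonneg (h0 _)]
      exact mul_le_of_le_one_left (h0 _) (hf'le t ht)
  rw [← him]
  refine ⟨(integrableOn_image_iff_integrableOn_abs_deriv_smul measurableSet_Ioi hd hinj H).2 hi', ?_⟩
  rw [integral_image_eq_integral_abs_deriv_smul measurableSet_Ioi hd hinj H]
  exact setIntegral_mono_on hi' hi measurableSet_Ioi fun t ht =>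
    mul_le_of_le_one_left (h0 _) (hf'le t ht)

/-- Fibres of a set squeezed between two balls. -/
lemma fib_between (h1 : Bp n a ⊆ A) (h2 : A ⊆ Bp n b) (w : Vec n) :
    (‖w‖ ^ 2 ≤ a ^ 2 → Icc (-√(a ^ 2 - ‖w‖ ^ 2)) (√(a ^ 2 - ‖w‖ ^ 2)) ⊆ fib A w) ∧
      fib A w ⊆ Icc (-√(b ^ 2 - ‖w‖ ^ 2)) (√(b ^ 2 - ‖w‖ ^ 2)) := by
  constructor
  · intro hw t ht
    apply h1
    change ‖w‖ ^ 2 + t ^ 2 ≤ a ^ 2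
    have := sq_le_sq' ht.1 ht.2
    rw [Real.sq_sqrt (by linarith)] at this
    linarith
  · intro t ht
    have h := h2 ht
    change ‖w‖ ^ 2 + t ^ 2 ≤ b ^ 2 at h
    exact ⟨Real.neg_sqrt_le_of_sq_le (by linarith), Real.le_sqrt_of_sq_le (by linarith)⟩

lemma vol_Icc_symm (ha : 0 ≤ a) : vol (Icc (-a) a) = 2 * a := by
  rw [Real.volume_real_Icc, max_eq_left (by linarith)]; ring

/-- Half-lengths of the fibres of a set squeezed between two balls. -/
lemma vol_fib_between (h1 : Bp n a ⊆ A) (h2 : A ⊆ Bp n b) (w : Vec n) (hw : ‖w‖ ^ 2 ≤ a ^ 2) :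
    2 * √(a ^ 2 - ‖w‖ ^ 2) ≤ vol (fib A w) ∧
      vol (fib A w) ≤ 2 * √(b ^ 2 - ‖w‖ ^ 2) := by
  obtain ⟨h3, h4⟩ := fib_between h1 h2 w
  have hfin : volume (fib A w) ≠ ⊤ := ((measure_mono h4).trans_lt (by simp)).ne
  rw [← vol_Icc_symm (Real.sqrt_nonneg _), ← vol_Icc_symm (Real.sqrt_nonneg _)]
  exact ⟨measureReal_mono (h3 hw) hfin, measureReal_mono h4 (by simp)⟩

/-- A set squeezed between two concentric balls, almost fixed by every Steiner symmetrization, is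
almost a ball. -/
lemma round_ball (n : ℕ) (hc : 0 < c) : ∃ C : ℝ, 0 ≤ C ∧ ∀ r : ℝ, c ≤ r → r ≤ 1 →
    ∀ E : Set (Vec (n + 1)), Fin' E → closedBall 0 (3 * r / 4) ⊆ E →
    E ⊆ closedBall 0 (5 * r / 4) →
    vol E = vol (𝔹 (n + 1) r) → ∀ ε : ℝ, 0 ≤ ε →
    (∀ F : Frame n, vol (E ∆ F.S E) ≤ ε) →
    vol (E ∆ closedBall 0 r) ≤ C * ε := by
  set v0 := vol (𝔹 n (c / 2)) with hv0
  have hv0pos : 0 < v0 := by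
    rw [hv0, Measure.real]
    exact ENNReal.toReal_pos (measure_closedBall_pos _ _ (by positivity)).ne'
      (fin_ball _ _).2
  set v1 := vol (ball (0 : Vec (n + 1)) 1)
  set C1 : ℝ := (n + 1) * (v1 * (2 ^ n * ((2 * (n + 1) + 1) / v0)))
  refine ⟨2 * (2 * (n + 1) + C1), by positivity, ?_⟩
  intro r hcr hr1 E hE hin hout hvol ε hε hF
  obtain ⟨g, hgm, hg0, hg1, hgin, hgout, hgi, hgε⟩ := radial_avg hE (isom_near hE hε hF)
  have hr : 0 < r := by linarith
  obtain ⟨u, hu⟩ : ∃ u : Vec (n + 1), ‖u‖ = 1 := exists_norm_eq _ zero_le_one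
  obtain ⟨F, -⟩ := frame_exists u hu
  set A := F.im E
  have hA : Fin' A := F.fin_im hE
  have hA1 : Bp n (3 * r / 4) ⊆ A := by rw [← im_ball F (by positivity)]; exact preimage_mono hin
  have hA2 : A ⊆ Bp n (5 * r / 4) := by rw [← im_ball F (by positivity)]; exact preimage_mono hout
  have hS : Fin' (F.S E) := F.fin_pre (fin_St hA)
  have gout s : 5 * r / 4 < s → g s = 0 := fun hs => hgout s (by linarith) fun y hy hyE => by
    have := hout hyE
    simp at this; linarith
  have gin s : 0 ≤ s → s ≤ 3 * r / 4 → g s = 1 := fun hs hs2 => hgin s hs fun y hy =>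
    hin (by simp; linarith)
  -- the radial function compared with the symmetrization, in the frame
  let G : Vec n × ℝ → ℝ := fun p => |g (√(‖p.1‖ ^ 2 + p.2 ^ 2)) - chi (St A) p|
  have hGe x : G (F.e x) = |g ‖x‖ - chi (F.S E) x| := by
    simp only [G]
    rw [← F.nsq, Real.sqrt_sq (norm_nonneg _)]; rfl
  have hiE : Integrable fun x => |chi E x - chi (F.S E) x| :=
    (hE.nice.sub hS.nice).2.1.abs
  have hle x : G (F.e x) ≤ |chi E x - g ‖x‖| + |chi E x - chi (F.S E) x| := by
    rw [hGe, abs_sub_comm (chi E x) (g ‖x‖)]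
    exact abs_sub_le _ _ _
  have hGm : Measurable G := by
    have := measurable_chi (fin_St hA).1
    simp only [G]; fun_prop
  have hGi' : Integrable fun x => G (F.e x) := by
    refine Integrable.mono' (hgi.add hiE) (hGm.comp F.e.continuous.measurable).aestronglyMeasurable
      (.of_forall fun x => ?_)
    rw [Real.norm_eq_abs, abs_of_nonneg (abs_nonneg _)]
    exact hle x
  have hemb : MeasurableEmbedding F.e := F.me.measurableEmbedding
  have hGi : Integrable G := (F.mp.integrable_comp_emb hemb).1 hGi'
  have hGε : ∫ p, G p ≤ (2 * (n + 1) + 1) * ε := by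
    rw [← F.mp.integral_comp hemb]
    calc ∫ x, G (F.e x) ≤ ∫ x, (|chi E x - g ‖x‖| + |chi E x - chi (F.S E) x|) :=
          integral_mono hGi' (hgi.add hiE) hle
      _ = (∫ x, |chi E x - g ‖x‖|) + ∫ x, |chi E x - chi (F.S E) x| := integral_add hgi hiE
      _ ≤ _ := by rw [integral_abs_chi_sub hE.1 hS.1]; linarith [hF F]
  -- a good line
  obtain ⟨w, hw, hwG⟩ : ∃ w ∈ 𝔹 n (c / 2),
      ∫ t, G (w, t) ≤ (2 * (n + 1) + 1) * ε / v0 := by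
    have hGW : Integrable fun w => ∫ t, G (w, t) := hGi.integral_prod_left
    obtain ⟨w, hw, h⟩ := exists_le_setAverage (μ := (volume : Measure (Vec n)))
      (s := 𝔹 n (c / 2)) (f := fun w => ∫ t, G (w, t))
      (measure_closedBall_pos _ _ (by positivity)).ne' (fin_ball _ _).2 hGW.integrableOn
    refine ⟨w, hw, h.trans ?_⟩
    rw [setAverage_eq, smul_eq_mul, inv_mul_eq_div]
    change _ / v0 ≤ _
    gcongr
    calc ∫ w in 𝔹 n (c / 2), ∫ t, G (w, t) ≤ ∫ w, ∫ t, G (w, t) :=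
          setIntegral_le_integral hGW (.of_forall fun w =>
            integral_nonneg fun t => abs_nonneg _)
      _ = ∫ p, G p := (integral_prod _ hGi).symm
      _ ≤ _ := hGε
  have hwr : ‖w‖ ≤ r / 2 := by simp at hw; linarith
  have hw0 := norm_nonneg w
  have hwa : ‖w‖ ^ 2 ≤ (3 * r / 4) ^ 2 := by nlinarith
  obtain ⟨hm1, hm2⟩ := vol_fib_between hA1 hA2 w hwa
  set m := vol (fib A w)
  set R := √(‖w‖ ^ 2 + (m / 2) ^ 2)
  have hm0 : 0 ≤ m := measureReal_nonneg
  have hR1 : 3 * r / 4 ≤ R := by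
    apply Real.le_sqrt_of_sq_le
    have : (√((3 * r / 4) ^ 2 - ‖w‖ ^ 2)) ^ 2 ≤ (m / 2) ^ 2 :=
      pow_le_pow_left₀ (Real.sqrt_nonneg _) (by linarith) 2
    rw [Real.sq_sqrt (by linarith)] at this
    linarith
  have hR2 : R ≤ 5 * r / 4 := by
    apply Real.sqrt_le_iff.2 ⟨by positivity, ?_⟩
    have : (m / 2) ^ 2 ≤ (√((5 * r / 4) ^ 2 - ‖w‖ ^ 2)) ^ 2 :=
      pow_le_pow_left₀ (by positivity) (by linarith) 2
    rw [Real.sq_sqrt (by nlinarith)] at this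
    linarith
  let H : ℝ → ℝ := fun s => |g s - chi (Iio R) s|
  have hHm : Measurable H := by
    have := measurable_chi (measurableSet_Iio (a := R))
    simp only [H]; fun_prop
  have hH0 s : 0 ≤ H s := abs_nonneg _
  have hHin s : 0 ≤ s → s < 3 * r / 4 → H s = 0 := by
    intro hs hs2
    simp only [H]
    rw [gin s hs hs2.le, chi_of_mem (show s ∈ Iio R from lt_of_lt_of_le hs2 hR1)]; simp
  have hHout s : 5 * r / 4 < s → H s = 0 := by
    intro hs
    simp only [H]
    rw [gout s hs, chi_of_notMem (show s ∉ Iio R by simp; linarith)]; simp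
  have hHG : ∀ t ∈ Ioi (0 : ℝ), H (√(‖w‖ ^ 2 + t ^ 2)) = G (w, t) := by
    intro t ht
    have ht' : 0 < t := ht
    simp only [H, G]
    congr 2
    apply chi_congr
    change √(‖w‖ ^ 2 + t ^ 2) < √(‖w‖ ^ 2 + (m / 2) ^ 2) ↔ -(m / 2) ≤ t ∧ t < m / 2
    rw [Real.sqrt_lt_sqrt_iff (by positivity)]
    constructor
    · intro h
      exact ⟨by linarith, lt_of_pow_lt_pow_left₀ 2 (by positivity) (by linarith)⟩
    · rintro ⟨-, h⟩
      linarith [pow_lt_pow_left₀ h ht'.le two_ne_zero]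
  have hGw : Integrable fun t => G (w, t) := by
    refine Integrable.mono' (g := (Icc (-2 : ℝ) 2).indicator 1)
      ((integrable_indicator_iff measurableSet_Icc).2 (integrableOn_const (by simp)))
      (hGm.comp measurable_prodMk_left).aestronglyMeasurable
      (.of_forall fun t => ?_)
    rw [Real.norm_eq_abs, abs_of_nonneg (show 0 ≤ G (w, t) from abs_nonneg _)]
    by_cases ht : t ∈ Icc (-2 : ℝ) 2
    · rw [indicator_of_mem ht]
      exact abs_sub_le_of_nonneg_of_le (hg0 _) (hg1 _) (chi_nonneg _ _) (chi_le_one _ _)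
    · rw [indicator_of_notMem ht]
      have ht2 : 4 < t ^ 2 := by
        by_contra hcon
        exact ht (abs_le.1 (abs_le_of_sq_le_sq (by linarith) (by norm_num)))
      have e1 : g (√(‖w‖ ^ 2 + t ^ 2)) = 0 := gout _ (Real.lt_sqrt_of_sq_lt (by nlinarith))
      have e2 : chi (St A) (w, t) = 0 := by
        apply chi_of_notMem
        intro h
        have h' : -(m / 2) ≤ t ∧ t < m / 2 := h
        have : m / 2 ≤ R := Real.le_sqrt_of_sq_le (by nlinarith)
        exact ht ⟨by linarith, by linarith⟩
      simp only [G, e1, e2]; simp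
  have hHt : IntegrableOn (fun t => H (√(‖w‖ ^ 2 + t ^ 2))) (Ioi 0) :=
    hGw.integrableOn.congr_fun (fun t ht => (hHG t ht).symm) measurableSet_Ioi
  obtain ⟨hHi, hHle⟩ := line_change hHm hH0 hw0 hHt
  have hHε : ∫ s in Ioi ‖w‖, H s ≤ (2 * (n + 1) + 1) * ε / v0 := by
    refine hHle.trans (le_trans ?_ hwG)
    rw [setIntegral_congr_fun measurableSet_Ioi hHG]
    exact setIntegral_le_integral hGw (.of_forall fun t => abs_nonneg _)
  have hHrad : ∫ x : Vec (n + 1), H ‖x‖ ≤ C1 * ε := by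
    rw [integral_fun_norm_addHaar (μ := (volume : Measure (Vec (n + 1)))) H]
    rw [show Module.finrank ℝ (Vec (n + 1)) = n + 1 by simp, Nat.add_sub_cancel]
    have hkey : ∫ y in Ioi (0 : ℝ), y ^ n • H y ≤ 2 ^ n * ((2 * (n + 1) + 1) * ε / v0) := by
      have e1 : ∫ y in Ioi (0 : ℝ), y ^ n • H y = ∫ y in Ioi ‖w‖, y ^ n • H y := by
        refine (setIntegral_eq_of_subset_of_forall_sdiff_eq_zero measurableSet_Ioi
          (Ioi_subset_Ioi hw0) ?_)
        rintro y ⟨hy, hy2⟩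
        have hy' : 0 < y := hy
        have hy2' : y ≤ ‖w‖ := not_lt.1 hy2
        rw [hHin y hy'.le (by linarith), smul_zero]
      rw [e1]
      have hle2 : ∀ y ∈ Ioi ‖w‖, y ^ n • H y ≤ 2 ^ n * H y := by
        intro y hy
        have hy' : ‖w‖ < y := hy
        by_cases h2 : 5 * r / 4 < y
        · rw [hHout y h2]; simp
        · exact mul_le_mul_of_nonneg_right (pow_le_pow_left₀ (by linarith) (by linarith) n) (hH0 y)
      calc ∫ y in Ioi ‖w‖, y ^ n • H y ≤ ∫ y in Ioi ‖w‖, 2 ^ n * H y := by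
            refine setIntegral_mono_on ?_ (hHi.const_mul _) measurableSet_Ioi hle2
            refine Integrable.mono' (hHi.const_mul (2 ^ n)) ?_ ?_
            · exact ((measurable_id.pow_const n).smul hHm).aestronglyMeasurable
            · refine (ae_restrict_iff' measurableSet_Ioi).2 (.of_forall ?_)
              intro y hy
              have hy' : ‖w‖ < y := hy
              rw [Real.norm_eq_abs, abs_of_nonneg
                (smul_nonneg (pow_nonneg (by linarith) n) (hH0 y))]
              exact hle2 y hy
        _ = 2 ^ n * ∫ y in Ioi ‖w‖, H y := integral_const_mul _ _
        _ ≤ _ := by gcongr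
    simp only [nsmul_eq_mul, smul_eq_mul] at hkey ⊢
    change _ * (v1 * _) ≤ _
    calc ((n + 1 : ℕ) : ℝ) * (v1 * ∫ y in Ioi (0 : ℝ), y ^ n * H y)
        ≤ ((n + 1 : ℕ) : ℝ) * (v1 * (2 ^ n * ((2 * (n + 1) + 1) * ε / v0))) := by
          have : 0 ≤ v1 := measureReal_nonneg
          gcongr
      _ = C1 * ε := by simp only [C1]; push_cast; ring
  have hfR : Fin' (ball (0 : Vec (n + 1)) R) :=
    ⟨measurableSet_ball, measure_ball_lt_top.ne⟩
  have hEB : vol (E ∆ ball 0 R) ≤ (2 * (n + 1) + C1) * ε := by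
    rw [← integral_abs_chi_sub hE.1 hfR.1]
    have hHx : ∀ x : Vec (n + 1), H ‖x‖ = |g ‖x‖ - chi (ball (0 : Vec (n + 1)) R) x| := by
      intro x
      simp only [H]
      congr 2
      exact chi_congr (by simp)
    have hHint : Integrable fun x : Vec (n + 1) => H ‖x‖ := by
      simp only [hHx]
      have i1 : Integrable fun x : Vec (n + 1) => chi E x - chi (ball (0 : Vec (n + 1)) R) x :=
        (hE.nice.sub hfR.nice).2.1
      refine Integrable.mono' (hgi.add i1.abs) ?_ (.of_forall fun x => ?_)
      · have := measurable_chi hfR.1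
        exact (by fun_prop : Measurable fun x : Vec (n + 1) =>
          |g ‖x‖ - chi (ball (0 : Vec (n + 1)) R) x|).aestronglyMeasurable
      · rw [Real.norm_eq_abs, abs_abs]
        change _ ≤ |chi E x - g ‖x‖| + |_|
        rw [abs_sub_comm (chi E x) (g ‖x‖)]
        exact abs_sub_le _ _ _
    calc ∫ x, |chi E x - chi (ball (0 : Vec (n + 1)) R) x|
        ≤ ∫ x, (|chi E x - g ‖x‖| + H ‖x‖) := by
          refine integral_mono (hE.nice.sub hfR.nice).2.1.abs
            (hgi.add hHint) fun x => ?_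
          change _ ≤ _ + _
          rw [hHx]
          exact abs_sub_le _ _ _
      _ = (∫ x, |chi E x - g ‖x‖|) + ∫ x : Vec (n + 1), H ‖x‖ := integral_add hgi hHint
      _ ≤ _ := by linarith
  have hR0 : 0 ≤ R := Real.sqrt_nonneg _
  have hvb : vol ((ball (0 : Vec (n + 1)) R) ∆ closedBall 0 r)
      ≤ |vol (ball (0 : Vec (n + 1)) R)
        - vol (𝔹 (n + 1) r)| := by
    rcases le_or_gt R r with h | h
    · have hs : ball (0 : Vec (n + 1)) R ⊆ closedBall 0 r :=
        ball_subset_closedBall.trans (closedBall_subset_closedBall h)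
      rw [symmDiff_of_le hs, abs_sub_comm, measureReal_sdiff hs hfR.1 (fin_ball _ _).2]
      exact le_abs_self _
    · have hs : 𝔹 (n + 1) r ⊆ ball 0 R :=
        closedBall_subset_ball h
      rw [symmDiff_of_ge hs, measureReal_sdiff hs (fin_ball _ _).1 hfR.2]
      exact le_abs_self _
  rw [← hvol, abs_sub_comm] at hvb
  have h5 := abs_vol_sub hE hfR
  linarith [sd_triangle hE hfR (fin_ball (0 : Vec (n + 1)) r)]

lemma tri_sub_mid {g' : G → ℝ} (hf : Nice f) (hg : Nice g) (hg' : Nice g') (hh : Nice h) :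
    Tri f (fun x => g x - g' x) h = Tri f g h - Tri f g' h := by
  rw [tri_swap, tri_sub_left hg hg' hf hh, tri_swap g, tri_swap g']

lemma tri_sub_right {h' : G → ℝ} (hf : Nice f) (hg : Nice g) (hh : Nice h) (hh' : Nice h') :
    Tri f g (fun x => h x - h' x) = Tri f g h - Tri f g h' := by
  rw [tri_rot hf hg (hh.sub hh'), tri_sub_mid hf hh hh' hg, tri_rot hf hh hg, tri_rot hf hh' hg]

lemma tri_cyc (hf : Nice f) (hg : Nice g) (hh : Nice h) : Tri f g h = Tri h f g := by
  rw [tri_rot hf hg hh, tri_swap]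

/-- Trilinear expansion about a reference triple. -/
lemma tri_expand {a b c a' b' c' : G → ℝ} (ha : Nice a) (hb : Nice b) (hc : Nice c)
    (ha' : Nice a') (hb' : Nice b') (hc' : Nice c') :
    Tri a b c = Tri a' b' c' + (Tri (fun x => a x - a' x) b' c' + Tri (fun x => b x - b' x) a' c'
      + Tri (fun x => c x - c' x) a' b')
      + (Tri (fun x => a x - a' x) (fun x => b x - b' x) c'
      + Tri (fun x => a x - a' x) (fun x => c x - c' x) b'
      + Tri (fun x => b x - b' x) (fun x => c x - c' x) a')
      + Tri (fun x => a x - a' x) (fun x => b x - b' x) (fun x => c x - c' x) := by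
  rw [tri_sub_left ha ha' hb' hc', tri_sub_left hb hb' ha' hc', tri_sub_left hc hc' ha' hb',
    tri_sub_left ha ha' (hb.sub hb') hc', tri_sub_mid ha hb hb' hc', tri_sub_mid ha' hb hb' hc',
    tri_sub_left ha ha' (hc.sub hc') hb', tri_sub_mid ha hc hc' hb', tri_sub_mid ha' hc hc' hb',
    tri_sub_left hb hb' (hc.sub hc') ha', tri_sub_mid hb hc hc' ha', tri_sub_mid hb' hc hc' ha',
    tri_sub_left ha ha' (hb.sub hb') (hc.sub hc'), tri_sub_mid ha hb hb' (hc.sub hc'),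
    tri_sub_mid ha' hb hb' (hc.sub hc'), tri_sub_right ha hb hc hc', tri_sub_right ha hb' hc hc',
    tri_sub_right ha' hb hc hc', tri_sub_right ha' hb' hc hc',
    tri_swap b a' c', tri_swap b' a' c', ← tri_cyc ha' hb' hc, ← tri_cyc ha' hb' hc',
    tri_rot ha hc hb', tri_rot ha hc' hb', tri_rot ha' hc hb', tri_rot ha' hc' hb',
    tri_cyc hb hc ha', tri_cyc hb hc' ha', tri_cyc hb' hc ha', tri_cyc hb' hc' ha']
  ring

section Line

/-- A subset of the line of length `2a` squeezed between two symmetric intervals. -/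
structure Sq (a θ : ℝ) (A : Set ℝ) : Prop where
  meas : MeasurableSet A
  inn : Icc (-(a - θ)) (a - θ) ⊆ A
  out : A ⊆ Icc (-(a + θ)) (a + θ)
  volA : vol A = 2 * a
  pos : 0 ≤ θ
  lt : θ < a

/-- The signed difference between `A` and the centred interval of length `2a`. -/
def dA (a : ℝ) (A : Set ℝ) (x : ℝ) : ℝ := chi A x - chi (cI (2 * a)) x

/-- The excess of mass of `A` on the positive half line. -/
def pp (a : ℝ) (A : Set ℝ) : ℝ := vol (A ∩ Ioi 0) - a

variable {a θ : ℝ} {A : Set ℝ}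

lemma Sq.fin (h : Sq a θ A) : Fin' A :=
  ⟨h.meas, ((measure_mono h.out).trans_lt (by simp)).ne⟩

lemma Sq.nice (h : Sq a θ A) : Nice (dA a A) :=
  h.fin.nice.sub (fin_cI _).nice

lemma Sq.supp (h : Sq a θ A) (hx : dA a A x ≠ 0) : a - θ ≤ |x| ∧ |x| ≤ a + θ := by
  have h1 := h.pos
  constructor
  · by_contra hc
    push Not at hc
    obtain ⟨h3, h4⟩ := abs_lt.1 hc
    apply hx
    simp only [dA]
    rw [chi_of_mem (h.inn ⟨h3.le, h4.le⟩), chi_of_mem (show x ∈ cI (2 * a) from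
      ⟨by linarith, by linarith⟩), sub_self]
  · by_contra hc
    push Not at hc
    apply hx
    simp only [dA]
    rw [chi_of_notMem fun h' => ?_, chi_of_notMem fun h' => ?_, sub_self]
    · obtain ⟨h3, h4⟩ := h'
      have : |x| ≤ a := abs_le.2 ⟨by linarith, by linarith⟩
      linarith
    · have := abs_le.2 (h.out h')
      linarith

lemma Sq.integral_dA (h : Sq a θ A) : ∫ x, dA a A x = 0 := by
  have h1 : Integrable (chi A) := h.fin.nice.2.1
  have h2 : Integrable (chi (cI (2 * a))) := (fin_cI _).nice.2.1
  simp only [dA]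
  rw [integral_sub h1 h2, integral_chi h.meas, integral_chi (fin_cI _).1, h.volA,
    vol_cI (by linarith [h.pos, h.lt]), sub_self]

lemma Sq.integral_pos (h : Sq a θ A) : ∫ x, dA a A x * chi (Ioi 0) x = pp a A := by
  have e : ∀ x, dA a A x * chi (Ioi 0) x = chi (A ∩ Ioi 0) x - chi (cI (2 * a) ∩ Ioi 0) x := by
    intro x; rw [chi_inter, chi_inter, dA, sub_mul]
  have f1 : Fin' (A ∩ Ioi 0) := h.fin.inter measurableSet_Ioi
  have f2 : Fin' (cI (2 * a) ∩ Ioi 0) := (fin_cI _).inter measurableSet_Ioi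
  have h1 := f1.nice.2.1
  have h2 := f2.nice.2.1
  simp only [e]
  rw [integral_sub h1 h2, integral_chi f1.1, integral_chi f2.1, pp]
  have : cI (2 * a) ∩ Ioi 0 = Ioo 0 a := by
    have := h.pos
    have := h.lt
    ext x
    simp only [cI, mem_inter_iff, mem_Ico, mem_Ioi, mem_Ioo]
    constructor
    · rintro ⟨⟨h1, h2⟩, h3⟩; exact ⟨h3, by linarith⟩
    · rintro ⟨h1, h2⟩; exact ⟨⟨by linarith, by linarith⟩, h1⟩
  rw [this, Real.volume_real_Ioo_of_le (by linarith [h.pos, h.lt])]; ring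

lemma Sq.mul_integrable (h : Sq a θ A) {k : ℝ → ℝ} (hk : Measurable k)
    (hc : ∀ x, a - θ ≤ |x| → |x| ≤ a + θ → |k x| ≤ c) : Integrable fun x => dA a A x * k x := by
  refine Integrable.mono' (h.nice.2.1.abs.mul_const c)
    (h.nice.1.mul hk).aestronglyMeasurable (.of_forall fun x => ?_)
  rw [Real.norm_eq_abs, abs_mul]
  by_cases h0 : dA a A x = 0
  · simp [h0]
  · exact mul_le_mul_of_nonneg_left (hc x (h.supp h0).1 (h.supp h0).2) (abs_nonneg _)

lemma ovl_mid (h1 : b - c ≤ |x|) (h2 : c - b ≤ |x|) (h3 : |x| ≤ b + c) :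
    ovl b c x = b + c - |x| := by
  unfold ovl
  rcases le_total 0 x with hx | hx
  · rw [abs_of_nonneg hx] at *
    rw [min_eq_right (by linarith), max_eq_left (a := -b) (by linarith), max_eq_right (by linarith)]; ring
  · rw [abs_of_nonpos hx] at *
    rw [min_eq_left (by linarith), max_eq_right (a := -b) (by linarith), max_eq_right (by linarith)]; ring

lemma nice_cI (m : ℝ) : Nice (chi (cI m)) := (fin_cI _).nice

lemma integral_ovl' (b c x : ℝ) :
    ∫ y, chi (cI (2 * b)) y * chi (cI (2 * c)) (-x - y) = ovl b c x := by
  have e (b : ℝ) : cI (2 * b) = Ico (-b) b := by rw [cI, mul_div_cancel_left₀ _ two_ne_zero]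
  rw [e, e, integral_ovl]

lemma Sq.tri1 (h : Sq a θ A) (h1 : b + θ ≤ a + c) (h2 : c + θ ≤ a + b) (h3 : a + θ ≤ b + c) :
    Tri (dA a A) (chi (cI (2 * b))) (chi (cI (2 * c))) = -∫ x, dA a A x * |x| := by
  rw [tri_iter h.nice (nice_cI _) (nice_cI _)]
  simp only [integral_ovl']
  have e x : dA a A x * ovl b c x = (b + c) * dA a A x - dA a A x * |x| := by
    by_cases h0 : dA a A x = 0
    · simp [h0]
    · obtain ⟨h4, h5⟩ := h.supp h0
      rw [ovl_mid (by linarith) (by linarith) (by linarith)]; ring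
  simp only [e]
  have i1 : Integrable fun x => (b + c) * dA a A x := h.nice.2.1.const_mul _
  have i2 : Integrable fun x => dA a A x * |x| :=
    h.mul_integrable measurable_norm (c := a + θ) fun x _ hx => by rw [abs_abs]; exact hx
  rw [integral_sub i1 i2, integral_const_mul, h.integral_dA]; ring

lemma Sq.int_chi (h : Sq a θ A) : Integrable fun x => dA a A x * chi (Ioi 0) x :=
  h.mul_integrable (measurable_chi measurableSet_Ioi) (c := 1) fun x _ _ => by exact abs_chi_le _ _

lemma chi_Ioi_cases (x : ℝ) (hx : x ≠ 0) :
    (0 < x ∧ chi (Ioi (0 : ℝ)) x = 1) ∨ (x < 0 ∧ chi (Ioi (0 : ℝ)) x = 0) := by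
  rcases lt_or_gt_of_ne hx with h | h
  · exact Or.inr ⟨h, chi_of_notMem (by simp; linarith)⟩
  · exact Or.inl ⟨h, chi_of_mem h⟩

lemma Sq.tri2 (h : Sq a θ A) (hB : Sq b θ B) (h1 : b + 2 * θ < a + c) (h2 : c + 2 * θ < a + b)
    (h3 : a + 2 * θ < b + c) :
    Tri (dA a A) (dA b B) (chi (cI (2 * c))) = -2 * (pp a A * pp b B) := by
  unfold Tri
  have hθ := h.pos
  have e : ∀ p : ℝ × ℝ, dA a A p.1 * dA b B p.2 * chi (cI (2 * c)) (-p.1 - p.2)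
      = dA a A p.1 * dA b B p.2 - (dA a A p.1 - dA a A p.1 * chi (Ioi 0) p.1)
        * (dA b B p.2 - dA b B p.2 * chi (Ioi 0) p.2)
        - (dA a A p.1 * chi (Ioi 0) p.1) * (dA b B p.2 * chi (Ioi 0) p.2) := by
    rintro ⟨x, y⟩
    simp only
    by_cases hx : dA a A x = 0
    · simp [hx]
    by_cases hy : dA b B y = 0
    · simp [hy]
    obtain ⟨x1, x2⟩ := h.supp hx
    obtain ⟨y1, y2⟩ := hB.supp hy
    have hx0 : x ≠ 0 := by rintro rfl; simp at x1; linarith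
    have hy0 : y ≠ 0 := by rintro rfl; simp at y1; linarith
    rcases chi_Ioi_cases x hx0 with ⟨sx, cx⟩ | ⟨sx, cx⟩ <;>
    rcases chi_Ioi_cases y hy0 with ⟨sy, cy⟩ | ⟨sy, cy⟩ <;>
    simp only [abs_of_pos, abs_of_neg, sx, sy] at x1 x2 y1 y2 <;> rw [cx, cy]
    · rw [chi_of_notMem (by simp only [cI, mem_Ico, not_and, not_lt]; intro; linarith)]; ring
    · rw [chi_of_mem (by simp only [cI, mem_Ico]; constructor <;> linarith)]; ring
    · rw [chi_of_mem (by simp only [cI, mem_Ico]; constructor <;> linarith)]; ring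
    · rw [chi_of_notMem (by simp only [cI, mem_Ico, not_and, not_lt]; intro; linarith)]; ring
  simp only [e]
  have ia := h.nice.2.1
  have ib := hB.nice.2.1
  have ja := ia.sub h.int_chi
  have jb := ib.sub hB.int_chi
  have k1 : Integrable fun p : ℝ × ℝ => dA a A p.1 * dA b B p.2 := ia.mul_prod ib
  have k2 : Integrable fun p : ℝ × ℝ => (dA a A p.1 - dA a A p.1 * chi (Ioi 0) p.1)
        * (dA b B p.2 - dA b B p.2 * chi (Ioi 0) p.2) := ja.mul_prod jb
  have k3 : Integrable fun p : ℝ × ℝ => (dA a A p.1 * chi (Ioi 0) p.1)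
      * (dA b B p.2 * chi (Ioi 0) p.2) := h.int_chi.mul_prod hB.int_chi
  have k12 : Integrable fun p : ℝ × ℝ => dA a A p.1 * dA b B p.2 -
      (dA a A p.1 - dA a A p.1 * chi (Ioi 0) p.1)
        * (dA b B p.2 - dA b B p.2 * chi (Ioi 0) p.2) := k1.sub k2
  rw [integral_sub k12 k3, integral_sub k1 k2]
  rw [Measure.volume_eq_prod, integral_prod_mul (dA a A) (dA b B),
    integral_prod_mul (fun x => dA a A x - dA a A x * chi (Ioi 0) x)
      (fun x => dA b B x - dA b B x * chi (Ioi 0) x),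
    integral_prod_mul (fun x => dA a A x * chi (Ioi 0) x) (fun x => dA b B x * chi (Ioi 0) x),
    integral_sub ia h.int_chi, integral_sub ib hB.int_chi, h.integral_dA, hB.integral_dA,
    h.integral_pos, hB.integral_pos]
  ring

lemma Sq.tri3 (h : Sq a θ A) {C : Set ℝ} (hB : Sq b θ B) (hC : Sq c θ C) (h1 : b + 3 * θ < a + c)
    (h2 : c + 3 * θ < a + b) (h3 : a + 3 * θ < b + c) : Tri (dA a A) (dA b B) (dA c C) = 0 := by
  unfold Tri
  rw [← integral_zero (ℝ × ℝ) ℝ]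
  congr 1
  ext ⟨x, y⟩
  simp only
  by_contra hne
  have hx : dA a A x ≠ 0 := fun h => hne (by simp [h])
  have hy : dA b B y ≠ 0 := fun h => hne (by simp [h])
  have hz : dA c C (-x - y) ≠ 0 := fun h => hne (by simp [h])
  obtain ⟨x1, x2⟩ := h.supp hx
  obtain ⟨y1, y2⟩ := hB.supp hy
  obtain ⟨z1, z2⟩ := hC.supp hz
  rcases abs_cases x with ⟨hx, hx'⟩ | ⟨hx, hx'⟩ <;> rcases abs_cases y with ⟨hy, hy'⟩ | ⟨hy, hy'⟩ <;>
  rcases abs_cases (-x - y) with ⟨hz, hz'⟩ | ⟨hz, hz'⟩ <;> rw [hx] at x1 x2 <;> rw [hy] at y1 y2 <;>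
  rw [hz] at z1 z2 <;> linarith

/-- The exact expansion of the one-dimensional form near a triple of strictly admissible
intervals. -/
lemma line_formula (h : Sq a θ A) {C : Set ℝ} (hB : Sq b θ B) (hC : Sq c θ C)
    (h1 : b + 3 * θ < a + c) (h2 : c + 3 * θ < a + b) (h3 : a + 3 * θ < b + c) :
    TS A B C = TS (cI (2 * a)) (cI (2 * b)) (cI (2 * c))
      - ((∫ x, dA a A x * |x|) + (∫ x, dA b B x * |x|) + ∫ x, dA c C x * |x|)
      - 2 * (pp a A * pp b B + pp a A * pp c C + pp b B * pp c C) := by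
  have hθ := h.pos
  have key := tri_expand h.fin.nice hB.fin.nice
    hC.fin.nice (nice_cI (2 * a)) (nice_cI (2 * b)) (nice_cI (2 * c))
  have t1 := h.tri1 (b := b) (c := c) (by linarith) (by linarith) (by linarith)
  have t2 := hB.tri1 (b := a) (c := c) (by linarith) (by linarith) (by linarith)
  have t3 := hC.tri1 (b := a) (c := b) (by linarith) (by linarith) (by linarith)
  have t4 := h.tri2 (c := c) hB (by linarith) (by linarith) (by linarith)
  have t5 := h.tri2 (c := b) hC (by linarith) (by linarith) (by linarith)
  have t6 := hB.tri2 (c := a) hC (by linarith) (by linarith) (by linarith)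
  have t7 := h.tri3 hB hC h1 h2 h3
  unfold TS
  change Tri (chi A) (chi B) (chi C) = Tri (chi (cI (2 * a))) (chi (cI (2 * b))) (chi (cI (2 * c)))
    + (Tri (dA a A) _ _ + Tri (dA b B) _ _ + Tri (dA c C) _ _) + (Tri (dA a A) (dA b B) _
    + Tri (dA a A) (dA c C) _ + Tri (dA b B) (dA c C) _) + Tri (dA a A) (dA b B) (dA c C) at key
  rw [key, t1, t2, t3, t4, t5, t6, t7]
  ring

end Line

section Line2

/-- Among sets of given length in a half line, the initial interval has least first moment. -/
lemma bath1 {S : Set ℝ} (hS : Fin' S) (h0 : ∀ x ∈ S, 0 ≤ x + t) (h1 : ∀ x ∈ S, x + t ≤ c) :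
    (vol S) ^ 2 / 2 ≤ ∫ x, chi S x * (x + t) := by
  set m := vol S
  have hm0 : 0 ≤ m := measureReal_nonneg
  let J : Set ℝ := Ico (-t) (m - t)
  have hJ : Fin' J := fin_Ico _ _
  have hJv : vol J = m := by rw [Real.volume_real_Ico, max_eq_left (by linarith)]; ring
  have iS := hS.nice.2.1
  have iJ := hJ.nice.2.1
  have hmeas := measurable_id.add_const t
  have jS : Integrable fun x => chi S x * (x + t) :=
    integrable_chi_mul hS.1 hS.2 hmeas (c := c) fun x hx => by
      rw [abs_of_nonneg (h0 x hx)]; exact h1 x hx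
  have jJ : Integrable fun x => chi J x * (x + t) :=
    integrable_chi_mul hJ.1 hJ.2 hmeas (c := m) fun x hx => by
      obtain ⟨h2, h3⟩ := hx
      rw [abs_of_nonneg (by linarith)]; linarith
  have eJ : ∫ x, chi J x * (x + t) = m ^ 2 / 2 := by
    have e : (fun x => chi J x * (x + t)) = J.indicator (fun x => x + t) := by
      ext x; by_cases hx : x ∈ J <;> simp [chi, hx]
    rw [e, integral_indicator hJ.1]
    simp only [J]
    rw [integral_Ico_eq_integral_Ioc, ← intervalIntegral.integral_of_le (by linarith),
      intervalIntegral.integral_comp_add_right (fun x => x)]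
    simp
  have key : 0 ≤ ∫ x, (chi S x * (x + t) - chi J x * (x + t) - m * (chi S x - chi J x)) := by
    refine integral_nonneg fun x => ?_
    change 0 ≤ chi S x * (x + t) - chi J x * (x + t) - m * (chi S x - chi J x)
    rw [show chi S x * (x + t) - chi J x * (x + t) - m * (chi S x - chi J x)
      = (chi S x - chi J x) * (x + t - m) by ring]
    by_cases hx : x ∈ S <;> by_cases hy : x ∈ J
    · rw [chi_of_mem hx, chi_of_mem hy]; simp
    · rw [chi_of_mem hx, chi_of_notMem hy]
      have h2 := h0 x hx
      by_contra h3
      exact hy ⟨by linarith, by linarith⟩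
    · rw [chi_of_notMem hx, chi_of_mem hy]
      obtain ⟨h2, h3⟩ := hy
      linarith
    · rw [chi_of_notMem hx, chi_of_notMem hy]; simp
  have i1 : Integrable fun x => chi S x * (x + t) - chi J x * (x + t) := jS.sub jJ
  have i2 : Integrable fun x => m * (chi S x - chi J x) := (iS.sub iJ).const_mul m
  rw [integral_sub i1 i2, integral_sub jS jJ, integral_const_mul, integral_sub iS iJ,
    integral_chi hS.1, integral_chi hJ.1, hJv, eJ] at key
  linarith

lemma bath1' {S : Set ℝ} (hS : Fin' S) (h0 : ∀ x ∈ S, 0 ≤ -x + t) (h1 : ∀ x ∈ S, -x + t ≤ c) :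
    (vol S) ^ 2 / 2 ≤ ∫ x, chi S x * (-x + t) := by
  have hv := (Measure.measurePreserving_neg (volume : Measure ℝ)).measure_preimage hS.1.nullMeasurableSet
  have hS' : Fin' (Neg.neg ⁻¹' S) := ⟨measurable_neg hS.1, by rw [hv]; exact hS.2⟩
  have h := bath1 hS' (t := t) (c := c) (fun x hx => by simpa using h0 (-x) hx)
    (fun x hx => by simpa using h1 (-x) hx)
  rw [Measure.real, hv] at h
  refine h.trans (le_of_eq ?_)
  rw [← integral_neg_eq_self]
  refine integral_congr_ae (.of_forall fun x => ?_)
  change chi (Neg.neg ⁻¹' S) (-x) * (-x + t) = _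
  rw [chi_congr (B := S) (y := x) (by simp)]

variable {a θ : ℝ} {A : Set ℝ}

/-- Energy of a squeezed set: it is nonnegative and, with the shift `pp`, controls the distance to
the centred interval. -/
lemma Sq.energy (h : Sq a θ A) :
    0 ≤ (∫ x, dA a A x * |x|) - pp a A ^ 2 ∧
      vol (A ∆ (cI (2 * a))) ≤
        2 * |pp a A| + √(8 * ((∫ x, dA a A x * |x|) - pp a A ^ 2)) := by
  have hθ := h.pos
  have ha := h.lt
  let O₁ := A ∩ Ici a
  let H₁ := Ioo 0 a \ A
  let O₂ := A ∩ Iio (-a)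
  let H₂ := Ico (-a) 0 \ A
  have fO₁ : Fin' O₁ := h.fin.inter measurableSet_Ici
  have fO₂ : Fin' O₂ := h.fin.inter measurableSet_Iio
  have fH₁ : Fin' H₁ := ⟨measurableSet_Ioo.diff h.meas,
    ((measure_mono sdiff_subset).trans_lt (by simp)).ne⟩
  have fH₂ : Fin' H₂ := ⟨measurableSet_Ico.diff h.meas,
    ((measure_mono sdiff_subset).trans_lt (by simp)).ne⟩
  have e0 x : dA a A x = chi O₁ x - chi H₁ x + (chi O₂ x - chi H₂ x) := by
    have h0 : (0 : ℝ) ∈ A := h.inn ⟨by linarith, by linarith⟩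
    simp only [dA, chi, indicator, O₁, H₁, O₂, H₂, cI, mem_inter_iff, mem_sdiff, mem_Ici, mem_Ioo,
      mem_Iio, mem_Ico, Pi.one_apply]
    have h0' : x = 0 → x ∈ A := by rintro rfl; exact h0
    grind
  have ie : ∀ {S : Set ℝ}, Fin' S → Integrable (chi S) := fun hS => hS.nice.2.1
  set o₁ := vol O₁
  set g₁ := vol H₁
  set o₂ := vol O₂
  set g₂ := vol H₂
  have i1 : Integrable fun x => chi O₁ x - chi H₁ x := (ie fO₁).sub (ie fH₁)
  have i2 : Integrable fun x => chi O₂ x - chi H₂ x := (ie fO₂).sub (ie fH₂)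
  have s0 : o₁ - g₁ + (o₂ - g₂) = 0 := by
    have := h.integral_dA
    simp only [e0] at this
    rwa [integral_add i1 i2, integral_sub (ie fO₁) (ie fH₁), integral_sub (ie fO₂) (ie fH₂),
      integral_chi fO₁.1, integral_chi fH₁.1, integral_chi fO₂.1, integral_chi fH₂.1] at this
  have sp : pp a A = o₁ - g₁ := by
    rw [← h.integral_pos]
    have : ∀ x, dA a A x * chi (Ioi 0) x = chi O₁ x - chi H₁ x := by
      intro x
      rw [e0]
      simp only [chi, indicator, O₁, H₁, O₂, H₂, mem_inter_iff, mem_sdiff, mem_Ici, mem_Ioo,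
        mem_Iio, mem_Ico, mem_Ioi, Pi.one_apply]
      grind
    simp only [this]
    rw [integral_sub (ie fO₁) (ie fH₁), integral_chi fO₁.1, integral_chi fH₁.1]
  have se : vol (A ∆ (cI (2 * a))) ≤ o₁ + g₁ + (o₂ + g₂) := by
    rw [← integral_abs_chi_sub h.meas (fin_cI _).1]
    have j1 : Integrable fun x => chi O₁ x + chi H₁ x := (ie fO₁).add (ie fH₁)
    have j2 : Integrable fun x => chi O₂ x + chi H₂ x := (ie fO₂).add (ie fH₂)
    calc ∫ x, |chi A x - chi (cI (2 * a)) x|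
        ≤ ∫ x, ((chi O₁ x + chi H₁ x) + (chi O₂ x + chi H₂ x)) := by
          refine integral_mono h.nice.2.1.abs (j1.add j2) fun x => ?_
          change |dA a A x| ≤ _
          rw [e0, abs_le]
          constructor <;>
            linarith [chi_nonneg O₁ x, chi_nonneg O₂ x, chi_nonneg H₁ x, chi_nonneg H₂ x]
      _ = _ := by
          rw [integral_add j1 j2, integral_add (ie fO₁) (ie fH₁), integral_add (ie fO₂) (ie fH₂),
            integral_chi fO₁.1, integral_chi fH₁.1, integral_chi fO₂.1, integral_chi fH₂.1]
  have bd : ∀ {x}, x ∈ A → x ≤ a + θ ∧ -x ≤ a + θ := fun hx =>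
    ⟨(h.out hx).2, by linarith [(h.out hx).1]⟩
  have b1 := bath1 fO₁ (t := -a) (c := θ) (fun x hx => by
    have : a ≤ x := hx.2
    linarith) (fun x hx => by linarith [(bd hx.1).1])
  have b2 := bath1' fH₁ (t := a) (c := a) (fun x hx => by linarith [hx.1.2])
    (fun x hx => by linarith [hx.1.1])
  have b3 := bath1' fO₂ (t := -a) (c := θ) (fun x hx => by
    have : x < -a := hx.2
    linarith) (fun x hx => by linarith [(bd hx.1).2])
  have b4 := bath1 fH₂ (t := a) (c := a) (fun x hx => by linarith [hx.1.1])
    (fun x hx => by linarith [hx.1.2])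
  have k1 : Integrable fun x => chi O₁ x * (x + -a) :=
    integrable_chi_mul fO₁.1 fO₁.2 (by fun_prop) (c := θ) fun x hx => by
      have : a ≤ x := hx.2
      rw [abs_le]; constructor <;> linarith [(bd hx.1).1]
  have k2 : Integrable fun x => chi H₁ x * (-x + a) :=
    integrable_chi_mul fH₁.1 fH₁.2 (by fun_prop) (c := a) fun x hx => by
      rw [abs_le]; constructor <;> linarith [hx.1.1, hx.1.2]
  have k3 : Integrable fun x => chi O₂ x * (-x + -a) :=
    integrable_chi_mul fO₂.1 fO₂.2 (by fun_prop) (c := θ) fun x hx => by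
      have : x < -a := hx.2
      rw [abs_le]; constructor <;> linarith [(bd hx.1).2]
  have k4 : Integrable fun x => chi H₂ x * (x + a) :=
    integrable_chi_mul fH₂.1 fH₂.2 (by fun_prop) (c := a) fun x hx => by
      rw [abs_le]; constructor <;> linarith [hx.1.1, hx.1.2]
  have eE : ∫ x, dA a A x * |x| = (∫ x, chi O₁ x * (x + -a)) + (∫ x, chi H₁ x * (-x + a))
      + ((∫ x, chi O₂ x * (-x + -a)) + ∫ x, chi H₂ x * (x + a)) := by
    have e1 x : dA a A x * |x| = (chi O₁ x * (x + -a) + chi H₁ x * (-x + a))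
        + (chi O₂ x * (-x + -a) + chi H₂ x * (x + a)) + a * dA a A x := by
      rw [e0]
      simp only [chi, indicator, O₁, H₁, O₂, H₂, mem_inter_iff, mem_sdiff, mem_Ici, mem_Ioo,
        mem_Iio, mem_Ico, Pi.one_apply]
      rcases le_or_gt 0 x with hx | hx
      · rw [abs_of_nonneg hx]; grind
      · rw [abs_of_neg hx]; grind
    simp only [e1]
    have k12 : Integrable fun x => chi O₁ x * (x + -a) + chi H₁ x * (-x + a) := k1.add k2
    have k34 : Integrable fun x => chi O₂ x * (-x + -a) + chi H₂ x * (x + a) := k3.add k4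
    have kk : Integrable fun x => (chi O₁ x * (x + -a) + chi H₁ x * (-x + a))
        + (chi O₂ x * (-x + -a) + chi H₂ x * (x + a)) := k12.add k34
    have kd : Integrable fun x => a * dA a A x := h.nice.2.1.const_mul a
    rw [integral_add kk kd, integral_const_mul, h.integral_dA, integral_add k12 k34,
      integral_add k1 k2, integral_add k3 k4]
    ring
  have p1 : 0 ≤ o₁ := measureReal_nonneg
  have p2 : 0 ≤ g₁ := measureReal_nonneg
  have p3 : 0 ≤ o₂ := measureReal_nonneg
  have p4 : 0 ≤ g₂ := measureReal_nonneg
  rw [sp]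
  have hE2 : (o₁ ^ 2 + g₁ ^ 2 + o₂ ^ 2 + g₂ ^ 2) / 2 ≤ ∫ x, dA a A x * |x| := by linarith
  have eg : g₂ = o₁ - g₁ + o₂ := by linarith
  refine ⟨by nlinarith [sq_nonneg (o₁ + g₁), sq_nonneg (o₂ + g₂)], ?_⟩
  refine se.trans ?_
  rw [← sub_le_iff_le_add']
  apply Real.le_sqrt_of_sq_le
  rcases le_total 0 (o₁ - g₁) with hp | hp
  · rw [abs_of_nonneg hp]
    rw [show o₁ + g₁ + (o₂ + g₂) - 2 * (o₁ - g₁) = 2 * (g₁ + o₂) by linarith]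
    rw [eg] at hE2
    nlinarith [mul_nonneg hp (add_nonneg p2 p3), sq_nonneg (g₁ - o₂)]
  · rw [abs_of_nonpos hp]
    rw [show o₁ + g₁ + (o₂ + g₂) - 2 * -(o₁ - g₁) = 2 * (o₁ + g₂) by linarith]
    rw [show o₂ = g₂ - (o₁ - g₁) by linarith] at hE2
    nlinarith [mul_nonneg (neg_nonneg.2 hp) (add_nonneg p1 p4), sq_nonneg (o₁ - g₂)]

/-- The first moment of a squeezed set is determined by its shift, up to a small multiple of its
distance to the centred interval. -/
lemma Sq.moment (h : Sq a θ A) :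
    |(∫ x, dA a A x * x) - 2 * a * pp a A| ≤ θ * vol (A ∆ (cI (2 * a))) := by
  have hθ := h.pos
  have ha := h.lt
  have i1 : Integrable fun x => dA a A x * x :=
    h.mul_integrable measurable_id (c := a + θ) fun x _ hx => hx
  have i2 : Integrable fun x => 2 * a * (dA a A x * chi (Ioi 0) x) := h.int_chi.const_mul _
  have i3 : Integrable fun x => a * dA a A x := h.nice.2.1.const_mul _
  have i12 : Integrable fun x => dA a A x * x - 2 * a * (dA a A x * chi (Ioi 0) x) := i1.sub i2
  have e : (∫ x, dA a A x * x) - 2 * a * pp a A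
      = ∫ x, (dA a A x * x - 2 * a * (dA a A x * chi (Ioi 0) x) + a * dA a A x) := by
    rw [integral_add i12 i3, integral_sub i1 i2, integral_const_mul, integral_const_mul,
      h.integral_dA, h.integral_pos]; ring
  rw [e, ← integral_abs_chi_sub h.meas (fin_cI _).1, ← integral_const_mul]
  refine (abs_integral_le_integral_abs).trans (integral_mono (i12.add i3).abs
    (h.nice.2.1.abs.const_mul θ) fun x => ?_)
  change |dA a A x * x - 2 * a * (dA a A x * chi (Ioi 0) x) + a * dA a A x| ≤ θ * |dA a A x|
  by_cases h0 : dA a A x = 0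
  · simp [h0]
  · obtain ⟨h1, h2⟩ := h.supp h0
    have hx0 : x ≠ 0 := by rintro rfl; simp at h1; linarith
    rw [show dA a A x * x - 2 * a * (dA a A x * chi (Ioi 0) x) + a * dA a A x
      = (x - 2 * a * chi (Ioi 0) x + a) * dA a A x by ring, abs_mul]
    refine mul_le_mul_of_nonneg_right ?_ (abs_nonneg _)
    rcases chi_Ioi_cases x hx0 with ⟨hx, hc⟩ | ⟨hx, hc⟩
    · rw [abs_of_pos hx] at h1 h2
      rw [hc, abs_le]; constructor <;> linarith
    · rw [abs_of_neg hx] at h1 h2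
      rw [hc, abs_le]; constructor <;> linarith

end Line2

variable {s' : ℝ} {B C : Set G}

/-! ### The kernel of the linearized functional -/

/-- The kernel `1_B * 1_{C}` in the trilinear normalization, so that
`TS A B C` is the integral of the kernel over `A`. -/
def KK {G : Type*} [AddCommGroup G] [MeasureSpace G] (B C : Set G) (x : G) : ℝ :=
  ∫ y, chi B y * chi C (-x - y)

lemma measurable_KK (hB : MeasurableSet B) (hC : MeasurableSet C) : Measurable (KK B C) := by
  have h : Measurable (fun p : G × G => chi B p.2 * chi C (-p.1 - p.2)) := by
    have h1 := measurable_chi hB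
    have h2 := measurable_chi hC
    have h3 : Measurable (fun p : G × G => -p.1 - p.2) := by
      simp only [sub_eq_add_neg]
      exact measurable_fst.neg.add measurable_snd.neg
    exact (h1.comp measurable_snd).mul (h2.comp h3)
  exact (h.stronglyMeasurable.integral_prod_right').measurable

lemma abs_KK_le (hB : Fin' B) (x : G) : |KK B C x| ≤ vol B := by
  have h0 : 0 ≤ KK B C x := integral_nonneg fun y => mul_nonneg (chi_nonneg _ _) (chi_nonneg _ _)
  rw [abs_of_nonneg h0, ← integral_chi hB.1]
  refine integral_mono_of_nonneg (ae_of_all _ fun y => mul_nonneg (chi_nonneg _ _) (chi_nonneg _ _))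
    hB.nice.2.1 (ae_of_all _ fun y => ?_)
  have := chi_nonneg B y
  have := chi_le_one C (-x - y)
  have := chi_nonneg C (-x - y)
  change chi B y * chi C (-x - y) ≤ chi B y
  nlinarith

lemma nice_mul_integrable {k : G → ℝ} (hf : Nice f) (hk : Measurable k) (hc : ∀ x, |k x| ≤ c) :
    Integrable (fun x => f x * k x) := by
  refine (hf.2.1.bdd_mul (c := c) hk.aestronglyMeasurable (ae_of_all _ fun x => ?_)).congr
    (ae_of_all _ fun x => mul_comm _ _)
  simpa using hc x

lemma tri_KK (hf : Nice f) (hB : Fin' B) (hC : Fin' C) :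
    Tri f (chi B) (chi C) = ∫ x, f x * KK B C x :=
  tri_iter hf hB.nice hC.nice

lemma lin1 (hf : Nice f) (hB : Fin' B) (hC : Fin' C) (hB' : Fin' B') (hC' : Fin' C') :
    |Tri f (chi B) (chi C) - Tri f (chi B') (chi C')| ≤
      (vol (B ∆ B') + vol (C ∆ C')) * ∫ x, |f x| := by
  have nB := hB.nice
  have nC := hC.nice
  have nB' := hB'.nice
  have nC' := hC'.nice
  have h1 := tri_sub_mid hf nB nB' nC
  have h2 := tri_sub_right hf nB' nC nC'
  have a1 : |Tri f (fun x => chi B x - chi B' x) (chi C)| ≤ _ :=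
    tri_abs_le (c := 1) hf (nB.sub nB') (fun x => by exact abs_chi_le _ _)
  have a2 : |Tri f (fun x => chi C x - chi C' x) (chi B')| ≤ _ :=
    tri_abs_le (c := 1) hf (nC.sub nC') (fun x => by exact abs_chi_le _ _)
  rw [← tri_rot hf nB' (nC.sub nC'), h2] at a2
  rw [h1, integral_abs_chi_sub hB.1 hB'.1] at a1
  rw [integral_abs_chi_sub hC.1 hC'.1] at a2
  rw [abs_le] at a1 a2 ⊢
  constructor <;> nlinarith [a1.1, a1.2, a2.1, a2.2]

/-- The two other indices of a triple. -/
def KT (B : Fin 3 → Set G) (j : Fin 3) : G → ℝ := KK (B (j + 1)) (B (j + 2))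

/-- Linearization of the trilinear form about the triple `B`. -/
lemma lin {X Y B : Fin 3 → Set G} (hX : ∀ j, Fin' (X j)) (hY : ∀ j, Fin' (Y j))
    (hB : ∀ j, Fin' (B j)) (eX : ∀ j, vol (X j ∆ B j) ≤ ε) (eY : ∀ j, vol (Y j ∆ B j) ≤ ε) :
    |T3 X - T3 Y - ∑ j, ∫ x, (chi (X j) x - chi (Y j) x) * KT B j x| ≤
      2 * ε * ∑ j, vol (X j ∆ Y j) := by
  have nX := fun j => (hX j).nice
  have nY := fun j => (hY j).nice
  have e0 := lin1 ((nX 0).sub (nY 0)) (hX 1) (hX 2) (hB 1) (hB 2)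
  have e1 := lin1 ((nX 1).sub (nY 1)) (hX 2) (hY 0) (hB 2) (hB 0)
  have e2 := lin1 ((nX 2).sub (nY 2)) (hY 0) (hY 1) (hB 0) (hB 1)
  have k0 : Tri (fun x => chi (X 0) x - chi (Y 0) x) (chi (B 1)) (chi (B 2))
      = ∫ x, (chi (X 0) x - chi (Y 0) x) * KT B 0 x := tri_KK ((nX 0).sub (nY 0)) (hB 1) (hB 2)
  have k1 : Tri (fun x => chi (X 1) x - chi (Y 1) x) (chi (B 2)) (chi (B 0))
      = ∫ x, (chi (X 1) x - chi (Y 1) x) * KT B 1 x := tri_KK ((nX 1).sub (nY 1)) (hB 2) (hB 0)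
  have k2 : Tri (fun x => chi (X 2) x - chi (Y 2) x) (chi (B 0)) (chi (B 1))
      = ∫ x, (chi (X 2) x - chi (Y 2) x) * KT B 2 x := tri_KK ((nX 2).sub (nY 2)) (hB 0) (hB 1)
  have t0 := tri_sub_left (nX 0) (nY 0) (nX 1) (nX 2)
  have t1 := tri_sub_left (nX 1) (nY 1) (nX 2) (nY 0)
  have t2 := tri_sub_left (nX 2) (nY 2) (nY 0) (nY 1)
  have c1 : Tri (chi (X 1)) (chi (X 2)) (chi (Y 0)) = TS (Y 0) (X 1) (X 2) := by
    rw [tri_cyc (nX 1) (nX 2) (nY 0)]; rfl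
  have c2 : Tri (chi (Y 1)) (chi (X 2)) (chi (Y 0)) = TS (Y 0) (Y 1) (X 2) := by
    rw [tri_cyc (nY 1) (nX 2) (nY 0)]; rfl
  have c3 : Tri (chi (X 2)) (chi (Y 0)) (chi (Y 1)) = TS (Y 0) (Y 1) (X 2) := by
    rw [← tri_cyc (nY 0) (nY 1) (nX 2)]; rfl
  have c4 : Tri (chi (Y 2)) (chi (Y 0)) (chi (Y 1)) = TS (Y 0) (Y 1) (Y 2) := by
    rw [← tri_cyc (nY 0) (nY 1) (nY 2)]; rfl
  rw [t0, k0, integral_abs_chi_sub (hX 0).1 (hY 0).1] at e0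
  rw [t1, k1, c1, c2, integral_abs_chi_sub (hX 1).1 (hY 1).1] at e1
  rw [t2, k2, c3, c4, integral_abs_chi_sub (hX 2).1 (hY 2).1] at e2
  change |TS (X 0) (X 1) (X 2) - TS (Y 0) (X 1) (X 2) - _| ≤ _ at e0
  rw [Fin.sum_univ_three, Fin.sum_univ_three]
  unfold T3
  have p := fun j => measureReal_nonneg (μ := (volume : Measure G)) (s := X j ∆ Y j)
  have q0 := mul_le_mul_of_nonneg_right (add_le_add (eX 1) (eX 2)) (p 0)
  have q1 := mul_le_mul_of_nonneg_right (add_le_add (eX 2) (eY 0)) (p 1)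
  have q2 := mul_le_mul_of_nonneg_right (add_le_add (eY 0) (eY 1)) (p 2)
  rw [abs_le] at e0 e1 e2 ⊢
  constructor <;> linarith [e0.1, e0.2, e1.1, e1.2, e2.1, e2.2]

lemma inner_ovl (b c s : ℝ) (w : Vec n) :
    ∫ t, chi (Bp n b) (w, t) * chi (Bp n c) (-w, -s - t) =
      ovl (√(b ^ 2 - ‖w‖ ^ 2)) (√(c ^ 2 - ‖w‖ ^ 2)) s := by
  rw [← integral_ovl]
  have key : ∀ (b : ℝ) (v : Vec n) (t : ℝ), ‖v‖ = ‖w‖ → t ≠ √(b ^ 2 - ‖w‖ ^ 2) →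
      chi (Bp n b) (v, t) = chi (Ico (-√(b ^ 2 - ‖w‖ ^ 2)) (√(b ^ 2 - ‖w‖ ^ 2))) t := by
    intro b v t hv ht
    apply chi_congr
    change ‖v‖ ^ 2 + t ^ 2 ≤ b ^ 2 ↔ _
    rw [hv]
    constructor
    · intro h
      have : |t| ≤ √(b ^ 2 - ‖w‖ ^ 2) := Real.abs_le_sqrt (by linarith)
      rw [abs_le] at this
      exact ⟨this.1, lt_of_le_of_ne this.2 ht⟩
    · rintro ⟨h1, h2⟩
      have h3 := abs_le.2 ⟨h1, h2.le⟩
      rcases le_or_gt 0 (b ^ 2 - ‖w‖ ^ 2) with h | h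
      · have := Real.sq_sqrt h
        have h4 := pow_le_pow_left₀ (abs_nonneg t) h3 2
        rw [sq_abs, this] at h4
        linarith
      · rw [Real.sqrt_eq_zero_of_nonpos h.le] at h1 h2
        linarith
  apply integral_congr_ae
  have hf : ({√(b ^ 2 - ‖w‖ ^ 2), -s - √(c ^ 2 - ‖w‖ ^ 2)} : Set ℝ).Finite := Set.toFinite _
  filter_upwards [compl_mem_ae_iff.2 (hf.measure_zero volume)] with t ht
  simp only [mem_compl_iff, mem_insert_iff, mem_singleton_iff, not_or] at ht
  rw [key b w t rfl ht.1, key c (-w) (-s - t) (norm_neg w) (fun h => ht.2 (by linarith))]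

/-- The kernel of two centered balls as a function of the norm. -/
def kk (n : ℕ) (b c s : ℝ) : ℝ := ∫ w : Vec n, ovl (√(b ^ 2 - ‖w‖ ^ 2)) (√(c ^ 2 - ‖w‖ ^ 2)) s

lemma frame_at (x : Vec (n + 1)) : ∃ F : Frame n, F.e x = (0, ‖x‖) := by
  by_cases hx : x = 0
  · obtain ⟨F, hF⟩ := frame_exists (n := n) (EuclideanSpace.single 0 1) (by simp)
    exact ⟨F, by simp [hx]; rfl⟩
  · have h0 := norm_ne_zero_iff.2 hx
    obtain ⟨F, hF⟩ := frame_exists (n := n) (‖x‖⁻¹ • x) (by rw [norm_smul]; simp [h0])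
    refine ⟨F, ?_⟩
    have : x = ‖x‖ • (‖x‖⁻¹ • x) := by rw [smul_smul, mul_inv_cancel₀ h0, one_smul]
    conv_lhs => rw [this, map_smul, hF]
    simp

lemma fin_Bp (hr : 0 ≤ r) : Fin' (Bp n r) := by
  obtain ⟨F, -⟩ := frame_at (0 : Vec (n + 1))
  rw [← im_ball F hr]
  exact F.fin_im (fin_ball _ _)

lemma KK_prod (hb : 0 ≤ b) (hc : 0 ≤ c) (s : ℝ) :
    Integrable (fun p : Vec n × ℝ => chi (Bp n b) p * chi (Bp n c) (-p.1, -s - p.2)) := by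
  refine integrable_chi_mul (fin_Bp hb).1 (fin_Bp hb).2 (c := 1)
    (f := fun p : Vec n × ℝ => chi (Bp n c) (-p.1, -s - p.2)) ?_ ?_
  · exact (measurable_chi (fin_Bp hc).1).comp (by fun_prop)
  · intro p _
    rw [abs_of_nonneg (chi_nonneg _ _)]
    exact chi_le_one _ _

lemma KK_ball (hb : 0 ≤ b) (hc : 0 ≤ c) (x : Vec (n + 1)) :
    KK (closedBall 0 b) (closedBall 0 c) x = kk n b c ‖x‖ := by
  obtain ⟨F, hF⟩ := frame_at x
  have h1 : KK (closedBall 0 b) (closedBall 0 c) x =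
      ∫ p : Vec n × ℝ, chi (Bp n b) p * chi (Bp n c) (-p.1, -‖x‖ - p.2) := by
    rw [KK, ← F.mp_symm.integral_comp F.me.symm.measurableEmbedding]
    congr 1; ext p
    have e1 : -x - F.e.symm p = F.e.symm (-p.1, -‖x‖ - p.2) := by
      apply F.e.injective
      rw [map_sub, map_neg, hF]
      simp only [ContinuousLinearEquiv.apply_symm_apply]
      ext1 <;> simp
    rw [e1]
    congr 1
    · exact chi_congr (by rw [← im_ball F hb]; rfl)
    · exact chi_congr (by rw [← im_ball F hc]; rfl)
  rw [h1, Measure.volume_eq_prod, integral_prod]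
  · unfold kk
    congr 1; ext w
    exact inner_ovl b c ‖x‖ w
  · exact KK_prod hb hc _

lemma kk_integrable (hb : 0 ≤ b) (hc : 0 ≤ c) (s : ℝ) :
    Integrable (fun w : Vec n => ovl (√(b ^ 2 - ‖w‖ ^ 2)) (√(c ^ 2 - ‖w‖ ^ 2)) s) := by
  have := (KK_prod (n := n) hb hc s)
  rw [Measure.volume_eq_prod] at this
  exact this.integral_prod_left.congr (ae_of_all _ fun w => inner_ovl b c s w)

lemma kk_anti (hb : 0 ≤ b) (hc : 0 ≤ c) (h : |s| ≤ |s'|) : kk n b c s' ≤ kk n b c s :=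
  integral_mono (kk_integrable hb hc s') (kk_integrable hb hc s) fun _ => ovl_anti h

lemma kk_slope (hm : 0 < m) (hb : m ≤ b) (hc : m ≤ c) (h1 : a + m ≤ b + c) (h2 : b + m ≤ a + c)
    (h3 : c + m ≤ a + b) (h0 : a - m / 2 ≤ s) (hs : s ≤ s') (h0' : s' ≤ a + m / 2) :
    (m / 2) ^ n * om n * (s' - s) ≤ kk n b c s - kk n b c s' := by
  have hb0 : 0 ≤ b := by linarith
  have hc0 : 0 ≤ c := by linarith
  have i1 := kk_integrable (n := n) hb0 hc0 s
  have i2 := kk_integrable (n := n) hb0 hc0 s'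
  unfold kk
  rw [← integral_sub i1 i2, ← vol_ball (0 : Vec n) (by linarith), ← integral_chi (fin_ball _ _).1,
    ← integral_mul_const]
  refine integral_mono ((fin_ball _ _).nice.2.1.mul_const _)
    (i1.sub i2) fun w => ?_
  change chi (closedBall 0 (m / 2)) w * (s' - s) ≤ ovl _ _ s - ovl _ _ s'
  by_cases hw : w ∈ 𝔹 n (m / 2)
  · rw [chi_of_mem hw]
    have hw' : ‖w‖ ≤ m / 2 := by simpa using hw
    have hw2 := pow_le_pow_left₀ (norm_nonneg _) hw' 2
    have key b : m ≤ b → b - m / 4 ≤ √(b ^ 2 - ‖w‖ ^ 2) ∧ √(b ^ 2 - ‖w‖ ^ 2) ≤ b := by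
      intro hb
      constructor
      · apply Real.le_sqrt_of_sq_le; nlinarith
      · rw [Real.sqrt_le_left (by linarith)]; nlinarith [sq_nonneg ‖w‖]
    obtain ⟨p1, p2⟩ := key b hb
    obtain ⟨q1, q2⟩ := key c hc
    have hs0 : 0 ≤ s := by linarith
    have as := abs_of_nonneg hs0
    have as' : |s'| = s' := abs_of_nonneg (by linarith)
    rw [ovl_mid, ovl_mid, as, as']
    · linarith
    all_goals first | rw [as] | rw [as']
    all_goals linarith
  · rw [chi_of_notMem hw]
    have := ovl_anti (h₁ := √(b ^ 2 - ‖w‖ ^ 2)) (h₂ := √(c ^ 2 - ‖w‖ ^ 2))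
      (show |s| ≤ |s'| by rw [abs_of_nonneg, abs_of_nonneg] <;> linarith)
    linarith

variable {κ : ℝ} {Y X : Set G} {r : Fin 3 → ℝ} {x : Vec (n + 1)}

/-! ### Stability near balls: weighted deficit bound and trimming -/

/-- Normalized strict admissibility of a triple of radii, with margin `c`. -/
structure Adm (c : ℝ) (r : Fin 3 → ℝ) : Prop where
  lo : ∀ j, c ≤ r j
  hi : ∀ j, r j ≤ 1
  tri : ∀ j, r j + c ≤ r (j + 1) + r (j + 2)

/-- The triple of centered balls of radii `r`. -/
def Bl (n : ℕ) (r : Fin 3 → ℝ) (j : Fin 3) : Set (Vec (n + 1)) := closedBall 0 (r j)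

lemma fin_Bl (r : Fin 3 → ℝ) (j : Fin 3) : Fin' (Bl n r j) := fin_ball _ _

/-- The value of the kernel of the `j`-th ball on the boundary of that ball. -/
def kb (n : ℕ) (r : Fin 3 → ℝ) (j : Fin 3) : ℝ := kk n (r (j + 1)) (r (j + 2)) (r j)

/-- The slope constant of the kernels near the boundary. -/
def slp (n : ℕ) (c : ℝ) : ℝ := (c / 2) ^ n * om n

lemma slp_pos (hc : 0 < c) : 0 < slp n c := mul_pos (by positivity) (om_pos n)

lemma KT_eq (hc : 0 < c) (h : Adm c r) (j : Fin 3) (x : Vec (n + 1)) :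
    KT (Bl n r) j x = kk n (r (j + 1)) (r (j + 2)) ‖x‖ :=
  KK_ball (hc.le.trans (h.lo _)) (hc.le.trans (h.lo _)) x

lemma kern_in (hc : 0 < c) (h : Adm c r) (j : Fin 3) (hx : ‖x‖ ≤ r j) :
    slp n c * min (r j - ‖x‖) (c / 2) ≤ KT (Bl n r) j x - kb n r j := by
  rw [KT_eq hc h, kb]
  have h1 := h.tri j
  have h2 : r (j + 1) + c ≤ r j + r (j + 2) := by
    have := h.tri (j + 1); fin_cases j <;> simp at this ⊢ <;> linarith
  have h3 : r (j + 2) + c ≤ r j + r (j + 1) := by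
    have := h.tri (j + 2); fin_cases j <;> simp at this ⊢ <;> linarith
  have l0 := h.lo j
  have l1 := h.lo (j + 1)
  have l2 := h.lo (j + 2)
  have n0 := norm_nonneg x
  have hm : 0 ≤ min (r j - ‖x‖) (c / 2) := le_min (by linarith) (by linarith)
  have key := kk_slope (n := n) hc l1 l2 h1 h2 h3 (s := r j - min (r j - ‖x‖) (c / 2)) (s' := r j)
    (by linarith [min_le_right (r j - ‖x‖) (c / 2)]) (by linarith) (by linarith)
  have mono : kk n (r (j + 1)) (r (j + 2)) (r j - min (r j - ‖x‖) (c / 2)) ≤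
      kk n (r (j + 1)) (r (j + 2)) ‖x‖ := by
    apply kk_anti (by linarith) (by linarith)
    rw [abs_of_nonneg n0, abs_of_nonneg] <;> linarith [min_le_left (r j - ‖x‖) (c / 2)]
  unfold slp
  rw [sub_sub_cancel] at key
  linarith

lemma kern_out (hc : 0 < c) (h : Adm c r) (j : Fin 3) (hx : r j ≤ ‖x‖) :
    slp n c * min (‖x‖ - r j) (c / 2) ≤ kb n r j - KT (Bl n r) j x := by
  rw [KT_eq hc h, kb]
  have h1 := h.tri j
  have h2 : r (j + 1) + c ≤ r j + r (j + 2) := by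
    have := h.tri (j + 1); fin_cases j <;> simp at this ⊢ <;> linarith
  have h3 : r (j + 2) + c ≤ r j + r (j + 1) := by
    have := h.tri (j + 2); fin_cases j <;> simp at this ⊢ <;> linarith
  have l0 := h.lo j
  have l1 := h.lo (j + 1)
  have l2 := h.lo (j + 2)
  have n0 := norm_nonneg x
  have hm : 0 ≤ min (‖x‖ - r j) (c / 2) := le_min (by linarith) (by linarith)
  have key := kk_slope (n := n) hc l1 l2 h1 h2 h3 (s := r j) (s' := r j + min (‖x‖ - r j) (c / 2))
    (by linarith) (by linarith) (by linarith [min_le_right (‖x‖ - r j) (c / 2)])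
  have mono : kk n (r (j + 1)) (r (j + 2)) ‖x‖ ≤
      kk n (r (j + 1)) (r (j + 2)) (r j + min (‖x‖ - r j) (c / 2)) := by
    apply kk_anti (by linarith) (by linarith)
    rw [abs_of_nonneg n0, abs_of_nonneg] <;> linarith [min_le_left (‖x‖ - r j) (c / 2)]
  unfold slp
  rw [add_sub_cancel_left] at key
  linarith

lemma chi_sub_nice (hX : Fin' X) (hY : Fin' Y) :
    Nice (fun x => chi X x - chi Y x) := hX.nice.sub hY.nice

lemma integral_chi_sub (hX : Fin' X) (hY : Fin' Y) : ∫ x, (chi X x - chi Y x) = vol X - vol Y := by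
  rw [integral_sub hX.nice.2.1 hY.nice.2.1, integral_chi hX.1,
    integral_chi hY.1]

/-- Subtracting the boundary value from the kernel. -/
lemma integral_KT_sub (r : Fin 3 → ℝ) (j : Fin 3) (k : ℝ) {X Y : Set (Vec (n + 1))}
    (hX : Fin' X) (hY : Fin' Y) :
    Integrable (fun x => (chi X x - chi Y x) * KT (Bl n r) j x) ∧
    Integrable (fun x => (chi X x - chi Y x) * (KT (Bl n r) j x - k)) ∧
    ∫ x, (chi X x - chi Y x) * KT (Bl n r) j x =
      (∫ x, (chi X x - chi Y x) * (KT (Bl n r) j x - k)) + k * (vol X - vol Y) := by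
  have nf := chi_sub_nice hX hY
  have i1 : Integrable fun x => (chi X x - chi Y x) * KT (Bl n r) j x :=
    nice_mul_integrable nf (measurable_KK (fin_Bl _ _).1 (fin_Bl _ _).1)
      (fun x => abs_KK_le (fin_Bl _ _) x)
  have i2 := nf.2.1.const_mul k
  have e : (fun x => (chi X x - chi Y x) * (KT (Bl n r) j x - k)) =
      fun x => (chi X x - chi Y x) * KT (Bl n r) j x - k * (chi X x - chi Y x) := by ext x; ring
  refine ⟨i1, by rw [e]; exact i1.sub i2, ?_⟩
  rw [e, integral_sub i1 i2, integral_const_mul, integral_chi_sub hX hY]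
  ring

/-- The part of `E Δ B` weighted with the (truncated) distance to the sphere of radius `r`. -/
def Wt (c r : ℝ) (E : Set (Vec (n + 1))) : ℝ :=
  ∫ x, chi (E ∆ closedBall 0 r) x * min |‖x‖ - r| (c / 2)

lemma Wt_integrable (hc : 0 < c) (r : ℝ) (hE : Fin' E) :
    Integrable (fun x => chi (E ∆ closedBall 0 r) x * min |‖x‖ - r| (c / 2)) := by
  have h := Fin'.symmDiff hE (fin_ball 0 r)
  refine integrable_chi_mul h.1 h.2 (c := c / 2)
    (f := fun x : Vec (n + 1) => min |‖x‖ - r| (c / 2)) ?_ ?_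
  · exact (Continuous.measurable (by fun_prop))
  · intro x _
    rw [abs_of_nonneg (le_min (abs_nonneg _) (by linarith))]
    exact min_le_right _ _

lemma weight_bound (hc : 0 < c) (h : Adm c r) {E : Fin 3 → Set (Vec (n + 1))} (hE : ∀ j, Fin' (E j))
    (hv : ∀ j, vol (E j) = vol (Bl n r j)) (h0 : 0 ≤ ε) (hε : ∀ j, vol (E j ∆ Bl n r j) ≤ ε) :
    slp n c * ∑ j, Wt c (r j) (E j) ≤ T3 (Bl n r) - T3 E + 6 * ε ^ 2 := by
  have L := lin hE (fun j => fin_Bl r j) (fun j => fin_Bl r j) hε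
    (fun j => by simpa using h0)
  have hs : ∑ j, vol (E j ∆ Bl n r j) ≤ 3 * ε := by
    rw [Fin.sum_univ_three]; linarith [hε 0, hε 1, hε 2]
  have key j : slp n c * Wt c (r j) (E j) ≤
      -∫ x, (chi (E j) x - chi (Bl n r j) x) * KT (Bl n r) j x := by
    obtain ⟨i1, i2, e⟩ := integral_KT_sub r j (kb n r j) (hE j) (fin_Bl r j)
    rw [e, hv j, sub_self, mul_zero, add_zero, Wt, ← integral_const_mul, ← integral_neg]
    refine integral_mono ((Wt_integrable hc (r j) (hE j)).const_mul _) i2.neg fun x => ?_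
    change slp n c * (chi (E j ∆ Bl n r j) x * _) ≤
      -((chi (E j) x - chi (Bl n r j) x) * (KT (Bl n r) j x - kb n r j))
    by_cases hx : x ∈ Bl n r j
    · have hx' : ‖x‖ ≤ r j := by simpa [Bl] using hx
      have k := kern_in hc h j hx'
      rw [abs_of_nonpos (by linarith), neg_sub]
      by_cases hxE : x ∈ E j
      · simp [← abs_chi_sub, chi_of_mem hx, chi_of_mem hxE]
      · simp only [← abs_chi_sub, chi_of_mem hx, chi_of_notMem hxE]
        norm_num
        linarith
    · have hx' : r j ≤ ‖x‖ := by simp only [Bl, mem_closedBall_zero_iff, not_le] at hx; exact hx.le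
      have k := kern_out hc h j hx'
      rw [abs_of_nonneg (by linarith)]
      by_cases hxE : x ∈ E j
      · simp only [← abs_chi_sub, chi_of_notMem hx, chi_of_mem hxE]
        norm_num
        linarith
      · simp [← abs_chi_sub, chi_of_notMem hx, chi_of_notMem hxE]
  rw [Fin.sum_univ_three] at L ⊢
  rw [abs_le] at L
  nlinarith [key 0, key 1, key 2, L.1]

/-- Trimming: fill the ball of radius `r - κ` and discard the outside of the ball `r + κ`. -/
def trim (r κ : ℝ) (E : Set (Vec (n + 1))) : Set (Vec (n + 1)) :=
  (E ∪ closedBall 0 (r - κ)) ∩ closedBall 0 (r + κ)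

lemma fin_trim (r κ : ℝ) (hE : Fin' E) : Fin' (trim r κ E) := by
  have h : MeasurableSet (E ∪ closedBall 0 (r - κ)) := hE.1.union (fin_ball _ _).1
  unfold trim
  rw [inter_comm]
  exact (fin_ball _ _).inter h

lemma trim_sd_subset {r : ℝ} (hκ : 0 ≤ κ) (E : Set (Vec (n + 1))) :
    trim r κ E ∆ closedBall 0 r ⊆ E ∆ closedBall 0 r ∧
    trim r κ E ∆ E ⊆ E ∆ closedBall 0 r := by
  constructor <;> intro x hx <;>
  · simp only [trim, Set.mem_symmDiff, mem_inter_iff, mem_union, mem_closedBall_zero_iff] at hx ⊢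
    by_cases h1 : x ∈ E <;> by_cases h2 : ‖x‖ ≤ r <;> simp only [h1, h2] at hx ⊢ <;> grind

lemma sd_balls {x : Vec n} :
    vol (closedBall x a ∆ closedBall x b) =
      |vol (closedBall x a) - vol (closedBall x b)| := by
  rcases le_total a b with h | h
  · have hs : closedBall x a ⊆ closedBall x b := closedBall_subset_closedBall h
    rw [Set.symmDiff_def, sdiff_eq_bot_iff.2 hs, bot_eq_empty, empty_union,
      measureReal_sdiff hs (fin_ball _ _).1 (fin_ball _ _).2, abs_sub_comm, abs_of_nonneg]
    linarith [measureReal_mono hs (fin_ball x b).2]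
  · have hs : closedBall x b ⊆ closedBall x a := closedBall_subset_closedBall h
    rw [Set.symmDiff_def, sdiff_eq_bot_iff.2 hs, bot_eq_empty, union_empty,
      measureReal_sdiff hs (fin_ball _ _).1 (fin_ball _ _).2, abs_of_nonneg]
    linarith [measureReal_mono hs (fin_ball x a).2]

lemma trim_deficit (hc : 0 < c) (h : Adm c r) {E : Fin 3 → Set (Vec (n + 1))} (hE : ∀ j, Fin' (E j))
    (hv : ∀ j, vol (E j) = vol (Bl n r j)) (hκ : 0 ≤ κ) (hκc : κ ≤ c / 2)
    (hε : ∀ j, vol (E j ∆ Bl n r j) ≤ ε) :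
    T3 (fun j => ballStar (trim (r j) κ (E j))) - T3 (fun j => trim (r j) κ (E j)) ≤
      T3 (Bl n r) - T3 E
        - (slp n c * κ - 4 * ε) * ∑ j, vol ((trim (r j) κ (E j)) ∆ E j) := by
  have h0 : 0 ≤ ε := measureReal_nonneg.trans (hε 0)
  set E' : Fin 3 → Set (Vec (n + 1)) := fun j => trim (r j) κ (E j)
  set B' : Fin 3 → Set (Vec (n + 1)) := fun j => ballStar (E' j)
  have fE' j : Fin' (E' j) := fin_trim _ _ (hE j)
  have fB' j : Fin' (B' j) := fin_ballStar _
  have fB := fun j => fin_Bl (n := n) r j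
  have sdB j : vol (B' j ∆ Bl n r j) ≤
      vol (E' j ∆ E j) := by
    have e1 : vol (B' j ∆ Bl n r j) =
        |vol (B' j) - vol (Bl n r j)| := sd_balls
    rw [e1, vol_ballStar, ← hv j]
    exact abs_vol_sub (fE' j) (hE j)
  have m_le j : vol (E' j ∆ E j) ≤ ε :=
    (measureReal_mono (trim_sd_subset hκ (E j)).2 (Fin'.symmDiff (hE j) (fB j)).2).trans (hε j)
  have e'_le j : vol (E' j ∆ Bl n r j) ≤ ε :=
    (measureReal_mono (trim_sd_subset hκ (E j)).1 (Fin'.symmDiff (hE j) (fB j)).2).trans (hε j)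
  have L1 := lin fE' hE fB e'_le hε
  have L2 := lin fB' fB fB (fun j => (sdB j).trans (m_le j)) (fun j => by simpa using h0)
  have key j : (∫ x, (chi (B' j) x - chi (Bl n r j) x) * KT (Bl n r) j x) +
      slp n c * κ * vol (E' j ∆ E j) ≤
      ∫ x, (chi (E' j) x - chi (E j) x) * KT (Bl n r) j x := by
    obtain ⟨-, i2, e⟩ := integral_KT_sub r j (kb n r j) (fE' j) (hE j)
    obtain ⟨-, i2', e'⟩ := integral_KT_sub r j (kb n r j) (fB' j) (fB j)
    rw [e, e', vol_ballStar, ← hv j]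
    have p1 : ∫ x, (chi (B' j) x - chi (Bl n r j) x) * (KT (Bl n r) j x - kb n r j) ≤ 0 := by
      refine integral_nonpos fun x => ?_
      change (chi (B' j) x - chi (Bl n r j) x) * (KT (Bl n r) j x - kb n r j) ≤ 0
      by_cases hx : x ∈ Bl n r j
      · have hx' : ‖x‖ ≤ r j := by simpa [Bl] using hx
        have k := kern_in hc h j hx'
        have k0 : 0 ≤ slp n c * min (r j - ‖x‖) (c / 2) :=
          mul_nonneg (slp_pos hc).le (le_min (by linarith) (by linarith))
        rw [chi_of_mem hx]
        exact mul_nonpos_of_nonpos_of_nonneg (by linarith [chi_le_one (B' j) x]) (by linarith)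
      · have hx' : r j ≤ ‖x‖ := by
          simp only [Bl, mem_closedBall_zero_iff, not_le] at hx; exact hx.le
        have k := kern_out hc h j hx'
        have k0 : 0 ≤ slp n c * min (‖x‖ - r j) (c / 2) :=
          mul_nonneg (slp_pos hc).le (le_min (by linarith) (by linarith))
        rw [chi_of_notMem hx]
        exact mul_nonpos_of_nonneg_of_nonpos (by linarith [chi_nonneg (B' j) x]) (by linarith)
    have p2 : slp n c * κ * vol (E' j ∆ E j) ≤
        ∫ x, (chi (E' j) x - chi (E j) x) * (KT (Bl n r) j x - kb n r j) := by
      have fs := Fin'.symmDiff (fE' j) (hE j)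
      rw [← integral_chi fs.1, ← integral_const_mul]
      refine integral_mono (fs.nice.2.1.const_mul _) i2 fun x => ?_
      change slp n c * κ * chi (E' j ∆ E j) x ≤
        (chi (E' j) x - chi (E j) x) * (KT (Bl n r) j x - kb n r j)
      by_cases hxE : x ∈ E j
      · by_cases hx : x ∈ E' j
        · simp [← abs_chi_sub, chi_of_mem hx, chi_of_mem hxE]
        · have hx' : r j + κ < ‖x‖ := by
            by_contra hcon
            exact hx ⟨Or.inl hxE, by simpa using hcon⟩
          have k := kern_out hc h j (x := x) (by linarith)
          have k2 : κ ≤ min (‖x‖ - r j) (c / 2) := le_min (by linarith) hκc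
          have k3 := mul_le_mul_of_nonneg_left k2 (slp_pos (n := n) hc).le
          simp only [← abs_chi_sub, chi_of_notMem hx, chi_of_mem hxE]
          norm_num
          linarith
      · by_cases hx : x ∈ E' j
        · have hx' : ‖x‖ ≤ r j - κ := by
            rcases hx.1 with h1 | h1
            · exact absurd h1 hxE
            · simpa using h1
          have k := kern_in hc h j (x := x) (by linarith)
          have k2 : κ ≤ min (r j - ‖x‖) (c / 2) := le_min (by linarith) hκc
          have k3 := mul_le_mul_of_nonneg_left k2 (slp_pos (n := n) hc).le
          simp only [← abs_chi_sub, chi_of_mem hx, chi_of_notMem hxE]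
          norm_num
          linarith
        · simp [← abs_chi_sub, chi_of_notMem hx, chi_of_notMem hxE]
    linarith
  have s2 : 2 * ε * ∑ j, vol (B' j ∆ Bl n r j) ≤
      2 * ε * ∑ j, vol (E' j ∆ E j) :=
    mul_le_mul_of_nonneg_left (Finset.sum_le_sum fun j _ => sdB j) (by linarith)
  have s3 := Finset.sum_le_sum (fun j (_ : j ∈ Finset.univ) => key j)
  rw [Finset.sum_add_distrib, ← Finset.mul_sum] at s3
  rw [abs_le] at L1 L2
  have e1 := L1.1
  have e2 := L2.2
  nlinarith [s2, s3, e1, e2]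

/-! ### Triangles formed by the half-lengths of parallel chords -/

/-- A Heron-type lower bound for the margins in the triangle inequality. -/
lemma heron {h : ℝ} (ha : 0 ≤ a) (hb : 0 ≤ b) (hc : 0 ≤ c) (ha1 : a ≤ 1) (hb1 : b ≤ 1) (hc1 : c ≤ 1)
    (h0 : 0 < h) (hH : h ≤ 4 * (a ^ 2 * b ^ 2) - (c ^ 2 - a ^ 2 - b ^ 2) ^ 2) :
    h / 12 ≤ a + b - c ∧ h / 12 ≤ a + c - b ∧ h / 12 ≤ b + c - a := by
  rw [show 4 * (a ^ 2 * b ^ 2) - (c ^ 2 - a ^ 2 - b ^ 2) ^ 2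
    = (a + b + c) * ((a + b - c) * (a + c - b) * (b + c - a)) by ring] at hH
  set s := a + b + c
  have hs : 0 ≤ s := by positivity
  set p := a + b - c
  set q := a + c - b
  set t := b + c - a
  have p2 : p ≤ 2 := by simp only [p]; linarith
  have q2 : q ≤ 2 := by simp only [q]; linarith
  have t2 : t ≤ 2 := by simp only [t]; linarith
  have hpos : 0 < p * q * t := by
    by_contra hcon
    linarith [mul_nonpos_of_nonneg_of_nonpos hs (not_lt.1 hcon)]
  have hle : h / 3 ≤ p * q * t := by nlinarith
  have hp : 0 < p := by
    by_contra hcon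
    have : 0 ≤ q := by linarith
    have : 0 ≤ t := by linarith
    nlinarith [mul_nonneg ‹0 ≤ q› ‹0 ≤ t›]
  have hq : 0 < q := by
    by_contra hcon
    have : 0 ≤ t := by linarith
    nlinarith [mul_nonneg hp.le ‹0 ≤ t›]
  have ht : 0 < t := by
    by_contra hcon
    nlinarith [mul_pos hp hq]
  refine ⟨?_, ?_, ?_⟩
  · nlinarith [mul_pos hp hq, mul_le_mul q2 t2 ht.le (by norm_num)]
  · nlinarith [mul_pos hp hq, mul_le_mul p2 t2 ht.le (by norm_num)]
  · nlinarith [mul_pos hp hq, mul_le_mul p2 q2 hq.le (by norm_num)]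

/-- Half-length of the chord of the ball of radius `r` over `w`. -/
def hl (r : ℝ) (w : Vec n) : ℝ := √(r ^ 2 - ‖w‖ ^ 2)

/-- The chords over `x`, `y`, `-x-y` form a triangle with margins at least `h`. -/
def GoodT (r : Fin 3 → ℝ) (h : ℝ) (x y : Vec n) : Prop :=
  hl (r 2) (-x - y) + h ≤ hl (r 0) x + hl (r 1) y ∧
  hl (r 1) y + h ≤ hl (r 0) x + hl (r 2) (-x - y) ∧
  hl (r 0) x + h ≤ hl (r 1) y + hl (r 2) (-x - y)

/-- The slope of the direction along which the chord triangles stay nondegenerate. -/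
def mu (r : Fin 3 → ℝ) : ℝ := (r 2 ^ 2 - r 0 ^ 2 - r 1 ^ 2) / (2 * r 0 ^ 2)

lemma sq_pert {x v : Vec n} (hx : ‖x‖ ≤ 1) (hs : s ≤ 1) (hv : ‖v‖ ≤ s) :
    |‖x + v‖ ^ 2 - ‖x‖ ^ 2| ≤ 3 * s := by
  have h1 := norm_add_le x v
  have h2 := norm_sub_le (x + v) v
  rw [add_sub_cancel_right] at h2
  have := norm_nonneg x
  have := norm_nonneg v
  have := norm_nonneg (x + v)
  rw [abs_le]
  constructor <;> nlinarith

set_option maxHeartbeats 1000000 in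
lemma geom {ω : ℝ} (hc : 0 < c) (hω : 0 < ω) (hω1 : ω ≤ 1) (hr : Adm c r) :
    |mu r| ≤ 1 / c ∧ ∀ x y : Vec n, ‖x‖ ≤ r 0 - ω → ‖y - mu r • x‖ ≤ ω * c ^ 5 / 200 →
      GoodT r (ω * c ^ 5 / 12) x y := by
  have l0 := hr.lo 0
  have l1 := hr.lo 1
  have l2 := hr.lo 2
  have u0 := hr.hi 0
  have u1 := hr.hi 1
  have u2 := hr.hi 2
  have t0 : r 0 + c ≤ r 1 + r 2 := hr.tri 0
  have t1 : r 1 + c ≤ r 2 + r 0 := hr.tri 1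
  have t2 : r 2 + c ≤ r 0 + r 1 := hr.tri 2
  have hc1 : c ≤ 1 := l0.trans u0
  set a := r 0
  set b := r 1
  set d := r 2
  have a0 : 0 < a := by linarith
  have b0 : 0 < b := by linarith
  have d0 : 0 < d := by linarith
  obtain ⟨Y1, hY1⟩ : ∃ Y, Y = mu r * a := ⟨_, rfl⟩
  have hY : 2 * a * Y1 = d ^ 2 - a ^ 2 - b ^ 2 := by
    have hmu : mu r = (d ^ 2 - a ^ 2 - b ^ 2) / (2 * a ^ 2) := rfl
    rw [hY1, hmu]; field_simp
  have hm : mu r = Y1 / a := by rw [hY1]; field_simp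
  obtain ⟨Y2, hY2⟩ : ∃ Y, Y = b ^ 2 - Y1 ^ 2 := ⟨_, rfl⟩
  have e2 : 4 * a ^ 2 * Y2 = ((a + b) ^ 2 - d ^ 2) * (d ^ 2 - (a - b) ^ 2) := by
    rw [hY2]; linear_combination (-(2 * a * Y1 + (d ^ 2 - a ^ 2 - b ^ 2))) * hY
  have f1 : 2 * c ^ 2 ≤ (a + b) ^ 2 - d ^ 2 := by
    rw [show (a + b) ^ 2 - d ^ 2 = (a + b - d) * (a + b + d) by ring]
    have := mul_le_mul (show c ≤ a + b - d by linarith) (show 2 * c ≤ a + b + d by linarith)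
      (by linarith) (by linarith)
    linarith
  have f2 : c ^ 2 ≤ d ^ 2 - (a - b) ^ 2 := by
    rw [show d ^ 2 - (a - b) ^ 2 = (d - a + b) * (d + a - b) by ring]
    have := mul_le_mul (show c ≤ d - a + b by linarith) (show c ≤ d + a - b by linarith)
      (by linarith) (by linarith)
    linarith
  have f3 : 2 * c ^ 2 * c ^ 2 ≤ 4 * a ^ 2 * Y2 := by
    rw [e2]; exact mul_le_mul f1 f2 (by positivity) (by linarith [sq_nonneg c])
  have hY2pos : c ^ 4 / 2 ≤ Y2 := by
    by_contra hcon
    have h1 := mul_lt_mul_of_pos_left (not_le.1 hcon) (show 0 < 4 * a ^ 2 by positivity)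
    have h2 := mul_le_mul_of_nonneg_right (pow_le_one₀ a0.le u0 (n := 2))
      (show 0 ≤ c ^ 4 by positivity)
    linarith [show 2 * c ^ 2 * c ^ 2 = 2 * c ^ 4 by ring]
  have c4 : 0 < c ^ 4 := by positivity
  have c5 : c ^ 5 ≤ c ^ 4 := by
    rw [show c ^ 5 = c ^ 4 * c by ring]; exact mul_le_of_le_one_right c4.le hc1
  have c41 : c ^ 4 ≤ 1 := pow_le_one₀ hc.le hc1
  have hY1b : |Y1| ≤ b := by apply abs_le_of_sq_le_sq (by linarith) b0.le
  have hdd : d ^ 2 = (a + Y1) ^ 2 + Y2 := by rw [hY2]; linear_combination -hY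
  have haY : |a + Y1| ≤ d := abs_le_of_sq_le_sq (by linarith) d0.le
  have hmu : |mu r| ≤ 1 / c := by
    rw [hm, abs_div, abs_of_pos a0]
    exact div_le_div₀ (by norm_num) (hY1b.trans u1) hc l0
  refine ⟨hmu, fun x y hx hy => ?_⟩
  have nx := norm_nonneg x
  obtain ⟨v, hv⟩ : ∃ v, v = y - mu r • x := ⟨_, rfl⟩
  have hyv : y = mu r • x + v := by rw [hv]; abel
  rw [← hv] at hy
  set s := ω * c ^ 5 / 200 with hs
  have hωc : ω * c ^ 5 ≤ c ^ 4 := by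
    have := mul_le_mul_of_nonneg_right hω1 (show 0 ≤ c ^ 5 by positivity)
    linarith
  have hs0 : 0 < s := by positivity
  have hs1 : s ≤ 1 := by rw [hs]; linarith
  have hxa : ‖x‖ / a ≤ 1 := by rw [div_le_one a0]; linarith
  have n1 : ‖mu r • x‖ = |Y1| * (‖x‖ / a) := by
    rw [norm_smul, hm, Real.norm_eq_abs, abs_div, abs_of_pos a0]; ring
  have n2 : ‖(1 + mu r) • x‖ = |a + Y1| * (‖x‖ / a) := by
    rw [norm_smul, hm, Real.norm_eq_abs, show 1 + Y1 / a = (a + Y1) / a by field_simp, abs_div,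
      abs_of_pos a0]; ring
  have hxa0 : 0 ≤ ‖x‖ / a := by positivity
  have p1 := sq_pert (x := mu r • x) (v := v) (by
    rw [n1]; exact mul_le_one₀ (hY1b.trans u1) hxa0 hxa) hs1 hy
  have p2 := sq_pert (x := (1 + mu r) • x) (v := v) (by
    rw [n2]; exact mul_le_one₀ (haY.trans u2) hxa0 hxa) hs1 hy
  rw [← hyv, n1] at p1
  rw [show ‖(1 + mu r) • x + v‖ = ‖-x - y‖ by rw [← norm_neg (-x - y), hyv]; congr 1; module,
    n2] at p2
  rw [mul_pow, sq_abs] at p1 p2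
  -- `u` is one minus the squared relative distance from the axis
  obtain ⟨u, hu⟩ : ∃ u, u = 1 - (‖x‖ / a) ^ 2 := ⟨_, rfl⟩
  have hu' : (‖x‖ / a) ^ 2 = 1 - u := by rw [hu]; ring
  have hxu : ‖x‖ ^ 2 = a ^ 2 * (1 - u) := by rw [← hu']; field_simp
  rw [hu'] at p1 p2
  have hu0 : 0 ≤ u := by rw [hu]; linarith [pow_le_one₀ hxa0 hxa (n := 2)]
  have hua : ω * c ≤ u * a ^ 2 := by
    have e : u * a ^ 2 = (a - ‖x‖) * (a + ‖x‖) := by rw [hu]; field_simp; ring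
    rw [e]; exact mul_le_mul (by linarith) (by linarith) hc.le (by linarith)
  obtain ⟨A, hA⟩ : ∃ A, A = a ^ 2 - ‖x‖ ^ 2 := ⟨_, rfl⟩
  obtain ⟨B, hB⟩ : ∃ B, B = b ^ 2 - ‖y‖ ^ 2 := ⟨_, rfl⟩
  obtain ⟨D, hD⟩ : ∃ D, D = d ^ 2 - ‖-x - y‖ ^ 2 := ⟨_, rfl⟩
  have A1 : A = u * a ^ 2 := by rw [hA, hxu]; ring
  have B1 : |B - (u * Y1 ^ 2 + Y2)| ≤ 3 * s := by
    rw [show B - (u * Y1 ^ 2 + Y2) = -(‖y‖ ^ 2 - Y1 ^ 2 * (1 - u)) by rw [hB, hY2]; ring, abs_neg]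
    exact p1
  have D1 : |D - (u * (a + Y1) ^ 2 + Y2)| ≤ 3 * s := by
    rw [show D - (u * (a + Y1) ^ 2 + Y2) = -(‖-x - y‖ ^ 2 - (a + Y1) ^ 2 * (1 - u)) by
      rw [hD, hdd]; ring, abs_neg]
    exact p2
  rw [abs_le] at B1 D1
  have A0 : 0 ≤ A := by rw [A1]; positivity
  have B0 : 0 ≤ B := by linarith [mul_nonneg hu0 (sq_nonneg Y1), B1.1]
  have D0 : 0 ≤ D := by linarith [mul_nonneg hu0 (sq_nonneg (a + Y1)), D1.1]
  have A2 : A ≤ 1 := by rw [hA]; linarith [sq_nonneg ‖x‖, pow_le_one₀ a0.le u0 (n := 2)]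
  have B2 : B ≤ 1 := by rw [hB]; linarith [sq_nonneg ‖y‖, pow_le_one₀ b0.le u1 (n := 2)]
  have D2 : D ≤ 1 := by rw [hD]; linarith [sq_nonneg ‖-x - y‖, pow_le_one₀ d0.le u2 (n := 2)]
  have hH : ω * c ^ 5 ≤ 4 * (A * B) - (D - A - B) ^ 2 := by
    obtain ⟨β, hβ⟩ : ∃ β, β = B - (u * Y1 ^ 2 + Y2) := ⟨_, rfl⟩
    obtain ⟨γ, hγ⟩ : ∃ γ, γ = D - (u * (a + Y1) ^ 2 + Y2) := ⟨_, rfl⟩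
    rw [← hβ] at B1
    rw [← hγ] at D1
    have q : 4 * (u * a ^ 2) * Y2 = 4 * (A * (B - β)) - (D - γ - A - (B - β)) ^ 2 := by
      rw [hβ, hγ, A1]; ring
    have q2 : 4 * (A * B) - (D - A - B) ^ 2 = 4 * (u * a ^ 2) * Y2 + 4 * (A * β)
        - (γ - β) * (2 * (D - A - B) - (γ - β)) := by rw [q]; ring
    have q3 : 2 * (ω * c ^ 5) ≤ 4 * (u * a ^ 2) * Y2 := by
      have := mul_le_mul hua hY2pos (by positivity) (by positivity)
      linarith [show ω * c * (c ^ 4 / 2) = ω * c ^ 5 / 2 by ring]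
    have q4 : -(12 * s) ≤ 4 * (A * β) := by
      have h1 := mul_le_mul_of_nonneg_left B1.1 A0
      have h2 := mul_le_mul_of_nonneg_right A2 hs0.le
      linarith
    have q5 : |(γ - β) * (2 * (D - A - B) - (γ - β))| ≤ 6 * s * 10 := by
      rw [abs_mul]
      refine mul_le_mul ?_ ?_ (abs_nonneg _) (by linarith)
      · rw [abs_le]; constructor <;> linarith [B1.1, B1.2, D1.1, D1.2]
      · rw [abs_le]; constructor <;> linarith [B1.1, B1.2, D1.1, D1.2]
    have q6 := (abs_le.1 q5).2
    rw [q2]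
    have : 200 * s = ω * c ^ 5 := by rw [hs]; ring
    linarith
  have res := heron (Real.sqrt_nonneg A) (Real.sqrt_nonneg B) (Real.sqrt_nonneg D)
    (Real.sqrt_le_one.2 A2) (Real.sqrt_le_one.2 B2) (Real.sqrt_le_one.2 D2)
    (show 0 < ω * c ^ 5 by positivity)
    (by rw [Real.sq_sqrt A0, Real.sq_sqrt B0, Real.sq_sqrt D0]; exact hH)
  rw [hA, hB, hD] at res
  unfold GoodT hl
  refine ⟨?_, ?_, ?_⟩ <;> linarith [res.1, res.2.1, res.2.2]

variable {h e δ : ℝ}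

/-! ### The deficit seen on chords -/

/-- Half the imbalance between the upper and lower part of the fibre over `w`. -/
def Pf (A : Set (Vec n × ℝ)) (w : Vec n) : ℝ :=
  vol (fib A w ∩ Ioi 0) - vol (fib A w) / 2

/-- The length of the symmetric difference between a fibre and its symmetrization. -/
def Ef (A : Set (Vec n × ℝ)) (w : Vec n) : ℝ :=
  vol (fib A w ∆ (cI (vol (fib A w))))

lemma measurable_Pf (hA : MeasurableSet A) : Measurable (Pf A) := by
  have h : MeasurableSet (A ∩ Prod.snd ⁻¹' Ioi 0) := hA.inter (measurable_snd measurableSet_Ioi)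
  have h1 := measurable_vol_fib h
  exact h1.sub ((measurable_vol_fib hA).div_const 2)

lemma measurable_Ef (hA : MeasurableSet A) : Measurable (Ef A) :=
  measurable_vol_fib (A := A ∆ St A) (hA.symmDiff (measurableSet_St hA))

lemma sqrt_add_le' (hs : 0 ≤ s) (he : 0 ≤ e) : √(s + e) ≤ √s + √e := by
  rw [Real.sqrt_le_left (by positivity)]
  nlinarith [Real.sq_sqrt hs, Real.sq_sqrt he, Real.sqrt_nonneg s, Real.sqrt_nonneg e,
    mul_nonneg (Real.sqrt_nonneg s) (Real.sqrt_nonneg e)]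

lemma sq_fib (hA : MeasurableSet A) {r : ℝ} (h0 : 0 < h) (hκ : 0 ≤ κ) (hκr : κ ≤ r) (hr : r ≤ 1)
    (hh : 20 * √κ ≤ h) (hin : Bp n (r - κ) ⊆ A) (hout : A ⊆ Bp n (r + κ)) {w : Vec n}
    (hw : h ≤ hl r w) :
    Sq (vol (fib A w) / 2) (2 * √κ) (fib A w) ∧
      |vol (fib A w) / 2 - hl r w| ≤ 2 * √κ := by
  have sk := Real.sqrt_nonneg κ
  have sk2 := Real.sq_sqrt hκ
  unfold hl at *
  have hpos : 0 < r ^ 2 - ‖w‖ ^ 2 := by apply Real.sqrt_pos.1; linarith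
  have hpos2 := (Real.le_sqrt' h0).1 hw
  have h4 : 400 * κ ≤ h ^ 2 := by nlinarith
  have hm : 0 ≤ (r - κ) ^ 2 - ‖w‖ ^ 2 := by nlinarith
  obtain ⟨v1, v2⟩ := vol_fib_between hin hout w (by linarith)
  obtain ⟨i1, i2⟩ := fib_between hin hout w
  have s4 : √(4 * κ) = 2 * √κ := by
    rw [show 4 * κ = 2 ^ 2 * κ by norm_num, Real.sqrt_mul (by norm_num), Real.sqrt_sq (by norm_num)]
  have d1 : √((r + κ) ^ 2 - ‖w‖ ^ 2) ≤ √((r - κ) ^ 2 - ‖w‖ ^ 2) + 2 * √κ := by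
    rw [← s4]
    refine le_trans (Real.sqrt_le_sqrt ?_) (sqrt_add_le' hm (by linarith))
    nlinarith
  have d2 : √((r - κ) ^ 2 - ‖w‖ ^ 2) ≤ √(r ^ 2 - ‖w‖ ^ 2) := Real.sqrt_le_sqrt (by nlinarith)
  have d3 : √(r ^ 2 - ‖w‖ ^ 2) ≤ √((r + κ) ^ 2 - ‖w‖ ^ 2) := Real.sqrt_le_sqrt (by nlinarith)
  set a := vol (fib A w) / 2 with ha
  refine ⟨⟨measurableSet_fib hA w, ?_, ?_, by rw [ha]; ring, by linarith, by linarith⟩, ?_⟩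
  · refine (Icc_subset_Icc ?_ ?_).trans (i1 (by linarith)) <;> linarith
  · refine i2.trans (Icc_subset_Icc ?_ ?_) <;> linarith
  · rw [abs_le]; constructor <;> linarith

/-- The deficit controls the integral, over any region of nondegenerate chord triangles, of the
additive defect of the imbalances and of the asymmetry of the fibres. -/
lemma slice_main (hc : 0 < c) (hr : Adm c r) (h0 : 0 < h) (hκ : 0 ≤ κ) (hκc : κ ≤ c)
    (hh : 20 * √κ ≤ h) {A : Fin 3 → Set (Vec n × ℝ)} (hA : ∀ j, Fin' (A j))
    (hin : ∀ j, Bp n (r j - κ) ⊆ A j) (hout : ∀ j, A j ⊆ Bp n (r j + κ))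
    (hv : ∀ j, vol (A j) = vol (Bp n (r j))) (hδ : 0 < δ)
    (hΔ : T3 (fun j => Bp n (r j)) - T3 A ≤ δ ^ 2) {Ω : Set (Vec n × Vec n)} (mΩ : MeasurableSet Ω)
    (fΩ : volume Ω ≠ ⊤) (hΩ : ∀ p ∈ Ω, GoodT r h p.1 p.2) :
    ∫ p in Ω, |Pf (A 0) p.1 + Pf (A 1) p.2 + Pf (A 2) (-p.1 - p.2)| ≤ δ * (1 + vol Ω) ∧
    ∫ p in Ω, max (Ef (A 0) p.1 - 2 * |Pf (A 0) p.1|) 0 ≤ 3 * δ * (1 + vol Ω) := by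
  have hr0 j : 0 ≤ r j := hc.le.trans (hr.lo j)
  have fSt j : Fin' (St (A j)) := fin_St (hA j)
  -- the symmetrized triple still satisfies the Riesz–Sobolev inequality
  have RS1 : T3 (fun j => St (A j)) ≤ T3 (fun j => Bp n (r j)) := by
    obtain ⟨F, -⟩ := frame_at (0 : Vec (n + 1))
    have h1 := rs_ineq (E := fun j => F.pre (St (A j))) (fun j => F.fin_pre (fSt j))
    rw [F.t3_pre] at h1
    have h2 : (fun j => ballStar (F.pre (St (A j)))) = fun j => F.pre (Bp n (r j)) := by
      ext1 j
      rw [← im_ball F (hr0 j), F.pre_im, ← ballStar_congr (E := closedBall 0 (r j)),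
        ballStar_eq, brad_ball (hr0 j)]
      rw [F.volr_pre, vol_St (hA j), hv j, ← im_ball F (hr0 j), F.volr_im]
    rw [h2, F.t3_pre] at h1
    exact h1
  set g : Vec n × Vec n → ℝ := fun p =>
    TS (fib (St (A 0)) p.1) (fib (St (A 1)) p.2) (fib (St (A 2)) (-p.1 - p.2))
      - TS (fib (A 0) p.1) (fib (A 1) p.2) (fib (A 2) (-p.1 - p.2)) with hg
  have i1 := ts_slice_integrable (fSt 0) (fSt 1) (fSt 2)
  have i2 := ts_slice_integrable (hA 0) (hA 1) (hA 2)
  have ig : Integrable g := i1.sub i2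
  have Ig : ∫ p, g p ≤ δ ^ 2 := by
    rw [hg, integral_sub i1 i2, ← ts_slice (fSt 0) (fSt 1) (fSt 2), ← ts_slice (hA 0) (hA 1) (hA 2)]
    unfold T3 at RS1 hΔ
    linarith
  have g0 p : 0 ≤ g p := by
    have h1 j w : fib (A j) w ⊆ Ico (-3) 3 := by
      refine (fib_Bp (hout j) w).trans ?_
      rw [abs_of_nonneg (by linarith [hr0 j])]
      have := hr.hi j
      have := hκc.trans ((hr.lo j).trans (hr.hi j))
      intro t ht
      exact ⟨by linarith [ht.1], by linarith [ht.2]⟩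
    have h2 := rs_line (A := ![fib (A 0) p.1, fib (A 1) p.2, fib (A 2) (-p.1 - p.2)]) (R := 3)
      (by intro j; fin_cases j <;> exact measurableSet_fib (hA _).1 _)
      (by intro j; fin_cases j <;> exact h1 _ _)
    have h3 : TS (fib (A 0) p.1) (fib (A 1) p.2) (fib (A 2) (-p.1 - p.2)) ≤
      TS (fib (St (A 0)) p.1) (fib (St (A 1)) p.2) (fib (St (A 2)) (-p.1 - p.2)) := h2
    simp only [hg]; linarith
  have IΩ : ∫ p in Ω, g p ≤ δ ^ 2 :=
    (setIntegral_le_integral ig (ae_of_all _ g0)).trans Ig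
  have main : ∀ p ∈ Ω, (Pf (A 0) p.1 + Pf (A 1) p.2 + Pf (A 2) (-p.1 - p.2)) ^ 2 ≤ g p ∧
      Ef (A 0) p.1 - 2 * |Pf (A 0) p.1| ≤ √(8 * g p) := by
    intro p hp
    obtain ⟨q1, q2, q3⟩ := hΩ p hp
    have kr j : κ ≤ r j := hκc.trans (hr.lo j)
    obtain ⟨s0, a0⟩ := sq_fib (hA 0).1 h0 hκ (kr 0) (hr.hi 0) hh (hin 0) (hout 0) (w := p.1)
      (by linarith)
    obtain ⟨s1, a1⟩ := sq_fib (hA 1).1 h0 hκ (kr 1) (hr.hi 1) hh (hin 1) (hout 1) (w := p.2)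
      (by linarith)
    obtain ⟨s2, a2⟩ := sq_fib (hA 2).1 h0 hκ (kr 2) (hr.hi 2) hh (hin 2) (hout 2)
      (w := -p.1 - p.2) (by linarith)
    have sk : 0 < h - 13 * √κ := by
      have := Real.sqrt_nonneg κ
      rcases this.eq_or_lt with h | h
      · rw [← h]; linarith
      · linarith
    rw [abs_le] at a0 a1 a2
    have L := line_formula s0 s1 s2 (by linarith) (by linarith) (by linarith)
    obtain ⟨e0, f0⟩ := s0.energy
    obtain ⟨e1, -⟩ := s1.energy
    obtain ⟨e2, -⟩ := s2.energy
    have P0 : pp (vol (fib (A 0) p.1) / 2) (fib (A 0) p.1) = Pf (A 0) p.1 := rfl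
    have P1 : pp (vol (fib (A 1) p.2) / 2) (fib (A 1) p.2) = Pf (A 1) p.2 := rfl
    have P2 : pp (vol (fib (A 2) (-p.1 - p.2)) / 2) (fib (A 2) (-p.1 - p.2))
      = Pf (A 2) (-p.1 - p.2) := rfl
    rw [mul_div_cancel₀ _ (two_ne_zero' ℝ), mul_div_cancel₀ _ (two_ne_zero' ℝ),
      mul_div_cancel₀ _ (two_ne_zero' ℝ), P0, P1, P2] at L
    rw [P0] at e0 f0
    rw [mul_div_cancel₀ _ (two_ne_zero' ℝ)] at f0
    rw [P1] at e1
    rw [P2] at e2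
    have hgp : g p = TS (cI (vol (fib (A 0) p.1))) (cI (vol (fib (A 1) p.2)))
      (cI (vol (fib (A 2) (-p.1 - p.2))))
        - TS (fib (A 0) p.1) (fib (A 1) p.2) (fib (A 2) (-p.1 - p.2)) := rfl
    rw [L] at hgp
    constructor
    · rw [hgp]; nlinarith
    · have : √(8 * ((∫ x, dA (vol (fib (A 0) p.1) / 2) (fib (A 0) p.1) x * |x|)
          - Pf (A 0) p.1 ^ 2)) ≤ √(8 * g p) := by
        apply Real.sqrt_le_sqrt
        rw [hgp]; nlinarith [sq_nonneg (Pf (A 0) p.1 + Pf (A 1) p.2 + Pf (A 2) (-p.1 - p.2))]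
      change vol (symmDiff (fib (A 0) p.1) (cI (vol (fib (A 0) p.1)))) - _ ≤ _
      linarith
  have iΩ : IntegrableOn (fun p => g p / δ + δ) Ω :=
    (ig.integrableOn.div_const δ).add (integrableOn_const fΩ)
  have vΩ : ∫ p in Ω, (g p / δ + δ) ≤ δ * (1 + vol Ω) := by
    rw [integral_add (ig.integrableOn.div_const δ) (integrableOn_const fΩ), integral_div,
      setIntegral_const, smul_eq_mul]
    have : (∫ p in Ω, g p) / δ ≤ δ := by rw [div_le_iff₀ hδ]; nlinarith
    linarith
  have amgm (t u : ℝ) : 0 ≤ t → t ^ 2 ≤ u → t ≤ u / δ + δ := by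
    intro ht htu
    rw [← sub_le_iff_le_add, le_div_iff₀ hδ]
    nlinarith [sq_nonneg (t - δ)]
  constructor
  · refine le_trans (integral_mono_of_nonneg (ae_of_all _ fun p => abs_nonneg _) iΩ ?_) vΩ
    refine ae_restrict_of_forall_mem mΩ fun p hp => ?_
    exact amgm _ _ (abs_nonneg _) (by rw [sq_abs]; exact (main p hp).1)
  · rw [show 3 * δ * (1 + vol Ω) = 3 * (δ * (1 + vol Ω)) by ring]
    refine le_trans (integral_mono_of_nonneg (ae_of_all _ fun p => le_max_right _ _)
      (iΩ.const_mul 3) ?_) ((integral_const_mul _ _).trans_le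
        (by gcongr))
    refine ae_restrict_of_forall_mem mΩ fun p hp => ?_
    have h1 := (main p hp).2
    have h2 : √(8 * g p) ≤ 3 * √(g p) := by
      rw [Real.sqrt_le_left (by positivity), mul_pow, Real.sq_sqrt (g0 p)]
      linarith [g0 p]
    have h3 := amgm (√(g p)) (g p) (Real.sqrt_nonneg _) (Real.sq_sqrt (g0 p)).le
    have h4 := Real.sqrt_nonneg (g p)
    change max (Ef (A 0) p.1 - 2 * |Pf (A 0) p.1|) 0 ≤ 3 * (g p / δ + δ)
    exact max_le (by linarith) (by linarith)

variable {σ M : ℝ} {h a b z : Vec n} {f g c s p q Φ : Vec n → ℝ} {B : Set (Vec n)}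

/-! ### Approximate solutions of Pexider's equation -/

/-- A bounded function on `[-s, s]` that is additive up to `e` is linear up to `8 e`. -/
lemma hyers_line {c : ℝ → ℝ} {s : ℝ} (hs : 0 < s) (hM : ∀ t, |t| ≤ s → |c t| ≤ M)
    (hadd : ∀ t u, |t| ≤ s → |u| ≤ s → |t + u| ≤ s → |c (t + u) - c t - c u| ≤ e) :
    ∀ t, |t| ≤ s → |c t - t * (c s / s)| ≤ 8 * e := by
  set f : ℝ → ℝ := fun t => c t - t * (c s / s) with hf
  have fadd t u : |t| ≤ s → |u| ≤ s → |t + u| ≤ s → |f (t + u) - f t - f u| ≤ e := by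
    intro h1 h2 h3
    rw [show f (t + u) - f t - f u = c (t + u) - c t - c u
      by simp only [hf]; ring]; exact hadd t u h1 h2 h3
  have fs : f s = 0 := by simp only [hf]; field_simp; ring
  have e0 := le_trans (abs_nonneg _) (fadd 0 0 (by simpa using hs.le) (by simpa using hs.le)
    (by simpa using hs.le))
  have f0 : |f 0| ≤ e := by
    have := fadd 0 0 (by simpa using hs.le) (by simpa using hs.le) (by simpa using hs.le)
    simpa using this
  -- halving an a priori bound improves it until only a multiple of `e` is left
  have step (B : ℝ) : (∀ t, |t| ≤ s → |f t| ≤ B) → ∀ t, |t| ≤ s → |f t| ≤ B / 2 + 4 * e := by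
    intro hB
    have pos t : 0 ≤ t → t ≤ s → |f t| ≤ B / 2 + 2 * e := by
      intro h0 h1
      have half u : 0 ≤ u → u ≤ s / 2 → |f u| ≤ B / 2 + e := by
        intro hu hu2
        have h2 := fadd u u (by rw [abs_of_nonneg hu]; linarith) (by rw [abs_of_nonneg hu]; linarith)
          (by rw [abs_of_nonneg (by linarith)]; linarith)
        have h3 := hB (u + u) (by rw [abs_of_nonneg (by linarith)]; linarith)
        rw [abs_le] at *
        constructor <;> linarith [h2.1, h2.2, h3.1, h3.2]
      rcases le_total t (s / 2) with h | h
      · linarith [half t h0 h]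
      · have h2 := fadd t (s - t) (by rw [abs_of_nonneg h0]; linarith)
          (by rw [abs_of_nonneg (by linarith)]; linarith) (by simp [abs_of_pos hs])
        have h3 := half (s - t) (by linarith) (by linarith)
        rw [add_sub_cancel, fs] at h2
        rw [abs_le] at *
        constructor <;> linarith [h2.1, h2.2, h3.1, h3.2]
    intro t ht
    rcases le_total 0 t with h | h
    · linarith [pos t h (le_trans (le_abs_self _) ht)]
    · have h1 := le_trans (neg_le_abs _) ht
      have h2 := fadd t (-t) ht (by rwa [abs_neg]) (by simpa using hs.le)
      have h3 := pos (-t) (by linarith) h1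
      rw [add_neg_cancel] at h2
      rw [abs_le] at *
      constructor <;> linarith [h2.1, h2.2, h3.1, h3.2]
  have M0 t : |t| ≤ s → |f t| ≤ M + |c s| := by
    intro ht
    have h1 : |t * (c s / s)| ≤ |c s| := by
      rw [abs_mul, abs_div, abs_of_pos hs]
      calc |t| * (|c s| / s) ≤ s * (|c s| / s) := by gcongr
        _ = |c s| := by field_simp
    calc |f t| ≤ |c t| + |t * (c s / s)| := abs_sub _ _
      _ ≤ _ := add_le_add (hM t ht) h1
  have S : Set.Nonempty ((fun t => |f t|) '' Icc (-s) s) := ⟨_, 0, ⟨by linarith, hs.le⟩, rfl⟩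
  have bdd : BddAbove ((fun t => |f t|) '' Icc (-s) s) := by
    refine ⟨M + |c s|, ?_⟩
    rintro _ ⟨t, ht, rfl⟩
    exact M0 t (abs_le.mpr ht)
  set B := sSup ((fun t => |f t|) '' Icc (-s) s)
  have hB t : |t| ≤ s → |f t| ≤ B := fun ht => le_csSup bdd ⟨t, abs_le.mp ht, rfl⟩
  have : B ≤ B / 2 + 4 * e := by
    apply csSup_le S
    rintro _ ⟨t, ht, rfl⟩
    exact step B hB t (abs_le.mpr ht)
  intro t ht
  linarith [hB t ht]

lemma norm_part_le (h : Vec n) (S : Finset (Fin n)) :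
    ‖∑ i ∈ S, h i • EuclideanSpace.single i (1 : ℝ)‖ ≤ ‖h‖ := by
  rw [EuclideanSpace.norm_eq, EuclideanSpace.norm_eq]
  apply Real.sqrt_le_sqrt
  apply Finset.sum_le_sum
  intro i _
  have : (∑ j ∈ S, h j • EuclideanSpace.single j (1 : ℝ)) i = if i ∈ S then h i else 0 := by
    rw [WithLp.ofLp_sum, Finset.sum_apply]
    simp
  rw [this]
  split_ifs
  · exact le_rfl
  · simpa using sq_nonneg (h i)

lemma hyers {s : ℝ} (hs : 0 < s) (hM : ∀ t, ‖t‖ ≤ s → |c t| ≤ M)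
    (hadd : ∀ t u, ‖t‖ ≤ s → ‖u‖ ≤ s → ‖t + u‖ ≤ s → |c (t + u) - c t - c u| ≤ e) :
    ∃ ξ : Vec n, ∀ t, ‖t‖ ≤ s → |c t - inner ℝ ξ t| ≤ (9 * n + 1) * e := by
  let b : Fin n → Vec n := fun i => EuclideanSpace.single i (1 : ℝ)
  have nb : ∀ (i : Fin n) (a : ℝ), ‖a • b i‖ = |a| := by intro i a; rw [norm_smul]; simp [b]
  let ξ : Vec n := WithLp.toLp 2 (fun i => c (s • b i) / s)
  refine ⟨ξ, ?_⟩
  intro t ht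
  have ci i : |t i| ≤ s := le_trans (by simpa using PiLp.norm_apply_le t i) ht
  have lin i : |c (t i • b i) - t i * (c (s • b i) / s)| ≤ 8 * e := by
    refine hyers_line (c := fun a => c (a • b i)) hs (M := M) ?_ ?_ (t i) (ci i)
    · intro a ha; exact hM _ (by rw [nb]; exact ha)
    · intro a a' h1 h2 h3
      have := hadd (a • b i) (a' • b i) (by rwa [nb]) (by rwa [nb]) (by rwa [← add_smul, nb])
      rwa [← add_smul] at this
  have e0 : |c 0| ≤ e := by
    have := hadd 0 0 (by simpa using hs.le) (by simpa using hs.le) (by simpa using hs.le)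
    simpa using this
  have part : ∀ S : Finset (Fin n), |c (∑ i ∈ S, t i • b i) - ∑ i ∈ S, t i * (c (s • b i) / s)|
      ≤ (9 * S.card + 1) * e := by
    intro S
    induction S using Finset.induction_on with
    | empty => simpa using e0
    | insert i S hi ih =>
      have h1 := hadd (t i • b i) (∑ i ∈ S, t i • b i) (by rw [nb]; exact ci i)
        ((norm_part_le t S).trans ht)
        (by rw [← Finset.sum_insert (f := fun i => t i • b i) hi]; exact (norm_part_le t _).trans ht)
      have h2 := lin i
      rw [Finset.sum_insert hi, Finset.sum_insert hi, Finset.card_insert_of_notMem hi]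
      push_cast
      rw [abs_le] at *
      constructor <;> linarith [h1.1, h1.2, h2.1, h2.2, ih.1, ih.2]
  have ht' : ∑ i, t i • b i = t := by
    ext j
    rw [WithLp.ofLp_sum, Finset.sum_apply]
    simp [b]
  have := part Finset.univ
  rw [ht'] at this
  rw [show inner ℝ ξ t = ∑ i, t i * (c (s • b i) / s) by simp [ξ, PiLp.inner_apply]]
  simpa using this

/-- Bounded measurable functions. -/
def Bdm {G : Type*} [MeasurableSpace G] (f : G → ℝ) : Prop := Measurable f ∧ ∃ M, ∀ x, |f x| ≤ M

lemma Bdm.chi_int (hf : Bdm f) (hB : Fin' B) : Integrable fun y => chi B y * f y := by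
  obtain ⟨M, hM⟩ := hf.2
  exact nice_mul_integrable hB.nice hf.1 hM

lemma Bdm.shift (hf : Bdm f) (h : Vec n) : Bdm (fun y => f (y + h)) := by
  obtain ⟨M, hM⟩ := hf.2
  exact ⟨hf.1.comp (measurable_add_const h), M, fun x => hM _⟩

lemma Bdm.sub (hf : Bdm f) (hg : Bdm g) : Bdm (fun y => f y - g y) := by
  obtain ⟨M, hM⟩ := hf.2
  obtain ⟨N, hN⟩ := hg.2
  exact ⟨hf.1.sub hg.1, M + N, fun x => (abs_sub _ _).trans (add_le_add (hM x) (hN x))⟩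

/-- The defect of the triple `(p, q, s)` in Pexider's equation. -/
def PF (p q s : Vec n → ℝ) (z : Vec n × Vec n) : ℝ := p z.1 + q z.2 + s (-z.1 - z.2)

lemma measurable_PF (hp : Bdm p) (hq : Bdm q) (hs : Bdm s) : Measurable (PF p q s) :=
  ((hp.1.comp measurable_fst).add (hq.1.comp measurable_snd)).add
    (hs.1.comp (measurable_fst.neg.sub measurable_snd))

lemma PF_bdd (hp : Bdm p) (hq : Bdm q) (hs : Bdm s) : ∃ M, ∀ z, |PF p q s z| ≤ M := by
  obtain ⟨M, hM⟩ := hp.2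
  obtain ⟨N, hN⟩ := hq.2
  obtain ⟨L, hL⟩ := hs.2
  exact ⟨M + N + L, fun z => (abs_add_three _ _ _).trans
    (add_le_add (add_le_add (hM _) (hN _)) (hL _))⟩

/-- The defect integrated over the slice `{x} × Ω_x`. -/
def gF (Ω : Set (Vec n × Vec n)) (p q s : Vec n → ℝ) (x : Vec n) : ℝ :=
  ∫ y, chi Ω (x, y) * |PF p q s (x, y)|

lemma gF_nonneg (Ω : Set (Vec n × Vec n)) (p q s : Vec n → ℝ) (x : Vec n) : 0 ≤ gF Ω p q s x :=
  integral_nonneg fun _ => mul_nonneg (chi_nonneg _ _) (abs_nonneg _)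

section
variable {Ω : Set (Vec n × Vec n)} {p q s : Vec n → ℝ}

lemma PF_int (mΩ : MeasurableSet Ω) (fΩ : volume Ω ≠ ⊤) (hp : Bdm p) (hq : Bdm q) (hs : Bdm s) :
    Integrable (fun z => chi Ω z * |PF p q s z|) := by
  obtain ⟨M, hM⟩ := PF_bdd hp hq hs
  refine ((nice_chi mΩ fΩ).2.1.bdd_mul (c := M) (measurable_PF hp hq hs).abs.aestronglyMeasurable
    (ae_of_all _ fun z => ?_)).congr (ae_of_all _ fun z => mul_comm _ _)
  rw [Real.norm_eq_abs, abs_abs]; exact hM z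

lemma gF_int (mΩ : MeasurableSet Ω) (fΩ : volume Ω ≠ ⊤) (hp : Bdm p) (hq : Bdm q) (hs : Bdm s) :
    Integrable (gF Ω p q s) ∧ ∫ x, gF Ω p q s x = ∫ z in Ω, |PF p q s z| := by
  have h := PF_int mΩ fΩ hp hq hs
  refine ⟨h.integral_prod_left, ?_⟩
  have h2 := integral_prod _ h
  unfold gF
  rw [← integral_indicator mΩ]
  rw [Measure.volume_eq_prod] at *
  rw [← h2]
  congr 1
  ext z
  by_cases hz : z ∈ Ω <;> simp [chi, hz]

/-- Comparing `F(z+h, y)` with `F(z, y+h)` eliminates the third function. -/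
lemma pex_step (hp : Bdm p) (hq : Bdm q) (hs : Bdm s) (sl : ∀ x, Fin' {y | (x, y) ∈ Ω})
    (hB : Fin' B) (h1 : ∀ y ∈ B, (z + h, y) ∈ Ω) (h2 : ∀ y ∈ B, (z, y + h) ∈ Ω) :
    |vol B * (p (z + h) - p z) - ∫ y, chi B y * (q (y + h) - q y)|
      ≤ gF Ω p q s (z + h) + gF Ω p q s z := by
  obtain ⟨M, hM⟩ := PF_bdd hp hq hs
  have mF := measurable_PF hp hq hs
  have key : vol B * (p (z + h) - p z) - ∫ y, chi B y * (q (y + h) - q y)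
      = ∫ y, chi B y * (PF p q s (z + h, y) - PF p q s (z, y + h)) := by
    rw [← integral_chi hB.1, ← integral_mul_const, ← integral_sub]
    · congr 1
      ext y
      have : -(z + h) - y = -z - (y + h) := by abel
      simp only [PF, this]
      ring
    · exact hB.nice.2.1.mul_const _
    · exact ((hq.shift h).sub hq).chi_int hB
  have i0 x : Integrable fun y => chi {y | (x, y) ∈ Ω} y * |PF p q s (x, y)| := nice_mul_integrable (sl x).nice
      (mF.comp (measurable_const.prodMk measurable_id)).abs (c := M)
      fun y => by rw [abs_abs]; exact hM _
  have i1 : Integrable fun y => chi Ω (z + h, y) * |PF p q s (z + h, y)| := i0 (z + h)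
  have i2 : Integrable fun y => chi Ω (z, y + h) * |PF p q s (z, y + h)| :=
    (i0 z).comp_add_right h
  have tr : gF Ω p q s z = ∫ y, chi Ω (z, y + h) * |PF p q s (z, y + h)| :=
    (integral_add_right_eq_self (fun y => chi Ω (z, y) * |PF p q s (z, y)|) h).symm
  rw [key, tr, gF, ← integral_add i1 i2, ← Real.norm_eq_abs]
  refine norm_integral_le_of_norm_le (i1.add i2) (ae_of_all _ fun y => ?_)
  rw [Real.norm_eq_abs]
  by_cases hy : y ∈ B
  · simp only [chi_of_mem hy, chi_of_mem (h1 y hy), chi_of_mem (h2 y hy), one_mul]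
    exact abs_sub _ _
  · simp only [chi_of_notMem hy, zero_mul, abs_zero]
    exact add_nonneg (mul_nonneg (chi_nonneg _ _) (abs_nonneg _))
      (mul_nonneg (chi_nonneg _ _) (abs_nonneg _))

end

lemma avg3 (g0 : ∀ x, 0 ≤ g x) (gi : Integrable g) (hg : ∫ x, g x ≤ ε) (hB : Fin' B)
    (h : ∀ z ∈ B, t ≤ 2 * g z + 2 * g (z + a) + 2 * g (z + b)) : vol B * t ≤ 6 * ε := by
  have i1 := gi.comp_add_right a
  have i2 := gi.comp_add_right b
  have e1 : ∫ x, g (x + a) = ∫ x, g x := integral_add_right_eq_self g a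
  have e2 : ∫ x, g (x + b) = ∫ x, g x := integral_add_right_eq_self g b
  have ii := ((gi.const_mul 2).add (i1.const_mul 2)).add (i2.const_mul 2)
  have e3 : ∫ z, (2 * g z + 2 * g (z + a) + 2 * g (z + b)) = 6 * ∫ x, g x := by
    have j1 : Integrable fun z => 2 * g z + 2 * g (z + a) :=
      (gi.const_mul 2).add (i1.const_mul 2)
    rw [integral_add j1 (i2.const_mul 2), integral_add (gi.const_mul 2) (i1.const_mul 2),
      integral_const_mul, integral_const_mul, integral_const_mul, e1, e2]
    ring
  have : ∫ z, chi B z * t ≤ ∫ z, (2 * g z + 2 * g (z + a) + 2 * g (z + b)) := by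
    refine integral_mono (hB.nice.2.1.mul_const _) ii fun z => ?_
    by_cases hz : z ∈ B
    · simpa [chi_of_mem hz] using h z hz
    · simp only [chi_of_notMem hz, zero_mul]
      linarith [g0 z, g0 (z + a), g0 (z + b)]
  rw [integral_mul_const, integral_chi hB.1, e3] at this
  linarith

/-- Chaining along a segment from the origin. -/
lemma seg_chain (hσ : 0 < σ) (hR1 : R ≤ 1) (e0 : 0 ≤ e)
    (h : ∀ x x', ‖x‖ ≤ R → ‖x'‖ ≤ R → ‖x - x'‖ ≤ σ → |Φ x - Φ x'| ≤ e) :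
    ∀ x, ‖x‖ ≤ R → |Φ x - Φ 0| ≤ (1 / σ + 1) * e := by
  intro x hx
  obtain ⟨N, hN0, hN1, hN2⟩ : ∃ N : ℕ, 0 < N ∧ 1 / σ ≤ N ∧ (N : ℝ) ≤ 1 / σ + 1 :=
    ⟨⌈1 / σ⌉₊, Nat.ceil_pos.mpr (by positivity), Nat.le_ceil _,
      (Nat.ceil_lt_add_one (by positivity)).le⟩
  have hNr : (0 : ℝ) < N := by exact_mod_cast hN0
  have bd (i : ℕ) : i ≤ N → ‖((i : ℝ) / N) • x‖ ≤ R := by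
    intro hi
    have : (i : ℝ) / N ≤ 1 := by rw [div_le_one hNr]; exact_mod_cast hi
    rw [norm_smul, Real.norm_of_nonneg (by positivity)]
    exact (mul_le_of_le_one_left (norm_nonneg x) this).trans hx
  have key (i : ℕ) : i ≤ N → |Φ (((i : ℝ) / N) • x) - Φ 0| ≤ i * e := by
    induction i with
    | zero => intro _; simp
    | succ i ih =>
      intro hi
      have h1 := ih (by omega)
      have h2 := h _ _ (bd (i + 1) hi) (bd i (by omega)) (by
        rw [← sub_smul, norm_smul]
        rw [show ((i + 1 : ℕ) : ℝ) / N - (i : ℝ) / N = 1 / N by push_cast; ring,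
          Real.norm_of_nonneg (by positivity)]
        have h3 : 1 / (N : ℝ) ≤ σ := by rw [div_le_iff₀ hNr]; rw [div_le_iff₀ hσ] at hN1; linarith
        calc 1 / (N : ℝ) * ‖x‖ ≤ 1 / (N : ℝ) * 1 := by gcongr; linarith
          _ ≤ σ := by linarith)
      rw [abs_le] at *
      push_cast at *
      constructor <;> linarith [h1.1, h1.2, h2.1, h2.2]
  have := key N le_rfl
  rw [div_self hNr.ne', one_smul] at this
  exact this.trans (by gcongr)

/-- The neighbourhood `|y - μ x| ≤ ρ`, `|x| ≤ R` of the line `y = μ x`. -/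
def OmP (n : ℕ) (μ R ρ : ℝ) : Set (Vec n × Vec n) := {z | ‖z.1‖ ≤ R ∧ ‖z.2 - μ • z.1‖ ≤ ρ}

lemma meas_OmP (μ R ρ : ℝ) : MeasurableSet (OmP n μ R ρ) := by
  apply IsClosed.measurableSet
  exact (isClosed_le (f := fun z : Vec n × Vec n => ‖z.1‖) (by fun_prop) continuous_const).inter
    (isClosed_le (f := fun z : Vec n × Vec n => ‖z.2 - μ • z.1‖) (by fun_prop) continuous_const)

lemma OmP_subset (μ R ρ : ℝ) : OmP n μ R ρ ⊆ closedBall 0 R ×ˢ closedBall 0 (ρ + |μ| * R) := by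
  rintro ⟨x, y⟩ ⟨h1, h2⟩
  change ‖x‖ ≤ R at h1
  change ‖y - μ • x‖ ≤ ρ at h2
  refine ⟨by simpa using h1, ?_⟩
  have : y = (y - μ • x) + μ • x := by abel
  rw [mem_closedBall_zero_iff]
  change ‖y‖ ≤ _
  rw [this]
  refine (norm_add_le _ _).trans (add_le_add h2 ?_)
  rw [norm_smul, Real.norm_eq_abs]
  gcongr

lemma vol_OmP_ne (μ R ρ : ℝ) : volume (OmP n μ R ρ) ≠ ⊤ := by
  refine ne_top_of_le_ne_top ?_ (measure_mono (OmP_subset μ R ρ))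
  rw [Measure.volume_eq_prod, Measure.prod_prod]
  exact ENNReal.mul_ne_top (fin_ball _ _).2 (fin_ball _ _).2

lemma fin_slice_OmP (μ R ρ : ℝ) (x : Vec n) : Fin' {y | (x, y) ∈ OmP n μ R ρ} := by
  refine ⟨(measurable_const.prodMk measurable_id) (meas_OmP μ R ρ), ?_⟩
  refine ne_top_of_le_ne_top (fin_ball (μ • x) ρ).2 (measure_mono ?_)
  rintro y ⟨_, h2⟩
  rwa [mem_closedBall_iff_norm]

lemma chi_inner_int (ξ x a : Vec n) (r : ℝ) :
    Integrable (fun y => chi (closedBall a r) y * inner ℝ ξ (x + y)) := by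
  have : IntegrableOn (fun y : Vec n => inner ℝ ξ (x + y)) (closedBall a r) :=
    (by fun_prop : Continuous fun y : Vec n => inner ℝ ξ (x + y)).continuousOn.integrableOn_compact
      (isCompact_closedBall _ _)
  rw [← integrable_indicator_iff isClosed_closedBall.measurableSet] at this
  refine this.congr (ae_of_all _ fun y => ?_)
  by_cases hy : y ∈ closedBall a r
  · simp only [indicator_of_mem hy, chi_of_mem hy, one_mul]
  · simp only [indicator_of_notMem hy, chi_of_notMem hy, zero_mul]

lemma avgb {u : Vec n → ℝ} (g0 : ∀ x, 0 ≤ g x) (gi : Integrable g) {K E : ℝ} (hK : 0 ≤ K)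
    (hg : ∫ x, g x ≤ ε) (hB : Fin' B) (h : ∀ y ∈ B, |u y| ≤ K * (g (y + a) + g (y + b)) + E) :
    |∫ y, chi B y * u y| ≤ 2 * K * ε + vol B * E := by
  have i1 := gi.comp_add_right a
  have i2 := gi.comp_add_right b
  have e1 : ∫ x, g (x + a) = ∫ x, g x := integral_add_right_eq_self g a
  have e2 : ∫ x, g (x + b) = ∫ x, g x := integral_add_right_eq_self g b
  have iB : Integrable fun y => chi B y * E := hB.nice.2.1.mul_const _
  have i3 : Integrable fun y => K * (g (y + a) + g (y + b)) := (i1.add i2).const_mul K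
  have ii : Integrable fun y => K * (g (y + a) + g (y + b)) + chi B y * E := i3.add iB
  have e3 : ∫ y, (K * (g (y + a) + g (y + b)) + chi B y * E)
      = 2 * K * (∫ x, g x) + vol B * E := by
    rw [integral_add i3 iB, integral_const_mul, integral_add i1 i2, integral_mul_const,
      integral_chi hB.1, e1, e2]
    ring
  have : |∫ y, chi B y * u y| ≤ ∫ y, (K * (g (y + a) + g (y + b)) + chi B y * E) := by
    rw [← Real.norm_eq_abs]
    refine norm_integral_le_of_norm_le ii (ae_of_all _ fun y => ?_)
    rw [Real.norm_eq_abs]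
    by_cases hy : y ∈ B
    · simpa [chi_of_mem hy] using h y hy
    · simp only [chi_of_notMem hy, zero_mul, abs_zero, add_zero]
      exact mul_nonneg hK (add_nonneg (g0 _) (g0 _))
  rw [e3] at this
  refine this.trans ?_
  have : 2 * K * ∫ x, g x ≤ 2 * K * ε := by gcongr
  linarith

/-- Stability of Pexider's equation in `L¹` near a line `y = μ x`. -/
lemma pexider (n : ℕ) {ρ : ℝ} (hM : 0 ≤ M) (hρ : 0 < ρ) (hσ : σ = ρ / (3 + 5 * M)) :
    ∃ C, 0 ≤ C ∧ ∀ (μ R ε : ℝ) (p q s : Vec n → ℝ), |μ| ≤ M → 4 * σ ≤ R → R ≤ 1 →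
      Bdm p → Bdm q → Bdm s → (∫ z in OmP n μ R ρ, |PF p q s z|) ≤ ε →
      ∃ (ξ : Vec n) (a : ℝ),
        (∫ x in closedBall 0 (R - 4 * σ), |p x - (inner ℝ ξ x + a)|) ≤ C * ε ∧
        ∀ h, ‖h‖ ≤ 2 * σ → |vol (𝔹 n σ) * inner ℝ ξ h
          - ∫ y, chi (closedBall 0 σ) y * (q (y + h) - q y)| ≤ C * ε := by
  have σ0 : 0 < σ := by rw [hσ]; positivity
  have hσρ : 3 * σ + 5 * M * σ = ρ := by rw [hσ]; field_simp
  set k := vol (𝔹 n σ) with hk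
  have kall (x : Vec n) : vol (closedBall x σ) = k := by
    rw [hk, Measure.real, Measure.real, Measure.addHaar_closedBall_center]
  have k0 : 0 < k := ENNReal.toReal_pos (measure_closedBall_pos _ _ σ0).ne' (fin_ball _ _).2
  set K := 1 / k with hK
  have K0 : 0 < K := by positivity
  have kK : k * K = 1 := by rw [hK]; field_simp
  set c1 := 6 * K ^ 2 with hc1
  set c2 := (1 / σ + 1) * c1 + (9 * n + 1) * c1 with hc2
  set c3 := (1 / σ + 1) * (K * (2 * K + k * c2)) + (K * (2 * K + k * c2)) with hc3
  set v1 := vol (𝔹 n 1)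
  have c10 : 0 ≤ c1 := by positivity
  have c20 : 0 ≤ c2 := by positivity
  have c30 : 0 ≤ c3 := by positivity
  have v10 : 0 ≤ v1 := measureReal_nonneg
  refine ⟨K + c3 * v1 + k * ((9 * n + 1) * c1), by positivity, ?_⟩
  intro μ R ε p q s hμ hR hR1 hp hq hs hε
  set g := gF (OmP n μ R ρ) p q s with hg
  have g0 : ∀ x, 0 ≤ g x := gF_nonneg _ _ _ _
  obtain ⟨gi, ge⟩ := gF_int (meas_OmP μ R ρ) (vol_OmP_ne μ R ρ) hp hq hs
  have gε : ∫ x, g x ≤ ε := by rw [hg, ge]; exact hε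
  have ε0 : 0 ≤ ε := le_trans (integral_nonneg g0) gε
  set cc : Vec n → Vec n → ℝ := fun x h =>
    (∫ y, chi (closedBall (μ • x) σ) y * (q (y + h) - q y)) * K with hcc
  have A1 x z h : ‖x - z‖ ≤ 3 * σ → ‖h‖ ≤ 2 * σ → ‖z‖ ≤ R → ‖z + h‖ ≤ R →
      |p (z + h) - p z - cc x h| ≤ K * (g (z + h) + g z) := by
    intro hxz hh hz hzh
    have mx : ‖μ • (x - z)‖ ≤ M * (3 * σ) := by rw [norm_smul, Real.norm_eq_abs]; gcongr
    have mh : ‖μ • h‖ ≤ M * (2 * σ) := by rw [norm_smul, Real.norm_eq_abs]; gcongr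
    have := pex_step hp hq hs (fin_slice_OmP μ R ρ) (fin_ball (μ • x) σ) (z := z) (h := h)
      (by
        intro y hy
        rw [mem_closedBall_iff_norm] at hy
        refine ⟨hzh, ?_⟩
        change ‖y - μ • (z + h)‖ ≤ ρ
        rw [show y - μ • (z + h) = (y - μ • x) + μ • (x - z) - μ • h
          by rw [smul_add, smul_sub]; abel]
        refine (norm_sub_le _ _).trans ?_
        have := norm_add_le (y - μ • x) (μ • (x - z))
        linarith)
      (by
        intro y hy
        rw [mem_closedBall_iff_norm] at hy
        refine ⟨hz, ?_⟩
        change ‖y + h - μ • z‖ ≤ ρ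
        rw [show y + h - μ • z = (y - μ • x) + μ • (x - z) + h by rw [smul_sub]; abel]
        refine (norm_add_le _ _).trans ?_
        have := norm_add_le (y - μ • x) (μ • (x - z))
        have : 0 ≤ M * σ := by positivity
        linarith)
    rw [kall] at this
    have e2 : p (z + h) - p z - cc x h = K * (k * (p (z + h) - p z) -
        ∫ y, chi (closedBall (μ • x) σ) y * (q (y + h) - q y)) := by
      simp only [hcc]
      linear_combination (-(p (z + h) - p z)) * kK
    rw [e2, abs_mul, abs_of_pos K0]
    gcongr
  have scale t : k * (k * t) ≤ 6 * ε → t ≤ c1 * ε := by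
    intro ht
    rw [show t = K * (K * (k * (k * t))) by linear_combination (-(k * K + 1) * t) * kK]
    calc K * (K * (k * (k * t))) ≤ K * (K * (6 * ε)) := by gcongr
      _ = c1 * ε := by rw [hc1]; ring
  have A2 h : ‖h‖ ≤ 2 * σ → ∀ x x', ‖x‖ ≤ R - 3 * σ → ‖x'‖ ≤ R - 3 * σ → ‖x - x'‖ ≤ σ →
      |cc x h - cc x' h| ≤ c1 * ε := by
    intro hh x x' hx _ hxx
    apply scale
    rw [← kall x]
    refine avg3 g0 gi gε (fin_ball x σ) (a := h) (b := 0) ?_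
    intro z hz
    rw [mem_closedBall_iff_norm] at hz
    have hz' : ‖x - z‖ ≤ σ := by rw [norm_sub_rev]; exact hz
    have zR : ‖z‖ ≤ R - 2 * σ := by
      rw [show z = (z - x) + x by abel]; linarith [norm_add_le (z - x) x]
    have zhR : ‖z + h‖ ≤ R := by linarith [norm_add_le z h]
    have hz2 : ‖x' - z‖ ≤ 3 * σ := by
      rw [show x' - z = (x - z) - (x - x') by abel]; linarith [norm_sub_le (x - z) (x - x')]
    have h1 := A1 x z h (by linarith) hh (by linarith) zhR
    have h2 := A1 x' z h hz2 hh (by linarith) zhR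
    have h3 : |cc x h - cc x' h| ≤ K * (2 * g z + 2 * g (z + h)) := by
      rw [abs_le] at *
      constructor <;> linarith [h1.1, h1.2, h2.1, h2.2]
    rw [kall]
    have h4 := mul_le_mul_of_nonneg_left h3 k0.le
    rw [← mul_assoc, kK] at h4
    linarith [g0 (z + 0)]
  have A3 h h' : ‖h‖ ≤ 2 * σ → ‖h'‖ ≤ 2 * σ → ‖h + h'‖ ≤ 2 * σ →
      |cc 0 (h + h') - cc 0 h - cc 0 h'| ≤ c1 * ε := by
    intro hh hh' hhh
    apply scale
    rw [← kall 0]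
    refine avg3 g0 gi gε (fin_ball 0 σ) (a := h) (b := h + h') ?_
    intro z hz
    rw [mem_closedBall_zero_iff] at hz
    have n1 := norm_add_le z h
    have n2 := norm_add_le z (h + h')
    have h1 := A1 0 z h (by rw [zero_sub, norm_neg]; linarith) hh (by linarith) (by linarith)
    have h2 := A1 0 z (h + h') (by rw [zero_sub, norm_neg]; linarith) hhh (by linarith) (by linarith)
    have h3 := A1 0 (z + h) h' (by rw [zero_sub, norm_neg]; linarith) hh' (by linarith)
      (by rw [add_assoc]; linarith)
    rw [add_assoc] at h3
    have h4 : |cc 0 (h + h') - cc 0 h - cc 0 h'|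
        ≤ K * (2 * g z + 2 * g (z + h) + 2 * g (z + (h + h'))) := by
      rw [abs_le] at *
      constructor <;> linarith [h1.1, h1.2, h2.1, h2.2, h3.1, h3.2]
    rw [kall]
    have h5 := mul_le_mul_of_nonneg_left h4 k0.le
    rw [← mul_assoc, kK] at h5
    linarith
  have A4 h : ‖h‖ ≤ 2 * σ → ∀ x, ‖x‖ ≤ R - 3 * σ →
      |cc x h - cc 0 h| ≤ (1 / σ + 1) * (c1 * ε) := fun hh =>
    seg_chain (Φ := fun x => cc x h) σ0 (by linarith) (by positivity) (A2 h hh)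
  obtain ⟨Q, hQ⟩ := hq.2
  have bd h : ‖h‖ ≤ 2 * σ → |cc 0 h| ≤ k * (2 * Q) * K := by
    intro _
    simp only [hcc]
    rw [abs_mul, abs_of_pos K0]
    refine mul_le_mul_of_nonneg_right ?_ K0.le
    rw [← kall (μ • 0), ← integral_chi (fin_ball _ _).1, ← integral_mul_const, ← Real.norm_eq_abs]
    refine norm_integral_le_of_norm_le ((fin_ball _ _).nice.2.1.mul_const _)
      (ae_of_all _ fun y => ?_)
    rw [Real.norm_eq_abs, abs_mul, abs_of_nonneg (chi_nonneg _ _)]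
    refine mul_le_mul_of_nonneg_left ?_ (chi_nonneg _ _)
    exact (abs_sub _ _).trans (by linarith [hQ (y + h), hQ y])
  obtain ⟨ξ, hξ⟩ := hyers (s := 2 * σ) (by positivity) bd A3
  set f : Vec n → ℝ := fun x => p x - inner ℝ ξ x with hf
  have A6 z h : ‖z‖ ≤ R - 3 * σ → ‖h‖ ≤ 2 * σ → ‖z + h‖ ≤ R →
      |f (z + h) - f z| ≤ K * (g (z + h) + g z) + c2 * ε := by
    intro hz hh hzh
    have h1 := A1 z z h (by simp [σ0.le]) hh (by linarith) hzh
    have h2 := A4 h hh z hz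
    have h3 := hξ h hh
    have e : f (z + h) - f z = (p (z + h) - p z - cc z h) + (cc z h - cc 0 h)
        + (cc 0 h - inner ℝ ξ h) := by simp only [hf, inner_add_right]; ring
    rw [e]
    refine (abs_add_three _ _ _).trans ?_
    have e2 : c2 * ε = (1 / σ + 1) * (c1 * ε) + (9 * n + 1) * (c1 * ε) := by rw [hc2]; ring
    linarith
  set B0 := 𝔹 n σ with hB0
  have fB0 : Fin' B0 := fin_ball _ _
  have fi x : Integrable fun y => chi B0 y * f (x + y) := by
    have h1 := (hp.shift x).chi_int fB0
    have h2 := chi_inner_int ξ x 0 σ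
    refine (h1.sub h2).congr (ae_of_all _ fun y => ?_)
    simp only [Pi.sub_apply, hf, add_comm y x, ← hB0]
    ring
  set m : Vec n → ℝ := fun x => K * ∫ y, chi B0 y * f (x + y) with hm
  have A7 x : ‖x‖ ≤ R - 4 * σ → |f x - m x| ≤ K * g x + K * (2 * K + k * c2) * ε := by
    intro hx
    have h1 := avgb g0 gi K0.le gε fB0 (u := fun y => f (x + y) - f x) (a := x) (b := x)
      (E := K * g x + c2 * ε) (by
        intro y hy
        rw [mem_closedBall_zero_iff] at hy
        have := A6 x y (by linarith) (by linarith) (by linarith [norm_add_le x y])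
        rw [add_comm y x]
        have := mul_nonneg K0.le (g0 (x + y))
        linarith)
    have e : ∫ y, chi B0 y * (f (x + y) - f x) = (∫ y, chi B0 y * f (x + y)) - k * f x := by
      have i2 : Integrable fun y => chi B0 y * f x := fB0.nice.2.1.mul_const _
      simp only [mul_sub]
      rw [integral_sub (fi x) i2, integral_mul_const, integral_chi fB0.1]
    rw [e] at h1
    rw [show f x - m x = K * -((∫ y, chi B0 y * f (x + y)) - k * f x)
      by simp only [hm]; linear_combination (- f x) * kK, abs_mul, abs_of_pos K0, abs_neg]
    refine (mul_le_mul_of_nonneg_left h1 K0.le).trans (le_of_eq ?_)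
    rw [← hk]
    linear_combination (K * g x) * kK
  have A8 x x' : ‖x‖ ≤ R - 4 * σ → ‖x'‖ ≤ R - 4 * σ → ‖x - x'‖ ≤ σ →
      |m x - m x'| ≤ K * (2 * K + k * c2) * ε := by
    intro hx hx' hxx
    have h1 := avgb g0 gi K0.le gε fB0 (u := fun y => f (x + y) - f (x' + y)) (a := x) (b := x')
      (E := c2 * ε) (by
        intro y hy
        rw [mem_closedBall_zero_iff] at hy
        have := A6 (x' + y) (x - x') (by linarith [norm_add_le x' y]) (by linarith) (by
          rw [show x' + y + (x - x') = x + y by abel]; linarith [norm_add_le x y])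
        rw [show x' + y + (x - x') = x + y by abel] at this
        rw [add_comm y x, add_comm y x']
        exact this)
    have e : ∫ y, chi B0 y * (f (x + y) - f (x' + y))
        = (∫ y, chi B0 y * f (x + y)) - ∫ y, chi B0 y * f (x' + y) := by
      simp only [mul_sub]
      rw [integral_sub (fi x) (fi x')]
    rw [e] at h1
    simp only [hm]
    rw [← mul_sub, abs_mul, abs_of_pos K0]
    refine (mul_le_mul_of_nonneg_left h1 K0.le).trans (le_of_eq ?_)
    rw [← hk]
    ring
  have E0 : 0 ≤ K * (2 * K + k * c2) * ε := by positivity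
  have A9 := seg_chain (Φ := m) σ0 (R := R - 4 * σ) (by linarith) E0 A8
  have A10 x : ‖x‖ ≤ R - 4 * σ → |p x - (inner ℝ ξ x + m 0)| ≤ K * g x + c3 * ε := by
    intro hx
    rw [show p x - (inner ℝ ξ x + m 0) = (f x - m x) + (m x - m 0) by simp only [hf]; ring]
    refine (abs_add_le _ _).trans ?_
    have h1 := A7 x hx
    have h2 := A9 x hx
    have : c3 * ε = (1 / σ + 1) * (K * (2 * K + k * c2) * ε) + K * (2 * K + k * c2) * ε := by
      rw [hc3]; ring
    linarith
  refine ⟨ξ, m 0, ?_, ?_⟩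
  · have mB : MeasurableSet (𝔹 n (R - 4 * σ)) := (fin_ball _ _).1
    have i1 : Integrable fun x => K * g x := gi.const_mul K
    have i2 : Integrable fun x => chi (𝔹 n (R - 4 * σ)) x * (c3 * ε) :=
      (nice_chi mB (fin_ball _ _).2).2.1.mul_const _
    rw [← integral_indicator mB]
    have : ∫ x, (𝔹 n (R - 4 * σ)).indicator
        (fun x => |p x - (inner ℝ ξ x + m 0)|) x
        ≤ ∫ x, (K * g x + chi (𝔹 n (R - 4 * σ)) x * (c3 * ε)) := by
      refine integral_mono_of_nonneg (ae_of_all _ fun x => indicator_nonneg (fun _ _ => abs_nonneg _) _)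
        (i1.add i2) (ae_of_all _ fun x => ?_)
      by_cases hx : x ∈ 𝔹 n (R - 4 * σ)
      · simp only [indicator_of_mem hx, chi_of_mem hx, one_mul]
        exact A10 x (by simpa using hx)
      · simp only [indicator_of_notMem hx, chi_of_notMem hx, zero_mul, add_zero]
        exact mul_nonneg K0.le (g0 x)
    refine this.trans ?_
    rw [integral_add i1 i2, integral_const_mul, integral_mul_const, integral_chi mB]
    have h1 : K * ∫ x, g x ≤ K * ε := by gcongr
    have h2 : vol (𝔹 n (R - 4 * σ)) ≤ v1 :=
      measureReal_mono (closedBall_subset_closedBall (by linarith)) (fin_ball _ _).2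
    have h3 := mul_le_mul_of_nonneg_right h2 (show 0 ≤ c3 * ε by positivity)
    have h4 : 0 ≤ k * ((9 * n + 1) * c1) * ε := by positivity
    linarith
  · intro h hh
    have h1 := hξ h hh
    have e : k * inner ℝ ξ h - ∫ y, chi B0 y * (q (y + h) - q y)
        = k * -(cc 0 h - inner ℝ ξ h) := by
      simp only [hcc, smul_zero, ← hB0]
      linear_combination (∫ y, chi B0 y * (q (y + h) - q y)) * kK
    rw [e, abs_mul, abs_of_pos k0, abs_neg]
    refine (mul_le_mul_of_nonneg_left h1 k0.le).trans ?_
    have : 0 ≤ (K + c3 * v1) * ε := by positivity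
    linarith

/-! ### Barycentres of the fibers are nearly affine -/

lemma exists_small (hB : Fin' B) (h0 : 0 < vol B) (fi : IntegrableOn f B) (he : ∫ x in B, f x ≤ e) :
    ∃ x ∈ B, f x ≤ e / vol B := by
  have hne : volume B ≠ 0 := by intro h; rw [Measure.real, h] at h0; simp at h0
  obtain ⟨x, hx, h⟩ := exists_le_setAverage hne hB.2 fi
  refine ⟨x, hx, h.trans ?_⟩
  rw [setAverage_eq, smul_eq_mul, div_eq_inv_mul]
  gcongr

lemma Bdm.integrableOn (hf : Bdm f) (hB : Fin' B) : IntegrableOn f B := by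
  obtain ⟨M, hM⟩ := hf.2
  exact Measure.integrableOn_of_bounded hB.2 hf.1.aestronglyMeasurable
    (ae_of_all _ fun x => by simpa using hM x)

lemma aff_integrableOn (hf : Bdm f) (ξ : Vec n) (a r : ℝ) :
    IntegrableOn (fun x => |f x - (inner ℝ ξ x + a)|) (closedBall 0 r) := by
  exact Integrable.abs ((hf.integrableOn (fin_ball _ _)).sub
    ((by fun_prop : Continuous fun x : Vec n => inner ℝ ξ x + a).continuousOn.integrableOn_compact
    (isCompact_closedBall _ _)))

/-- The affine approximants of a triple with small Pexider defect have small total value at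
some pair of points near the origin. -/
lemma pex_sum {μ ρ : ℝ} (σ0 : 0 < σ) (hM : |μ| ≤ M) (hσ : σ + M * σ ≤ ρ) (hR : σ ≤ R) (hp : Bdm p)
    (hq : Bdm q) (hs : Bdm s) (hε : (∫ z in OmP n μ R ρ, |PF p q s z|) ≤ ε) (ξ : Fin 3 → Vec n)
    (a : Fin 3 → ℝ) (h0 : ∫ x in closedBall 0 (2 * σ), |p x - (inner ℝ (ξ 0) x + a 0)| ≤ e)
    (h1 : ∫ x in closedBall 0 (2 * σ), |q x - (inner ℝ (ξ 1) x + a 1)| ≤ e)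
    (h2 : ∫ x in closedBall 0 (2 * σ), |s x - (inner ℝ (ξ 2) x + a 2)| ≤ e) :
    ∃ x y : Vec n, ‖x‖ ≤ σ ∧ ‖y‖ ≤ σ ∧
      |(inner ℝ (ξ 0) x + a 0) + (inner ℝ (ξ 1) y + a 1) + (inner ℝ (ξ 2) (-x - y) + a 2)| ≤
        (e + ε) / vol (𝔹 n σ) +
        ((e + ε) / vol (𝔹 n σ) + 2 * e) /
          vol (𝔹 n σ) := by
  set B0 := 𝔹 n σ with hB0
  set B2 := 𝔹 n (2 * σ) with hB2
  have sub : B0 ⊆ B2 := closedBall_subset_closedBall (by linarith)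
  have mB0 : MeasurableSet B0 := (fin_ball _ _).1
  have mB2 : MeasurableSet B2 := (fin_ball _ _).1
  set k := vol B0 with hk
  have k0 : 0 < k := ENNReal.toReal_pos (measure_closedBall_pos _ _ σ0).ne' (fin_ball _ _).2
  obtain ⟨gi, ge⟩ := gF_int (meas_OmP μ R ρ) (vol_OmP_ne μ R ρ) hp hq hs
  have g0 := gF_nonneg (OmP n μ R ρ) p q s
  set g := gF (OmP n μ R ρ) p q s with hg
  have ih : ∀ {f : Vec n → ℝ} (_ : Bdm f) (i : Fin 3),
      IntegrableOn (fun x => |f x - (inner ℝ (ξ i) x + a i)|) B2 := fun hf i =>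
    aff_integrableOn hf _ _ _
  have mono : ∀ {f : Vec n → ℝ} (_ : Bdm f) (i : Fin 3),
      ∫ x in B0, |f x - (inner ℝ (ξ i) x + a i)| ≤ ∫ x in B2, |f x - (inner ℝ (ξ i) x + a i)| :=
    fun hf i => setIntegral_mono_set (ih hf i) (ae_of_all _ fun _ => abs_nonneg _)
      (LE.le.eventuallyLE sub)
  have gB : ∫ x in B0, g x ≤ ε := by
    refine (setIntegral_le_integral gi (ae_of_all _ g0)).trans ?_
    rwa [ge]
  obtain ⟨x, hx, hx2⟩ := exists_small (fin_ball _ _) k0 (e := e + ε)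
    (f := fun x => |p x - (inner ℝ (ξ 0) x + a 0)| + g x)
    (((ih hp 0).mono_set sub).add gi.integrableOn) (by
      have i1 : IntegrableOn (fun x => |p x - (inner ℝ (ξ 0) x + a 0)|) B0 := (ih hp 0).mono_set sub
      have i2 : IntegrableOn g B0 := gi.integrableOn
      rw [← hB0, integral_add i1 i2]
      linarith [mono hp 0])
  rw [← hB0, ← hk] at hx2
  rw [← hB0] at hx
  have xn : ‖x‖ ≤ σ := by simpa [hB0] using hx
  obtain ⟨Q, hQ⟩ := PF_bdd hp hq hs
  have iF : IntegrableOn (fun y => |PF p q s (x, y)|) B0 := by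
    refine Measure.integrableOn_of_bounded (M := Q) (fin_ball _ _).2
      ((measurable_PF hp hq hs).comp (measurable_const.prodMk measurable_id)).abs.aestronglyMeasurable
      (ae_of_all _ fun y => ?_)
    rw [Real.norm_eq_abs, abs_abs]; exact hQ _
  have FB : ∫ y in B0, |PF p q s (x, y)| ≤ g x := by
    rw [← integral_indicator mB0, hg, gF]
    refine integral_mono_of_nonneg (ae_of_all _ fun y => indicator_nonneg (fun _ _ => abs_nonneg _) _)
      ?_ (ae_of_all _ fun y => ?_)
    · have sl := fin_slice_OmP μ R ρ x
      exact nice_mul_integrable sl.nice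
        ((measurable_PF hp hq hs).comp (measurable_const.prodMk measurable_id)).abs (c := Q)
        fun y => by rw [abs_abs]; exact hQ _
    · by_cases hy : y ∈ B0
      · have yn : ‖y‖ ≤ σ := by simpa [hB0] using hy
        have : (x, y) ∈ OmP n μ R ρ := by
          refine ⟨xn.trans hR, ?_⟩
          change ‖y - μ • x‖ ≤ ρ
          refine (norm_sub_le _ _).trans ?_
          rw [norm_smul, Real.norm_eq_abs]
          have : |μ| * ‖x‖ ≤ M * σ := mul_le_mul hM xn (norm_nonneg _) ((abs_nonneg _).trans hM)
          linarith
        simp only [indicator_of_mem hy, chi_of_mem this, one_mul]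
        exact le_rfl
      · simp only [indicator_of_notMem hy]
        exact mul_nonneg (chi_nonneg _ _) (abs_nonneg _)
  -- the third approximant, seen from the fiber over `x`
  have tB : IntegrableOn (fun y => |s (-x - y) - (inner ℝ (ξ 2) (-x - y) + a 2)|) B0 ∧
      ∫ y in B0, |s (-x - y) - (inner ℝ (ξ 2) (-x - y) + a 2)| ≤ e := by
    have i1 := (integrable_indicator_iff mB2).mpr (ih hs 2)
    have i2 := i1.comp_sub_left (-x)
    have e1 := integral_sub_left_eq_self (fun y => B2.indicator
      (fun x => |s x - (inner ℝ (ξ 2) x + a 2)|) y) volume (-x)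
    have mem : ∀ y ∈ B0, -x - y ∈ B2 := by
      intro y hy
      have yn : ‖y‖ ≤ σ := by simpa [hB0] using hy
      rw [hB2, mem_closedBall_zero_iff]
      have := norm_sub_le (-x) y
      rw [norm_neg] at this
      linarith
    constructor
    · refine (i2.integrableOn (s := B0)).congr_fun (fun y hy => ?_) mB0
      simp only [indicator_of_mem (mem y hy)]
    · rw [integral_indicator mB2] at e1
      refine le_trans ?_ (e1.trans_le h2)
      rw [← integral_indicator mB0]
      refine integral_mono_of_nonneg (ae_of_all _ fun y => indicator_nonneg (fun _ _ => abs_nonneg _) _)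
        i2 (ae_of_all _ fun y => ?_)
      by_cases hy : y ∈ B0
      · simp only [indicator_of_mem hy, indicator_of_mem (mem y hy)]
        exact le_rfl
      · simp only [indicator_of_notMem hy]
        exact indicator_nonneg (fun _ _ => abs_nonneg _) _
  obtain ⟨y, hy, hy2⟩ := exists_small (fin_ball _ _) k0 (e := (e + ε) / k + 2 * e)
    (f := fun y => |PF p q s (x, y)| + |q y - (inner ℝ (ξ 1) y + a 1)|
      + |s (-x - y) - (inner ℝ (ξ 2) (-x - y) + a 2)|)
    ((iF.add ((ih hq 1).mono_set sub)).add tB.1) (by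
      have i1 : IntegrableOn (fun x => |q x - (inner ℝ (ξ 1) x + a 1)|) B0 := (ih hq 1).mono_set sub
      have i2 : IntegrableOn (fun y => |PF p q s (x, y)| + |q y - (inner ℝ (ξ 1) y + a 1)|) B0 :=
        iF.add i1
      rw [← hB0, integral_add i2 tB.1, integral_add iF i1]
      have := mono hq 1
      have : g x ≤ (e + ε) / k := le_trans (by linarith [abs_nonneg (p x - (inner ℝ (ξ 0) x + a 0))]) hx2
      linarith [tB.2])
  rw [← hB0, ← hk] at hy2
  rw [← hB0] at hy
  refine ⟨x, y, xn, by simpa [hB0] using hy, ?_⟩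
  have e1 : (inner ℝ (ξ 0) x + a 0) + (inner ℝ (ξ 1) y + a 1) + (inner ℝ (ξ 2) (-x - y) + a 2)
      = PF p q s (x, y) - (p x - (inner ℝ (ξ 0) x + a 0)) - (q y - (inner ℝ (ξ 1) y + a 1))
        - (s (-x - y) - (inner ℝ (ξ 2) (-x - y) + a 2)) := by simp only [PF]; ring
  rw [e1]
  have t1 := abs_sub (PF p q s (x, y) - (p x - (inner ℝ (ξ 0) x + a 0))
    - (q y - (inner ℝ (ξ 1) y + a 1))) (s (-x - y) - (inner ℝ (ξ 2) (-x - y) + a 2))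
  have t2 := abs_sub (PF p q s (x, y) - (p x - (inner ℝ (ξ 0) x + a 0)))
    (q y - (inner ℝ (ξ 1) y + a 1))
  linarith [abs_sub (PF p q s (x, y)) (p x - (inner ℝ (ξ 0) x + a 0)), g0 x]

/-- Increments of a function close to an affine one. -/
lemma inc_aff (hq : Bdm q) (ξ : Vec n) (a : ℝ) (hh : ‖h‖ ≤ 2 * σ)
    (h1 : ∫ x in closedBall 0 (3 * σ), |q x - (inner ℝ ξ x + a)| ≤ e) (σ0 : 0 < σ) :
    |(∫ y, chi (closedBall 0 σ) y * (q (y + h) - q y))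
      - vol (𝔹 n σ) * inner ℝ ξ h| ≤ 2 * e := by
  set B0 := 𝔹 n σ with hB0
  set B3 := 𝔹 n (3 * σ) with hB3
  have i1 := (integrable_indicator_iff (fin_ball _ _).1).mpr (aff_integrableOn hq ξ a (3 * σ))
  rw [← hB3] at i1
  have i2 := i1.comp_add_right h
  have e2 := integral_add_right_eq_self (B3.indicator fun x => |q x - (inner ℝ ξ x + a)|) h
    (μ := volume)
  have e1 : (∫ y, chi B0 y * (q (y + h) - q y)) - vol B0 * inner ℝ ξ h
      = ∫ y, chi B0 y * ((q (y + h) - (inner ℝ ξ (y + h) + a)) - (q y - (inner ℝ ξ y + a))) := by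
    rw [← integral_chi (fin_ball _ _).1, ← integral_mul_const, ← integral_sub]
    · congr 1
      ext y
      rw [inner_add_right]; ring
    · exact ((hq.shift h).sub hq).chi_int (fin_ball _ _)
    · exact (fin_ball _ _).nice.2.1.mul_const _
  rw [integral_indicator (fin_ball _ _).1] at e2
  have e3 := integral_indicator (μ := volume) (f := fun x => |q x - (inner ℝ ξ x + a)|)
    (fin_ball (0 : Vec n) (3 * σ)).1
  rw [e1, ← Real.norm_eq_abs]
  refine (norm_integral_le_of_norm_le (i2.add i1) (ae_of_all _ fun y => ?_)).trans ?_
  · rw [Real.norm_eq_abs]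
    by_cases hy : y ∈ B0
    · have yn : ‖y‖ ≤ σ := by simpa [hB0] using hy
      have m1 : y ∈ B3 := by rw [hB3, mem_closedBall_zero_iff]; linarith
      have m2 : y + h ∈ B3 := by rw [hB3, mem_closedBall_zero_iff]; linarith [norm_add_le y h]
      simp only [chi_of_mem hy, one_mul, Pi.add_apply, indicator_of_mem m1, indicator_of_mem m2]
      exact abs_sub _ _
    · simp only [chi_of_notMem hy, zero_mul, abs_zero, Pi.add_apply]
      exact add_nonneg (indicator_nonneg (fun _ _ => abs_nonneg _) _)
        (indicator_nonneg (fun _ _ => abs_nonneg _) _)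
  · have : ∫ y, ((fun y => B3.indicator (fun x => |q x - (inner ℝ ξ x + a)|) (y + h))
        + B3.indicator (fun x => |q x - (inner ℝ ξ x + a)|)) y = _ := integral_add i2 i1
    rw [this, e2]
    rw [hB3] at *
    rw [e3]
    linarith

variable {c μ ρ ω : ℝ}

/-- A triple of sets of the right volumes, squeezed between balls of radii `r j ± κ`, whose
trilinear deficit is at most `δ²`. -/
structure Shell (c : ℝ) (r : Fin 3 → ℝ) (κ δ : ℝ) (A : Fin 3 → Set (Vec n × ℝ)) : Prop where
  adm : Adm c r
  κ0 : 0 ≤ κ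
  κc : κ ≤ c
  fin : ∀ j, Fin' (A j)
  hin : ∀ j, Bp n (r j - κ) ⊆ A j
  hout : ∀ j, A j ⊆ Bp n (r j + κ)
  hv : ∀ j, vol (A j) = vol (Bp n (r j))
  δ0 : 0 < δ
  hΔ : T3 (fun j => Bp n (r j)) - T3 A ≤ δ ^ 2

lemma t3_shift1 {A : Fin 3 → Set G} (hA : ∀ j, Fin' (A j)) : T3 (fun i => A (i + 1)) = T3 A := by
  change TS (A 1) (A 2) (A 0) = TS (A 0) (A 1) (A 2)
  rw [ts_swap, ts_rot (hA 2) (hA 1) (hA 0), ts_swap, ts_rot (hA 0) (hA 2) (hA 1)]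

lemma t3_shift {A : Fin 3 → Set G} (hA : ∀ j, Fin' (A j)) (j : Fin 3) :
    T3 (fun i => A (i + j)) = T3 A := by
  have h1 := t3_shift1 hA
  have h2 := t3_shift1 (A := fun i => A (i + 1)) fun j => hA _
  fin_cases j
  · simp
  · exact h1
  · rw [← h1, ← h2]; congr 1; funext i; fin_cases i <;> rfl

lemma Shell.shift {A : Fin 3 → Set (Vec n × ℝ)} (h : Shell c r κ δ A) (j : Fin 3) :
    Shell c (fun i => r (i + j)) κ δ (fun i => A (i + j)) where
  adm := ⟨fun i => h.adm.lo _, fun i => h.adm.hi _, fun i => by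
    have := h.adm.tri (i + j)
    rw [add_right_comm i 1 j, add_right_comm i 2 j]; exact this⟩
  κ0 := h.κ0
  κc := h.κc
  fin := fun i => h.fin _
  hin := fun i => h.hin _
  hout := fun i => h.hout _
  hv := fun i => h.hv _
  δ0 := h.δ0
  hΔ := by
    have fB j : Fin' (Bp n (r j)) := by
      by_cases h0 : 0 ≤ r j
      · exact fin_Bp h0
      · exact ⟨by
          have := (fin_Bp (n := n) (r := |r j|) (abs_nonneg _)).1
          unfold Bp at *; rwa [sq_abs] at this, by
          have := (fin_Bp (n := n) (r := |r j|) (abs_nonneg _)).2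
          unfold Bp at *; rwa [sq_abs] at this⟩
    rw [t3_shift h.fin j, t3_shift (A := fun j => Bp n (r j)) fB j]
    exact h.hΔ

lemma fib_le (hR : 0 ≤ R) (hA : A ⊆ Bp n R) (w : Vec n) : fib A w ⊆ Icc (-R) R := by
  intro t ht
  have h := hA ht
  change ‖w‖ ^ 2 + t ^ 2 ≤ R ^ 2 at h
  exact abs_le.mp (abs_le_of_sq_le_sq (by nlinarith [sq_nonneg ‖w‖]) hR)

lemma vol_fib_le (hR : 0 ≤ R) (hA : A ⊆ Bp n R) (w : Vec n) : vol (fib A w) ≤ 2 * R := by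
  refine (measureReal_mono (fib_le hR hA w) (by simp)).trans ?_
  rw [vol_Icc_symm hR]

lemma abs_Pf_le (hR : 0 ≤ R) (hA : A ⊆ Bp n R) (w : Vec n) : |Pf A w| ≤ 2 * R := by
  have h1 := vol_fib_le hR hA w
  have h2 : vol (fib A w ∩ Ioi 0) ≤ vol (fib A w) :=
    measureReal_mono inter_subset_left
      (ne_top_of_le_ne_top (by simp) (measure_mono (fib_le hR hA w)))
  have h3 : 0 ≤ vol (fib A w ∩ Ioi 0) := measureReal_nonneg
  rw [Pf, abs_le]
  constructor <;> linarith

lemma Ef_nonneg (A : Set (Vec n × ℝ)) (w : Vec n) : 0 ≤ Ef A w := measureReal_nonneg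

lemma Ef_le (hR : 0 ≤ R) (hA : A ⊆ Bp n R) (w : Vec n) : Ef A w ≤ 4 * R := by
  have h1 := vol_fib_le hR hA w
  have hf : volume (fib A w) ≠ ⊤ := ne_top_of_le_ne_top (by simp) (measure_mono (fib_le hR hA w))
  have h2 : Ef A w ≤ vol (fib A w ∪ cI (vol (fib A w))) :=
    measureReal_mono (symmDiff_subset_union) (by
      exact (measure_union_lt_top hf.lt_top (fin_cI _).2.lt_top).ne)
  have h3 := measureReal_union_le (μ := volume) (fib A w) (cI (vol (fib A w)))
  rw [vol_cI measureReal_nonneg] at h3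
  linarith

lemma bdm_Pf {A : Fin 3 → Set (Vec n × ℝ)} (h : Shell c r κ δ A) (j : Fin 3) : Bdm (Pf (A j)) :=
  ⟨measurable_Pf (h.fin j).1, 2 * (r j + κ), abs_Pf_le
    (by linarith [h.adm.lo j, h.κ0, h.κc]) (h.hout j)⟩

lemma int_OmP_fst {u : Vec n → ℝ} (hu : Bdm u) :
    ∫ z in OmP n μ R ρ, u z.1 =
      vol (𝔹 n ρ) * ∫ x in closedBall 0 R, u x := by
  obtain ⟨M, hM⟩ := hu.2
  have h1 : Integrable fun z : Vec n × Vec n => chi (OmP n μ R ρ) z * u z.1 := by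
    refine ((nice_chi (meas_OmP μ R ρ) (vol_OmP_ne μ R ρ)).2.1.bdd_mul (c := M)
      (hu.1.comp measurable_fst).aestronglyMeasurable
      (ae_of_all _ fun z => ?_)).congr (ae_of_all _ fun z => mul_comm _ _)
    simpa using hM z.1
  have h2 := integral_prod _ h1
  rw [← integral_indicator (meas_OmP μ R ρ)]
  have e : (fun z : Vec n × Vec n => (OmP n μ R ρ).indicator (fun z => u z.1) z)
      = fun z => chi (OmP n μ R ρ) z * u z.1 := by
    ext z
    by_cases hz : z ∈ OmP n μ R ρ <;> simp [chi, hz]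
  rw [e]
  rw [Measure.volume_eq_prod] at *
  rw [h2, ← integral_indicator (fin_ball _ _).1, ← integral_const_mul]
  congr 1
  ext x
  change ∫ y, chi (OmP n μ R ρ) (x, y) * u x = _
  rw [integral_mul_const]
  by_cases hx : x ∈ 𝔹 n R
  · rw [indicator_of_mem hx]
    congr 1
    have : ∀ y, chi (OmP n μ R ρ) (x, y) = chi (closedBall (μ • x) ρ) y := fun y => by
      apply chi_congr
      rw [mem_closedBall_iff_norm]
      exact ⟨fun h => h.2, fun h => ⟨by simpa using hx, h⟩⟩
    simp only [this]
    rw [integral_chi (fin_ball _ _).1, Measure.real, Measure.real,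
      Measure.addHaar_closedBall_center]
  · rw [indicator_of_notMem hx, mul_zero]
    have : ∀ y, chi (OmP n μ R ρ) (x, y) = 0 := fun y => by
      apply chi_of_notMem
      intro h
      exact hx (by simpa using h.1)
    simp [this]

/-- Fiber barycentres of the first set are nearly affine, and fibers are nearly intervals. -/
lemma slice_base (n : ℕ) (hc : 0 < c) (hω : 0 < ω) (hωc : ω ≤ c / 4) (hc1 : c ≤ 1)
    (hσ : σ = ω * c ^ 5 / 200 / (3 + 5 * (1 / c))) :
    ∃ κ0, 0 < κ0 ∧ ∃ C, 0 ≤ C ∧ ∀ (r : Fin 3 → ℝ) (κ δ : ℝ) (A : Fin 3 → Set (Vec n × ℝ)),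
      Shell c r κ δ A → κ ≤ κ0 →
      (∫ z in OmP n (mu r) (r 0 - ω) (ω * c ^ 5 / 200), |PF (Pf (A 0)) (Pf (A 1)) (Pf (A 2)) z|)
        ≤ C * δ ∧
      (∫ x in closedBall 0 (r 0 - 2 * ω), max (Ef (A 0) x - 2 * |Pf (A 0) x|) 0) ≤ C * δ ∧
      ∃ (ξ : Vec n) (a : ℝ),
        (∫ x in closedBall 0 (r 0 - 2 * ω), |Pf (A 0) x - (inner ℝ ξ x + a)|) ≤ C * δ ∧
        ∀ h, ‖h‖ ≤ 2 * σ → |vol (𝔹 n σ) * inner ℝ ξ h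
          - ∫ y, chi (closedBall 0 σ) y * (Pf (A 1) (y + h) - Pf (A 1) y)| ≤ C * δ := by
  set ρ := ω * c ^ 5 / 200 with hρ
  have ρ0 : 0 < ρ := by positivity
  have c5 : c ^ 5 ≤ 1 := pow_le_one₀ hc.le hc1
  have ρω : 200 * ρ ≤ ω := by rw [hρ]; nlinarith
  obtain ⟨C, C0, hC⟩ := pexider n (M := 1 / c) (by positivity) ρ0 hσ
  have σ0 : 0 < σ := by rw [hσ]; positivity
  have σρ : 3 * σ ≤ ρ := by
    have : 3 * σ + 5 * (1 / c) * σ = ρ := by rw [hσ]; field_simp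
    have : 0 ≤ 5 * (1 / c) * σ := by positivity
    linarith
  set h := ω * c ^ 5 / 12
  have h0 : 0 < h := by positivity
  set V := vol (𝔹 n 1) *
    vol (𝔹 n (1 + 1 / c)) with hV
  have V0 : 0 ≤ V := by positivity
  set vr := vol (𝔹 n ρ)
  have vr0 : 0 < vr := ENNReal.toReal_pos (measure_closedBall_pos _ _ ρ0).ne' (fin_ball _ _).2
  refine ⟨(h / 20) ^ 2, by positivity, (1 + V) + 3 * (1 + V) / vr + C * (1 + V), by positivity, ?_⟩
  intro r κ δ A hS hκ
  have hd := hS.δ0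
  obtain ⟨g1, g2⟩ := geom (n := n) hc hω (by linarith) hS.adm
  have sq : 20 * √κ ≤ h := by linarith [Real.sqrt_le_iff.mpr ⟨by positivity, hκ⟩]
  have r1 := hS.adm.hi 0
  have rc := hS.adm.lo 0
  obtain ⟨s1, s2⟩ := slice_main hc hS.adm h0 hS.κ0 hS.κc sq hS.fin hS.hin hS.hout hS.hv hd hS.hΔ
    (meas_OmP (mu r) (r 0 - ω) ρ) (vol_OmP_ne _ _ _) (fun p hp => g2 p.1 p.2 hp.1 hp.2)
  have vb : vol (OmP n (mu r) (r 0 - ω) ρ) ≤ V := by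
    refine (measureReal_mono (OmP_subset _ _ _) ?_).trans ?_
    · rw [Measure.volume_eq_prod, Measure.prod_prod]
      exact ENNReal.mul_ne_top (fin_ball _ _).2 (fin_ball _ _).2
    · rw [Measure.volume_eq_prod, measureReal_prod_prod, hV]
      refine mul_le_mul ?_ ?_ measureReal_nonneg measureReal_nonneg
      · exact measureReal_mono (closedBall_subset_closedBall (by linarith)) (fin_ball _ _).2
      · refine measureReal_mono (closedBall_subset_closedBall ?_) (fin_ball _ _).2
        have : |mu r| * (r 0 - ω) ≤ 1 / c * 1 :=
          mul_le_mul g1 (by linarith) (by linarith) (by positivity)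
        linarith
  have dV : δ * (1 + vol (OmP n (mu r) (r 0 - ω) ρ)) ≤ δ * (1 + V) := by gcongr
  have p1 : (∫ z in OmP n (mu r) (r 0 - ω) ρ, |PF (Pf (A 0)) (Pf (A 1)) (Pf (A 2)) z|)
      ≤ (1 + V) * δ := by
    refine le_trans s1 ?_
    linarith
  have q1 : 0 ≤ (1 + V) * δ := by positivity
  have q2 : 0 ≤ 3 * (1 + V) / vr * δ := by positivity
  have q3 : 0 ≤ C * (1 + V) * δ := by positivity
  refine ⟨by linarith, ?_, ?_⟩
  · have bu : Bdm (fun x => max (Ef (A 0) x - 2 * |Pf (A 0) x|) 0) := by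
      refine ⟨((measurable_Ef (hS.fin 0).1).sub ((measurable_Pf (hS.fin 0).1).abs.const_mul 2)).max
        measurable_const, 4 * (r 0 + κ), fun x => ?_⟩
      rw [abs_of_nonneg (le_max_right _ _)]
      have := Ef_le (by linarith [hS.κ0]) (hS.hout 0) x
      have := abs_nonneg (Pf (A 0) x)
      have := Ef_nonneg (A 0) x
      apply max_le <;> linarith
    have e := int_OmP_fst (μ := mu r) (R := r 0 - ω) (ρ := ρ) bu
    have m : ∫ x in closedBall 0 (r 0 - 2 * ω), max (Ef (A 0) x - 2 * |Pf (A 0) x|) 0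
        ≤ ∫ x in closedBall 0 (r 0 - ω), max (Ef (A 0) x - 2 * |Pf (A 0) x|) 0 :=
      setIntegral_mono_set (bu.integrableOn (fin_ball _ _)) (ae_of_all _ fun _ => le_max_right _ _)
        (LE.le.eventuallyLE (closedBall_subset_closedBall (by linarith)))
    have e3 : ∫ x in closedBall 0 (r 0 - ω), max (Ef (A 0) x - 2 * |Pf (A 0) x|) 0
        ≤ 3 * (1 + V) / vr * δ := by rw [div_mul_eq_mul_div, le_div_iff₀ vr0]; linarith
    linarith
  · obtain ⟨ξ, a, x1, x2⟩ := hC (mu r) (r 0 - ω) _ _ _ _ g1 (by linarith) (by linarith) (bdm_Pf hS 0)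
      (bdm_Pf hS 1) (bdm_Pf hS 2) p1
    refine ⟨ξ, a, ?_, ?_⟩
    · have m : ∫ x in closedBall 0 (r 0 - 2 * ω), |Pf (A 0) x - (inner ℝ ξ x + a)|
          ≤ ∫ x in closedBall 0 (r 0 - ω - 4 * σ), |Pf (A 0) x - (inner ℝ ξ x + a)| :=
        setIntegral_mono_set (aff_integrableOn (bdm_Pf hS 0) _ _ _)
          (ae_of_all _ fun _ => abs_nonneg _)
          (LE.le.eventuallyLE (closedBall_subset_closedBall (by linarith)))
      linarith
    · intro v hv
      linarith [x2 v hv]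

lemma norm_le_of_inner {u : Vec n} {s : ℝ} (hs : 0 < s) (he : 0 ≤ e)
    (h : ∀ v : Vec n, ‖v‖ ≤ s → |inner ℝ u v| ≤ e) : ‖u‖ ≤ e / s := by
  rcases eq_or_ne u 0 with h0 | h0
  · rw [h0, norm_zero]; positivity
  have hu := norm_pos_iff.mpr h0
  have := h ((s / ‖u‖) • u) (by
    rw [norm_smul, Real.norm_of_nonneg (by positivity), div_mul_cancel₀ _ hu.ne'])
  rw [inner_smul_right, real_inner_self_eq_norm_sq, abs_of_nonneg (by positivity)] at this
  rw [le_div_iff₀ hs]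
  calc ‖u‖ * s = s / ‖u‖ * ‖u‖ ^ 2 := by field_simp
    _ ≤ e := this

/-- Changing the affine approximant. -/
lemma aff_change (hf : Bdm f) {ξ ξ' : Vec n} {a a' r : ℝ} (hr : r ≤ 1)
    (h : ∫ x in closedBall 0 r, |f x - (inner ℝ ξ x + a)| ≤ e) (ht : ‖ξ - ξ'‖ + |a - a'| ≤ t) :
    ∫ x in closedBall 0 r, |f x - (inner ℝ ξ' x + a')|
      ≤ e + vol (𝔹 n 1) * t := by
  have i1 := aff_integrableOn hf ξ a r
  have t0 : 0 ≤ t := by linarith [norm_nonneg (ξ - ξ'), abs_nonneg (a - a')]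
  have i2 : IntegrableOn (fun _ : Vec n => t) (closedBall 0 r) :=
    integrableOn_const (fin_ball _ _).2
  have m : ∫ x in closedBall 0 r, |f x - (inner ℝ ξ' x + a')|
      ≤ ∫ x in closedBall 0 r, (|f x - (inner ℝ ξ x + a)| + t) := by
    refine setIntegral_mono_on (aff_integrableOn hf ξ' a' r) (i1.add i2) (fin_ball _ _).1
      fun x hx => ?_
    have hx1 := (by simpa using hx : ‖x‖ ≤ r).trans hr
    have e1 : f x - (inner ℝ ξ' x + a')
        = (f x - (inner ℝ ξ x + a)) + (inner ℝ (ξ - ξ') x + (a - a')) := by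
      rw [inner_sub_left]; ring
    have e2 : |inner ℝ (ξ - ξ') x| ≤ ‖ξ - ξ'‖ :=
      (abs_real_inner_le_norm _ _).trans (mul_le_of_le_one_right (norm_nonneg _) hx1)
    rw [e1]
    refine (abs_add_le _ _).trans ?_
    linarith [abs_add_le (inner ℝ (ξ - ξ') x) (a - a')]
  rw [integral_add i1 i2, setIntegral_const, smul_eq_mul] at m
  have v : vol (𝔹 n r) * t
      ≤ vol (𝔹 n 1) * t := by
    gcongr
    · exact (fin_ball _ _).2
  linarith

/-- Fiber barycentres of the three sets are nearly affine, with a common linear part and with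
constants summing to zero. -/
lemma slices_affine (n : ℕ) (hc : 0 < c) (hω : 0 < ω) (hωc : ω ≤ c / 4) (hc1 : c ≤ 1) :
    ∃ κ0, 0 < κ0 ∧ ∃ C, 0 ≤ C ∧ ∀ (r : Fin 3 → ℝ) (κ δ : ℝ) (A : Fin 3 → Set (Vec n × ℝ)),
      Shell c r κ δ A → κ ≤ κ0 → ∃ (ξ : Vec n) (a : Fin 3 → ℝ), a 0 + a 1 + a 2 = 0 ∧ ∀ j,
      (∫ x in closedBall 0 (r j - 2 * ω), |Pf (A j) x - (inner ℝ ξ x + a j)|) ≤ C * δ ∧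
      (∫ x in closedBall 0 (r j - 2 * ω), max (Ef (A j) x - 2 * |Pf (A j) x|) 0)
        ≤ C * δ := by
  obtain ⟨κ0, hκ0, C, C0, H⟩ := slice_base n hc hω hωc hc1 rfl
  set ρ := ω * c ^ 5 / 200 with hρ
  set σ := ρ / (3 + 5 * (1 / c)) with hσ
  have ρ0 : 0 < ρ := by positivity
  have c5 : c ^ 5 ≤ 1 := pow_le_one₀ hc.le hc1
  have ρω : 200 * ρ ≤ ω := by rw [hρ]; nlinarith
  have σ0 : 0 < σ := by rw [hσ]; positivity
  have σe : 3 * σ + 5 * (1 / c * σ) = ρ := by rw [hσ]; field_simp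
  have σp : 0 ≤ 1 / c * σ := by positivity
  set k := vol (𝔹 n σ) with hk
  have k0 : 0 < k := ENNReal.toReal_pos (measure_closedBall_pos _ _ σ0).ne' (fin_ball _ _).2
  set N := 3 * C / k / (2 * σ) with hN
  set Q := (C + C) / k + ((C + C) / k + 2 * C) / k + 4 * N with hQ
  refine ⟨κ0, hκ0, C + vol (𝔹 n 1) * (2 * N + Q),
    by positivity, ?_⟩
  intro r κ δ A hS hκ
  have d0 := hS.δ0
  have H' := fun j => H _ _ _ _ (hS.shift j) hκ
  have rl := hS.adm.lo
  have rh := hS.adm.hi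
  simp only [zero_add] at H'
  choose p1 p2 ξ a p3 p4 using H'
  have sub : ∀ (j : Fin 3) (s : ℝ), s ≤ 3 * σ →
      ∫ x in closedBall 0 s, |Pf (A j) x - (inner ℝ (ξ j) x + a j)| ≤ C * δ := by
    intro j s hs
    refine le_trans (setIntegral_mono_set (aff_integrableOn (bdm_Pf hS j) _ _ _)
      (ae_of_all _ fun _ => abs_nonneg _)
      (LE.le.eventuallyLE (closedBall_subset_closedBall ?_))) (p3 j)
    linarith [rl j]
  have step j : ‖ξ j - ξ (1 + j)‖ ≤ N * δ := by
    have := norm_le_of_inner (u := ξ j - ξ (1 + j)) (s := 2 * σ) (e := 3 * C / k * δ)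
      (by positivity) (by positivity) fun v hv => by
        have h1 := p4 j v hv
        have h2 := inc_aff (bdm_Pf hS (1 + j)) (ξ (1 + j)) (a (1 + j)) hv (sub _ _ le_rfl) σ0
        rw [← hk] at h2
        have h3 := (abs_add_le _ _).trans (add_le_add h1 h2)
        rw [sub_add_sub_cancel, ← mul_sub, ← inner_sub_left, abs_mul, abs_of_pos k0] at h3
        rw [div_mul_eq_mul_div, le_div_iff₀ k0]
        linarith
    refine this.trans (le_of_eq ?_)
    rw [hN]; ring
  have s0 : ‖ξ 0 - ξ 1‖ ≤ N * δ := step 0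
  have s1 : ‖ξ 1 - ξ 2‖ ≤ N * δ := step 1
  have s2 : ‖ξ 2 - ξ 0‖ ≤ N * δ := step 2
  have sa : |a 0 + a 1 + a 2| ≤ Q * δ := by
    obtain ⟨g1, -⟩ := geom (n := n) hc hω (by linarith) hS.adm
    obtain ⟨x, y, hx, hy, hxy⟩ := pex_sum σ0 g1 (by linarith) (R := r 0 - ω)
      (by linarith [rl 0]) (bdm_Pf hS 0) (bdm_Pf hS 1) (bdm_Pf hS 2) (p1 0) ξ a
      (sub 0 _ (by linarith)) (sub 1 _ (by linarith)) (sub 2 _ (by linarith))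
    rw [← hk] at hxy
    rw [show (C * δ + C * δ) / k + ((C * δ + C * δ) / k + 2 * (C * δ)) / k
      = ((C + C) / k + ((C + C) / k + 2 * C) / k) * δ by ring] at hxy
    have e2 : a 0 + a 1 + a 2 = ((inner ℝ (ξ 0) x + a 0) + (inner ℝ (ξ 1) y + a 1)
        + (inner ℝ (ξ 2) (-x - y) + a 2)) + inner ℝ (ξ 2 - ξ 0) x - inner ℝ (ξ 1 - ξ 2) y := by
      simp only [inner_sub_left, inner_sub_right, inner_neg_right]; ring
    have b1 : |inner ℝ (ξ 2 - ξ 0) x| ≤ N * δ := (abs_real_inner_le_norm _ _).trans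
      ((mul_le_of_le_one_right (norm_nonneg _) (by linarith)).trans s2)
    have b2 : |inner ℝ (ξ 1 - ξ 2) y| ≤ N * δ := (abs_real_inner_le_norm _ _).trans
      ((mul_le_of_le_one_right (norm_nonneg _) (by linarith)).trans s1)
    have : 0 ≤ N * δ := by positivity
    rw [e2, hQ]
    rw [abs_le] at *
    constructor <;> linarith [hxy.1, hxy.2, b1.1, b1.2, b2.1, b2.2]
  have Nd : 0 ≤ N * δ := by positivity
  have Qd : 0 ≤ Q * δ := by positivity
  have W0 : 0 ≤ vol (𝔹 n 1) := measureReal_nonneg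
  refine ⟨ξ 0, ![a 0, a 1, -a 0 - a 1], by simp, fun j => ⟨?_, (p2 j).trans ?_⟩⟩
  · have := aff_change (bdm_Pf hS j) (ξ' := ξ 0) (a' := (![a 0, a 1, -a 0 - a 1] : Fin 3 → ℝ) j)
      (t := (2 * N + Q) * δ) (by linarith [rh j]) (p3 j) (by
        fin_cases j
        · simp; linarith
        · simp only [Fin.mk_one, Fin.isValue, Matrix.cons_val_one, Matrix.cons_val_zero, sub_self,
            abs_zero, add_zero]
          rw [norm_sub_rev]; linarith
        · have : a 2 - (-a 0 - a 1) = a 0 + a 1 + a 2 := by ring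
          simp only [Fin.reduceFinMk, Fin.isValue, Matrix.cons_val, this]
          linarith)
    linarith
  · have : 0 ≤ vol (𝔹 n 1) * (2 * N + Q) * δ := by positivity
    linarith

lemma integral_cI_id (m : ℝ) : ∫ x, chi (cI m) x * x = 0 := by
  have e : (fun x => chi (cI m) x * x) = (cI m).indicator (fun x => x) := by
    ext x; by_cases hx : x ∈ cI m <;> simp [chi, hx]
  rw [e, integral_indicator (fin_cI m).1]
  by_cases hm : 0 ≤ m
  · rw [cI, integral_Ico_eq_integral_Ioc, ← intervalIntegral.integral_of_le (by linarith),
      integral_id]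
    ring
  · rw [cI, Ico_eq_empty (by linarith)]; simp

lemma fib_empty (hR : 0 ≤ R) (hA : A ⊆ Bp n R) {w : Vec n} (hw : R < ‖w‖) : fib A w = ∅ := by
  ext t
  refine ⟨fun ht => ?_, fun h => h.elim⟩
  have h := hA ht
  change ‖w‖ ^ 2 + t ^ 2 ≤ R ^ 2 at h
  nlinarith [sq_nonneg t]

lemma Ef_zero (hR : 0 ≤ R) (hA : A ⊆ Bp n R) {w : Vec n} (hw : R < ‖w‖) : Ef A w = 0 := by
  rw [Ef, fib_empty hR hA hw]
  simp [cI]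

lemma bdm_Ef (mA : MeasurableSet A) (hR : 0 ≤ R) (hA : A ⊆ Bp n R) : Bdm (Ef A) :=
  ⟨measurable_Ef mA, 4 * R, fun x => by rw [abs_of_nonneg (Ef_nonneg A x)]; exact Ef_le hR hA x⟩

lemma Ef_integrable (mA : MeasurableSet A) (hR : 0 ≤ R) (hA : A ⊆ Bp n R) : Integrable (Ef A) := by
  refine ((bdm_Ef mA hR hA).chi_int (fin_ball 0 R)).congr (ae_of_all _ fun w => ?_)
  by_cases hw : w ∈ 𝔹 n R
  · simp [chi_of_mem hw]
  · simp [Ef_zero hR hA (by simpa using hw : R < ‖w‖)]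

/-- First moment in `t` of the fiber over `w`. -/
def gm (A : Set (Vec n × ℝ)) (w : Vec n) : ℝ := ∫ t, chi (fib A w) t * t

lemma fib_id_int (mA : MeasurableSet A) (hR : 0 ≤ R) (hA : A ⊆ Bp n R) (w : Vec n) :
    Integrable (fun t => chi (fib A w) t * t) := by
  have e : (fun x => chi (fib A w) x * x) = (fib A w).indicator (fun x => x) := by
    ext x; by_cases hx : x ∈ fib A w <;> simp [chi, hx]
  rw [e, integrable_indicator_iff (measurableSet_fib mA w)]
  exact (continuous_id.integrableOn_Icc).mono_set (fib_le hR hA w)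

lemma gm_eq (mA : MeasurableSet A) (hR : 0 ≤ R) (hA : A ⊆ Bp n R) (w : Vec n) :
    Integrable (fun t => dA (vol (fib A w) / 2) (fib A w) t * t) ∧
    gm A w = ∫ t, dA (vol (fib A w) / 2) (fib A w) t * t := by
  have i2 : Integrable fun t => chi (cI (2 * (vol (fib A w) / 2))) t * t := by
    have e : (fun t => chi (cI (2 * (vol (fib A w) / 2))) t * t)
        = (cI (2 * (vol (fib A w) / 2))).indicator (fun x => x) := by
      ext x; by_cases hx : x ∈ cI (2 * (vol (fib A w) / 2)) <;> simp [chi, hx]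
    rw [e, integrable_indicator_iff (fin_cI _).1]
    exact (continuous_id.integrableOn_Icc).mono_set Ico_subset_Icc_self
  have i1 := fib_id_int mA hR hA w
  have e : (fun t => dA (vol (fib A w) / 2) (fib A w) t * t)
      = fun t => chi (fib A w) t * t - chi (cI (2 * (vol (fib A w) / 2))) t * t := by
    ext t; rw [dA]; ring
  rw [e, integral_sub i1 i2, integral_cI_id, sub_zero]
  exact ⟨i1.sub i2, rfl⟩

lemma abs_gm_le (mA : MeasurableSet A) (hR : 0 ≤ R) (hA : A ⊆ Bp n R) (w : Vec n) :
    |gm A w| ≤ R * Ef A w := by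
  obtain ⟨i1, e1⟩ := gm_eq mA hR hA w
  have ff : Fin' (fib A w) := ⟨measurableSet_fib mA w,
    ne_top_of_le_ne_top (by simp) (measure_mono (fib_le hR hA w))⟩
  have v := integral_abs_chi_sub ff.1 (fin_cI (vol (fib A w))).1
  rw [e1, Ef, ← v, ← integral_const_mul]
  refine (abs_integral_le_integral_abs).trans
    (integral_mono i1.abs ((chi_sub_nice ff (fin_cI _)).2.1.abs.const_mul R) fun t => ?_)
  change |dA (vol (fib A w) / 2) (fib A w) t * t| ≤ R * |_|
  have e2 : dA (vol (fib A w) / 2) (fib A w) t =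
      chi (fib A w) t - chi (cI (vol (fib A w))) t := by rw [dA]; congr 3; ring
  rw [abs_mul, e2, mul_comm]
  by_cases ht : |t| ≤ R
  · gcongr
  · have h1 : t ∉ fib A w := fun h => ht (abs_le.mpr (fib_le hR hA w h))
    have h2 : t ∉ cI (vol (fib A w)) := fun h => ht (by
      have := vol_fib_le hR hA w
      rw [cI, mem_Ico] at h
      rw [abs_le]; constructor <;> linarith [h.1, h.2])
    simp [chi, h1, h2]

lemma mom_slice (mA : MeasurableSet A) (hR : 0 ≤ R) (hA : A ⊆ Bp n R) (ξ : Vec n) (a : ℝ) :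
    Integrable (fun w => gm A w * (inner ℝ ξ w + a)) ∧
    ∫ p in A, p.2 * (inner ℝ ξ p.1 + a) = ∫ w, gm A w * (inner ℝ ξ w + a) := by
  have fA := (measure_mono hA).trans_lt (fin_Bp hR).2.lt_top
  have i1 : IntegrableOn (fun p : Vec n × ℝ => p.2 * (inner ℝ ξ p.1 + a)) A := by
    refine Measure.integrableOn_of_bounded (M := R * (‖ξ‖ * R + |a|)) fA.ne
      (by fun_prop) ?_
    refine (ae_restrict_mem mA).mono fun p hp => ?_
    have h := hA hp
    change ‖p.1‖ ^ 2 + p.2 ^ 2 ≤ R ^ 2 at h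
    have h1 : ‖p.1‖ ≤ R := by
      rw [← abs_of_nonneg (norm_nonneg p.1)]
      exact abs_le_of_sq_le_sq (by nlinarith [sq_nonneg p.2]) hR
    have h2 : |p.2| ≤ R := abs_le_of_sq_le_sq (by nlinarith [sq_nonneg ‖p.1‖]) hR
    rw [norm_mul, Real.norm_eq_abs, Real.norm_eq_abs]
    have h3 : |inner ℝ ξ p.1 + a| ≤ ‖ξ‖ * R + |a| := (abs_add_le _ _).trans
      (add_le_add ((abs_real_inner_le_norm _ _).trans (by gcongr)) le_rfl)
    gcongr
  rw [← integrable_indicator_iff mA] at i1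
  rw [← integral_indicator mA]
  have e w : ∫ t, A.indicator (fun p : Vec n × ℝ => p.2 * (inner ℝ ξ p.1 + a)) (w, t)
      = gm A w * (inner ℝ ξ w + a) := by
    rw [gm, ← integral_mul_const]
    congr 1; ext t
    by_cases h : (w, t) ∈ A
    · have h' : t ∈ fib A w := h
      rw [indicator_of_mem h, chi_of_mem h']; ring
    · have h' : t ∉ fib A w := h
      rw [indicator_of_notMem h, chi_of_notMem h']; ring
  rw [Measure.volume_eq_prod] at *
  have i3 := i1.integral_prod_left
  simp only [e] at i3
  rw [integral_prod _ i1]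
  simp only [e]
  exact ⟨i3, trivial⟩

lemma aff_sq_lower (ξ : Vec n) (a : ℝ) {s : ℝ} (hs : 0 < s) (hs1 : s ≤ 1) :
    vol (𝔹 n (s / 4)) * ((s / 4) * (‖ξ‖ + |a|)) ^ 2 ≤
      ∫ x in closedBall 0 s, (inner ℝ ξ x + a) ^ 2 := by
  -- on a suitable sub-ball both terms of the affine function have the same sign
  obtain ⟨ε, hε, hεa⟩ : ∃ ε : ℝ, |ε| = 1 ∧ ε * |a| = a := by
    rcases le_total 0 a with h | h
    · exact ⟨1, by simp, by rw [abs_of_nonneg h, one_mul]⟩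
    · exact ⟨-1, by simp, by rw [abs_of_nonpos h]; ring⟩
  have ε2 : ε * ε = 1 := by rw [← abs_mul_abs_self, hε, one_mul]
  set x0 : Vec n := (ε * (s / 2) * ‖ξ‖⁻¹) • ξ with hx0
  have n0 : ‖x0‖ ≤ s / 2 := by
    rw [hx0, norm_smul, Real.norm_eq_abs, abs_mul, abs_mul, hε, abs_of_pos (by positivity),
      abs_of_nonneg (by positivity), one_mul, mul_assoc]
    exact mul_le_of_le_one_right (by positivity) inv_mul_le_one
  have i0 : inner ℝ ξ x0 = ε * (s / 2 * ‖ξ‖) := by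
    rw [hx0, inner_smul_right, real_inner_self_eq_norm_sq]
    rcases eq_or_ne ‖ξ‖ 0 with h | h
    · rw [h]; ring
    · field_simp
  have sub : closedBall x0 (s / 4) ⊆ closedBall 0 s := by
    apply closedBall_subset_closedBall'
    rw [dist_zero_right]; linarith
  have fi : IntegrableOn (fun x : Vec n => (inner ℝ ξ x + a) ^ 2) (closedBall 0 s) :=
    (by fun_prop : Continuous fun x : Vec n => (inner ℝ ξ x + a) ^ 2).continuousOn.integrableOn_compact
      (isCompact_closedBall _ _)
  have m1 := setIntegral_mono_set fi (ae_of_all _ fun _ => sq_nonneg _) (LE.le.eventuallyLE sub)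
  have m2 : ∫ x in closedBall x0 (s / 4), ((s / 4) * (‖ξ‖ + |a|)) ^ 2
      ≤ ∫ x in closedBall x0 (s / 4), (inner ℝ ξ x + a) ^ 2 := by
    refine setIntegral_mono_on (integrableOn_const (fin_ball _ _).2) (fi.mono_set sub)
      (fin_ball _ _).1 fun x hx => ?_
    rw [mem_closedBall_iff_norm] at hx
    have i1 : |inner ℝ ξ (x - x0)| ≤ ‖ξ‖ * (s / 4) :=
      (abs_real_inner_le_norm _ _).trans (by gcongr)
    have i2 : |ε * inner ℝ ξ (x - x0)| ≤ ‖ξ‖ * (s / 4) := by rwa [abs_mul, hε, one_mul]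
    have e1 : ε * (inner ℝ ξ x + a) = s / 2 * ‖ξ‖ + |a| + ε * inner ℝ ξ (x - x0) := by
      rw [inner_sub_right, i0]
      nth_rewrite 1 [← hεa]
      linear_combination (|a| - s / 2 * ‖ξ‖ + s / 2 * ‖ξ‖) * ε2 + (s / 2 * ‖ξ‖) * ε2
    rw [show (inner ℝ ξ x + a) ^ 2 = (ε * (inner ℝ ξ x + a)) ^ 2
      by rw [mul_pow, pow_two ε, ε2, one_mul]]
    have := neg_abs_le (ε * inner ℝ ξ (x - x0))
    have a0 := abs_nonneg a
    have : s / 4 * |a| ≤ |a| := mul_le_of_le_one_left a0 (by linarith)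
    refine pow_le_pow_left₀ (by positivity) ?_ 2
    rw [e1]; linarith
  rw [setIntegral_const, smul_eq_mul, Measure.real, Measure.addHaar_closedBall_center] at m2
  exact m2.trans m1

/-- If the fiber barycentres of `A` are close to the affine function `⟨ξ, w⟩ + a`, then the moment
of `t` against that function is bounded below by its size squared, up to errors. -/
lemma mom_one {r Λ e1 e2 a : ℝ} {ξ : Vec n} (hc : 0 < c) (hr : c ≤ r) (hr1 : r ≤ 1) (hω : 0 < ω)
    (hωc : ω ≤ c / 4) (hκ : 0 ≤ κ) (hκω : 20 * √κ ≤ √(ω * c)) (mA : MeasurableSet A)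
    (hin : Bp n (r - κ) ⊆ A) (hout : A ⊆ Bp n (r + κ)) (hκc : κ ≤ c) (hΛ : ‖ξ‖ + |a| ≤ Λ)
    (h1 : (∫ x in closedBall 0 (r - 2 * ω), |Pf A x - (inner ℝ ξ x + a)|) ≤ e1)
    (h2 : (∫ x in closedBall 0 (r - 2 * ω), max (Ef A x - 2 * |Pf A x|) 0) ≤ e1)
    (h3 : (∫ x in (closedBall 0 (r - 2 * ω))ᶜ, Ef A x) ≤ e2) :
    c * (vol (𝔹 n (c / 8)) * ((c / 8) * (‖ξ‖ + |a|)) ^ 2)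
      - Λ * (7 * e1 + 4 * e2 + 4 * √κ * vol (𝔹 n 1) * Λ) ≤
      ∫ p in A, p.2 * (inner ℝ ξ p.1 + a) ∧
    ∫ w, Ef A w ≤ 3 * e1 + e2 + 2 * Λ * vol (𝔹 n 1) := by
  have hR : 0 ≤ r + κ := by linarith
  have Λ0 : 0 ≤ Λ := by linarith [norm_nonneg ξ, abs_nonneg a]
  set D := 𝔹 n (r - 2 * ω) with hD
  have mD : MeasurableSet D := (fin_ball _ _).1
  set D' := 𝔹 n (c / 2) with hD'
  have mD' : MeasurableSet D' := (fin_ball _ _).1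
  have sD : D' ⊆ D := closedBall_subset_closedBall (by linarith)
  set L : Vec n → ℝ := fun w => inner ℝ ξ w + a with hL
  have Lb w t : 1 ≤ t → ‖w‖ ≤ t → |L w| ≤ t * Λ := fun ht hw => by
    have := (abs_real_inner_le_norm ξ w).trans (mul_le_mul_of_nonneg_left hw (norm_nonneg ξ))
    have b : |a| ≤ t * |a| := le_mul_of_one_le_left (abs_nonneg a) ht
    have b2 : t * (‖ξ‖ + |a|) ≤ t * Λ := by gcongr
    have := abs_add_le (inner ℝ ξ w) a
    simp only [hL]; linarith
  have sqc : √(ω * c) ≤ c / 2 := Real.sqrt_le_iff.mpr ⟨by positivity, by nlinarith⟩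
  have hlD : ∀ w ∈ D, √(ω * c) ≤ hl r w := fun w hw => by
    have hw' : ‖w‖ ≤ r - 2 * ω := by simpa [hD] using hw
    refine Real.sqrt_le_sqrt ?_
    have : ‖w‖ ^ 2 ≤ (r - 2 * ω) ^ 2 := pow_le_pow_left₀ (norm_nonneg _) hw' 2
    nlinarith
  have fi1 := aff_integrableOn (f := Pf A) ⟨measurable_Pf mA, _, abs_Pf_le hR hout⟩ ξ a (r - 2 * ω)
  have bu : Bdm (fun x => max (Ef A x - 2 * |Pf A x|) 0) := by
    refine ⟨((measurable_Ef mA).sub ((measurable_Pf mA).abs.const_mul 2)).max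
      measurable_const, 4 * (r + κ), fun x => ?_⟩
    rw [abs_of_nonneg (le_max_right _ _)]
    have := Ef_le hR hout x
    have := abs_nonneg (Pf A x)
    have := Ef_nonneg A x
    apply max_le <;> linarith
  have fi2 := bu.integrableOn (fin_ball 0 (r - 2 * ω))
  have fi3 := Ef_integrable mA hR hout
  have EfD : ∀ w ∈ D, Ef A w ≤ max (Ef A w - 2 * |Pf A w|) 0 + 2 * |Pf A w - L w| + 2 * Λ := by
    intro w hw
    have hw' : ‖w‖ ≤ r - 2 * ω := by simpa [hD] using hw
    have := Lb w 1 le_rfl (by linarith)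
    have := le_max_left (Ef A w - 2 * |Pf A w|) 0
    have := abs_sub_abs_le_abs_sub (Pf A w) (L w)
    linarith
  have vD : vol D ≤ vol (𝔹 n 1) :=
    measureReal_mono (closedBall_subset_closedBall (by linarith)) (fin_ball _ _).2
  have cD (t : ℝ) : IntegrableOn (fun _ : Vec n => t) D := integrableOn_const (fin_ball _ _).2
  constructor
  swap
  · rw [← integral_add_compl mD fi3]
    have i1 : IntegrableOn (fun w => max (Ef A w - 2 * |Pf A w|) 0 + 2 * |Pf A w - L w|) D :=
      fi2.add (fi1.const_mul 2)
    have m := setIntegral_mono_on fi3.integrableOn (i1.add (cD (2 * Λ))) mD EfD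
    rw [integral_add' i1 (cD _), integral_add fi2 (fi1.const_mul 2), integral_const_mul,
      setIntegral_const, smul_eq_mul] at m
    have : vol D * (2 * Λ) ≤ vol (𝔹 n 1) * (2 * Λ) := by gcongr
    linarith
  obtain ⟨gi, ge⟩ := mom_slice mA hR hout ξ a
  rw [ge]
  -- pointwise lower bounds on the core, near the core, and off it
  have bD : ∀ w ∈ D, D'.indicator (fun w => c * L w ^ 2) w - Λ * (6 * |Pf A w - L w|
      + max (Ef A w - 2 * |Pf A w|) 0 + 4 * √κ * Λ) ≤ gm A w * L w := by
    intro w hw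
    have hw' : ‖w‖ ≤ r - 2 * ω := by simpa [hD] using hw
    obtain ⟨q1, q2⟩ := sq_fib mA (by positivity) hκ (by linarith) hr1 hκω hin hout (hlD w hw)
    have q3 := q1.moment
    rw [← (gm_eq mA hR hout w).2, mul_div_cancel₀ _ (two_ne_zero' ℝ)] at q3
    set f := vol (fib A w)
    have f0 : 0 ≤ f := measureReal_nonneg
    change |gm A w - f * Pf A w| ≤ 2 * √κ * Ef A w at q3
    have f4 : f ≤ 4 := (vol_fib_le hR hout w).trans (by linarith)
    have Lw := Lb w 1 le_rfl (by linarith)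
    rw [one_mul] at Lw
    have E0 := Ef_nonneg A w
    have ED := EfD w hw
    have k1 : 2 * √κ ≤ 1 := by linarith
    have k0 : 0 ≤ √κ := Real.sqrt_nonneg κ
    have x1 : |(gm A w - f * Pf A w) * L w| ≤ 2 * √κ * Ef A w * Λ := by rw [abs_mul]; gcongr
    have x2 : |f * (Pf A w - L w) * L w| ≤ 4 * |Pf A w - L w| * Λ := by
      rw [abs_mul, abs_mul, abs_of_nonneg f0]; gcongr
    have x3 : 2 * √κ * Ef A w * Λ ≤ (max (Ef A w - 2 * |Pf A w|) 0 + 2 * |Pf A w - L w|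
        + 4 * √κ * Λ) * Λ := by
      refine mul_le_mul_of_nonneg_right ?_ Λ0
      have y1 : 2 * √κ * Ef A w ≤ 2 * √κ * (max (Ef A w - 2 * |Pf A w|) 0 + 2 * |Pf A w - L w|
        + 2 * Λ) := by gcongr
      have y2 : 2 * √κ * (max (Ef A w - 2 * |Pf A w|) 0 + 2 * |Pf A w - L w|) ≤
        max (Ef A w - 2 * |Pf A w|) 0 + 2 * |Pf A w - L w| := by
        refine mul_le_of_le_one_left ?_ k1
        have := le_max_right (Ef A w - 2 * |Pf A w|) 0
        positivity
      linarith
    have x4 : D'.indicator (fun w => c * L w ^ 2) w ≤ f * L w ^ 2 := by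
      by_cases h : w ∈ D'
      · rw [indicator_of_mem h]
        refine mul_le_mul_of_nonneg_right ?_ (sq_nonneg _)
        have hw2 : ‖w‖ ≤ c / 2 := by simpa [hD'] using h
        have : 3 / 4 * c ≤ hl r w := by
          refine Real.le_sqrt_of_sq_le ?_
          have : ‖w‖ ^ 2 ≤ (c / 2) ^ 2 := pow_le_pow_left₀ (norm_nonneg _) hw2 2
          nlinarith
        have := (abs_le.mp q2).1
        linarith
      · rw [indicator_of_notMem h]; positivity
    rw [show gm A w * L w = f * L w ^ 2 + f * (Pf A w - L w) * L w + (gm A w - f * Pf A w) * L w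
      by ring]
    have := neg_abs_le ((gm A w - f * Pf A w) * L w)
    have := neg_abs_le (f * (Pf A w - L w) * L w)
    linarith
  have bO : ∀ w ∈ Dᶜ, -(4 * Λ * Ef A w) ≤ gm A w * L w := by
    intro w _
    rcases lt_or_ge (r + κ) ‖w‖ with h | h
    · have := abs_gm_le mA hR hout w
      rw [Ef_zero hR hout h] at this ⊢
      rw [mul_zero] at this
      rw [abs_nonpos_iff.mp this]; simp
    · have z1 := abs_gm_le mA hR hout w
      have z2 := Lb w 2 (by norm_num) (by linarith)
      have E0 := Ef_nonneg A w
      have z3 : (r + κ) * Ef A w ≤ 2 * Ef A w := by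
        refine mul_le_mul_of_nonneg_right (by linarith) E0
      have z4 : |gm A w| * |L w| ≤ 2 * Ef A w * (2 * Λ) :=
        mul_le_mul (z1.trans z3) z2 (abs_nonneg _) (by positivity)
      have := neg_abs_le (gm A w * L w)
      rw [abs_mul] at this
      linarith
  have Lc : Continuous fun w => c * L w ^ 2 := by simp only [hL]; fun_prop
  have i0 : IntegrableOn (fun w => c * L w ^ 2) D' :=
    Lc.continuousOn.integrableOn_compact (isCompact_closedBall _ _)
  have i0' : IntegrableOn (D'.indicator fun w => c * L w ^ 2) D :=
    (i0.integrable_indicator mD').integrableOn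
  have i1 : IntegrableOn (fun w => 6 * |Pf A w - L w| + max (Ef A w - 2 * |Pf A w|) 0) D :=
    (fi1.const_mul 6).add fi2
  have i2 : IntegrableOn (fun w => 6 * |Pf A w - L w| + max (Ef A w - 2 * |Pf A w|) 0
    + 4 * √κ * Λ) D := i1.add (cD _)
  have mDI := setIntegral_mono_on (i0'.sub (i2.const_mul Λ)) gi.integrableOn mD bD
  rw [integral_sub' i0' (i2.const_mul Λ), integral_const_mul, integral_add i1 (cD _),
    integral_add (fi1.const_mul 6) fi2, integral_const_mul, setIntegral_const, smul_eq_mul,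
    setIntegral_indicator mD', inter_eq_self_of_subset_right sD, integral_const_mul] at mDI
  have mOI := setIntegral_mono_on ((fi3.const_mul (4 * Λ)).neg).integrableOn gi.integrableOn
    mD.compl bO
  rw [integral_neg', integral_const_mul] at mOI
  rw [← integral_add_compl mD gi]
  have lo := aff_sq_lower ξ a (s := c / 2) (by positivity) (by linarith)
  rw [show c / 2 / 4 = c / 8 by ring] at lo
  have lo' := mul_le_mul_of_nonneg_left lo hc.le
  have u1 : Λ * (6 * ∫ w in D, |Pf A w - L w|) ≤ Λ * (6 * e1) := by gcongr
  have u2 : Λ * (∫ w in D, max (Ef A w - 2 * |Pf A w|) 0) ≤ Λ * e1 := by gcongr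
  have u3 : 4 * Λ * (∫ w in Dᶜ, Ef A w) ≤ 4 * Λ * e2 := by gcongr
  have u4 : Λ * (vol D * (4 * √κ * Λ)) ≤
      Λ * (vol (𝔹 n 1) * (4 * √κ * Λ)) := by have := Real.sqrt_nonneg κ; gcongr
  simp only [hL] at mDI mOI u1 ⊢
  rw [mul_add, mul_add] at mDI
  refine le_trans ?_ (by gcongr)
  linarith

variable {a b r s : ℝ}

/-- For a normalized triple, almost all fibers are centred: the affine drift is killed by the
vanishing of the mixed moments. The constant in front of the edge term does not depend on `ω`. -/
lemma centred (n : ℕ) (hc : 0 < c) (hc1 : c ≤ 1) :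
    ∃ C, 0 ≤ C ∧ ∀ ω, 0 < ω → ω ≤ c / 4 → ∃ κ0, 0 < κ0 ∧ ∃ C', 0 ≤ C' ∧
    ∀ (r : Fin 3 → ℝ) (κ δ e : ℝ) (A : Fin 3 → Set (Vec n × ℝ)), Shell c r κ δ A → κ ≤ κ0 →
      (∀ (ξ : Vec n) (a : Fin 3 → ℝ), a 0 + a 1 + a 2 = 0 →
        ∑ j, ∫ p in A j, p.2 * (inner ℝ ξ p.1 + a j) = 0) →
      (∀ j, ∫ x in (closedBall 0 (r j - 2 * ω))ᶜ, Ef (A j) x ≤ e) →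
      ∀ j, ∫ x, Ef (A j) x ≤ C' * δ + C * e := by
  set v := vol (𝔹 n (c / 8)) with hv
  have v0 : 0 < v :=
    ENNReal.toReal_pos (measure_closedBall_pos _ _ (by positivity)).ne' (fin_ball _ _).2
  set V := vol (𝔹 n 1) with hV
  set q := c * v * (c / 8) ^ 2 / 3 with hq
  have q0 : 0 < q := by positivity
  refine ⟨1 + 48 * V / q, by positivity, fun ω hω hωc => ?_⟩
  obtain ⟨κ1, hκ1, C1, C10, H⟩ := slices_affine n hc hω hωc hc1
  refine ⟨min κ1 (min ((√(ω * c) / 20) ^ 2) ((q / (24 * (V + 1))) ^ 2)), by positivity,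
    3 * C1 + 84 * V * C1 / q, by positivity, ?_⟩
  intro r κ δ e A hS hκ hM he
  rw [le_min_iff, le_min_iff] at hκ
  obtain ⟨hk1, hk2, hk3⟩ := hκ
  obtain ⟨ξ, a, sa, hj⟩ := H r κ δ A hS hk1
  have d0 := hS.δ0
  set Λ := ‖ξ‖ + (|a 0| + |a 1| + |a 2|) with hΛ
  have b0 := abs_nonneg (a 0)
  have b1 := abs_nonneg (a 1)
  have b2 := abs_nonneg (a 2)
  have x0 := norm_nonneg ξ
  have Λ0 : 0 ≤ Λ := by positivity
  have sk : 20 * √κ ≤ √(ω * c) := by linarith [Real.sqrt_le_iff.mpr ⟨by positivity, hk2⟩]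
  have sk2 : √κ * (24 * (V + 1)) ≤ q := by
    rw [← le_div_iff₀ (by positivity)]
    exact Real.sqrt_le_iff.mpr ⟨by positivity, hk3⟩
  have main := fun j => mom_one (c := c) (r := r j) (ξ := ξ) (a := a j) (Λ := Λ) hc (hS.adm.lo j)
    (hS.adm.hi j) hω hωc hS.κ0 sk (hS.fin j).1 (hS.hin j) (hS.hout j) hS.κc
    (by fin_cases j <;> simp [hΛ] <;> linarith) (hj j).1 (hj j).2 (he j)
  have sum := hM ξ a sa
  rw [Fin.sum_univ_three] at sum
  have m0 := (main 0).1
  have m1 := (main 1).1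
  have m2 := (main 2).1
  rw [← hv, ← hV] at m0 m1 m2
  have e0 := (setIntegral_nonneg (fin_ball _ _).1.compl fun x _ => Ef_nonneg _ x).trans (he 0)
  have cs : Λ ^ 2 / 3 ≤ (‖ξ‖ + |a 0|) ^ 2 + (‖ξ‖ + |a 1|) ^ 2 + (‖ξ‖ + |a 2|) ^ 2 := by
    have : Λ ^ 2 ≤ (3 * ‖ξ‖ + (|a 0| + |a 1| + |a 2|)) ^ 2 :=
      pow_le_pow_left₀ Λ0 (by rw [hΛ]; linarith) 2
    nlinarith [sq_nonneg (|a 0| - |a 1|), sq_nonneg (|a 0| - |a 2|), sq_nonneg (|a 1| - |a 2|)]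
  have key : q * Λ ^ 2 ≤ 3 * (Λ * (7 * (C1 * δ) + 4 * e + 4 * √κ * V * Λ)) := by
    have : c * v * (c / 8) ^ 2 * (Λ ^ 2 / 3) ≤ c * v * (c / 8) ^ 2 *
      ((‖ξ‖ + |a 0|) ^ 2 + (‖ξ‖ + |a 1|) ^ 2 + (‖ξ‖ + |a 2|) ^ 2) := by gcongr
    rw [hq]
    linarith
  have Λb : Λ * q ≤ 6 * (7 * (C1 * δ) + 4 * e) := by
    rcases Λ0.eq_or_lt with h | h
    · rw [← h, zero_mul]; positivity
    · have k1 : Λ * (Λ * q) ≤ Λ * (3 * (7 * (C1 * δ) + 4 * e + 4 * √κ * V * Λ)) := by linarith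
      have k2 := le_of_mul_le_mul_left k1 h
      have k3 : √κ * (24 * (V + 1)) * Λ ≤ q * Λ := by gcongr
      have : 0 ≤ √κ * Λ := by positivity
      linarith
  intro j
  have := (main j).2
  rw [← hV] at this
  have Λc : Λ ≤ 6 * (7 * (C1 * δ) + 4 * e) / q := by rwa [le_div_iff₀ q0]
  have : 2 * Λ * V ≤ 2 * (6 * (7 * (C1 * δ) + 4 * e) / q) * V := by gcongr
  have e1 : 2 * (6 * (7 * (C1 * δ) + 4 * e) / q) * V
    = 84 * V * C1 / q * δ + 48 * V / q * e := by ring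
  linarith

lemma pow_sub_le (m : ℕ) (hb : 0 ≤ b) (hab : b ≤ a) (ha : a ≤ 2) :
    a ^ m - b ^ m ≤ m * 2 ^ m * (a - b) := by
  induction m with
  | zero => simp
  | succ m ih =>
    have h1 := pow_le_pow_left₀ hb (hab.trans ha) m
    have h2 := mul_le_mul ha ih (by have := pow_le_pow_left₀ hb hab m; linarith) (by norm_num)
    have h3 : b ^ m * (a - b) ≤ 2 ^ m * (a - b) := by gcongr
    have h4 : 0 ≤ 2 ^ m * (a - b) := mul_nonneg (by positivity) (by linarith)
    push_cast
    rw [pow_succ, pow_succ, pow_succ]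
    linarith

/-- The thin double cone around the equator `t = 0`. -/
def Cone (n : ℕ) (s : ℝ) : Set (Vec n × ℝ) := {p | p.2 ^ 2 ≤ s ^ 2 * (‖p.1‖ ^ 2 + p.2 ^ 2)}

open scoped Pointwise in
lemma vol_cone (n : ℕ) (hs : 0 ≤ s) (hρ : 0 < ρ) :
    vol (Cone n s ∩ Bp n ρ) = ρ ^ (n + 1) * vol (Cone n s ∩ Bp n 1) ∧
    vol (Cone n s ∩ Bp n 1) ≤
      2 * s * vol (𝔹 n 1) := by
  constructor
  · have e : Cone n s ∩ Bp n ρ = ρ • (Cone n s ∩ Bp n 1) := by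
      ext p
      rw [mem_smul_set_iff_inv_smul_mem₀ hρ.ne']
      have i := inv_pos.mpr hρ
      have i2 := inv_mul_cancel₀ hρ.ne'
      change (p.2 ^ 2 ≤ s ^ 2 * (‖p.1‖ ^ 2 + p.2 ^ 2) ∧ ‖p.1‖ ^ 2 + p.2 ^ 2 ≤ ρ ^ 2) ↔
        ((ρ⁻¹ * p.2) ^ 2 ≤ s ^ 2 * (‖ρ⁻¹ • p.1‖ ^ 2 + (ρ⁻¹ * p.2) ^ 2) ∧
          ‖ρ⁻¹ • p.1‖ ^ 2 + (ρ⁻¹ * p.2) ^ 2 ≤ 1 ^ 2)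
      rw [norm_smul, Real.norm_of_nonneg i.le]
      have e1 : (ρ⁻¹ * ‖p.1‖) ^ 2 + (ρ⁻¹ * p.2) ^ 2 = ρ⁻¹ ^ 2 * (‖p.1‖ ^ 2 + p.2 ^ 2) := by ring
      have e2 : (1 : ℝ) ^ 2 = ρ⁻¹ ^ 2 * ρ ^ 2 := by rw [← mul_pow, i2]
      rw [e1, e2, mul_pow, mul_left_comm, mul_le_mul_iff_right₀ (by positivity),
        mul_le_mul_iff_right₀ (by positivity)]
    rw [e, Measure.volume_eq_prod, Measure.real, Measure.addHaar_smul, ENNReal.toReal_mul, ENNReal.toReal_ofReal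
      (abs_nonneg _), abs_of_pos (by positivity)]
    congr 2
    simp
  · have sub : Cone n s ∩ Bp n 1 ⊆ 𝔹 n 1 ×ˢ Icc (-s) s := by
      rintro p ⟨h1, h2⟩
      change p.2 ^ 2 ≤ s ^ 2 * (‖p.1‖ ^ 2 + p.2 ^ 2) at h1
      change ‖p.1‖ ^ 2 + p.2 ^ 2 ≤ 1 ^ 2 at h2
      refine ⟨?_, abs_le.mp (abs_le_of_sq_le_sq ?_ hs)⟩
      · rw [mem_closedBall_zero_iff, ← abs_of_nonneg (norm_nonneg p.1)]
        exact abs_le_of_sq_le_sq (by nlinarith [sq_nonneg p.2]) zero_le_one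
      · refine h1.trans (mul_le_of_le_one_right (sq_nonneg _) (by linarith))
    refine (measureReal_mono sub ?_).trans (le_of_eq ?_)
    · rw [Measure.volume_eq_prod, Measure.prod_prod]
      exact ENNReal.mul_ne_top (fin_ball _ _).2 (by simp)
    · rw [Measure.volume_eq_prod, measureReal_prod_prod, vol_Icc_symm hs]
      ring

lemma cone_shell (n : ℕ) (hs : 0 ≤ s) (hτ : 0 ≤ τ) (hr : τ < r) (hr1 : r + τ ≤ 2) :
    vol (Cone n s ∩ (Bp n (r + τ) \ Bp n (r - τ))) ≤
      (n + 1) * 2 ^ (n + 3) * vol (𝔹 n 1) * (s * τ) := by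
  have mC : MeasurableSet (Cone n s) :=
    (isClosed_le (by fun_prop : Continuous fun p : Vec n × ℝ => p.2 ^ 2)
      (by fun_prop : Continuous fun p : Vec n × ℝ => s ^ 2 * (‖p.1‖ ^ 2 + p.2 ^ 2))).measurableSet
  have f1 : Fin' (Cone n s ∩ Bp n (r + τ)) := ⟨mC.inter (fin_Bp (by linarith)).1,
    ne_top_of_le_ne_top (fin_Bp (by linarith)).2 (measure_mono inter_subset_right)⟩
  have m2 : MeasurableSet (Cone n s ∩ Bp n (r - τ)) := mC.inter (fin_Bp (by linarith)).1
  have sub : Cone n s ∩ Bp n (r - τ) ⊆ Cone n s ∩ Bp n (r + τ) := by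
    refine inter_subset_inter_right _ fun p hp => ?_
    change ‖p.1‖ ^ 2 + p.2 ^ 2 ≤ (r - τ) ^ 2 at hp
    change ‖p.1‖ ^ 2 + p.2 ^ 2 ≤ (r + τ) ^ 2
    nlinarith
  rw [inter_sdiff_distrib_left, measureReal_sdiff sub m2 f1.2, (vol_cone n hs (by linarith)).1,
    (vol_cone n hs (by linarith : 0 < r - τ)).1, ← sub_mul]
  have p := pow_sub_le (n + 1) (a := r + τ) (b := r - τ) (by linarith) (by linarith) hr1
  have c := (vol_cone n hs one_pos).2
  refine (mul_le_mul p c measureReal_nonneg ?_).trans (le_of_eq ?_)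
  · refine mul_nonneg (by positivity) (by linarith)
  · push_cast; ring

lemma Ef_le_Bp (r : ℝ) {w : Vec n} (hf : Fin' (fib A w)) :
    Ef A w ≤ 2 * vol (fib (A ∆ Bp n r) w) := by
  set f := fib A w with hff
  obtain ⟨m, m0, hI, hz⟩ : ∃ m, 0 ≤ m ∧ Fin' (fib (Bp n r) w) ∧
      vol ((fib (Bp n r) w) ∆ cI m) = 0 := by
    by_cases hw : ‖w‖ ^ 2 ≤ r ^ 2
    · set q := √(r ^ 2 - ‖w‖ ^ 2)
      have q0 : 0 ≤ q := Real.sqrt_nonneg _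
      have q2 : q ^ 2 = r ^ 2 - ‖w‖ ^ 2 := Real.sq_sqrt (by linarith)
      have e : fib (Bp n r) w = Icc (-q) q := by
        ext t
        change ‖w‖ ^ 2 + t ^ 2 ≤ r ^ 2 ↔ -q ≤ t ∧ t ≤ q
        rw [← abs_le, ← sq_le_sq₀ (abs_nonneg t) q0, sq_abs, q2]
        constructor <;> intro h <;> linarith
      refine ⟨2 * q, by positivity, by rw [e]; exact ⟨measurableSet_Icc, by simp⟩, ?_⟩
      have sub : (fib (Bp n r) w) ∆ (cI (2 * q)) ⊆ {q} := by
        rw [e, cI, mul_div_cancel_left₀ _ (two_ne_zero' ℝ)]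
        rintro t (⟨h1, h2⟩ | ⟨h1, h2⟩)
        · by_contra h
          exact h2 ⟨h1.1, lt_of_le_of_ne h1.2 h⟩
        · exact absurd ⟨h1.1, h1.2.le⟩ h2
      refine le_antisymm ((measureReal_mono sub (by simp)).trans ?_) measureReal_nonneg
      rw [Measure.real, Real.volume_singleton]; simp
    · have e : fib (Bp n r) w = ∅ := by
        ext t
        refine ⟨fun h => ?_, fun h => h.elim⟩
        change ‖w‖ ^ 2 + t ^ 2 ≤ r ^ 2 at h
        nlinarith [sq_nonneg t]
      refine ⟨0, le_rfl, ?_, ?_⟩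
      · rw [e]; exact ⟨MeasurableSet.empty, by simp⟩
      · rw [e]; simp [cI]
  have t1 := sd_triangle hf hI (fin_cI m)
  have t2 := sd_triangle hf (fin_cI m) (fin_cI (vol f))
  have t3 := abs_vol_sub hf (fin_cI m)
  rw [vol_cI m0] at t3
  rw [vol_sd_cI m0 measureReal_nonneg, abs_sub_comm] at t2
  rw [fib_symmDiff, ← hff]
  change vol (f ∆ (cI (vol f))) ≤ _
  linarith

lemma edge_slice (hA : Fin' A) (hr : 0 ≤ r) (hR : 0 ≤ R) (hAR : A ⊆ Bp n R) {D : Set (Vec n)}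
    (mD : MeasurableSet D) : ∫ x in D, Ef A x ≤ 2 * vol (A ∆ Bp n r ∩ {p | p.1 ∈ D}) := by
  have f1 : Fin' (A ∆ Bp n r ∩ {p | p.1 ∈ D}) := by
    have := hA.symmDiff (fin_Bp (n := n) hr)
    exact ⟨this.1.inter (measurable_fst mD), measure_ne_top_of_subset inter_subset_left this.2⟩
  rw [vol_slice f1, ← integral_indicator mD, ← integral_const_mul]
  refine integral_mono_ae ((Ef_integrable hA.1 hR hAR).indicator mD)
    ((vol_fib_integrable f1).const_mul 2) ?_
  filter_upwards [fib_ae hA] with w hw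
  by_cases h : w ∈ D
  · rw [indicator_of_mem h]
    have : fib (A ∆ Bp n r ∩ {p | p.1 ∈ D}) w = fib (A ∆ Bp n r) w := by
      ext t; exact ⟨fun h => h.1, fun h' => ⟨h', h⟩⟩
    simp only [this]
    exact Ef_le_Bp r hw
  · rw [indicator_of_notMem h]
    positivity

/-- The part of `E Δ B` near the equator of a frame is small: either it is in a thin cone inside a
thin shell, or it is far from the sphere and controlled by the weighted measure. -/
lemma edge_bound (F : Frame n) (hc : 0 < c) (hcr : c ≤ r) (hr1 : r ≤ 1) (hτ : 0 < τ) (hτω : τ ≤ ω)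
    (hω : ω ≤ c / 4) (hE : Fin' E) (hR : 0 ≤ R) (hER : E ⊆ closedBall 0 R) :
    ∫ x in (closedBall 0 (r - 2 * ω))ᶜ, Ef (F.im E) x ≤
      2 * ((n + 1) * 2 ^ (n + 3) * vol (𝔹 n 1) *
        (6 * √ω / c * τ) + Wt c r E / τ) := by
  have hr0 : 0 ≤ r := by linarith
  refine (edge_slice (F.fin_im hE) hr0 hR (im_subset_Bp F hR hER)
    (fin_ball 0 (r - 2 * ω)).1.compl).trans ?_
  refine mul_le_mul_of_nonneg_left ?_ (by norm_num)
  set B := 𝔹 (n + 1) r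
  set N := E ∆ B ∩ {x | τ ≤ |‖x‖ - r|}
  have fS : Fin' (E ∆ B) := hE.symmDiff (fin_ball _ _)
  have mT : MeasurableSet {x : Vec (n + 1) | τ ≤ |‖x‖ - r|} :=
    (isClosed_le continuous_const (by fun_prop)).measurableSet
  have fN : Fin' N := ⟨fS.1.inter mT, measure_ne_top_of_subset inter_subset_left fS.2⟩
  have hNW : vol N ≤ Wt c r E / τ := by
    rw [le_div_iff₀ hτ, ← integral_chi fN.1, ← integral_mul_const]
    refine integral_mono (fN.nice.2.1.mul_const τ) (Wt_integrable hc r hE) fun x => ?_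
    change chi N x * τ ≤ chi (E ∆ B) x * min |‖x‖ - r| (c / 2)
    by_cases hx : x ∈ N
    · rw [chi_of_mem hx, chi_of_mem hx.1, one_mul, one_mul]
      exact le_min hx.2 (by linarith)
    · rw [chi_of_notMem hx, zero_mul]
      exact mul_nonneg (by unfold chi; exact indicator_nonneg (fun _ _ => zero_le_one) _)
        (le_min (abs_nonneg _) (by positivity))
  have sub : F.im E ∆ Bp n r ∩ {p | p.1 ∈ (closedBall 0 (r - 2 * ω))ᶜ} ⊆
      (Cone n (6 * √ω / c) ∩ (Bp n (r + τ) \ Bp n (r - τ))) ∪ F.im N := by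
    rintro p ⟨hp, hp2⟩
    rw [← im_ball F hr0, ← F.im_symmDiff] at hp
    have hp2' : r - 2 * ω < ‖p.1‖ := by
      have := hp2
      simpa using this
    by_cases h : τ ≤ |‖F.e.symm p‖ - r|
    · exact Or.inr ⟨hp, h⟩
    left
    rw [not_le, abs_lt] at h
    set z := ‖F.e.symm p‖ with hz
    have hz2 := F.nsq_symm p
    have z0 : 0 ≤ z := norm_nonneg _
    refine ⟨?_, ?_, ?_⟩
    · change p.2 ^ 2 ≤ (6 * √ω / c) ^ 2 * (‖p.1‖ ^ 2 + p.2 ^ 2)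
      have ω0 : 0 ≤ ω := by linarith
      rw [← hz2, div_pow, mul_pow, Real.sq_sqrt ω0, div_mul_eq_mul_div, le_div_iff₀ (by positivity)]
      have y1 : p.2 ^ 2 ≤ 9 * ω := by
        have := pow_le_pow_left₀ (by linarith) hp2'.le 2
        have : z ^ 2 ≤ (r + τ) ^ 2 := pow_le_pow_left₀ z0 (by linarith) 2
        have : (τ + 2 * ω) * (2 * r + τ - 2 * ω) ≤ (3 * ω) * 3 :=
          mul_le_mul (by linarith) (by linarith) (by linarith) (by linarith)
        linarith
      have y3 : (c / 2) ^ 2 ≤ z ^ 2 := pow_le_pow_left₀ (by positivity) (by linarith) 2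
      have y4 : p.2 ^ 2 * c ^ 2 ≤ 9 * ω * c ^ 2 := by gcongr
      have y5 : 36 * ω * (c / 2) ^ 2 ≤ 36 * ω * z ^ 2 := by gcongr
      linarith
    · change ‖p.1‖ ^ 2 + p.2 ^ 2 ≤ (r + τ) ^ 2
      rw [← hz2]; exact pow_le_pow_left₀ z0 (by linarith) 2
    · intro h'
      change ‖p.1‖ ^ 2 + p.2 ^ 2 ≤ (r - τ) ^ 2 at h'
      rw [← hz2] at h'
      have := abs_le_of_sq_le_sq h' (by linarith)
      rw [abs_of_nonneg z0] at this
      linarith [h.1]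
  refine (measureReal_mono sub ?_).trans ((measureReal_union_le _ _).trans (add_le_add ?_ ?_))
  · refine measure_union_ne_top (measure_ne_top_of_subset ?_ (fin_Bp (n := n) (r := r + τ)
      (by linarith)).2) (F.fin_im fN).2
    exact inter_subset_right.trans sdiff_subset
  · exact cone_shell n (by positivity) hτ.le (by linarith) (by linarith)
  · rwa [F.volr_im]

lemma sd_S (F : Frame n) (hE : Fin' E) : vol (E ∆ F.S E) = ∫ w, Ef (F.im E) w := by
  have h := fin_St (F.fin_im hE)
  rw [show E ∆ F.S E = F.pre (F.im E ∆ (St (F.im E))) by rw [F.pre_symmDiff, F.pre_im]; rfl,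
    F.volr_pre, vol_slice (Fin'.symmDiff (F.fin_im hE) h)]
  rfl

lemma shell_im (F : Frame n) {r : Fin 3 → ℝ} (h : Adm c r) (hκ : 0 ≤ κ) (hκc : κ ≤ c)
    {E : Fin 3 → Set (Vec (n + 1))} (hE : ∀ j, Fin' (E j)) (hv : ∀ j, vol (E j) = vol (Bl n r j))
    (hin : ∀ j, closedBall 0 (r j - κ) ⊆ E j) (hout : ∀ j, E j ⊆ closedBall 0 (r j + κ))
    (hδ : 0 < δ) (hΔ : T3 (Bl n r) - T3 E ≤ δ ^ 2) : Shell c r κ δ (fun j => F.im (E j)) := by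
  have b : ∀ {s : ℝ}, 0 ≤ s → F.im (closedBall 0 s) = Bp n s := im_ball F
  have p j : 0 ≤ r j := by linarith [h.lo j]
  refine ⟨h, hκ, hκc, fun j => F.fin_im (hE j), fun j => ?_, fun j => ?_, fun j => ?_, hδ, ?_⟩
  · rw [← b (by linarith [h.lo j])]; exact preimage_mono (hin j)
  · rw [← b (by linarith [h.lo j])]; exact preimage_mono (hout j)
  · rw [← b (p j), F.volr_im, F.volr_im, hv]; rfl
  · have : (fun j => Bp n (r j)) = fun j => F.im (Bl n r j) := funext fun j => (b (p j)).symm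
    rwa [this, F.t3_im, F.t3_im]

lemma moment_im (F : Frame n) {E : Fin 3 → Set (Vec (n + 1))}
    (hM : ∀ u ζ : Vec (n + 1), ‖u‖ = 1 → inner ℝ u ζ = 0 → ∀ a : Fin 3 → ℝ, a 0 + a 1 + a 2 = 0 →
      ∑ j, ∫ x in E j, inner ℝ u x * (inner ℝ ζ x + a j) = 0) (ξ : Vec n) (a : Fin 3 → ℝ)
    (ha : a 0 + a 1 + a 2 = 0) : ∑ j, ∫ p in F.im (E j), p.2 * (inner ℝ ξ p.1 + a j) = 0 := by
  have hu : ‖F.e.symm (0, 1)‖ = 1 := by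
    have := F.nsq_symm (0, 1)
    rw [← sq_eq_sq₀ (norm_nonneg _) zero_le_one, this]; simp
  rw [← hM (F.e.symm (0, 1)) (F.e.symm (ξ, 0)) hu (by rw [F.inner_symm]; simp) a ha]
  refine Finset.sum_congr rfl fun j _ => ?_
  rw [← F.mp_symm.setIntegral_preimage_emb F.me.symm.measurableEmbedding]
  change _ = ∫ p in F.im (E j), _
  refine integral_congr_ae (ae_of_all _ fun p => ?_)
  simp only [F.inner_symm]
  simp

/-- A near-extremizing triple confined to thin shells around concentric balls and satisfying the
moment normalisation is within `O(δ)` of those balls. -/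
lemma local_norm (n : ℕ) (hc : 0 < c) (hc1 : c ≤ 1) :
    ∃ κ0, 0 < κ0 ∧ κ0 ≤ c / 4 ∧ ∃ η0, 0 < η0 ∧ ∃ C, 0 ≤ C ∧ ∀ (r : Fin 3 → ℝ) (δ : ℝ) (E : Fin 3 → Set (Vec (n + 1))),
    Adm c r → (∀ j, Fin' (E j)) → (∀ j, vol (E j) = vol (Bl n r j)) →
    (∀ j, closedBall 0 (r j - κ0) ⊆ E j) → (∀ j, E j ⊆ closedBall 0 (r j + κ0)) →
    0 < δ → δ ≤ η0 → T3 (Bl n r) - T3 E ≤ δ ^ 2 →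
    (∀ j, vol (E j ∆ Bl n r j) ≤ η0) →
    (∀ u ζ : Vec (n + 1), ‖u‖ = 1 → inner ℝ u ζ = 0 → ∀ a : Fin 3 → ℝ, a 0 + a 1 + a 2 = 0 →
      ∑ j, ∫ x in E j, inner ℝ u x * (inner ℝ ζ x + a j) = 0) →
    ∀ j, vol (E j ∆ Bl n r j) ≤ C * δ := by
  obtain ⟨CR, CR0, hR⟩ := round_ball n hc
  obtain ⟨C, C0, hcen⟩ := centred n hc hc1
  have sp : 0 < slp n c := slp_pos hc
  set Cv : ℝ := (n + 1) * 2 ^ (n + 3) * vol (𝔹 n 1)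
  have Cv0 : 0 ≤ Cv := by positivity
  set M := CR * C + 1 with hM
  have M0 : 1 ≤ M := by have := mul_nonneg CR0 C0; linarith
  set K := 48 * M / slp n c with hK
  have K0 : 0 < K := by positivity
  set s := min (c / (48 * M * (Cv + 1) * K)) (c / 4) with hs
  have s0 : 0 < s := by positivity
  have s1 : s ≤ c / 4 := min_le_right _ _
  set ω := s ^ 2 with hω
  have ωc : ω ≤ c / 4 := by nlinarith
  have sω : √ω = s := Real.sqrt_sq s0.le
  have ω0 : 0 < ω := by positivity
  obtain ⟨κ1, κ10, C', C'0, hcen⟩ := hcen ω ω0 ωc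
  refine ⟨min κ1 (c / 4), by positivity, min_le_right _ _, ω / (2 * K), by positivity,
    2 * (CR * C') + 1, by positivity, ?_⟩
  set κ := min κ1 (c / 4) with hκ
  have κ0 : 0 ≤ κ := by positivity
  have κ4 : κ ≤ c / 4 := min_le_right _ _
  intro r δ E had hE hv hin hout hδ hδη hΔ hη hmom
  obtain ⟨j0, -, hj0⟩ := Finset.exists_max_image Finset.univ
    (fun j => vol (E j ∆ Bl n r j)) ⟨0, Finset.mem_univ _⟩
  set D := vol (E j0 ∆ Bl n r j0) with hD
  have hDj j : vol (E j ∆ Bl n r j) ≤ D := hj0 j (Finset.mem_univ _)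
  have D0 : 0 ≤ D := measureReal_nonneg
  set τ := K * (D + δ) with hτ
  have τ0 : 0 < τ := by positivity
  have τω : τ ≤ ω := by
    have h1 : D + δ ≤ ω / K := by
      have := hη j0
      have e : ω / K = ω / (2 * K) + ω / (2 * K) := by field_simp; ring
      linarith
    calc τ ≤ K * (ω / K) := mul_le_mul_of_nonneg_left h1 K0.le
      _ = ω := by field_simp
  have hW j : Wt c (r j) (E j) / τ ≤ (D + δ) * (6 / (slp n c * K)) := by
    have h1 := weight_bound hc had hE hv D0 hDj
    have nn i : 0 ≤ Wt c (r i) (E i) := integral_nonneg fun x =>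
      mul_nonneg (indicator_nonneg (fun _ _ => zero_le_one) _) (by positivity)
    have h2 := Finset.single_le_sum (fun i _ => nn i) (Finset.mem_univ j)
    have h3 : slp n c * Wt c (r j) (E j) ≤ 6 * (D + δ) ^ 2 := by nlinarith
    rw [div_le_iff₀ τ0, hτ]
    rw [show (D + δ) * (6 / (slp n c * K)) * (K * (D + δ)) = 6 * (D + δ) ^ 2 / slp n c
      by field_simp, le_div_iff₀ sp]; linarith
  set q := 2 * (Cv * (6 * s / c * K) + 6 / (slp n c * K)) with hq
  have hMq : M * q ≤ 1 / 2 := by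
    have e1 : M * (6 / (slp n c * K)) = 1 / 8 := by rw [hK]; field_simp; norm_num
    have e2 : M * (Cv * (6 * s / c * K)) ≤ 1 / 8 := by
      calc M * (Cv * (6 * s / c * K)) ≤ M * ((Cv + 1) * (6 * (c / (48 * M * (Cv + 1) * K)) / c * K)) := by
            gcongr
            · linarith
            · exact min_le_left _ _
        _ = 1 / 8 := by field_simp; norm_num
    rw [hq]; linarith
  have q0 : 0 ≤ q := by positivity
  have hS : ∀ j (F : Frame n), vol (E j ∆ (F.S (E j))) ≤
      C' * δ + C * ((D + δ) * q) := by
    intro j F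
    rw [sd_S F (hE j)]
    refine hcen r κ δ ((D + δ) * q) _ (shell_im F had κ0 (by linarith) hE hv hin hout hδ hΔ)
      (min_le_left _ _) (moment_im F hmom) (fun i => ?_) j
    refine (edge_bound F hc (had.lo i) (had.hi i) τ0 τω ωc (hE i)
      (by linarith [had.lo i] : 0 ≤ r i + κ) (hout i)).trans ?_
    rw [sω]
    have := hW i
    rw [hq]
    rw [show Cv * (6 * s / c * τ) = (D + δ) * (Cv * (6 * s / c * K)) by rw [hτ]; ring]; linarith
  have hfin := hR (r j0) (had.lo j0) (had.hi j0) (E j0) (hE j0)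
    ((closedBall_subset_closedBall (by linarith [had.lo j0])).trans (hin j0))
    ((hout j0).trans (closedBall_subset_closedBall (by linarith [had.lo j0]))) (hv j0) _
    (by positivity) (hS j0)
  have h1 : CR * (C' * δ + C * ((D + δ) * q)) ≤ CR * C' * δ + (D + δ) * (1 / 2) := by
    have : CR * C * q ≤ 1 / 2 := by rw [hM] at hMq; linarith
    have := mul_le_mul_of_nonneg_left this (by positivity : 0 ≤ D + δ)
    linarith
  have h2 : D ≤ CR * C' * δ + (D + δ) * (1 / 2) := hfin.trans h1
  intro j
  linarith [hDj j]

/-- The triple of preimages of `E` under the affine maps `y ↦ ψ y + v j`. -/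
def tf {d : ℕ} (ψ : Vec d ≃ₗ[ℝ] Vec d) (v : Fin 3 → Vec d) (E : Fin 3 → Set (Vec d)) (j : Fin 3) :
    Set (Vec d) := (fun y => ψ y + v j) ⁻¹' E j

lemma mp_aff {ψ : Vec d ≃ₗ[ℝ] Vec d} (hψ : MeasurePreserving ψ) (a : Vec d) :
    MeasurePreserving (fun y => ψ y + a) :=
  (measurePreserving_add_right volume a).comp hψ

lemma vol_tf {ψ : Vec d ≃ₗ[ℝ] Vec d} (hψ : MeasurePreserving ψ) (a : Vec d) {A : Set (Vec d)}
    (hA : MeasurableSet A) : vol ((fun y => ψ y + a) ⁻¹' A) = vol A := by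
  rw [Measure.real, Measure.real, (mp_aff hψ a).measure_preimage hA.nullMeasurableSet]

lemma fin_tf {ψ : Vec d ≃ₗ[ℝ] Vec d} (hψ : MeasurePreserving ψ) (a : Vec d) {A : Set (Vec d)}
    (hA : Fin' A) : Fin' ((fun y => ψ y + a) ⁻¹' A) :=
  ⟨(mp_aff hψ a).measurable hA.1, by
    rw [(mp_aff hψ a).measure_preimage hA.1.nullMeasurableSet]; exact hA.2⟩

lemma t3_tf {ψ : Vec d ≃ₗ[ℝ] Vec d} (hψ : MeasurePreserving ψ) {v : Fin 3 → Vec d}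
    (hv : v 0 + v 1 + v 2 = 0) (E : Fin 3 → Set (Vec d)) : T3 (tf ψ v E) = T3 E := by
  rw [T3, T3, ← ts_translate (E 0) (E 1) (E 2) _ _ _ hv,
    ← ts_comp ψ.toContinuousLinearEquiv.toHomeomorph.toMeasurableEquiv hψ
      (fun x y => by change ψ _ = -ψ x - ψ y; simp) ((fun x => x + v 0) ⁻¹' E 0)]
  rfl

lemma tf_tf (ψ φ : Vec d ≃ₗ[ℝ] Vec d) (v w : Fin 3 → Vec d) (E : Fin 3 → Set (Vec d)) :
    tf φ w (tf ψ v E) = tf (φ.trans ψ) (fun j => ψ (w j) + v j) E := by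
  funext j
  simp only [tf, preimage_preimage, LinearEquiv.trans_apply, map_add, add_assoc]

lemma shell_sd (hκ : 0 ≤ κ) (hκr : κ ≤ r) (hr : r ≤ 1) (hin : closedBall 0 (r - κ) ⊆ E)
    (hout : E ⊆ closedBall 0 (r + κ)) :
    vol (E ∆ closedBall 0 r) ≤ (n + 1) * 2 ^ (n + 1) * om (n + 1) * (2 * κ) := by
  have sub : E ∆ closedBall 0 r ⊆
      closedBall 0 (r + κ) \ closedBall 0 (r - κ) := by
    rintro x (⟨h1, h2⟩ | ⟨h1, h2⟩)
    · exact ⟨hout h1, fun h => h2 (closedBall_subset_closedBall (by linarith) h)⟩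
    · exact ⟨closedBall_subset_closedBall (by linarith) h1, fun h => h2 (hin h)⟩
  have hs : 𝔹 (n + 1) (r - κ) ⊆ closedBall 0 (r + κ) :=
    closedBall_subset_closedBall (by linarith)
  refine (measureReal_mono sub ((measure_mono sdiff_subset).trans_lt (fin_ball _ _).2.lt_top).ne).trans ?_
  rw [measureReal_sdiff hs (fin_ball _ _).1 (fin_ball _ _).2, vol_ball _ (by linarith),
    vol_ball _ (by linarith), ← sub_mul]
  have := pow_sub_le (n + 1) (by linarith : 0 ≤ r - κ) (by linarith : r - κ ≤ r + κ) (by linarith)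
  have := mul_le_mul_of_nonneg_right this (om_pos (n + 1)).le
  push_cast at this
  linarith

lemma cint {m : ℕ} {X : Type*} [NormedAddCommGroup X] {f : Vec m → X} (hf : Continuous f)
    {E : Set (Vec m)} (hE : E ⊆ closedBall 0 R) : IntegrableOn f E :=
  (hf.continuousOn.integrableOn_compact (isCompact_closedBall 0 R)).mono_set hE

lemma int_sd {m : ℕ} {X : Type*} [NormedAddCommGroup X] [NormedSpace ℝ X] {f : Vec m → X}
    (hf : Continuous f) (hM : ∀ x, ‖x‖ ≤ R → ‖f x‖ ≤ M) {E B : Set (Vec m)} (hE : Fin' E)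
    (hB : Fin' B) (hER : E ⊆ closedBall 0 R) (hBR : B ⊆ closedBall 0 R) :
    ‖(∫ x in E, f x) - ∫ x in B, f x‖ ≤ M * vol (E ∆ B) := by
  rw [← integral_inter_add_sdiff hB.1 (cint hf hER), ← integral_inter_add_sdiff hE.1 (cint hf hBR),
    inter_comm, add_sub_add_left_eq_sub]
  have fE : volume (E \ B) ≠ ⊤ := ((measure_mono sdiff_subset).trans_lt hE.2.lt_top).ne
  have fB : volume (B \ E) ≠ ⊤ := ((measure_mono sdiff_subset).trans_lt hB.2.lt_top).ne
  have e : vol (E ∆ B) = vol (E \ B) + vol (B \ E) :=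
    measureReal_union (disjoint_sdiff_sdiff) (hB.1.diff hE.1) fE fB
  rw [e, mul_add]
  refine (norm_sub_le _ _).trans (add_le_add ?_ ?_)
  · exact norm_setIntegral_le_of_norm_le_const fE.lt_top
      fun x hx => hM x (by simpa using hER hx.1)
  · exact norm_setIntegral_le_of_norm_le_const fB.lt_top
      fun x hx => hM x (by simpa using hBR hx.1)

/-- Translations summing to zero that make the first moments of the three sets equal. -/
lemma trans_norm (n : ℕ) {κ' : ℝ} (hc : 0 < c) (hκ' : 0 < κ') : ∃ κ, 0 < κ ∧ κ ≤ κ' ∧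
    ∀ (r : Fin 3 → ℝ) (E : Fin 3 → Set (Vec (n + 1))), (∀ j, c ≤ r j) → (∀ j, r j ≤ 1) →
      (∀ j, Fin' (E j)) → (∀ j, vol (E j) = vol (Bl n r j)) →
      (∀ j, closedBall 0 (r j - κ) ⊆ E j) → (∀ j, E j ⊆ closedBall 0 (r j + κ)) →
      ∃ (w : Fin 3 → Vec (n + 1)) (m : Vec (n + 1)), w 0 + w 1 + w 2 = 0 ∧
        (∀ j, ‖w j‖ ≤ κ' - κ) ∧ ∀ j, ∫ x in (fun y => y + w j) ⁻¹' E j, x = m := by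
  set Q : ℝ := (n + 1) * 2 ^ (n + 1) * om (n + 1)
  have Q0 : 0 < Q := by have := om_pos (n + 1); positivity
  set b := c ^ (n + 1) * om (n + 1)
  have b0 : 0 < b := by have := om_pos (n + 1); positivity
  set κ := min (min c 1) (κ' / (1 + 8 * Q / b)) with hκ
  have κ0 : 0 < κ := by positivity
  have κc : κ ≤ c := (min_le_left _ _).trans (min_le_left _ _)
  have κ1 : κ ≤ 1 := (min_le_left _ _).trans (min_le_right _ _)
  have κs : κ + 8 * Q / b * κ ≤ κ' := by
    have : κ * (1 + 8 * Q / b) ≤ κ' := (le_div_iff₀ (by positivity)).1 (min_le_right _ _)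
    linarith
  refine ⟨κ, κ0, by have : 0 ≤ 8 * Q / b * κ := by positivity
                    linarith, fun r E hr hr1 hE hv hin hout => ?_⟩
  set p := fun j => ∫ x in E j, x with hp
  have V0 j : b ≤ vol (E j) := by
    rw [hv, Bl, vol_ball _ (hc.le.trans (hr j))]
    exact mul_le_mul_of_nonneg_right (pow_le_pow_left₀ hc.le (hr j) _) (om_pos _).le
  have hp' j : ‖p j‖ ≤ 4 * Q * κ := by
    have h0 : ∫ x in 𝔹 (n + 1) (r j), x = 0 := by
      have h1 := (Measure.measurePreserving_neg (volume : Measure (Vec (n + 1)))).setIntegral_preimage_emb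
        (MeasurableEquiv.neg _).measurableEmbedding (fun x => x) (closedBall 0 (r j))
      rw [show (Neg.neg ⁻¹' 𝔹 (n + 1) (r j)) = closedBall 0 (r j) by ext x; simp,
        integral_neg] at h1
      have h2 := add_eq_zero_iff_eq_neg.2 h1.symm
      rw [← two_smul ℝ] at h2
      exact (smul_eq_zero.1 h2).resolve_left two_ne_zero
    have h2 := int_sd (f := fun x : Vec (n + 1) => x) continuous_id (fun x hx => hx) (hE j)
      (fin_ball 0 (r j)) ((hout j).trans (closedBall_subset_closedBall
        (by linarith [hr1 j] : r j + κ ≤ 2))) (closedBall_subset_closedBall (by linarith [hr1 j]))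
    rw [h0, sub_zero] at h2
    have h3 := shell_sd κ0.le (κc.trans (hr j)) (hr1 j) (hin j) (hout j)
    calc ‖p j‖ ≤ _ := h2
      _ ≤ 2 * (Q * (2 * κ)) := by gcongr
      _ = _ := by ring
  set s := fun j => (vol (E j))⁻¹ with hs
  have s0 j : 0 < s j := inv_pos.2 (b0.trans_le (V0 j))
  set S := s 0 + s 1 + s 2 with hS
  have S0 : 0 < S := by have := s0 0; have := s0 1; have := s0 2; positivity
  set m := S⁻¹ • (s 0 • p 0 + s 1 • p 1 + s 2 • p 2) with hm
  have hSm : S • m = s 0 • p 0 + s 1 • p 1 + s 2 • p 2 := by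
    rw [hm, smul_smul, mul_inv_cancel₀ S0.ne', one_smul]
  have hmn : ‖m‖ ≤ 4 * Q * κ := by
    rw [← mul_le_mul_iff_right₀ S0]
    calc S * ‖m‖ = ‖S • m‖ := by rw [norm_smul S m, Real.norm_of_nonneg S0.le]
      _ ≤ ‖s 0 • p 0‖ + ‖s 1 • p 1‖ + ‖s 2 • p 2‖ := by rw [hSm]; exact norm_add₃_le
      _ ≤ s 0 * (4 * Q * κ) + s 1 * (4 * Q * κ) + s 2 * (4 * Q * κ) := by
        simp only [norm_smul, Real.norm_of_nonneg (s0 _).le]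
        gcongr <;> first | exact (s0 _).le | exact hp' _
      _ = _ := by rw [hS]; ring
  refine ⟨fun j => s j • (p j - m), m, ?_, fun j => ?_, fun j => ?_⟩
  · rw [show s 0 • (p 0 - m) + s 1 • (p 1 - m) + s 2 • (p 2 - m)
      = (s 0 • p 0 + s 1 • p 1 + s 2 • p 2) - S • m by rw [hS]; module, hSm, sub_self]
  · have h1 : ‖p j - m‖ ≤ 8 * Q * κ := (norm_sub_le _ _).trans (by linarith [hp' j])
    have h2 := inv_anti₀ b0 (V0 j)
    rw [norm_smul, Real.norm_of_nonneg (s0 j).le]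
    calc s j * ‖p j - m‖ ≤ b⁻¹ * (8 * Q * κ) := by gcongr
      _ = 8 * Q / b * κ := by ring
      _ ≤ _ := by linarith
  · set a := s j • (p j - m) with ha
    have h1 := (measurePreserving_add_right (volume : Measure (Vec (n + 1))) a).setIntegral_preimage_emb
      (MeasurableEquiv.addRight a).measurableEmbedding (fun x => x - a) (E j)
    simp only [add_sub_cancel_right] at h1
    rw [h1, integral_sub (cint (f := fun x => x) continuous_id (hout j)) (integrableOn_const (hE j).2),
      setIntegral_const]
    change p j - _ = m
    rw [ha, smul_smul, mul_inv_cancel₀ (b0.trans_le (V0 j)).ne', one_smul, sub_sub_cancel]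

variable {θ κ' : ℝ} {t s : Fin n → ℝ}

/-- The symmetric map with eigenvalues `exp (s i)` on the orthonormal basis `b`. -/
def dg (b : OrthonormalBasis (Fin n) ℝ (Vec n)) (s : Fin n → ℝ) : Vec n →ₗ[ℝ] Vec n :=
  Matrix.toLin b.toBasis b.toBasis (Matrix.diagonal fun i => Real.exp (s i))

section
variable (b : OrthonormalBasis (Fin n) ℝ (Vec n))

lemma inner_dg (s : Fin n → ℝ) (i : Fin n) (x : Vec n) :
    inner ℝ (b i) (dg b s x) = Real.exp (s i) * inner ℝ (b i) x := by
  have h := congrFun (LinearMap.toMatrix_mulVec_repr b.toBasis b.toBasis (dg b s) x) i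
  rw [dg, LinearMap.toMatrix_toLin, Matrix.mulVec_diagonal] at h
  simpa [b.repr_apply_apply, dg] using h.symm

lemma dg_comp (h : ∀ i, s i + t i = 0) : dg b s ∘ₗ dg b t = LinearMap.id := by
  rw [dg, dg, ← Matrix.toLin_mul, Matrix.diagonal_mul_diagonal]
  simp only [← Real.exp_add, h, Real.exp_zero, Matrix.diagonal_one, Matrix.toLin_one]

lemma norm_dg_le (h : ∀ i, |s i| ≤ θ) (x : Vec n) : ‖dg b s x‖ ≤ Real.exp θ * ‖x‖ := by
  rw [← sq_le_sq₀ (norm_nonneg _) (by positivity), mul_pow, ← b.sum_sq_norm_inner_right,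
    ← b.sum_sq_norm_inner_right x, Finset.mul_sum]
  refine Finset.sum_le_sum fun i _ => ?_
  rw [inner_dg, norm_mul, mul_pow, Real.norm_of_nonneg (Real.exp_pos _).le]
  gcongr
  exact (le_abs_self _).trans (h i)

lemma inner_dg_sym (s : Fin n → ℝ) (x y : Vec n) : inner ℝ x (dg b s y) = inner ℝ (dg b s x) y := by
  rw [← b.sum_inner_mul_inner, ← b.sum_inner_mul_inner (dg b s x)]
  refine Finset.sum_congr rfl fun i _ => ?_
  rw [inner_dg, real_inner_comm (b i) (dg b s x), inner_dg, real_inner_comm (b i) x]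
  ring

lemma mp_dg (h : ∑ i, s i = 0) : MeasurePreserving (dg b s) := by
  have e : LinearMap.det (dg b s) = 1 := by
    rw [dg, LinearMap.det_toLin, Matrix.det_diagonal, ← Real.exp_sum, h, Real.exp_zero]
  refine ⟨(dg b s).continuous_of_finiteDimensional.measurable, ?_⟩
  rw [Measure.map_linearMap_addHaar_eq_smul_addHaar _ (by rw [e]; exact one_ne_zero), e]
  simp

end

lemma ball_mom (hu : ‖u‖ = 1) (hr : 0 ≤ r) :
    ∫ z in closedBall 0 r, (inner ℝ u z) ^ 2 = ∫ p in Bp n r, p.2 ^ 2 := by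
  obtain ⟨F, hF⟩ := frame_exists u hu
  rw [← im_ball F hr, ← F.mp_symm.setIntegral_preimage_emb F.me.symm.measurableEmbedding]
  refine integral_congr_ae (ae_of_all _ fun p => ?_)
  have : u = F.e.symm (0, 1) := by rw [← hF]; simp
  simp only [this, F.inner_symm]
  simp

/-- Total second moment operator of the three sets. -/
def sm (Y : Fin 3 → Set (Vec n)) (x : Vec n) : Vec n := ∑ j, ∫ z in Y j, (inner ℝ x z : ℝ) • z

lemma lin_norm (n : ℕ) (hc : 0 < c) (hκ' : 0 < κ') : ∃ κ, 0 < κ ∧ κ ≤ κ' ∧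
    ∀ (r : Fin 3 → ℝ) (Y : Fin 3 → Set (Vec (n + 1))), (∀ j, c ≤ r j) → (∀ j, r j ≤ 1) →
      (∀ j, Fin' (Y j)) →
      (∀ j, closedBall 0 (r j - κ) ⊆ Y j) → (∀ j, Y j ⊆ closedBall 0 (r j + κ)) →
      ∃ ψ : Vec (n + 1) ≃ₗ[ℝ] Vec (n + 1), MeasurePreserving ψ ∧
        (∀ j, closedBall 0 (r j - κ') ⊆ ψ ⁻¹' Y j) ∧
        (∀ j, ψ ⁻¹' Y j ⊆ closedBall 0 (r j + κ')) ∧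
        ∀ u ζ, inner ℝ u ζ = 0 →
          ∑ j, ∫ z in Y j, inner ℝ u (ψ.symm z) * inner ℝ ζ (ψ.symm z) = 0 := by
  set Q : ℝ := (n + 1) * 2 ^ (n + 1) * om (n + 1)
  have Q0 : 0 < Q := by have := om_pos (n + 1); positivity
  set β0 := (c / 4) ^ 2 * ((c / 4) ^ (n + 1) * om (n + 1))
  have β00 : 0 < β0 := by have := om_pos (n + 1); positivity
  set κ := min (min c 1) (min 1 κ' / (1 + 400 * Q / β0)) with hκ
  have κ0 : 0 < κ := by positivity
  have κc : κ ≤ c := (min_le_left _ _).trans (min_le_left _ _)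
  have κ1 : κ ≤ 1 := (min_le_left _ _).trans (min_le_right _ _)
  have hk : κ * (1 + 400 * Q / β0) ≤ min 1 κ' := (le_div_iff₀ (by positivity)).1 (min_le_right _ _)
  set θ := 96 * Q * κ / β0 with hθ
  have θ0 : 0 ≤ θ := by positivity
  have hk' : κ + 4 * θ ≤ min 1 κ' := by
    have : κ * (1 + 400 * Q / β0) = κ + 4 * θ + 16 * Q * κ / β0 := by rw [hθ]; field_simp; ring
    have : 0 ≤ 16 * Q * κ / β0 := by positivity
    linarith
  have hk1 := hk'.trans (min_le_left _ _)
  have hk2 := hk'.trans (min_le_right _ _)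
  have θ1 : θ ≤ 1 := by linarith
  refine ⟨κ, κ0, by linarith, fun r Y hr hr1 hY hin hout => ?_⟩
  have r0 j : 0 ≤ r j := hc.le.trans (hr j)
  have hY2 j : Y j ⊆ closedBall 0 2 := (hout j).trans (closedBall_subset_closedBall (by linarith [hr1 j]))
  have hi1 : ∀ j (x : Vec (n + 1)), IntegrableOn (fun z => (inner ℝ x z : ℝ) • z) (Y j) :=
    fun j x => cint (by fun_prop) (hout j)
  let T : Vec (n + 1) →ₗ[ℝ] Vec (n + 1) :=
    { toFun := sm Y
      map_add' := fun x y => by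
        simp only [sm, inner_add_left, add_smul]
        rw [← Finset.sum_add_distrib]
        exact Finset.sum_congr rfl fun j _ => integral_add (hi1 j x) (hi1 j y)
      map_smul' := fun a x => by
        simp only [sm, inner_smul_left, mul_smul, RingHom.id_apply, integral_smul, Finset.smul_sum]
        rfl }
  have hT x y : inner ℝ y (T x) = ∑ j, ∫ z in Y j, inner ℝ x z * inner ℝ y z := by
    change inner ℝ y (sm Y x) = _
    rw [sm, inner_sum]
    refine Finset.sum_congr rfl fun j _ => ?_
    rw [← integral_inner (hi1 j x)]
    simp only [inner_smul_right]
  have hs : T.IsSymmetric := fun x y => by rw [real_inner_comm, hT, hT]; simp only [mul_comm]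
  have hn : Module.finrank ℝ (Vec (n + 1)) = n + 1 := by simp
  set b := hs.eigenvectorBasis hn
  set l := hs.eigenvalues hn with hl
  have hTb := hs.apply_eigenvectorBasis hn
  have hli i : l i = ∑ j, ∫ z in Y j, (inner ℝ (b i) z) ^ 2 := by
    have := hT (b i) (b i)
    rw [hTb, inner_smul_right, real_inner_self_eq_norm_sq, b.norm_eq_one] at this
    simpa [sq] using this
  set β := ∑ j, ∫ p in Bp n (r j), p.2 ^ 2 with hβ
  have hlβ i : |l i - β| ≤ 24 * Q * κ := by
    have h1 j : |(∫ z in Y j, (inner ℝ (b i) z) ^ 2) - ∫ p in Bp n (r j), p.2 ^ 2| ≤ 8 * Q * κ := by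
      rw [← ball_mom (b.norm_eq_one i) (r0 j)]
      have h2 := int_sd (f := fun z => (inner ℝ (b i) z) ^ 2) (M := 4) (by fun_prop)
        (fun x hx => by
          have := abs_real_inner_le_norm (b i) x
          rw [b.norm_eq_one, one_mul] at this
          rw [Real.norm_of_nonneg (sq_nonneg _), ← sq_abs]
          have h0 := abs_nonneg (inner ℝ (b i) x)
          nlinarith) (hY j) (fin_ball 0 (r j)) (hY2 j)
        (closedBall_subset_closedBall (by linarith [hr1 j]))
      have h3 := shell_sd κ0.le (κc.trans (hr j)) (hr1 j) (hin j) (hout j)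
      rw [Real.norm_eq_abs] at h2
      linarith
    rw [hli, hβ, ← Finset.sum_sub_distrib]
    refine (Finset.abs_sum_le_sum_abs _ _).trans ?_
    refine (Finset.sum_le_sum fun j _ => h1 j).trans ?_
    simp; linarith
  have hββ : β0 ≤ β := by
    have nn j : 0 ≤ ∫ p in Bp n (r j), p.2 ^ 2 := integral_nonneg fun p => sq_nonneg _
    refine le_trans ?_ (Finset.single_le_sum (fun j _ => nn j) (Finset.mem_univ 0))
    have u1 := b.norm_eq_one 0
    have q0 : ∀ z ∈ closedBall ((c / 2) • b 0) (c / 4), c / 4 ≤ inner ℝ (b 0) z := by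
      intro z hz
      have h1 := (abs_real_inner_le_norm (b 0) (z - (c / 2) • b 0))
      rw [u1, one_mul, inner_sub_right, inner_smul_right, real_inner_self_eq_norm_sq, u1] at h1
      rw [mem_closedBall_iff_norm] at hz
      have := abs_le.1 (h1.trans hz)
      linarith
    have sub : closedBall ((c / 2) • b 0) (c / 4) ⊆ closedBall 0 (r 0) := by
      refine closedBall_subset_closedBall' ?_
      rw [dist_zero_right, norm_smul, u1, Real.norm_of_nonneg (by positivity)]
      linarith [hr 0]
    have ic : ∀ {s : Set (Vec (n + 1))}, s ⊆ closedBall 0 (r 0) →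
        IntegrableOn (fun z => (inner ℝ (b 0) z) ^ 2) s := fun h => cint (by fun_prop) h
    rw [← ball_mom u1 (r0 0)]
    refine le_trans ?_ (setIntegral_mono_set (ic subset_rfl) (ae_of_all _ fun z => sq_nonneg _)
      (LE.le.eventuallyLE sub))
    calc β0 = ∫ z in closedBall ((c / 2) • b 0) (c / 4), (c / 4) ^ 2 := by
          rw [setIntegral_const, vol_ball _ (by positivity), smul_eq_mul, mul_comm]
      _ ≤ _ := setIntegral_mono_on (integrableOn_const (fin_ball _ _).2) (ic sub) (fin_ball _ _).1
          fun z hz => pow_le_pow_left₀ (by positivity) (q0 z hz) 2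
  have hκβ : 48 * Q * κ ≤ β0 := by
    have := (div_le_iff₀ β00).1 θ1
    have : 0 ≤ Q * κ := by positivity
    linarith
  have l0 i : β0 / 2 ≤ l i := by have := abs_le.1 (hlβ i); linarith
  have lp i : 0 < l i := lt_of_lt_of_le (by positivity) (l0 i)
  have hlog i k : Real.log (l k) - Real.log (l i) ≤ θ := by
    rw [← Real.log_div (lp k).ne' (lp i).ne']
    refine (Real.log_le_sub_one_of_pos (div_pos (lp k) (lp i))).trans ?_
    rw [sub_le_iff_le_add, div_le_iff₀ (lp i), add_mul, one_mul]
    have h1 := abs_le.1 (hlβ i)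
    have h2 := abs_le.1 (hlβ k)
    have h3 : θ * (β0 / 2) = 48 * Q * κ := by rw [hθ]; field_simp; ring
    have h4 := mul_le_mul_of_nonneg_left (l0 i) θ0
    linarith
  set μ := (∑ k, Real.log (l k)) / (n + 1) with hμ
  have hμs : ((n : ℝ) + 1) * μ = ∑ k, Real.log (l k) := by rw [hμ]; field_simp
  set s : Fin (n + 1) → ℝ := fun i => (μ - Real.log (l i)) / 2 with hsd
  have s_sum : ∑ i, s i = 0 := by
    simp only [hsd]
    rw [← Finset.sum_div, Finset.sum_sub_distrib, ← hμs]; simp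
  have s_abs i : |s i| ≤ θ := by
    have hcard (a : ℝ) : ∑ _k : Fin (n + 1), a = ((n : ℝ) + 1) * a := by simp
    have n1 : (0 : ℝ) < n + 1 := by positivity
    have u1 : μ ≤ Real.log (l i) + θ := by
      refine le_of_mul_le_mul_left ?_ n1
      rw [hμs, ← hcard]
      exact Finset.sum_le_sum fun k _ => by linarith [hlog i k]
    have u2 : Real.log (l i) - θ ≤ μ := by
      refine le_of_mul_le_mul_left ?_ n1
      rw [hμs, ← hcard]
      exact Finset.sum_le_sum fun k _ => by linarith [hlog k i]
    rw [abs_le]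
    constructor <;> simp only [hsd] <;> linarith
  have e2 : ∀ x : Vec (n + 1), Real.exp θ * ‖x‖ ≤ (1 + 2 * θ) * ‖x‖ := fun x => by
    have := Real.abs_exp_sub_one_le (x := θ) (by rwa [abs_of_nonneg θ0])
    rw [abs_of_nonneg θ0] at this
    have := (abs_le.1 this).2
    exact mul_le_mul_of_nonneg_right (by linarith) (norm_nonneg _)
  have hc1 := dg_comp b (s := fun i => -s i) (t := s) fun i => by ring
  have hc2 := dg_comp b (s := s) (t := fun i => -s i) fun i => by ring
  refine ⟨LinearEquiv.ofLinearMap _ _ hc1 hc2, mp_dg b (by simp [s_sum]), fun j y hy => ?_,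
    fun j y hy => ?_, fun u ζ huz => ?_⟩
  · refine hin j ?_
    change dg b (fun i => -s i) y ∈ _
    rw [mem_closedBall_zero_iff] at hy ⊢
    have h1 := (norm_dg_le b (s := fun i => -s i) (fun i => by rw [abs_neg]; exact s_abs i) y).trans (e2 y)
    have : θ * ‖y‖ ≤ θ * 1 := mul_le_mul_of_nonneg_left (by linarith [hr1 j]) θ0
    linarith
  · have hy' : dg b (fun i => -s i) y ∈ Y j := hy
    have h0 := mem_closedBall_zero_iff.1 (hout j hy')
    have h1 := (norm_dg_le b s_abs (dg b (fun i => -s i) y)).trans (e2 _)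
    rw [show dg b s (dg b (fun i => -s i) y) = y from LinearMap.congr_fun hc2 y] at h1
    rw [mem_closedBall_zero_iff]
    have : θ * ‖dg b (fun i => -s i) y‖ ≤ θ * 2 :=
      mul_le_mul_of_nonneg_left (by linarith [hr1 j]) θ0
    linarith
  · change ∑ j, ∫ z in Y j, inner ℝ u (dg b s z) * inner ℝ ζ (dg b s z) = 0
    simp only [inner_dg_sym]
    rw [← hT, ← b.sum_inner_mul_inner]
    have h1 i : inner ℝ (dg b s ζ) (b i) * inner ℝ (b i) (T (dg b s u)) =
        Real.exp μ * (inner ℝ ζ (b i) * inner ℝ (b i) u) := by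
      rw [← hs (b i), hTb, inner_smul_left, real_inner_comm, inner_dg, inner_dg,
        real_inner_comm ζ]
      have : Real.exp (s i) * Real.exp (s i) * l i = Real.exp μ := by
        conv_lhs => rw [← Real.exp_log (lp i), ← Real.exp_add, ← Real.exp_add]
        congr 1; simp only [hsd]; ring
      rw [← this]; simp; ring
    simp only [h1]
    rw [← Finset.mul_sum, b.sum_inner_mul_inner, real_inner_comm, huz, mul_zero]

lemma normalize (n : ℕ) (hc : 0 < c) (hκ' : 0 < κ') : ∃ κ, 0 < κ ∧
    ∀ (r : Fin 3 → ℝ) (E : Fin 3 → Set (Vec (n + 1))), (∀ j, c ≤ r j) → (∀ j, r j ≤ 1) →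
      (∀ j, Fin' (E j)) → (∀ j, vol (E j) = vol (Bl n r j)) →
      (∀ j, closedBall 0 (r j - κ) ⊆ E j) → (∀ j, E j ⊆ closedBall 0 (r j + κ)) →
      ∃ (ψ : Vec (n + 1) ≃ₗ[ℝ] Vec (n + 1)) (v : Fin 3 → Vec (n + 1)), MeasurePreserving ψ ∧
        v 0 + v 1 + v 2 = 0 ∧ (∀ j, closedBall 0 (r j - κ') ⊆ tf ψ v E j) ∧
        (∀ j, tf ψ v E j ⊆ closedBall 0 (r j + κ')) ∧
        ∀ u ζ : Vec (n + 1), ‖u‖ = 1 → inner ℝ u ζ = 0 → ∀ a : Fin 3 → ℝ, a 0 + a 1 + a 2 = 0 →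
          ∑ j, ∫ x in tf ψ v E j, inner ℝ u x * (inner ℝ ζ x + a j) = 0 := by
  obtain ⟨κ1, κ10, -, hL⟩ := lin_norm n hc hκ'
  obtain ⟨κ, κ0, κκ, hT⟩ := trans_norm n hc κ10
  refine ⟨κ, κ0, fun r E hr hr1 hE hv hin hout => ?_⟩
  obtain ⟨w, m, hw, hwn, hwm⟩ := hT r E hr hr1 hE hv hin hout
  set Y := fun j => (fun y => y + w j) ⁻¹' E j
  have hYo j : Y j ⊆ closedBall 0 (r j + κ1) := fun y hy => by
    have h1 := mem_closedBall_zero_iff.1 (hout j hy)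
    rw [mem_closedBall_zero_iff]
    have := norm_sub_le (y + w j) (w j)
    rw [add_sub_cancel_right] at this
    linarith [hwn j]
  obtain ⟨ψ, hψ, hi, ho, hQ⟩ := hL r Y hr hr1
    (fun j => fin_tf (ψ := LinearEquiv.refl ℝ _) (MeasurePreserving.id _) (w j) (hE j))
    (fun j y hy => hin j (by
      rw [mem_closedBall_zero_iff] at hy ⊢
      linarith [norm_add_le y (w j), hwn j])) hYo
  refine ⟨ψ, w, hψ, hw, hi, ho, fun u ζ _ huζ a ha => ?_⟩
  have hc1 : Continuous ψ.symm := ψ.symm.toLinearMap.continuous_of_finiteDimensional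
  have ex j : ∫ x in tf ψ w E j, inner ℝ u x * (inner ℝ ζ x + a j) =
      (∫ z in Y j, inner ℝ u (ψ.symm z) * inner ℝ ζ (ψ.symm z)) + inner ℝ u (ψ.symm m) * a j := by
    have h1 := hψ.setIntegral_preimage_emb
      ψ.toContinuousLinearEquiv.toHomeomorph.toMeasurableEquiv.measurableEmbedding
      (fun z => inner ℝ u (ψ.symm z) * (inner ℝ ζ (ψ.symm z) + a j)) (Y j)
    simp only [LinearEquiv.symm_apply_apply] at h1
    have h2 : ∫ z in Y j, inner ℝ u (ψ.symm z) = inner ℝ u (ψ.symm m) := by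
      rw [← hwm j]
      exact ((innerSL ℝ u).comp (ψ.symm.toContinuousLinearEquiv : Vec (n + 1) →L[ℝ] _)).integral_comp_comm
        (cint (f := fun x => x) continuous_id (hYo j))
    change ∫ x in ψ ⁻¹' Y j, _ = _
    rw [h1, ← h2, ← integral_mul_const, ← integral_add
      (cint (f := fun z => inner ℝ u (ψ.symm z) * inner ℝ ζ (ψ.symm z)) (by fun_prop) (hYo j))
      (cint (f := fun z => inner ℝ u (ψ.symm z) * a j) (by fun_prop) (hYo j))]
    simp only [mul_add]
  simp only [ex]
  rw [Finset.sum_add_distrib, hQ u ζ huζ, ← Finset.mul_sum, Fin.sum_univ_three, ha]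
  simp

/-- Closeness to an orbit: some measure preserving affine change of variables brings each `E j`
within `ε` of `B j`. -/
def Near {d : ℕ} (E B : Fin 3 → Set (Vec d)) (ε : ℝ) : Prop :=
  ∃ (ψ : Vec d ≃ₗ[ℝ] Vec d) (v : Fin 3 → Vec d), MeasurePreserving ψ ∧ v 0 + v 1 + v 2 = 0 ∧
    ∀ j, vol (tf ψ v E j ∆ B j) ≤ ε

/-- The quantitative inverse theorem for triples that are already close to concentric balls. -/
lemma local_thm (n : ℕ) (hc : 0 < c) (hc1 : c ≤ 1) : ∃ η, 0 < η ∧ ∃ C, 0 ≤ C ∧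
    ∀ (r : Fin 3 → ℝ) (δ : ℝ) (E : Fin 3 → Set (Vec (n + 1))), Adm c r → (∀ j, r j ≤ 1 / 2) →
      (∀ j, Fin' (E j)) → (∀ j, vol (E j) = vol (Bl n r j)) →
      0 < δ → δ ≤ η → T3 (Bl n r) - T3 E ≤ δ ^ 2 →
      (∀ j, vol (E j ∆ Bl n r j) ≤ η) → Near E (Bl n r) (C * δ) := by
  obtain ⟨κL, κL0, κLc, η0, η00, C1, C10, hloc⟩ :=
    local_norm n (by positivity : 0 < c / 2) (by linarith)
  set Q : ℝ := (n + 1) * 2 ^ (n + 1) * om (n + 1)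
  have Q0 : 0 < Q := by have := om_pos (n + 1); positivity
  set κ' := min κL (η0 / (2 * Q))
  have κ'0 : 0 < κ' := by positivity
  have κ'L : κ' ≤ κL := min_le_left _ _
  obtain ⟨κ2, κ20, hN⟩ := normalize n (by positivity : 0 < c / 2) κ'0
  set κ := min (κ2 / 2) (c / 8) with hκ
  have κ0 : 0 < κ := by positivity
  have κ22 : 2 * κ ≤ κ2 := by linarith [min_le_left (κ2 / 2) (c / 8)]
  have κc : κ ≤ c / 8 := min_le_right _ _
  have sp : 0 < slp n c := slp_pos hc
  set p := slp n c * κ with hp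
  have p0 : 0 < p := by positivity
  refine ⟨min (min η0 1) (p / 8), by positivity, 4 / p + C1, by positivity, ?_⟩
  intro r δ E had hr2 hE hv hδ hδη hΔ hη
  have hδ0 := hδη.trans ((min_le_left _ _).trans (min_le_left _ _))
  have hδ1 := hδη.trans ((min_le_left _ _).trans (min_le_right _ _))
  set E' := fun j => trim (r j) κ (E j) with hE'
  have fE' j : Fin' (E' j) := fin_trim _ _ (hE j)
  set r' := fun j => brad (E' j) with hr'
  have hlo j : closedBall 0 (r j - κ) ⊆ E' j := fun x hx => ⟨Or.inr hx, closedBall_subset_closedBall (by linarith) hx⟩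
  have hhi j : E' j ⊆ closedBall 0 (r j + κ) := inter_subset_right
  have r'hi j : r' j ≤ r j + κ := brad_le (by linarith [had.lo j]) (hhi j)
  have r'lo j : r j - κ ≤ r' j := by
    have h1 := measureReal_mono (hlo j) (fE' j).2
    rw [vol_ball _ (by linarith [had.lo j]), ← brad_pow, mul_le_mul_iff_left₀ (om_pos _)] at h1
    exact le_of_pow_le_pow_left₀ (by simp) (brad_nonneg _) h1
  have had' : Adm (c / 2) r' := ⟨fun j => by linarith [r'lo j, had.lo j],
    fun j => by linarith [r'hi j, hr2 j],
    fun j => by linarith [r'hi j, r'lo (j + 1), r'lo (j + 2), had.tri j]⟩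
  have hv' j : vol (E' j) = vol (Bl n r' j) := (vol_ballStar _).symm
  have htd := trim_deficit hc had hE hv κ0.le (by linarith) (ε := p / 8)
    (fun j => (hη j).trans (min_le_right _ _))
  have hrs := rs_ineq fE'
  set m := fun j => vol (E' j ∆ E j) with hm
  have m0 j : 0 ≤ m j := measureReal_nonneg
  have hms : p / 2 * ∑ j, m j ≤ δ ^ 2 - (T3 (Bl n r') - T3 E') := by
    rw [show slp n c * κ - 4 * (p / 8) = p / 2 by rw [hp]; ring] at htd
    change T3 (Bl n r') - T3 E' ≤ _ - p / 2 * ∑ j, m j at htd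
    linarith
  have hmj j : m j ≤ 2 / p * δ := by
    have h1 := Finset.single_le_sum (fun i _ => m0 i) (Finset.mem_univ j)
    have h2 : p / 2 * m j ≤ δ := by nlinarith
    rw [show m j = 2 / p * (p / 2 * m j) by field_simp]; gcongr
  obtain ⟨ψ, v, hψ, hvs, hi, ho, hmom⟩ := hN r' E' had'.lo had'.hi fE' hv'
    (fun j => (closedBall_subset_closedBall (by linarith [r'hi j])).trans (hlo j))
    (fun j => (hhi j).trans (closedBall_subset_closedBall (by linarith [r'lo j])))
  have fE'' j : Fin' (tf ψ v E' j) := fin_tf hψ _ (fE' j)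
  have hfin := hloc r' δ (tf ψ v E') had' fE'' (fun j => (vol_tf hψ _ (fE' j).1).trans (hv' j))
    (fun j => (closedBall_subset_closedBall (by linarith)).trans (hi j))
    (fun j => (ho j).trans (closedBall_subset_closedBall (by linarith))) hδ hδ0
    (by rw [t3_tf hψ hvs]
        have : 0 ≤ p / 2 * ∑ j, m j := by positivity
        linarith)
    (fun j => by
      refine (shell_sd κ'0.le (by linarith [had'.lo j]) (had'.hi j) (hi j) (ho j)).trans ?_
      have : κ' * (2 * Q) ≤ η0 := (le_div_iff₀ (by positivity)).1 (min_le_right _ _)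
      linarith) hmom
  refine ⟨ψ, v, hψ, hvs, fun j => ?_⟩
  have t1 := sd_triangle (fin_tf hψ (v j) (hE j)) (fE'' j) (fin_Bl r j)
  have t2 := sd_triangle (fE'' j) (fin_Bl r' j) (fin_Bl r j)
  have e1 : vol (((fun y => ψ y + v j) ⁻¹' E j) ∆ tf ψ v E' j) = m j := by
    rw [symmDiff_comm]
    exact vol_tf hψ (v j) (Fin'.symmDiff (fE' j) (hE j)).1
  have e2 : vol (Bl n r' j ∆ Bl n r j) ≤ m j := by
    refine (sd_balls (x := (0 : Vec (n + 1)))).le.trans ?_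
    change |vol (Bl n r' j) - vol (Bl n r j)| ≤ _
    rw [← hv', ← hv]
    exact abs_vol_sub (fE' j) (hE j)
  have e3 : (4 / p + C1) * δ = 2 / p * δ + 2 / p * δ + C1 * δ := by ring
  change vol (((fun y => ψ y + v j) ⁻¹' E j) ∆ Bl n r j) ≤ _
  linarith [hfin j, hmj j]

variable {B B' E E' : Fin 3 → Set (Vec d)}

lemma Near.of_tf {ψ : Vec d ≃ₗ[ℝ] Vec d} (hψ : MeasurePreserving ψ) {v : Fin 3 → Vec d}
    (hv : v 0 + v 1 + v 2 = 0) (h : Near (tf ψ v E) B ε) : Near E B ε := by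
  obtain ⟨φ, w, hφ, hw, hs⟩ := h
  refine ⟨φ.trans ψ, fun j => ψ (w j) + v j, hψ.comp hφ, ?_, fun j => ?_⟩
  · rw [show ψ (w 0) + v 0 + (ψ (w 1) + v 1) + (ψ (w 2) + v 2)
      = ψ (w 0 + w 1 + w 2) + (v 0 + v 1 + v 2) by simp only [map_add]; abel, hw, hv]; simp
  · rw [← tf_tf]; exact hs j

lemma Near.of_id (h : ∀ j, vol (E j ∆ B j) ≤ ε) : Near E B ε :=
  ⟨LinearEquiv.refl ℝ _, 0, MeasurePreserving.id _, by simp, fun j => by simpa [tf] using h j⟩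

lemma Near.perturb {s t ε' : ℝ} (h : Near E B ε) (hE : ∀ j, Fin' (E j)) (hE' : ∀ j, Fin' (E' j))
    (hB : ∀ j, Fin' (B j)) (hB' : ∀ j, Fin' (B' j)) (hs : ∀ j, vol (E' j ∆ E j) ≤ s)
    (ht : ∀ j, vol (B j ∆ B' j) ≤ t) (hε : s + ε + t ≤ ε') : Near E' B' ε' := by
  obtain ⟨ψ, v, hψ, hv, h⟩ := h
  refine ⟨ψ, v, hψ, hv, fun j => ?_⟩
  have f1 : Fin' (tf ψ v E j) := fin_tf hψ _ (hE j)
  have f2 : Fin' (tf ψ v E' j) := fin_tf hψ _ (hE' j)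
  have t1 := sd_triangle f2 f1 (hB' j)
  have t2 := sd_triangle f1 (hB j) (hB' j)
  have e : vol (tf ψ v E' j ∆ tf ψ v E j) = vol (E' j ∆ E j) :=
    vol_tf hψ (v j) (Fin'.symmDiff (hE' j) (hE j)).1
  linarith [hs j, ht j, h j]

lemma first_link {α : Type*} {R : α → α → Prop} {P Q : α → Prop} {a b : α}
    (h : Relation.ReflTransGen R a b) (hQ : Q a) (hR : ∀ x y, R x y → Q y) (ha : ¬ P a) (hb : P b) :
    ∃ x y, R x y ∧ Q x ∧ ¬ P x ∧ P y := by
  induction h using Relation.ReflTransGen.head_induction_on with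
  | refl => exact absurd hb ha
  | @head x y h' _ ih =>
    by_cases hy : P y
    · exact ⟨x, y, h', hQ, ha, hy⟩
    · exact ih (hR _ _ h') hy

lemma rad_close (hc : 0 < c) (ha : c ≤ a) (hb : 0 ≤ b) :
    c ^ n * |b - a| ≤ |b ^ (n + 1) - a ^ (n + 1)| := by
  have key : ∀ {x y : ℝ}, c ≤ x → 0 ≤ y → y ≤ x → c ^ n * (x - y) ≤ x ^ (n + 1) - y ^ (n + 1) := by
    intro x y hx hy hxy
    have h1 := pow_le_pow_left₀ hc.le hx n
    have h2 := pow_le_pow_left₀ hy hxy n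
    have h3 := mul_le_mul_of_nonneg_right h1 (sub_nonneg.2 hxy)
    have h4 := mul_le_mul_of_nonneg_right h2 hy
    rw [pow_succ, pow_succ]
    linarith
  rcases le_total b a with h | h
  · rw [abs_of_nonpos (by linarith), abs_sub_comm]
    refine le_trans ?_ (le_abs_self _)
    linarith [key ha hb h]
  · rw [abs_of_nonneg (by linarith)]
    exact (key (ha.trans h) (by linarith) h).trans (le_abs_self _)

lemma Adm.of_close {r r' : Fin 3 → ℝ} (hc : 0 < c) (h : Adm c r) (hr : ∀ j, r j ≤ 1 / 2)
    (hc1 : c ≤ 1) (hs : ∀ j, |r' j - r j| ≤ c / 8) : Adm (c / 2) r' :=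
  have hs' := fun j => abs_le.1 (hs j)
  ⟨fun j => by linarith [hs' j, h.lo j], fun j => by linarith [hs' j, hr j], fun j => by
    linarith [hs' j, hs' (j + 1), hs' (j + 2), h.tri j]⟩

/-- Triples with small deficit lie near the orbit of the balls: otherwise the chain joining the
triple to balls has a link at a fixed positive distance from the orbit, where the local theorem
bounds the deficit from below, while the deficit barely increases along the chain. -/
lemma global_near (n : ℕ) {C : ℝ} (hc : 0 < c) (hc1 : c ≤ 1) (hη : 0 < η) (hC : 0 ≤ C)
    (hloc : ∀ (r : Fin 3 → ℝ) (δ : ℝ) (E : Fin 3 → Set (Vec (n + 1))), Adm (c / 2) r →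
      (∀ j, r j ≤ 1 / 2) →
      (∀ j, Fin' (E j)) → (∀ j, vol (E j) = vol (Bl n r j)) →
      0 < δ → δ ≤ η → T3 (Bl n r) - T3 E ≤ δ ^ 2 →
      (∀ j, vol (E j ∆ Bl n r j) ≤ η) → Near E (Bl n r) (C * δ)) :
    ∃ δ0, 0 < δ0 ∧ ∀ (r : Fin 3 → ℝ) (E : Fin 3 → Set (Vec (n + 1))), Adm c r → (∀ j, r j ≤ 1 / 4) →
      (∀ j, Fin' (E j)) → (∀ j, vol (E j) = vol (Bl n r j)) →
      T3 (Bl n r) - T3 E ≤ δ0 ^ 2 / 2 → Near E (Bl n r) η := by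
  have o0 : 0 < om (n + 1) := om_pos _
  set δ0 := min η (η / (4 * (C + 1)))
  have δ00 : 0 < δ0 := by positivity
  have hCδ : C * δ0 ≤ η / 4 := by
    have h1 : δ0 * (4 * (C + 1)) ≤ η := (le_div_iff₀ (by positivity)).1 (min_le_right _ _)
    linarith
  refine ⟨δ0, δ00, fun r E had hr4 hE hv hΔ => ?_⟩
  set m := om (n + 1) + 2
  set s := min (min (η / 12) 1) (min (δ0 ^ 2 / (2 * (9 * m + 1))) (om (n + 1) * c ^ n * c / 16)) with hs
  have s0 : 0 < s := by positivity
  have sη : s ≤ η / 12 := (min_le_left _ _).trans (min_le_left _ _)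
  have s1 : s ≤ 1 := (min_le_left _ _).trans (min_le_right _ _)
  have sδ : s * (2 * (9 * m + 1)) ≤ δ0 ^ 2 :=
    (le_div_iff₀ (by positivity)).1 ((min_le_right _ _).trans (min_le_left _ _))
  have sc : s ≤ om (n + 1) * c ^ n * c / 16 := (min_le_right _ _).trans (min_le_right _ _)
  have r0 j : 0 ≤ r j := hc.le.trans (had.lo j)
  have hvm j : vol (E j) ≤ om (n + 1) := by
    rw [hv, Bl, vol_ball _ (r0 j)]
    have : r j ^ (n + 1) ≤ 1 := pow_le_one₀ (r0 j) (had.hi j)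
    nlinarith
  choose R₀ hR₀ using fun j => trunc (hE j) s0
  set R := ∑ j, |R₀ j| + 1 with hR
  have sR : 0 ≤ ∑ j, |R₀ j| := Finset.sum_nonneg fun _ _ => abs_nonneg _
  have hRj j : R₀ j ≤ R := by
    have := Finset.single_le_sum (f := fun j => |R₀ j|) (fun _ _ => abs_nonneg _) (Finset.mem_univ j)
    linarith [le_abs_self (R₀ j)]
  set H : Fin 3 → Set (Vec (n + 1)) := fun j => E j ∩ closedBall 0 R with hH
  have fH j : Fin' (H j) := (hE j).inter (fin_ball _ _).1
  have dH j : vol (E j ∆ H j) ≤ s := by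
    simp only [hH]; rw [symmDiff_inter_self]; exact (hR₀ j R (hRj j)).le
  have vH j : |vol (E j) - vol (H j)| ≤ s :=
    (abs_vol_sub (hE j) (fH j)).trans (dH j)
  -- balls with almost the volume of `E j` are close to `Bl n r j`
  have bs : ∀ {A : Set (Vec (n + 1))} {t : ℝ} (j), |vol A - vol (E j)| ≤ t →
      vol (ballStar A ∆ Bl n r j) ≤ t := by
    intro A t j h
    refine (sd_balls (x := (0 : Vec (n + 1)))).le.trans ?_
    change |vol (ballStar A) - vol (Bl n r j)| ≤ _
    rwa [vol_ballStar, ← hv]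
  by_cases hP : Near H (Bl n r) (η / 2)
  · exact hP.perturb fH hE (fin_Bl r) (fin_Bl r) dH (t := 0) (by simp) (by linarith)
  exfalso
  obtain ⟨G, hG, hGb⟩ := near_balls (by linarith : 0 < R) (fun j => (fH j).1)
    (fun j => inter_subset_right) s0
  have fG := (hG.spec fH).1
  have hPG : Near G (Bl n r) (η / 2) := Near.of_id fun j => by
    have t1 := sd_triangle (fG j) (fin_ballStar (H j)) (fin_Bl r j)
    have := bs (A := H j) (t := s) j (by rw [abs_sub_comm]; exact vH j)
    linarith [hGb j]
  obtain ⟨X, Y, hXY, fX, hX, hY⟩ := first_link (P := fun X => Near X (Bl n r) (η / 2))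
    (Q := fun X => ∀ j, Fin' (X j)) (hG s s0 s s0) fH (fun _ _ h => h.1) hP hPG
  obtain ⟨fY, dXY, vY, tY⟩ := hXY
  have vYE j : |vol (Y j) - vol (E j)| ≤ 2 * s := by
    have := abs_sub_le (vol (Y j)) (vol (H j)) (vol (E j))
    have := vH j
    rw [abs_sub_comm] at this
    linarith [vY j]
  set r' := fun j => brad (Y j) with hr'
  have dB j : vol (Bl n r' j ∆ Bl n r j) ≤ 2 * s := bs j (vYE j)
  have hrr j : |r' j - r j| ≤ c / 8 := by
    have h1 := rad_close (n := n) hc (had.lo j) (brad_nonneg (Y j))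
    have h2 := vYE j
    rw [hv, Bl, vol_ball _ (r0 j), ← brad_pow, ← sub_mul, abs_mul, abs_of_pos o0] at h2
    have := mul_le_mul_of_nonneg_left h1 o0.le
    change om (n + 1) * (c ^ n * |r' j - r j|) ≤ _ at this
    exact le_of_mul_le_mul_left (a := om (n + 1) * c ^ n) (by linarith) (by positivity)
  have had' := had.of_close hc (fun j => by linarith [hr4 j]) hc1 hrr
  obtain ⟨ψ, v, hψ, hvs, hψY⟩ := hY.perturb fY fY (fin_Bl r) (fin_Bl r') (s := 0) (t := 2 * s)
    (ε' := η) (by simp) (fun j => by rw [symmDiff_comm]; exact dB j) (by linarith)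
  by_cases hd : T3 (Bl n r') - T3 Y ≤ δ0 ^ 2
  · have h1 := hloc r' δ0 (tf ψ v Y) had'
      (fun j => by have := abs_le.1 (hrr j); linarith [hr4 j])
      (fun j => fin_tf hψ _ (fY j)) (fun j => (vol_tf hψ _ (fY j).1).trans (vol_ballStar (Y j)).symm)
      δ00 (min_le_left _ _) (by rw [t3_tf hψ hvs]; exact hd) hψY
    exact hX ((Near.of_tf hψ hvs h1).perturb fY fX (fin_Bl r') (fin_Bl r) dXY dB (by linarith))
  · have m1 j : vol (E j) ≤ m := by linarith [hvm j]
    have l1 := T3_lip hE fH (m := m) m1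
      (fun j => by have := abs_le.1 (vH j); linarith [hvm j]) dH
    have l2 := T3_lip (fin_Bl r') (fin_Bl r) (m := m)
      (fun j => by
        have := (vol_ballStar (Y j)).le
        change vol (Bl n r' j) ≤ _ at this
        have := abs_le.1 (vYE j); linarith [hvm j])
      (fun j => by rw [← hv]; exact m1 j) dB
    have := abs_le.1 l1
    have := abs_le.1 l2
    linarith

lemma global_thm (n : ℕ) (hc : 0 < c) (hc1 : c ≤ 1) : ∃ C, 0 ≤ C ∧
    ∀ (r : Fin 3 → ℝ) (δ : ℝ) (E : Fin 3 → Set (Vec (n + 1))), Adm c r → (∀ j, r j ≤ 1 / 4) →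
      (∀ j, Fin' (E j)) → (∀ j, vol (E j) = vol (Bl n r j)) →
      0 < δ → T3 (Bl n r) - T3 E ≤ δ ^ 2 → Near E (Bl n r) (C * δ) := by
  obtain ⟨η, η0, C, C0, hloc⟩ := local_thm n (by positivity : 0 < c / 2) (by linarith)
  obtain ⟨δ0, δ00, hg⟩ := global_near n hc hc1 η0 C0 hloc
  have o0 : 0 < om (n + 1) := om_pos _
  set d0 := min η (δ0 / 2)
  have d00 : 0 < d0 := by positivity
  refine ⟨C + 2 * om (n + 1) / d0, by positivity, fun r δ E had hr4 hE hv hδ hΔ => ?_⟩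
  have r0 j : 0 ≤ r j := hc.le.trans (had.lo j)
  by_cases h : δ ≤ d0
  · have h1 := h.trans (min_le_right _ _)
    obtain ⟨ψ, v, hψ, hvs, hs⟩ := hg r E had hr4 hE hv (by nlinarith)
    have h2 := hloc r δ (tf ψ v E)
      (had.of_close hc (fun j => by linarith [hr4 j]) hc1 (by simp; positivity))
      (fun j => by linarith [hr4 j])
      (fun j => fin_tf hψ _ (hE j)) (fun j => (vol_tf hψ _ (hE j).1).trans (hv j)) hδ
      (h.trans (min_le_left _ _)) (by rw [t3_tf hψ hvs]; exact hΔ) hs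
    refine (Near.of_tf hψ hvs h2).perturb hE hE (fin_Bl r) (fin_Bl r) (s := 0) (t := 0) (by simp)
      (by simp) ?_
    have : 0 ≤ 2 * om (n + 1) / d0 * δ := by positivity
    linarith
  · refine Near.of_id fun j => ?_
    have h1 : vol (E j ∆ Bl n r j) ≤ vol (E j) + vol (Bl n r j) :=
      (measureReal_mono (by rintro x (hx | hx); exacts [Or.inl hx.1, Or.inr hx.1])
        (measure_union_lt_top (hE j).2.lt_top (fin_Bl r j).2.lt_top).ne).trans (measureReal_union_le _ _)
    have h2 : vol (Bl n r j) ≤ om (n + 1) := by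
      rw [Bl, vol_ball _ (r0 j)]
      have : r j ^ (n + 1) ≤ 1 := pow_le_one₀ (r0 j) (had.hi j)
      nlinarith
    have h3 : 2 * om (n + 1) ≤ 2 * om (n + 1) / d0 * δ := by
      rw [div_mul_eq_mul_div, le_div_iff₀ d00]
      exact mul_le_mul_of_nonneg_left (not_le.1 h).le (by positivity)
    have : 0 ≤ C * δ := by positivity
    rw [hv] at h1
    linarith

variable {l : ℝ} {a r : Fin 3 → ℝ} {A B C : Set (Vec d)}

/-! ### Normalization and the proof of the theorem -/

lemma conv_eq_ts (hA : Fin' A) (hB : Fin' B) (hC : Fin' C) :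
    ∫ x in C, conv (ind A) (ind B) x = TS A B (Neg.neg ⁻¹' C) := by
  have mp := Measure.measurePreserving_neg (volume : Measure (Vec d))
  have hC' : Fin' (Neg.neg ⁻¹' C) :=
    ⟨mp.measurable hC.1, by rw [mp.measure_preimage hC.1.nullMeasurableSet]; exact hC.2⟩
  rw [ts_rot hA hB hC', ts_swap, TS, tri_iter hC'.nice hA.nice
    hB.nice, ← integral_indicator hC.1]
  refine Eq.trans ?_ (integral_neg_eq_self _ volume)
  refine integral_congr_ae (.of_forall fun x => ?_)
  simp only [neg_neg]
  by_cases h : x ∈ C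
  · rw [indicator_of_mem h, chi_of_mem (by simpa using h), one_mul]; rfl
  · rw [indicator_of_notMem h, chi_of_notMem (by simpa using h), zero_mul]

lemma vol_smul_preimage (hl : 0 < l) (A : Set (Vec d)) :
    l ^ d * vol ((fun x => l • x) ⁻¹' A) = vol A := by
  rw [measureReal_def, Measure.addHaar_preimage_smul _ hl.ne', ENNReal.toReal_mul, finrank_euclideanSpace_fin,
    ENNReal.toReal_ofReal (abs_nonneg _), abs_of_pos (by positivity), ← mul_assoc,
    mul_inv_cancel₀ (by positivity), one_mul, measureReal_def]

lemma fin_smul_preimage (hl : 0 < l) (hA : Fin' A) : Fin' ((fun x => l • x) ⁻¹' A) := by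
  refine ⟨(measurable_const_smul l) hA.1, ?_⟩
  rw [Measure.addHaar_preimage_smul _ hl.ne']
  exact ENNReal.mul_ne_top ENNReal.ofReal_ne_top hA.2

lemma ts_smul (hl : 0 < l) (A B C : Set (Vec d)) :
    l ^ (d + d) * TS ((fun x => l • x) ⁻¹' A) ((fun x => l • x) ⁻¹' B) ((fun x => l • x) ⁻¹' C)
      = TS A B C := by
  have h := Measure.integral_comp_smul ((volume : Measure (Vec d)).prod (volume : Measure (Vec d)))
    (fun p => chi A p.1 * chi B p.2 * chi C (-p.1 - p.2)) l
  have e : TS ((fun x => l • x) ⁻¹' A) ((fun x => l • x) ⁻¹' B) ((fun x => l • x) ⁻¹' C)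
      = ∫ p : Vec d × Vec d, chi A (l • p).1 * chi B (l • p).2 * chi C (-(l • p).1 - (l • p).2) := by
    refine integral_congr_ae (.of_forall fun p => ?_)
    have : l • (-p.1 - p.2) = -(l • p).1 - (l • p).2 := by simp [smul_sub]
    simp only [← this]; rfl
  rw [e]
  refine (congrArg (l ^ (d + d) * ·) h).trans ?_
  beta_reduce
  rw [Module.finrank_prod, finrank_euclideanSpace_fin, abs_of_pos (by positivity), smul_eq_mul,
    ← mul_assoc, mul_inv_cancel₀ (by positivity), one_mul]
  rfl

lemma near_unscale (hl : 0 < l) {F : Fin 3 → Set (Vec (n + 1))} (hF : ∀ j, Fin' (F j))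
    (h : Near (fun j => (fun x => l • x) ⁻¹' F j) (Bl n r) ε) :
    ∃ (ψ : Vec (n + 1) ≃ₗ[ℝ] Vec (n + 1)) (v : Fin 3 → Vec (n + 1)), MeasurePreserving ψ ∧
      v 0 + v 1 + v 2 = 0 ∧ ∀ j, vol (symmDiff (F j)
        ((fun y => ψ y + v j) '' closedBall 0 (l * r j))) ≤ l ^ (n + 1) * ε := by
  obtain ⟨ψ, v, hψ, hv, h⟩ := h
  refine ⟨ψ, fun j => l • v j, hψ, by simp only [← smul_add, hv, smul_zero], fun j => ?_⟩
  set g : Vec (n + 1) → Vec (n + 1) := fun y => ψ y + l • v j with hg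
  have gc : Continuous g := (LinearMap.continuous_of_finiteDimensional ψ.toLinearMap).add continuous_const
  have gi : Function.Injective g := fun x y hxy => ψ.injective (add_right_cancel hxy)
  have m : MeasurableSet (F j ∆ (g '' closedBall 0 (l * r j))) :=
    (hF j).1.symmDiff ((isCompact_closedBall _ _).image gc).measurableSet
  rw [← vol_tf hψ (l • v j) m, ← vol_smul_preimage hl]
  refine mul_le_mul_of_nonneg_left (le_trans (le_of_eq ?_) (h j)) (by positivity)
  congr 1
  change (fun x => l • x) ⁻¹' (g ⁻¹' _) = _
  rw [preimage_symmDiff, preimage_image_eq _ gi, preimage_symmDiff]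
  congr 1
  · ext y
    simp [hg, tf, smul_add]
  · ext y
    simp [Bl, norm_smul, abs_of_pos hl, mul_le_mul_iff_right₀ hl]

lemma ts_Bl_le (h0 : ∀ j, 0 ≤ r j) (h1 : ∀ j, r j ≤ 1) : T3 (Bl n r) ≤ om (n + 1) ^ 2 := by
  have hb j : vol (Bl n r j) ≤ om (n + 1) := by
    rw [Bl, vol_ball _ (h0 j)]
    exact mul_le_of_le_one_left (om_pos _).le (pow_le_one₀ (h0 j) (h1 j))
  have e j : ∫ x, |chi (Bl n r j) x| = vol (Bl n r j) := by
    simp only [abs_of_nonneg (chi_nonneg _ _)]; exact integral_chi (fin_Bl r j).1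
  have h := tri_abs_le (c := 1) (nice_chi (fin_Bl (n := n) r 0).1 (fin_Bl r 0).2)
    (nice_chi (fin_Bl (n := n) r 1).1 (fin_Bl r 1).2) (h := chi (Bl n r 2))
    (fun x => abs_chi_le _ _)
  rw [e, e, one_mul] at h
  rw [sq]
  exact (le_abs_self _).trans (h.trans (mul_le_mul (hb 0) (hb 1) measureReal_nonneg (om_pos _).le))

lemma ball_neg (r : ℝ) : Neg.neg ⁻¹' 𝔹 d r = closedBall 0 r := by ext; simp

/-- The scaled radii of a strictly admissible triple satisfy `Adm`. -/
lemma adm_of_rho (hρ : 0 < ρ) (h : RhoStrictlyAdmissible ρ a) {i : Fin 3} (hi : ∀ j, a j ≤ a i) :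
    Adm (min 1 (min (ρ / 4) (ρ ^ 2 / 2))) (fun j => a j / (4 * a i)) ∧ ∀ j, a j / (4 * a i) ≤ 1 / 4 := by
  obtain ⟨h1, h2, h3⟩ := h
  have p := h1 i
  have le j : a j / (4 * a i) ≤ 1 / 4 := by
    rw [div_le_div_iff₀ (by positivity) (by norm_num)]; linarith [hi j]
  have ge j : ρ / 4 ≤ a j / (4 * a i) := by
    rw [div_le_div_iff₀ (by norm_num) (by positivity)]; linarith [h3 i j]
  refine ⟨⟨fun j => ?_, fun j => (le j).trans (by norm_num), fun j => ?_⟩, le⟩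
  · exact (min_le_right _ _).trans ((min_le_left _ _).trans (ge j))
  · have hu : ({j + 1, j + 2, j} : Set (Fin 3)) = univ := by
      ext x; fin_cases j <;> fin_cases x <;> simp
    have k := div_le_div_of_nonneg_right (h2 _ _ _ hu) (by positivity : 0 ≤ 4 * a i)
    rw [mul_div_assoc, add_div] at k
    have k1 := mul_le_mul_of_nonneg_left (add_le_add (ge (j + 1)) (ge (j + 2))) hρ.le
    have : min 1 (min (ρ / 4) (ρ ^ 2 / 2)) ≤ ρ ^ 2 / 2 := (min_le_right _ _).trans (min_le_right _ _)
    change a j / (4 * a i) + _ ≤ a (j + 1) / (4 * a i) + a (j + 2) / (4 * a i)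
    linarith

end RS

open RS in
theorem riesz_sobolev_inverse (d : ℕ) (hd : 1 ≤ d) (ρ : ℝ) (hρ : 0 < ρ) :
    ∃ C : ℝ, ∀ δ > (0 : ℝ), ∀ E : Fin 3 → Set (Vec d),
      (∀ j, MeasurableSet (E j)) → (∀ j, volume (E j) ≠ ⊤) →
      RhoStrictlyAdmissible ρ (fun j => (volume (E j)).toReal ^ ((1 : ℝ) / d)) →
      (1 - δ) * (∫ x in ballStar (E 2), conv (ind (ballStar (E 0))) (ind (ballStar (E 1))) x)
        ≤ ∫ x in E 2, conv (ind (E 0)) (ind (E 1)) x →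
      tripleDistance E (fun j => ballStar (E j)) ≤
        C * δ ^ ((1 : ℝ) / 2) *
          max (volume (E 0)).toReal (max (volume (E 1)).toReal (volume (E 2)).toReal) := by
  obtain ⟨n, rfl⟩ : ∃ n, d = n + 1 := ⟨d - 1, by omega⟩
  have hc : 0 < min 1 (min (ρ / 4) (ρ ^ 2 / 2)) := by positivity
  obtain ⟨C, hC, key⟩ := global_thm n hc (min_le_left _ _)
  refine ⟨C * 4 ^ (n + 1), fun δ hδ E hm hf hadm hyp => ?_⟩
  have fE j : Fin' (E j) := ⟨hm j, hf j⟩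
  set a : Fin 3 → ℝ := fun j => (volume (E j)).toReal ^ ((1 : ℝ) / (n + 1 : ℕ))
  obtain ⟨i, hi⟩ := Finite.exists_max a
  obtain ⟨hA, h4⟩ := adm_of_rho hρ hadm hi
  set r : Fin 3 → ℝ := fun j => a j / (4 * a i) with hr
  have ai := hadm.1 i
  have ω := om_pos (n + 1)
  have r0 j : 0 ≤ r j := (hc.le.trans (hA.lo j))
  -- the dilation factor bringing the largest of the three radii to `1 / 4`
  set l : ℝ := 4 * brad (E i) with hl
  have br j : brad (E j) = a j / om (n + 1) ^ ((1 : ℝ) / (n + 1 : ℕ)) := Real.div_rpow measureReal_nonneg ω.le _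
  have l0 : 0 < l := by rw [hl, br]; positivity
  have lr j : l * r j = brad (E j) := by rw [hl, br, br, hr]; field_simp
  -- the third set is reflected to pass to the symmetric trilinear form
  set F : Fin 3 → Set (Vec (n + 1)) := ![E 0, E 1, Neg.neg ⁻¹' E 2]
  have mp := Measure.measurePreserving_neg (volume : Measure (Vec (n + 1)))
  have vneg : ∀ {A : Set (Vec (n + 1))}, MeasurableSet A →
      vol (Neg.neg ⁻¹' A) = vol A := fun h =>
    mp.measureReal_preimage h.nullMeasurableSet
  have fF j : Fin' (F j) := by
    fin_cases j
    · exact fE 0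
    · exact fE 1
    · exact ⟨mp.measurable (hm 2), by
        change volume (Neg.neg ⁻¹' E 2) ≠ ⊤
        rw [mp.measure_preimage (hm 2).nullMeasurableSet]; exact hf 2⟩
  have vF j : vol (F j) = vol (E j) := by
    fin_cases j
    · rfl
    · rfl
    · exact vneg (hm 2)
  have sB j : (fun x : Vec (n + 1) => l • x) ⁻¹' ballStar (E j) = Bl n r j := by
    rw [ballStar_eq, ← lr]
    ext y
    simp [Bl, norm_smul, abs_of_pos l0, mul_le_mul_iff_right₀ l0]
  have hdef : T3 (Bl n r) - T3 (fun j => (fun x => l • x) ⁻¹' F j) ≤ (om (n + 1) * √δ) ^ 2 := by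
    rw [conv_eq_ts (fin_ballStar _) (fin_ballStar _) (fin_ballStar _),
      conv_eq_ts (fE 0) (fE 1) (fE 2), ballStar_eq (E 2), ball_neg, ← ballStar_eq,
      ← ts_smul l0, ← ts_smul l0 (E 0), sB, sB, sB] at hyp
    change (1 - δ) * (_ * T3 (Bl n r)) ≤ _ * T3 (fun j => (fun x => l • x) ⁻¹' F j) at hyp
    have hyp' : (1 - δ) * T3 (Bl n r) ≤ T3 (fun j => (fun x => l • x) ⁻¹' F j) := by
      refine le_of_mul_le_mul_left ?_ (by positivity : 0 < l ^ (n + 1 + (n + 1)))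
      linarith
    have := mul_le_mul_of_nonneg_left (ts_Bl_le (n := n) r0 hA.hi) hδ.le
    rw [mul_pow, Real.sq_sqrt hδ.le]
    linarith
  have vS j : vol ((fun x => l • x) ⁻¹' F j) = vol (Bl n r j) := by
    refine mul_left_cancel₀ (pow_pos l0 (n + 1)).ne' ?_
    rw [← sB, vol_smul_preimage l0, vol_smul_preimage l0, vF, vol_ballStar]
  obtain ⟨ψ, v, hψ, hv, hn⟩ := near_unscale l0 fF
    (key r (om (n + 1) * √δ) _ hA h4 (fun j => fin_smul_preimage l0 (fF j)) vS (by positivity) hdef)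
  set M := max (volume (E 0)).toReal (max (volume (E 1)).toReal (volume (E 2)).toReal) with hM
  have hMi : vol (E i) ≤ M := by
    fin_cases i
    · exact le_max_left _ _
    · exact (le_max_left _ _).trans (le_max_right _ _)
    · exact (le_max_right _ _).trans (le_max_right _ _)
  have bound : l ^ (n + 1) * (C * (om (n + 1) * √δ)) ≤ C * 4 ^ (n + 1) * δ ^ ((1 : ℝ) / 2) * M := by
    rw [← Real.sqrt_eq_rpow]
    rw [show l ^ (n + 1) * (C * (om (n + 1) * √δ)) = C * 4 ^ (n + 1) * √δ * vol (E i)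
      by rw [← brad_pow, hl, mul_pow]; ring]
    exact mul_le_mul_of_nonneg_left hMi (by positivity)
  refine le_trans (csInf_le ⟨0, ?_⟩ ⟨ψ, ![v 0, v 1, -v 2], ?_, hψ, rfl⟩) ?_
  · rintro _ ⟨_, _, _, _, rfl⟩
    exact le_max_of_le_left ENNReal.toReal_nonneg
  · change -v 2 = v 0 + v 1
    exact (eq_neg_of_add_eq_zero_left hv).symm
  · simp only [lr] at hn
    refine max_le ((hn 0).trans bound) (max_le ((hn 1).trans bound) ?_)
    have h2 := hn 2
    have m : MeasurableSet (E 2 ∆ ((fun y => ψ y + -v 2) '' ballStar (E 2))) :=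
      (hm 2).symmDiff ((isCompact_closedBall _ _).image
        ((LinearMap.continuous_of_finiteDimensional ψ.toLinearMap).add continuous_const)).measurableSet
    refine le_trans (le_of_eq ?_) (h2.trans bound)
    change vol _ = _
    refine (vneg m).symm.trans ?_
    congr 1
    rw [preimage_symmDiff]
    congr 1
    rw [← ballStar_eq]
    ext y
    constructor
    · rintro ⟨x, hx, e⟩
      refine ⟨-x, by simpa [ballStar] using hx, ?_⟩
      have := e
      change ψ (-x) + v 2 = y
      rw [map_neg, ← neg_inj, ← this]; abel
    · rintro ⟨x, hx, e⟩
      refine ⟨-x, by simpa [ballStar] using hx, ?_⟩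
      have : ψ x + v 2 = y := e
      change ψ (-x) + -v 2 = -y
      rw [map_neg, ← this]; abel
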